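/- Let n ≥ 2 and let k = (k_1,…,k_n) be integers with 1 ≤ k_1 < k_2 < … < k_n. Let s ≥ 1 + k_n(1 + k_n) and let F = (F_1,…,F_n) be a system of diagonal forms in s variables of degrees k_1,…,k_n with nonzero integer coefficients. Then the singular integral 𝕀(F) and the singular series 𝕊(F) are convergent, and for every ε > 0 one has N_F(X) = 𝕀(F)·𝕊(F)·X^{s−σ(k)} + O(X^{s−σ(k)−η₀+ε}) for X ≥ 1, where σ(k) = k_1 + … + k_n and η₀ = 1/(n·k_n²). If moreover the system F(x) = 0 has a nonsingular solution over ℝ and a nonsingular solution over ℚ_p for every prime p, then 𝕀(F)·𝕊(F) > 0. -/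

import Mathlib

/-!
The theorem is proved by the circle method; write `K` for the largest degree and `τ = 1 / (n K²)`.

**Mean values.** Everything rests on the sharp form of Vinogradov's mean value theorem (`vmvt`). It is
obtained from `ℓ²` decoupling for the moment curve over `ℤ_p` at one fixed prime `p > K`, in the style
of nested efficient congruencing: an exponential sum is split into residue classes modulo powers of
`p`, each class is carried back to the whole curve by an affine change of variables, and the bilinear
expressions built from two separated classes of different depths satisfy a recursive inequality
(`St_step`) whose iteration forces the decoupling exponent to vanish (`DecExp_all`). Degrees absent
from the system are supplied by summing over the values they may take (`count_incomplete`), and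
orthogonality turns these counts into mean values over the torus.

**Weyl's inequality.** The mean value theorem in degree `K - 1`, combined with the large sieve, shows
that a one-variable sum exceeding `P ^ (1 - τ)` in size has its coefficients simultaneously close to
fractions with a small common denominator (`weyl`, `major_one`, `major`). Near such fractions the sum
is a complete exponential sum times an oscillatory integral (`approx`), and the integral decays by
van der Corput's lemma (`vdc`, `oint_decay`).

**The asymptotic formula.** Off the major arcs one variable contributes the factor `P ^ (1 - τ)`, and
the remaining `K (K + 1)` or more variables are controlled by the mean value theorem (`minor_arcs`). On
the major arcs the generating function factors into terms of the singular series and the singular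
integral (`major_arcs`). The singular series converges absolutely because the normalised complete sums
obey both a pointwise bound (`Ts_bound`) and a moment bound inherited from the mean value theorem
(`moment`, `series`); for the singular integral the decay of the oscillatory integrals is enough
(`sing_integral`). Together these give `asymp`.

**Positivity.** Near a nonsingular zero over a complete field some `n` of the variables can be replaced
by the values of the forms (`local_coord`). Over `ℝ` this bounds from below the volume of the region
where all the forms are small, and inserting Gaussian weights into the singular integral shows that it
is positive (`singInt_pos`). For the series, the sum over the divisors of `q` is the normalised number
`sdens` of solutions modulo `q` (`sum_divisors`), which is multiplicative in `q`. At each prime it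
stays away from zero along prime powers (`dens_prime_pow`), and absolute convergence controls the
product over the large primes (`dens_lower`, `singSer_pos`).
-/

open MeasureTheory Finset

noncomputable def e (θ : ℝ) : ℂ := Complex.exp (2 * Real.pi * Complex.I * θ)

/-- The diagonal form `F_i(t) = ∑_j u_{i,j} t_j^{k_i}` over a commutative ring. -/
noncomputable def dF {R : Type*} [CommRing R] {n s : ℕ} (k : Fin n → ℕ)
    (u : Fin n → Fin s → ℤ) (i : Fin n) (t : Fin s → R) : R :=
  ∑ j, (u i j : R) * t j ^ k i

noncomputable def NF {n s : ℕ} (k : Fin n → ℕ) (u : Fin n → Fin s → ℤ) (X : ℝ) : ℕ :=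
  Nat.card {x : Fin s → ℤ | (∀ j, |(x j : ℝ)| ≤ X) ∧ ∀ i, dF k u i x = 0}

noncomputable def singIntInner {n s : ℕ} (k : Fin n → ℕ) (u : Fin n → Fin s → ℤ)
    (β : Fin n → ℝ) : ℂ :=
  ∫ t in Set.Icc (fun _ : Fin s => (-1 : ℝ)) (fun _ => 1),
    e (∑ i, β i * dF k u i t)

noncomputable def singInt {n s : ℕ} (k : Fin n → ℕ) (u : Fin n → Fin s → ℤ) : ℂ :=
  ∫ β : Fin n → ℝ, singIntInner k u β

noncomputable def singSerTerm {n s : ℕ} (k : Fin n → ℕ) (u : Fin n → Fin s → ℤ)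
    (q : ℕ) : ℂ :=
  (1 / (q : ℂ) ^ s) *
    ∑ a ∈ (Fintype.piFinset fun _ : Fin n => Finset.Icc 1 q).filter
        (fun a => Nat.gcd (Finset.univ.gcd a) q = 1),
      ∑ r ∈ Fintype.piFinset fun _ : Fin s => Finset.Icc 1 q,
        e ((∑ i, (a i : ℝ) * ((dF k u i fun j => ((r j : ℤ))) : ℝ)) / q)

noncomputable def singSer {n s : ℕ} (k : Fin n → ℕ) (u : Fin n → Fin s → ℤ) : ℂ :=
  ∑' q : ℕ, singSerTerm k u (q + 1)

/-- A nonsingular solution of the system `F = 0` over a field `K`. -/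
def NonsingularSol {K : Type*} [Field K] {n s : ℕ} (k : Fin n → ℕ)
    (u : Fin n → Fin s → ℤ) (η : Fin s → K) : Prop :=
  (∀ i, dF k u i η = 0) ∧
    (Matrix.of fun i j => (k i : K) * (u i j : K) * η j ^ (k i - 1)).rank = n

open Real (rpow_natCast rpow_le_rpow_of_exponent_le rpow_add rpow_mul rpow_one
  mul_rpow rpow_nonneg rpow_neg rpow_mul_natCast rpow_le_rpow)
open Filter (atTop Eventually Tendsto)
open Complex (I)

lemma e_add (x y : ℝ) : e (x + y) = e x * e y := by
  unfold e; rw [← Complex.exp_add]; congr 1; push_cast; ring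

lemma e_zero : e 0 = 1 := by simp [e]

lemma norm_e (x : ℝ) : ‖e x‖ = 1 := by
  unfold e
  have : (2 * Real.pi * I * x : ℂ) = ((2 * Real.pi * x : ℝ) : ℂ) * I := by
    push_cast; ring
  rw [this, Complex.norm_exp_ofReal_mul_I]

lemma e_int (m : ℤ) : e m = 1 := by
  unfold e
  have := Complex.exp_int_mul_two_pi_mul_I m
  rw [← this]; congr 1; push_cast; ring

lemma e_neg (x : ℝ) : e (-x) = (starRingEnd ℂ) (e x) := by
  unfold e
  rw [← Complex.exp_conj]; congr 1; simp [Complex.conj_ofNat]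

lemma e_sum {ι : Type*} (S : Finset ι) (f : ι → ℝ) : e (∑ i ∈ S, f i) = ∏ i ∈ S, e (f i) := by
  classical
  induction S using Finset.induction_on with
  | empty => simp [e_zero]
  | insert a S ha ih => rw [sum_insert ha, prod_insert ha, e_add, ih]

lemma e_add_int (x : ℝ) (m : ℤ) : e (x + m) = e x := by rw [e_add, e_int, mul_one]

lemma continuous_e : Continuous e := by unfold e; fun_prop

/-! ### Weighted power means and class sums -/

/-- The square `(∑ W |f|^q)^(2/q)` of the weighted `ℓ^q` norm. -/
noncomputable def sqn {Ω : Type*} [Fintype Ω] (W : Ω → ℝ) (q : ℕ) (f : Ω → ℂ) : ℝ :=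
  (∑ ω, W ω * ‖f ω‖ ^ q) ^ ((2 : ℝ) / q)

lemma sqn_nonneg {Ω : Type*} [Fintype Ω] {W : Ω → ℝ} (hW : ∀ ω, 0 ≤ W ω) (q : ℕ) (f : Ω → ℂ) :
    0 ≤ sqn W q f :=
  rpow_nonneg (sum_nonneg fun ω _ => mul_nonneg (hW ω) (by positivity)) _

lemma sqn_pow {Ω : Type*} [Fintype Ω] {W : Ω → ℝ} (hW : ∀ ω, 0 ≤ W ω) {d : ℕ} (hd : d ≠ 0)
    (f : Ω → ℂ) : sqn W (2 * d) f ^ d = ∑ ω, W ω * ‖f ω‖ ^ (2 * d) := by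
  unfold sqn
  have h0 : 0 ≤ ∑ ω, W ω * ‖f ω‖ ^ (2 * d) :=
    sum_nonneg fun ω _ => mul_nonneg (hW ω) (by positivity)
  rw [← rpow_natCast, ← rpow_mul h0]
  have : (2 : ℝ) / ((2 * d : ℕ) : ℝ) * (d : ℝ) = 1 := by
    push_cast; field_simp
  rw [this, rpow_one]

/-- Minkowski's inequality for finitely many nonnegative functions, with weights. -/
lemma minkowski_weighted {Ω ι : Type*} [Fintype Ω] {W : Ω → ℝ} (hW : ∀ ω, 0 ≤ W ω) {d : ℕ}
    (hd : 1 ≤ d) (s : Finset ι) (x : ι → Ω → ℝ) (hx : ∀ i ω, 0 ≤ x i ω) :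
    (∑ ω, W ω * (∑ i ∈ s, x i ω) ^ d) ^ ((1 : ℝ) / d) ≤
      ∑ i ∈ s, (∑ ω, W ω * x i ω ^ d) ^ ((1 : ℝ) / d) := by
  classical
  have hd0 : (d : ℝ) ≠ 0 := by positivity
  have hd1 : (1 : ℝ) ≤ d := by exact_mod_cast hd
  have key : ∀ y : Ω → ℝ, (∀ ω, 0 ≤ y ω) → ∑ ω, W ω * y ω ^ d =
      ∑ ω, (W ω ^ ((1 : ℝ) / d) * y ω) ^ (d : ℝ) := by
    intro y hy
    refine sum_congr rfl fun ω _ => ?_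
    rw [mul_rpow (rpow_nonneg (hW ω) _) (hy ω), ← rpow_mul (hW ω),
      one_div_mul_cancel hd0, rpow_one, rpow_natCast]
  induction s using Finset.induction_on with
  | empty =>
    have : d ≠ 0 := by omega
    simp [this, Real.zero_rpow]
  | insert a s ha ih =>
    rw [sum_insert ha]
    refine le_trans ?_ (add_le_add le_rfl ih)
    rw [key _ (fun ω => sum_nonneg fun i _ => hx i ω), key _ (hx a),
      key _ (fun ω => sum_nonneg fun i _ => hx i ω)]
    have := Real.Lp_add_le_of_nonneg (s := (univ : Finset Ω)) hd1
      (f := fun ω => W ω ^ ((1 : ℝ) / d) * x a ω)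
      (g := fun ω => W ω ^ ((1 : ℝ) / d) * ∑ i ∈ s, x i ω)
      (fun ω _ => mul_nonneg (rpow_nonneg (hW ω) _) (hx a ω))
      (fun ω _ => mul_nonneg (rpow_nonneg (hW ω) _)
        (sum_nonneg fun i _ => hx i ω))
    refine le_trans (le_of_eq ?_) this
    congr 1
    refine sum_congr rfl fun ω _ => ?_
    rw [sum_insert ha]; congr 1; ring

/-- The sum of `Q` over the fibres of `κ` on `S`. -/
def clsSum {τ : Type*} [DecidableEq τ] (κ : ℤ → τ) (Q : Finset ℤ → ℝ) (S : Finset ℤ) : ℝ :=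
  ∑ c ∈ S.image κ, Q (S.filter fun n => κ n = c)

lemma clsSum_nonneg {τ : Type*} [DecidableEq τ] (κ : ℤ → τ) {Q : Finset ℤ → ℝ}
    (hQ : ∀ S, 0 ≤ Q S) (S : Finset ℤ) : 0 ≤ clsSum κ Q S :=
  sum_nonneg fun _ _ => hQ _

/-- A class sum depends only on the partition of `S` into fibres. -/
lemma clsSum_congr {τ τ' : Type*} [DecidableEq τ] [DecidableEq τ'] (κ : ℤ → τ) (κ' : ℤ → τ')
    (Q : Finset ℤ → ℝ) (S : Finset ℤ)
    (h : ∀ n ∈ S, ∀ n' ∈ S, (κ n = κ n' ↔ κ' n = κ' n')) : clsSum κ Q S = clsSum κ' Q S := by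
  classical
  unfold clsSum
  have hex : ∀ c ∈ S.image κ, ∃ n ∈ S, κ n = c := fun c hc => by simpa using hc
  choose! g hg1 hg2 using hex
  refine sum_bij (fun c _ => κ' (g c)) ?_ ?_ ?_ ?_
  · intro c hc; exact mem_image_of_mem _ (hg1 c hc)
  · intro c hc c' hc' heq
    rw [← hg2 c hc, ← hg2 c' hc']
    exact (h _ (hg1 c hc) _ (hg1 c' hc')).2 heq
  · intro c' hc'
    obtain ⟨n, hn, rfl⟩ := mem_image.1 hc'
    have hc : κ n ∈ S.image κ := mem_image_of_mem _ hn
    exact ⟨κ n, hc, (h _ (hg1 _ hc) _ hn).1 (hg2 _ hc)⟩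
  · intro c hc
    congr 1
    ext n
    simp only [mem_filter, and_congr_right_iff]
    intro hn
    conv_lhs => rw [← hg2 c hc]
    exact h n hn _ (hg1 c hc)

/-- Class sums over a finer partition can be computed class by class. -/
lemma clsSum_fiber {τ τ' : Type*} [DecidableEq τ] [DecidableEq τ'] (κ : ℤ → τ) (κ' : ℤ → τ')
    (Q : Finset ℤ → ℝ) (S : Finset ℤ) (h : ∀ n ∈ S, ∀ n' ∈ S, κ' n = κ' n' → κ n = κ n') :
    clsSum κ (clsSum κ' Q) S = clsSum κ' Q S := by
  classical
  unfold clsSum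
  have hex : ∀ c ∈ S.image κ', ∃ n ∈ S, κ' n = c := fun c hc => by simpa using hc
  choose! g hg1 hg2 using hex
  rw [← sum_fiberwise_of_maps_to (s := S.image κ') (t := S.image κ)
    (g := fun c => κ (g c)) (fun c hc => mem_image_of_mem _ (hg1 c hc))]
  refine sum_congr rfl fun c _ => ?_
  have himg : (S.filter fun n => κ n = c).image κ' = (S.image κ').filter fun c' => κ (g c') = c := by
    ext c'
    simp only [mem_image, mem_filter]
    constructor
    · rintro ⟨n, ⟨hn, hc⟩, rfl⟩
      refine ⟨⟨n, hn, rfl⟩, ?_⟩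
      have hm : κ' n ∈ S.image κ' := mem_image_of_mem _ hn
      rw [← hc]; exact h _ (hg1 _ hm) _ hn (hg2 _ hm)
    · rintro ⟨⟨n, hn, rfl⟩, hc⟩
      have hm : κ' n ∈ S.image κ' := mem_image_of_mem _ hn
      refine ⟨n, ⟨hn, ?_⟩, rfl⟩
      rw [← hc]; exact (h _ (hg1 _ hm) _ hn (hg2 _ hm)).symm
  rw [himg]
  refine sum_congr rfl fun c' hc' => ?_
  congr 1
  ext n
  simp only [mem_filter] at hc' ⊢
  constructor
  · rintro ⟨⟨a, _⟩, b⟩; exact ⟨a, b⟩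
  · rintro ⟨a, b⟩
    refine ⟨⟨a, ?_⟩, b⟩
    rw [← hc'.2]
    exact h _ a _ (hg1 _ hc'.1) (b.trans (hg2 _ hc'.1).symm)

lemma clsSum_mono {τ : Type*} [DecidableEq τ] (κ : ℤ → τ) {Q Q' : Finset ℤ → ℝ}
    (S : Finset ℤ) (h : ∀ c ∈ S.image κ, Q (S.filter fun n => κ n = c) ≤
      Q' (S.filter fun n => κ n = c)) : clsSum κ Q S ≤ clsSum κ Q' S :=
  sum_le_sum h

lemma sum_clsSum {τ : Type*} [DecidableEq τ] (κ : ℤ → τ) {E : Type*} [AddCommMonoid E]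
    (g : ℤ → E) (S : Finset ℤ) :
    ∑ c ∈ S.image κ, ∑ n ∈ S.filter (fun n => κ n = c), g n = ∑ n ∈ S, g n :=
  sum_fiberwise_of_maps_to (fun _ hn => mem_image_of_mem _ hn) _

/-! ### Decoupling constants -/

/-- The triangular number `k(k+1)/2`. -/
def tri (k : ℕ) : ℕ := k * (k + 1) / 2

lemma two_mul_tri (k : ℕ) : 2 * tri k = k * (k + 1) :=
  Nat.mul_div_cancel' (even_iff_two_dvd.1 (Nat.even_mul_succ_self k))

lemma tri_pos {k : ℕ} (hk : 1 ≤ k) : 1 ≤ tri k := by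
  have := two_mul_tri k; nlinarith

/-- The class of integral polynomial curves congruent to the moment curve `(x, x², …, x^k)`
coefficientwise modulo `p`. -/
def InC (p : ℕ) {k : ℕ} (φ : Fin k → Polynomial ℤ) : Prop :=
  ∀ (j : Fin k) (i : ℕ), (p : ℤ) ∣ (φ j).coeff i - (if i = j.val + 1 then 1 else 0)

/-- The additive character `x ↦ e(α·φ(x)/N)`. -/
noncomputable def ph {k : ℕ} (N : ℕ) [NeZero N] (φ : Fin k → Polynomial ℤ) (α : Fin k → ZMod N)
    (x : ℤ) : ℂ :=
  ZMod.stdAddChar (∑ j, α j * (((φ j).eval x : ℤ) : ZMod N))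

instance neZero_prime_pow (p M : ℕ) [hp : Fact p.Prime] : NeZero (p ^ M) :=
  ⟨pow_ne_zero _ hp.out.ne_zero⟩

lemma norm_stdAddChar {N : ℕ} [NeZero N] (x : ZMod N) : ‖(ZMod.stdAddChar x : ℂ)‖ = 1 :=
  AddChar.norm_apply _ _

/-- `Δ` is an admissible (squared) constant for `ℓ²` decoupling of curves of class `InC p`
into residue classes modulo `p^h`, at the critical exponent `k(k+1)`. The argument of the curve
is `m n`, an arbitrary function of the summation index. -/
def Dec (p k h : ℕ) [Fact p.Prime] (Δ : ℝ) : Prop :=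
  ∀ φ : Fin k → Polynomial ℤ, InC p φ → ∀ (S : Finset ℤ) (b : ℤ → ℂ) (m : ℤ → ℤ),
    sqn (fun _ => 1) (2 * tri k) (fun α => ∑ n ∈ S, b n * ph (p ^ (k * h)) φ α (m n)) ≤
      Δ * clsSum (fun n => ((m n : ℤ) : ZMod (p ^ h)))
        (fun A => sqn (fun _ => 1) (2 * tri k)
          (fun α => ∑ n ∈ A, b n * ph (p ^ (k * h)) φ α (m n))) S

/-- Decoupling at the finest resolution transfers to any finite space with an invariant weight on
which the characters are acted on by the corresponding group: average over the group and apply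
Minkowski's inequality. -/
lemma Dec.localize {p l h : ℕ} [Fact p.Prime] {Δ : ℝ} (hΔ : 0 ≤ Δ) (hD : Dec p l h Δ) (hl : 1 ≤ l)
    {ψ : Fin l → Polynomial ℤ} (hψ : InC p ψ) {Ω : Type*} [Fintype Ω] {W : Ω → ℝ}
    (hW : ∀ ω, 0 ≤ W ω) (T : (Fin l → ZMod (p ^ (l * h))) → (Ω ≃ Ω))
    (hT : ∀ β ω, W (T β ω) = W ω) (S : Finset ℤ) (g : ℤ → Ω → ℂ) (m : ℤ → ℤ)
    (hg : ∀ β, ∃ c : Ω → ℂ, (∀ ω, ‖c ω‖ = 1) ∧ ∀ ω, ∀ n ∈ S,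
      g n (T β ω) = c ω * (g n ω * ph (p ^ (l * h)) ψ β (m n))) :
    sqn W (2 * tri l) (fun ω => ∑ n ∈ S, g n ω) ≤
      Δ * clsSum (fun n => ((m n : ℤ) : ZMod (p ^ h)))
        (fun A => sqn W (2 * tri l) (fun ω => ∑ n ∈ A, g n ω)) S := by
  classical
  set d := tri l with hd
  have hd1 : 1 ≤ d := tri_pos hl
  have hd0 : d ≠ 0 := by omega
  have hdR : (d : ℝ) ≠ 0 := by exact_mod_cast hd0
  set κ : ℤ → ZMod (p ^ h) := fun n => ((m n : ℤ) : ZMod (p ^ h)) with hκ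
  have hcard : (0 : ℝ) < Fintype.card (Fin l → ZMod (p ^ (l * h))) := by exact_mod_cast Fintype.card_pos
  -- averaging over the group does not change weighted power sums
  have avg : ∀ A ⊆ S, ∑ ω, W ω * ∑ β : Fin l → ZMod (p ^ (l * h)), ‖∑ n ∈ A, g n ω * ph (p ^ (l * h)) ψ β (m n)‖ ^ (2 * d) =
      (Fintype.card (Fin l → ZMod (p ^ (l * h))) : ℝ) * ∑ ω, W ω * ‖∑ n ∈ A, g n ω‖ ^ (2 * d) := by
    intro A hA
    simp_rw [mul_sum]
    rw [sum_comm]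
    have : ∀ β : Fin l → ZMod (p ^ (l * h)), ∑ ω, W ω * ‖∑ n ∈ A, g n ω * ph (p ^ (l * h)) ψ β (m n)‖ ^ (2 * d) =
        ∑ ω, W ω * ‖∑ n ∈ A, g n ω‖ ^ (2 * d) := by
      intro β
      obtain ⟨c, hc, hcg⟩ := hg β
      rw [← Equiv.sum_comp (T β) (fun ω => W ω * ‖∑ n ∈ A, g n ω‖ ^ (2 * d))]
      refine sum_congr rfl fun ω _ => ?_
      rw [hT, sum_congr rfl (fun n hn => hcg ω n (hA hn)), ← mul_sum, norm_mul, hc,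
        one_mul]
    rw [sum_congr rfl (fun β _ => this β)]
    simp [mul_sum]
  set Y : ZMod (p ^ h) → Ω → ℝ := fun c ω => sqn (fun _ : Fin l → ZMod (p ^ (l * h)) => 1) (2 * d)
    (fun β => ∑ n ∈ S.filter (fun n => κ n = c), g n ω * ph (p ^ (l * h)) ψ β (m n)) with hY
  have hY0 : ∀ c ω, 0 ≤ Y c ω := fun c ω => sqn_nonneg (fun _ => zero_le_one) _ _
  have hpt : ∀ ω, ∑ β : Fin l → ZMod (p ^ (l * h)), ‖∑ n ∈ S, g n ω * ph (p ^ (l * h)) ψ β (m n)‖ ^ (2 * d) ≤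
      (Δ * ∑ c ∈ S.image κ, Y c ω) ^ d := by
    intro ω
    have h1 := hD ψ hψ S (fun n => g n ω) m
    have h2 := sqn_pow (W := fun _ : Fin l → ZMod (p ^ (l * h)) => (1 : ℝ)) (fun _ => zero_le_one) hd0
      (fun β => ∑ n ∈ S, g n ω * ph (p ^ (l * h)) ψ β (m n))
    simp only [one_mul] at h2
    rw [← h2]
    exact pow_le_pow_left₀ (sqn_nonneg (fun _ => zero_le_one) _ _) h1 d
  have hX0 : 0 ≤ ∑ ω, W ω * ‖∑ n ∈ S, g n ω‖ ^ (2 * d) :=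
    sum_nonneg fun ω _ => mul_nonneg (hW ω) (by positivity)
  have h3 : (Fintype.card (Fin l → ZMod (p ^ (l * h))) : ℝ) * ∑ ω, W ω * ‖∑ n ∈ S, g n ω‖ ^ (2 * d) ≤
      Δ ^ d * ∑ ω, W ω * (∑ c ∈ S.image κ, Y c ω) ^ d := by
    rw [← avg S subset_rfl, mul_sum]
    refine sum_le_sum fun ω _ => ?_
    calc _ ≤ W ω * (Δ * ∑ c ∈ S.image κ, Y c ω) ^ d := mul_le_mul_of_nonneg_left (hpt ω) (hW ω)
      _ = _ := by rw [mul_pow]; ring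
  have h4 := minkowski_weighted hW hd1 (S.image κ) Y hY0
  have h5 : ∀ c, (∑ ω, W ω * Y c ω ^ d) =
      (Fintype.card (Fin l → ZMod (p ^ (l * h))) : ℝ) * ∑ ω, W ω * ‖∑ n ∈ S.filter (fun n => κ n = c), g n ω‖ ^ (2 * d) := by
    intro c
    rw [← avg _ (filter_subset _ _)]
    refine sum_congr rfl fun ω _ => ?_
    have h2 := sqn_pow (W := fun _ : Fin l → ZMod (p ^ (l * h)) => (1 : ℝ)) (fun _ => zero_le_one) hd0
      (fun β => ∑ n ∈ S.filter (fun n => κ n = c), g n ω * ph (p ^ (l * h)) ψ β (m n))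
    simp only [one_mul] at h2
    rw [← h2]
  have hexp : (2 : ℝ) / ((2 * d : ℕ) : ℝ) = 1 / d := by push_cast; field_simp
  have h6 : ((Fintype.card (Fin l → ZMod (p ^ (l * h))) : ℝ) * ∑ ω, W ω * ‖∑ n ∈ S, g n ω‖ ^ (2 * d)) ^ ((1 : ℝ) / d) ≤
      Δ * ∑ c ∈ S.image κ, ((Fintype.card (Fin l → ZMod (p ^ (l * h))) : ℝ) *
        ∑ ω, W ω * ‖∑ n ∈ S.filter (fun n => κ n = c), g n ω‖ ^ (2 * d)) ^ ((1 : ℝ) / d) := by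
    simp_rw [← h5]
    refine le_trans (rpow_le_rpow (by positivity) h3 (by positivity)) ?_
    rw [mul_rpow (by positivity) (sum_nonneg fun ω _ => mul_nonneg (hW ω)
      (pow_nonneg (sum_nonneg fun c _ => hY0 c ω) _)), ← rpow_natCast,
      ← rpow_mul hΔ, mul_one_div_cancel hdR, rpow_one]
    exact mul_le_mul_of_nonneg_left h4 hΔ
  have hC : (0 : ℝ) < (Fintype.card (Fin l → ZMod (p ^ (l * h))) : ℝ) ^ ((1 : ℝ) / d) := Real.rpow_pos_of_pos hcard _
  unfold clsSum sqn
  rw [hexp]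
  rw [mul_rpow hcard.le hX0] at h6
  have h7 : ∀ c, ((Fintype.card (Fin l → ZMod (p ^ (l * h))) : ℝ) *
        ∑ ω, W ω * ‖∑ n ∈ S.filter (fun n => κ n = c), g n ω‖ ^ (2 * d)) ^ ((1 : ℝ) / d) =
      (Fintype.card (Fin l → ZMod (p ^ (l * h))) : ℝ) ^ ((1 : ℝ) / d) *
        (∑ ω, W ω * ‖∑ n ∈ S.filter (fun n => κ n = c), g n ω‖ ^ (2 * d)) ^ ((1 : ℝ) / d) :=
    fun c => mul_rpow hcard.le
      (sum_nonneg fun ω _ => mul_nonneg (hW ω) (by positivity))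
  simp_rw [h7, ← mul_sum] at h6
  rw [mul_left_comm] at h6
  exact le_of_mul_le_mul_left h6 hC

/-! ### Normalisation of curves at a residue class -/

open Polynomial in
/-- The matrix of Taylor coefficients at `r` of a curve congruent to `(x^(m+1), …, x^(m+l))`
modulo `p` is invertible modulo `p`: a left kernel vector yields a polynomial whose derivative
is divisible by `(x-r)^l x^m`, which exceeds its degree. -/
lemma taylor_det_ne_zero {p : ℕ} [Fact p.Prime] {l m : ℕ} (hml : m + l < p) (r : ZMod p)
    (hr : m = 0 ∨ r ≠ 0) :
    (Matrix.of fun (j i : Fin l) =>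
      (taylor r (X ^ (m + j.val + 1) : (ZMod p)[X])).coeff (i.val + 1)).det ≠ 0 := by
  intro hdet
  obtain ⟨v, hv0, hv⟩ := Matrix.exists_vecMul_eq_zero_iff.2 hdet
  apply hv0
  set G : (ZMod p)[X] := ∑ j : Fin l, C (v j) * X ^ (m + j.val + 1) with hG
  set H : (ZMod p)[X] := ∑ j : Fin l, C (v j * ((m + j.val + 1 : ℕ) : ZMod p)) * X ^ j.val with hH
  have hcoef : ∀ i < l, (taylor r G).coeff (i + 1) = 0 := by
    intro i hi
    have := congrFun hv ⟨i, hi⟩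
    simp only [Matrix.vecMul, dotProduct, Matrix.of_apply, Pi.zero_apply] at this
    rw [← this, hG, map_sum, finsetSum_coeff]
    refine sum_congr rfl fun j _ => ?_
    rw [taylor_mul, taylor_C, coeff_C_mul]
  have hdvd : (X - C r) ^ (l + 1) ∣ G - C (G.eval r) := by
    rw [X_sub_C_pow_dvd_iff, X_pow_dvd_iff]
    intro d hd
    rw [sub_comp, C_comp, coeff_sub, coeff_C]
    rcases d with _ | d
    · have : (G.comp (X + C r)).coeff 0 = G.eval r := by
        rw [coeff_zero_eq_eval_zero, eval_comp]; simp
      simp [this]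
    · have := hcoef d (by omega)
      rw [taylor_apply] at this
      simp [this]
  have hder : derivative G = X ^ m * H := by
    rw [hG, hH, derivative_sum, mul_sum]
    refine sum_congr rfl fun j _ => ?_
    rw [derivative_C_mul_X_pow]
    simp only [Nat.add_sub_cancel]
    rw [pow_add]; ring
  have h2 : (X - C r) ^ l ∣ X ^ m * H := by
    have := pow_sub_one_dvd_derivative_of_pow_dvd hdvd
    simpa [hder] using this
  have h3 : (X - C r) ^ l ∣ H := by
    rcases hr with rfl | hr
    · simpa using h2
    · refine IsCoprime.dvd_of_dvd_mul_left ?_ h2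
      apply IsCoprime.pow
      have : IsCoprime (X - C r) (X - C 0 : (ZMod p)[X]) :=
        isCoprime_X_sub_C_of_isUnit_sub (by simpa using hr)
      simpa using this
  have hcoefH : ∀ j : Fin l, H.coeff j.val = v j * ((m + j.val + 1 : ℕ) : ZMod p) := by
    intro j
    rw [hH, finsetSum_coeff, sum_eq_single j]
    · rw [coeff_C_mul, coeff_X_pow_self, mul_one]
    · intro b _ hb
      rw [coeff_C_mul, coeff_X_pow, if_neg (fun h => hb (Fin.ext h.symm)), mul_zero]
    · simp
  have h4 : H = 0 := by
    by_contra hne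
    have h5 := natDegree_le_of_dvd h3 hne
    rw [natDegree_pow, natDegree_X_sub_C, mul_one] at h5
    rcases Nat.eq_zero_or_pos l with h0 | hl
    · subst h0; exact hne (by simp [hH])
    have h6 : H.degree < l := by
      rw [hH]
      refine lt_of_le_of_lt (degree_sum_le _ _) ?_
      refine (Finset.sup_lt_iff (by exact WithBot.bot_lt_coe l)).2 fun j _ => ?_
      refine lt_of_le_of_lt (degree_C_mul_X_pow_le _ _) ?_
      exact_mod_cast j.2
    have h7 : H.natDegree < l := (natDegree_lt_iff_degree_lt hne).2 h6
    omega
  funext j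
  have h5 := hcoefH j
  rw [h4, coeff_zero] at h5
  rcases mul_eq_zero.1 h5.symm with h | h
  · simpa using h
  · exfalso
    rw [ZMod.natCast_eq_zero_iff] at h
    have := Nat.le_of_dvd (by omega) h
    have := j.2
    omega

open Polynomial in
/-- Near a residue `r0` a curve congruent to `(x^(m+1), …, x^(m+l))` modulo `p` is, up to a linear
change of coordinates `A'` and anisotropic scaling, again congruent to the moment curve. -/
lemma normalize_curve {p : ℕ} [Fact p.Prime] {l m : ℕ} (hml : m + l < p) (Χ : Fin l → ℤ[X])
    (hΧ : ∀ (j : Fin l) (i : ℕ), (p : ℤ) ∣ (Χ j).coeff i - (if i = m + j.val + 1 then 1 else 0))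
    (r0 : ℤ) (a : ℕ) (h : m = 0 ∨ (¬ (p : ℤ) ∣ r0 ∧ 1 ≤ a)) :
    ∃ (A' : Fin l → Fin l → ℤ) (ψ : Fin l → ℤ[X]), InC p ψ ∧
      (∀ (i : Fin l) (d : ℕ), d ≤ i.val → (ψ i).coeff d = 0) ∧
      ∀ (i : Fin l) (x : ℤ), ∑ j, A' i j * ((Χ j).eval (r0 + p ^ a * x) - (Χ j).eval r0) =
        p ^ (a * (i.val + 1)) * (ψ i).eval x := by
  classical
  set A : Matrix (Fin l) (Fin l) ℤ := Matrix.of fun j i => (taylor r0 (Χ j)).coeff (i.val + 1)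
    with hA
  have hred : ∀ j : Fin l, (Χ j).map (Int.castRingHom (ZMod p)) = X ^ (m + j.val + 1) := by
    intro j
    ext i
    rw [coeff_map, coeff_X_pow]
    have := hΧ j i
    rw [← ZMod.intCast_zmod_eq_zero_iff_dvd] at this
    push_cast at this
    rw [sub_eq_zero] at this
    simpa using this
  have hredT : ∀ (j : Fin l) (i : ℕ), (((taylor r0 (Χ j)).coeff i : ℤ) : ZMod p) =
      (taylor (r0 : ZMod p) (X ^ (m + j.val + 1) : (ZMod p)[X])).coeff i := by
    intro j i
    have h1 := coeff_map (Int.castRingHom (ZMod p)) (p := taylor r0 (Χ j)) i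
    rw [map_taylor, hred] at h1
    simpa using h1.symm
  have hdet : ((A.det : ℤ) : ZMod p) ≠ 0 := by
    have h1 := taylor_det_ne_zero (p := p) (l := l) (m := m) hml (r0 : ZMod p) (by
      rcases h with h | h
      · exact Or.inl h
      · right; rw [Ne, ZMod.intCast_zmod_eq_zero_iff_dvd]; exact h.1)
    have h2 : ((A.det : ℤ) : ZMod p) = (A.map (Int.castRingHom (ZMod p))).det := by
      have := RingHom.map_det (Int.castRingHom (ZMod p)) A
      simpa using this
    rw [h2]
    convert h1 using 2
    ext j i
    simp [hA, hredT]
  obtain ⟨dinv, hdinv⟩ : ∃ d' : ℤ, (p : ℤ) ∣ d' * A.det - 1 := by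
    obtain ⟨d', hd'⟩ := ZMod.intCast_surjective ((A.det : ZMod p)⁻¹)
    refine ⟨d', ?_⟩
    rw [← ZMod.intCast_zmod_eq_zero_iff_dvd]
    rw [Int.cast_sub, Int.cast_mul, hd', inv_mul_cancel₀ hdet, Int.cast_one, sub_self]
  set A' : Matrix (Fin l) (Fin l) ℤ := dinv • A.adjugate with hA'
  have hAA : A' * A = (dinv * A.det) • (1 : Matrix (Fin l) (Fin l) ℤ) := by
    rw [hA', Matrix.smul_mul, Matrix.adjugate_mul, smul_smul]
  set Θ : Fin l → ℤ[X] := fun i => ∑ j, C (A' i j) * taylor r0 (Χ j) with hΘ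
  have hΘc : ∀ (i : Fin l) (d : ℕ), (Θ i).coeff d = ∑ j, A' i j * (taylor r0 (Χ j)).coeff d := by
    intro i d
    rw [hΘ]; simp only [finsetSum_coeff, coeff_C_mul]
  have hΘl : ∀ (i i' : Fin l), (Θ i).coeff (i'.val + 1) = if i = i' then dinv * A.det else 0 := by
    intro i i'
    have := congrFun (congrFun hAA i) i'
    rw [Matrix.mul_apply] at this
    rw [hΘc]
    simpa [hA, Matrix.one_apply] using this
  set ψ : Fin l → ℤ[X] := fun i => ∑ d ∈ range ((Θ i).natDegree + 1),
    if d ≤ i.val then 0 else C ((Θ i).coeff d * p ^ (a * (d - i.val - 1))) * X ^ d with hψ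
  have hψc : ∀ (i : Fin l) (d : ℕ), (ψ i).coeff d =
      if d ≤ i.val then 0 else (Θ i).coeff d * p ^ (a * (d - i.val - 1)) := by
    intro i d
    rw [hψ]
    simp only [finsetSum_coeff]
    by_cases hd : d < (Θ i).natDegree + 1
    · rw [sum_eq_single_of_mem d (mem_range.2 hd)]
      · split_ifs with h
        · simp
        · rw [coeff_C_mul, coeff_X_pow_self, mul_one]
      · intro d' _ hne
        split_ifs with h
        · simp
        · rw [coeff_C_mul, coeff_X_pow, if_neg (Ne.symm hne), mul_zero]
    · have hz : (Θ i).coeff d = 0 := coeff_eq_zero_of_natDegree_lt (by omega)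
      rw [hz, zero_mul, ite_self]
      refine sum_eq_zero fun d' hd' => ?_
      have := mem_range.1 hd'
      split_ifs with h
      · simp
      · rw [coeff_C_mul, coeff_X_pow, if_neg (by omega), mul_zero]
  refine ⟨A', ψ, ?_, fun i d hd => by rw [hψc, if_pos hd], ?_⟩
  · intro i d
    rw [hψc]
    by_cases h1 : d ≤ i.val
    · rw [if_pos h1, if_neg (by omega)]; simp
    rw [if_neg h1]
    by_cases h2 : d = i.val + 1
    · subst h2
      rw [if_pos rfl, hΘl i i, if_pos rfl]
      simpa using hdinv
    rw [if_neg h2, sub_zero]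
    by_cases h3 : d ≤ l
    · have := hΘl i ⟨d - 1, by omega⟩
      rw [if_neg (by intro h; have := congrArg Fin.val h; simp at this; omega)] at this
      simp only at this
      rw [show d - 1 + 1 = d by omega] at this
      rw [this]; simp
    rcases h with hm | ⟨_, ha⟩
    · apply Dvd.dvd.mul_right
      rw [hΘc]
      refine dvd_sum fun j _ => Dvd.dvd.mul_left ?_ _
      rw [← ZMod.intCast_zmod_eq_zero_iff_dvd, hredT]
      apply coeff_eq_zero_of_natDegree_lt
      rw [natDegree_taylor, natDegree_X_pow]
      have := j.2
      omega
    · apply Dvd.dvd.mul_left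
      refine dvd_pow_self _ ?_
      have : 1 ≤ d - i.val - 1 := by omega
      positivity
  · intro i x
    have h1 : ∀ y : ℤ, ∑ j, A' i j * (Χ j).eval (r0 + y) = (Θ i).eval y := by
      intro y
      rw [hΘ]
      simp only [eval_finsetSum, eval_mul, eval_C, taylor_eval]
      refine sum_congr rfl fun j _ => by rw [add_comm]
    have h2 : (Θ i).eval (p ^ a * x) = (Θ i).eval 0 + p ^ (a * (i.val + 1)) * (ψ i).eval x := by
      rw [eval_eq_sum_range, sum_range_succ', ← coeff_zero_eq_eval_zero]
      simp only [pow_zero, mul_one]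
      rw [add_comm, hψ]
      simp only [eval_finsetSum]
      rw [sum_range_succ']
      simp only [Nat.zero_le, if_true, eval_zero, add_zero]
      rw [mul_sum]
      congr 1
      refine sum_congr rfl fun d _ => ?_
      split_ifs with hd
      · have := hΘl i ⟨d, by omega⟩
        rw [if_neg (by intro h; have := congrArg Fin.val h; simp at this; omega)] at this
        simp only at this
        rw [this]; simp
      · simp only [eval_mul, eval_C, eval_pow, eval_X]
        have : a * (d + 1) = a * (i.val + 1) + a * (d + 1 - i.val - 1) := by
          rw [← mul_add]; congr 1; omega
        rw [mul_pow, ← pow_mul, this, pow_add]; ring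
    have h3 := h1 (p ^ a * x)
    have h4 := h1 0
    rw [add_zero] at h4
    simp_rw [mul_sub]
    rw [sum_sub_distrib, h3, h4, h2]; ring

/-! ### Rescaling -/

lemma stdAddChar_scale (p M M' : ℕ) [Fact p.Prime] (h : M' ≤ M) (x : ℤ) :
    (ZMod.stdAddChar (((p ^ (M - M') * x : ℤ)) : ZMod (p ^ M)) : ℂ) =
      ZMod.stdAddChar ((x : ℤ) : ZMod (p ^ M')) := by
  rw [ZMod.stdAddChar_coe, ZMod.stdAddChar_coe]
  congr 1
  have hp : (p : ℂ) ≠ 0 := by exact_mod_cast (Fact.out : p.Prime).ne_zero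
  push_cast
  have : (p : ℂ) ^ M = p ^ (M - M') * p ^ M' := by rw [← pow_add]; congr 1; omega
  rw [this]
  field_simp

/-- The exponential sum over `A`. -/
noncomputable def Fs {k : ℕ} (N : ℕ) [NeZero N] (φ : Fin k → Polynomial ℤ) (b : ℤ → ℂ) (m : ℤ → ℤ)
    (A : Finset ℤ) (α : Fin k → ZMod N) : ℂ :=
  ∑ n ∈ A, b n * ph N φ α (m n)

/-- The frequency shift attached to a matrix `V` and `β`. -/
noncomputable def shv {k l N N' : ℕ} (V : Fin l → Fin k → ℤ) (β : Fin l → ZMod N') (j : Fin k) :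
    ZMod N :=
  ((∑ i, (V i j) * ((β i).val : ℤ) : ℤ) : ZMod N)

lemma ph_shift {k l N N' : ℕ} [NeZero N] (φ : Fin k → Polynomial ℤ) (V : Fin l → Fin k → ℤ)
    (β : Fin l → ZMod N') (α : Fin k → ZMod N) (x : ℤ) :
    ph N φ (α + shv V β) x = ph N φ α x *
      ZMod.stdAddChar ((∑ i, ((β i).val : ℤ) * ∑ j, V i j * (φ j).eval x : ℤ) : ZMod N) := by
  unfold ph
  rw [← AddChar.map_add_eq_mul]
  congr 1
  simp only [Pi.add_apply, add_mul, sum_add_distrib]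
  congr 1
  unfold shv
  push_cast
  simp_rw [sum_mul, mul_sum]
  rw [sum_comm]
  refine sum_congr rfl fun i _ => sum_congr rfl fun j _ => by ring

/-- A shift along which the phases are constant modulo `N` changes the sum only by a unimodular
factor. -/
lemma norm_Fs_shift {k l N N' : ℕ} [NeZero N] (φ : Fin k → Polynomial ℤ) (b : ℤ → ℂ) (m : ℤ → ℤ)
    (B : Finset ℤ) (V : Fin l → Fin k → ℤ) (c : Fin l → ℤ)
    (hV : ∀ i, ∀ n ∈ B, (N : ℤ) ∣ ∑ j, V i j * (φ j).eval (m n) - c i)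
    (β : Fin l → ZMod N') (α : Fin k → ZMod N) :
    ‖Fs N φ b m B (α + shv V β)‖ = ‖Fs N φ b m B α‖ := by
  have : Fs N φ b m B (α + shv V β) =
      ZMod.stdAddChar ((∑ i, ((β i).val : ℤ) * c i : ℤ) : ZMod N) * Fs N φ b m B α := by
    unfold Fs
    rw [mul_sum]
    refine sum_congr rfl fun n hn => ?_
    rw [ph_shift]
    have : ((∑ i, ((β i).val : ℤ) * ∑ j, V i j * (φ j).eval (m n) : ℤ) : ZMod N) =
        ((∑ i, ((β i).val : ℤ) * c i : ℤ) : ZMod N) := by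
      rw [ZMod.intCast_eq_intCast_iff_dvd_sub, ← sum_sub_distrib]
      refine dvd_sum fun i _ => ?_
      rw [← mul_sub]
      apply Dvd.dvd.mul_left
      rw [← dvd_neg, neg_sub]; exact hV i n hn
    rw [this]; ring
  rw [this, norm_mul, norm_stdAddChar, one_mul]

/-- Decoupling along an `l`-parameter family of frequency shifts. -/
lemma Dec.rescale {p k l h' M : ℕ} [Fact p.Prime] {Δ : ℝ} (hΔ : 0 ≤ Δ) (hD : Dec p l h' Δ)
    (hl : 1 ≤ l) (hM : l * h' ≤ M) {φ : Fin k → Polynomial ℤ} {ψ : Fin l → Polynomial ℤ}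
    (hψ : InC p ψ) {W : (Fin k → ZMod (p ^ M)) → ℝ} (hW : ∀ α, 0 ≤ W α) (S : Finset ℤ)
    (b : ℤ → ℂ) (m m' : ℤ → ℤ) (V : Fin l → Fin k → ℤ) (c : Fin l → ℤ)
    (hV : ∀ i, ∀ n ∈ S, ∑ j, V i j * (φ j).eval (m n) =
      c i + p ^ (M - l * h') * (ψ i).eval (m' n))
    (hWV : ∀ (β : Fin l → ZMod (p ^ (l * h'))) α, W (α + shv V β) = W α) :
    sqn W (2 * tri l) (Fs (p ^ M) φ b m S) ≤
      Δ * clsSum (fun n => ((m' n : ℤ) : ZMod (p ^ h')))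
        (fun A => sqn W (2 * tri l) (Fs (p ^ M) φ b m A)) S := by
  refine Dec.localize hΔ hD hl hψ hW (fun β => Equiv.addRight (shv V β)) hWV S
    (fun n α => b n * ph (p ^ M) φ α (m n)) m' ?_
  intro β
  refine ⟨fun _ => ZMod.stdAddChar ((∑ i, ((β i).val : ℤ) * c i : ℤ) : ZMod (p ^ M)),
    fun _ => norm_stdAddChar _, ?_⟩
  intro α n hn
  simp only [Equiv.coe_addRight]
  rw [ph_shift]
  have h1 : (∑ i, ((β i).val : ℤ) * ∑ j, V i j * (φ j).eval (m n) : ℤ) =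
      (∑ i, ((β i).val : ℤ) * c i) +
        p ^ (M - l * h') * ∑ i, ((β i).val : ℤ) * (ψ i).eval (m' n) := by
    rw [mul_sum, ← sum_add_distrib]
    refine sum_congr rfl fun i _ => ?_
    rw [hV i n hn]; ring
  have h2 : ph (p ^ (l * h')) ψ β (m' n) =
      ZMod.stdAddChar ((∑ i, ((β i).val : ℤ) * (ψ i).eval (m' n) : ℤ) : ZMod (p ^ (l * h'))) := by
    unfold ph
    congr 1
    push_cast
    refine sum_congr rfl fun i _ => ?_
    rw [ZMod.natCast_zmod_val]
  rw [h1, Int.cast_add, AddChar.map_add_eq_mul, stdAddChar_scale p M (l * h') hM, h2]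
  ring

/-- Reduction of a residue class modulo `p^a'` to one modulo `p^(a'-a)` inside a class modulo
`p^a`. -/
lemma cls_rescale_iff {p a a' : ℕ} [hp : Fact p.Prime] (ha : a ≤ a') {x x' r y y' : ℤ}
    (hx : x = r + p ^ a * y) (hx' : x' = r + p ^ a * y') :
    ((y : ZMod (p ^ (a' - a))) = y' ↔ (x : ZMod (p ^ a')) = x') := by
  rw [ZMod.intCast_eq_intCast_iff_dvd_sub, ZMod.intCast_eq_intCast_iff_dvd_sub, hx, hx']
  push_cast
  have h1 : (p : ℤ) ^ a' = p ^ a * p ^ (a' - a) := by rw [← pow_add]; congr 1; omega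
  have h2 : (r + (p : ℤ) ^ a * y' - (r + p ^ a * y)) = p ^ a * (y' - y) := by ring
  rw [h1, h2, mul_dvd_mul_iff_left]
  exact pow_ne_zero _ (by exact_mod_cast hp.out.ne_zero)

/-- Parabolic rescaling: decoupling a residue class modulo `p^a` costs only the constant at
scale `h - a`. -/
lemma Dec.on_class {p k h a : ℕ} [Fact p.Prime] {Δ : ℝ} (hΔ : 0 ≤ Δ) (hk : 1 ≤ k) (hkp : k < p)
    (ha : a ≤ h) (hD : Dec p k (h - a) Δ) {φ : Fin k → Polynomial ℤ} (hφ : InC p φ)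
    (S : Finset ℤ) (b : ℤ → ℂ) (m : ℤ → ℤ) (r : ℤ) (hS : ∀ n ∈ S, (p : ℤ) ^ a ∣ m n - r) :
    sqn (fun _ => 1) (2 * tri k) (Fs (p ^ (k * h)) φ b m S) ≤
      Δ * clsSum (fun n => ((m n : ℤ) : ZMod (p ^ h)))
        (fun A => sqn (fun _ => 1) (2 * tri k) (Fs (p ^ (k * h)) φ b m A)) S := by
  obtain ⟨A', ψ, hψ, -, hA⟩ := normalize_curve (p := p) (m := 0) (by omega) φ (by simpa [InC] using hφ) r a
    (Or.inl rfl)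
  choose! y hy using hS
  have hy' : ∀ n ∈ S, m n = r + p ^ a * y n := fun n hn => by have := hy n hn; linarith
  have hle : k * (h - a) ≤ k * h := Nat.mul_le_mul_left _ (by omega)
  have hsub : k * h - k * (h - a) = k * a := by
    rw [← Nat.mul_sub]; congr 1; omega
  have := Dec.rescale hΔ hD hk hle (φ := φ) hψ (W := fun _ => 1) (fun _ => zero_le_one) S b m y
    (fun i j => p ^ (k * a - a * (i.val + 1)) * A' i j)
    (fun i => ∑ j, p ^ (k * a - a * (i.val + 1)) * A' i j * (φ j).eval r) ?_ (fun _ _ => rfl)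
  · rw [clsSum_congr _ (fun n => ((m n : ℤ) : ZMod (p ^ h)))] at this
    · exact this
    · intro n hn n' hn'
      exact cls_rescale_iff ha (hy' n hn) (hy' n' hn')
  · intro i n hn
    have h1 := hA i (y n)
    have h2 : (p : ℤ) ^ (k * a) = p ^ (k * a - a * (i.val + 1)) * p ^ (a * (i.val + 1)) := by
      rw [← pow_add]; congr 1
      have : a * (i.val + 1) ≤ k * a := by rw [mul_comm k]; exact Nat.mul_le_mul_left _ i.2
      omega
    rw [hsub, h2, mul_assoc, ← h1, hy' n hn, mul_sum, ← sum_add_distrib]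
    refine sum_congr rfl fun j _ => by ring

/-- Transversal lower-degree decoupling: on the fibres where a sum over a class `B` modulo `p^b`
is constant in modulus, a sum over a transversal class `A` decouples as an `l`-dimensional curve
down to scale `p^a'`, provided `l a' ≤ (k-l+1) b`. -/
lemma Dec.transversal {p k h a b a' l : ℕ} [hp : Fact p.Prime] {Δ : ℝ} (hΔ : 0 ≤ Δ) (hl : 1 ≤ l)
    (hlk : l ≤ k) (hkp : k < p) (ha : 1 ≤ a) (haa : a ≤ a') (hab : l * a' ≤ (k - l + 1) * b)
    (hbh : b ≤ h) (hD : Dec p l (a' - a) Δ) {φ : Fin k → Polynomial ℤ} (hφ : InC p φ)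
    (A B : Finset ℤ) (w : ℤ → ℂ) (m : ℤ → ℤ) (r r' : ℤ) (hr : ¬ (p : ℤ) ∣ r - r')
    (hA : ∀ n ∈ A, (p : ℤ) ^ a ∣ m n - r) (hB : ∀ n ∈ B, (p : ℤ) ^ b ∣ m n - r') (q : ℕ) :
    sqn (fun α => ‖Fs (p ^ (k * h)) φ w m B α‖ ^ q) (2 * tri l) (Fs (p ^ (k * h)) φ w m A) ≤
      Δ * clsSum (fun n => ((m n : ℤ) : ZMod (p ^ a')))
        (fun S => sqn (fun α => ‖Fs (p ^ (k * h)) φ w m B α‖ ^ q) (2 * tri l)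
          (Fs (p ^ (k * h)) φ w m S)) A := by
  obtain ⟨A', Θ, hΘ, hΘ0, hA'⟩ := normalize_curve (p := p) (m := 0) (by omega) φ (by simpa [InC] using hφ) r' 0
    (Or.inl rfl)
  simp only [pow_zero, one_mul, zero_mul] at hA'
  have hi : ∀ i : Fin l, k - l + i.val < k := fun i => by have := i.2; omega
  obtain ⟨A'', ψ, hψ, -, hA''⟩ := normalize_curve (p := p) (l := l) (m := k - l) (by omega)
    (fun i => Θ ⟨k - l + i.val, hi i⟩) (fun j i => hΘ ⟨k - l + j.val, hi j⟩ i) (r - r') a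
    (Or.inr ⟨hr, ha⟩)
  choose! y hy using hA
  have hy' : ∀ n ∈ A, m n = r + p ^ a * y n := fun n hn => by have := hy n hn; linarith
  choose! z hz using hB
  have hz' : ∀ n ∈ B, m n = r' + p ^ b * z n := fun n hn => by have := hz n hn; linarith
  set M := k * h with hM
  have hkb : (k - l + 1) * b ≤ M := Nat.mul_le_mul (by omega) hbh
  have hla : l * (a' - a) + l * a = l * a' := by rw [← mul_add]; congr 1; omega
  set V : Fin l → Fin k → ℤ := fun i j => p ^ (M - l * (a' - a) - a * (i.val + 1)) *
    ∑ i' : Fin l, A'' i i' * A' ⟨k - l + i'.val, hi i'⟩ j with hV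
  set c0 : Fin l → ℤ := fun i => p ^ (M - l * (a' - a) - a * (i.val + 1)) *
    ∑ i' : Fin l, A'' i i' * ∑ j, A' ⟨k - l + i'.val, hi i'⟩ j * (φ j).eval r' with hc0
  have hVx : ∀ i x, ∑ j, V i j * (φ j).eval x = c0 i + p ^ (M - l * (a' - a) - a * (i.val + 1)) *
      ∑ i' : Fin l, A'' i i' * (Θ ⟨k - l + i'.val, hi i'⟩).eval (x - r') := by
    intro i x
    rw [hV, hc0]
    simp only [mul_assoc]
    rw [← mul_add, ← mul_sum]
    congr 1
    rw [← sum_add_distrib]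
    simp_rw [sum_mul]
    rw [sum_comm]
    refine sum_congr rfl fun i' _ => ?_
    have := hA' ⟨k - l + i'.val, hi i'⟩ (x - r')
    rw [← this, ← mul_add, ← sum_add_distrib, mul_sum]
    refine sum_congr rfl fun j _ => ?_
    rw [show r' + (x - r') = x by ring]; ring
  have hai : ∀ i : Fin l, a * (i.val + 1) ≤ l * a := fun i => by
    rw [mul_comm l]; exact Nat.mul_le_mul_left _ i.2
  have := Dec.rescale hΔ hD hl (M := M) (by omega) (φ := φ) hψ
    (W := fun α => ‖Fs (p ^ M) φ w m B α‖ ^ q) (fun _ => by positivity) A w m y V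
    (fun i => c0 i + p ^ (M - l * (a' - a) - a * (i.val + 1)) *
      ∑ i' : Fin l, A'' i i' * (Θ ⟨k - l + i'.val, hi i'⟩).eval (r - r')) ?_ ?_
  · rw [clsSum_congr _ (fun n => ((m n : ℤ) : ZMod (p ^ a')))] at this
    · exact this
    · intro n hn n' hn'
      exact cls_rescale_iff haa (hy' n hn) (hy' n' hn')
  · intro i n hn
    have h1 := hA'' i (y n)
    have h2 : (p : ℤ) ^ (M - l * (a' - a)) = p ^ (M - l * (a' - a) - a * (i.val + 1)) *
        p ^ (a * (i.val + 1)) := by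
      rw [← pow_add]; congr 1
      have := hai i
      omega
    rw [hVx, h2, mul_assoc, ← h1, hy' n hn, add_assoc]
    congr 1
    rw [← mul_add, ← sum_add_distrib]
    congr 1
    refine sum_congr rfl fun j _ => ?_
    rw [show r + p ^ a * y n - r' = r - r' + p ^ a * y n by ring]
    ring
  · intro β α
    rw [norm_Fs_shift φ w m B V c0]
    intro i n hn
    rw [hVx, add_sub_cancel_left, hz' n hn]
    have h3 : ∀ i' : Fin l, (p : ℤ) ^ (b * (k - l + 1)) ∣
        (Θ ⟨k - l + i'.val, hi i'⟩).eval (r' + p ^ b * z n - r') := by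
      intro i'
      rw [add_sub_cancel_left, Polynomial.eval_eq_sum_range]
      refine dvd_sum fun d _ => ?_
      by_cases hd : d ≤ k - l + i'.val
      · rw [hΘ0 _ _ hd]; simp
      · apply Dvd.dvd.mul_left
        rw [mul_pow, ← pow_mul]
        apply Dvd.dvd.mul_right
        exact pow_dvd_pow _ (Nat.mul_le_mul_left _ (by omega))
    have h4 : (p : ℤ) ^ M ∣ p ^ (M - l * (a' - a) - a * (i.val + 1)) * p ^ (b * (k - l + 1)) := by
      rw [← pow_add]
      apply pow_dvd_pow
      have := hai i
      rw [mul_comm b]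
      omega
    push_cast
    refine h4.trans (mul_dvd_mul_left _ (dvd_sum fun i' _ => Dvd.dvd.mul_left (h3 i') _))

/-! ### Bilinear iteration -/

lemma tri_real (k : ℕ) : (tri k : ℝ) = k * (k + 1) / 2 := by
  have := two_mul_tri k
  have h : (2 : ℝ) * tri k = k * (k + 1) := by exact_mod_cast this
  linarith

lemma tri_mono {l k : ℕ} (h : l ≤ k) : tri l ≤ tri k :=
  Nat.div_le_div_right (Nat.mul_le_mul h (by omega))

lemma tri_strict {l k : ℕ} (h : l < k) : tri l < tri k := by
  have h1 := two_mul_tri l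
  have h2 := two_mul_tri k
  nlinarith

/-- Hölder's inequality for geometric means. -/
lemma holder_geom {Ω : Type*} [Fintype Ω] {f g : Ω → ℝ} (hf : ∀ ω, 0 ≤ f ω) (hg : ∀ ω, 0 ≤ g ω)
    {θ : ℝ} (h0 : 0 < θ) (h1 : θ < 1) :
    ∑ ω, f ω ^ θ * g ω ^ (1 - θ) ≤ (∑ ω, f ω) ^ θ * (∑ ω, g ω) ^ (1 - θ) := by
  have hpq : (1 / θ).HolderConjugate (1 / (1 - θ)) := by
    rw [Real.holderConjugate_iff]
    refine ⟨by rw [lt_div_iff₀ h0]; linarith, ?_⟩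
    simp
  have := Real.inner_le_Lp_mul_Lq_of_nonneg (s := (univ : Finset Ω)) hpq
    (f := fun ω => f ω ^ θ) (g := fun ω => g ω ^ (1 - θ))
    (fun ω _ => rpow_nonneg (hf ω) _) (fun ω _ => rpow_nonneg (hg ω) _)
  refine this.trans (le_of_eq ?_)
  have e1 : ∀ ω, (f ω ^ θ) ^ (1 / θ) = f ω := fun ω => by
    rw [← rpow_mul (hf ω), mul_one_div_cancel h0.ne', rpow_one]
  have e2 : ∀ ω, (g ω ^ (1 - θ)) ^ (1 / (1 - θ)) = g ω := fun ω => by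
    rw [← rpow_mul (hg ω), mul_one_div_cancel (by linarith), rpow_one]
  simp_rw [e1, e2, one_div_one_div]

lemma geom_pow {x y : ℝ} (hx : 0 ≤ x) (hy : 0 ≤ y) {θ : ℝ} (h0 : 0 ≤ θ) (h1 : θ ≤ 1)
    {v1 v2 u1 u2 v u : ℕ} (hv : θ * v1 + (1 - θ) * v2 = v) (hu : θ * u1 + (1 - θ) * u2 = u) :
    (x ^ v1 * y ^ u1) ^ θ * (x ^ v2 * y ^ u2) ^ (1 - θ) = x ^ v * y ^ u := by
  have h2 : 0 ≤ 1 - θ := by linarith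
  rw [mul_rpow (by positivity) (by positivity), mul_rpow (by positivity) (by positivity)]
  have key : ∀ (z : ℝ) (c1 c2 c : ℕ), 0 ≤ z → θ * c1 + (1 - θ) * c2 = c →
      (z ^ c1) ^ θ * (z ^ c2) ^ (1 - θ) = z ^ c := by
    intro z c1 c2 c hz hc
    rw [← rpow_natCast z c1, ← rpow_natCast z c2, ← rpow_natCast z c,
      ← rpow_mul hz, ← rpow_mul hz, ← Real.rpow_add_of_nonneg hz (by positivity)
        (by positivity), ← hc]
    congr 1; ring
  rw [← key x v1 v2 v hx hv, ← key y u1 u2 u hy hu]; ring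

/-- The sum of squared norms over residue classes modulo `p^h`. -/
noncomputable def sg (p k h : ℕ) [Fact p.Prime] (φ : Fin k → Polynomial ℤ) (w : ℤ → ℂ) (m : ℤ → ℤ)
    (A : Finset ℤ) : ℝ :=
  clsSum (fun n => ((m n : ℤ) : ZMod (p ^ h)))
    (fun A => sqn (fun _ => 1) (2 * tri k) (Fs (p ^ (k * h)) φ w m A)) A

lemma sg_nonneg (p k h : ℕ) [Fact p.Prime] (φ : Fin k → Polynomial ℤ) (w : ℤ → ℂ) (m : ℤ → ℤ)
    (A : Finset ℤ) : 0 ≤ sg p k h φ w m A :=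
  clsSum_nonneg _ (fun _ => sqn_nonneg (fun _ => zero_le_one) _ _) _

/-- The asymmetric bilinear integral. -/
noncomputable def Bl (p k h : ℕ) [Fact p.Prime] (φ : Fin k → Polynomial ℤ) (w : ℤ → ℂ) (m : ℤ → ℤ)
    (l : ℕ) (A B : Finset ℤ) : ℝ :=
  ∑ α, ‖Fs (p ^ (k * h)) φ w m A α‖ ^ (2 * tri l) *
    ‖Fs (p ^ (k * h)) φ w m B α‖ ^ (2 * (tri k - tri l))

lemma Bl_nonneg (p k h : ℕ) [Fact p.Prime] (φ : Fin k → Polynomial ℤ) (w : ℤ → ℂ) (m : ℤ → ℤ)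
    (l : ℕ) (A B : Finset ℤ) : 0 ≤ Bl p k h φ w m l A B :=
  sum_nonneg fun _ _ => by positivity

lemma tri_interp {k l : ℕ} (hl : 1 ≤ l) (hlk : l < k) :
    (1 / ((k - l + 1 : ℕ) : ℝ)) * ((tri k - tri (k - l) : ℕ) : ℝ) +
      (1 - 1 / ((k - l + 1 : ℕ) : ℝ)) * (tri (l - 1) : ℕ) = (tri l : ℕ) ∧
    (1 / ((k - l + 1 : ℕ) : ℝ)) * (tri (k - l) : ℕ) +
      (1 - 1 / ((k - l + 1 : ℕ) : ℝ)) * ((tri k - tri (l - 1) : ℕ) : ℝ) =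
        ((tri k - tri l : ℕ) : ℝ) := by
  rw [Nat.cast_sub (tri_mono (by omega : k - l ≤ k)), Nat.cast_sub (tri_mono (by omega : l - 1 ≤ k)),
    Nat.cast_sub (tri_mono (by omega : l ≤ k)), tri_real, tri_real, tri_real, tri_real]
  push_cast [Nat.cast_sub (show l ≤ k by omega), Nat.cast_sub hl]
  have : ((k : ℝ) - l + 1) ≠ 0 := by
    have : (l : ℝ) < k := by exact_mod_cast hlk
    linarith
  constructor <;> field_simp <;> ring

lemma Bl_holder {p k h : ℕ} [Fact p.Prime] (φ : Fin k → Polynomial ℤ) (w : ℤ → ℂ) (m : ℤ → ℤ)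
    {l : ℕ} (hl : 1 ≤ l) (hlk : l < k) (A B : Finset ℤ) :
    Bl p k h φ w m l A B ≤ Bl p k h φ w m (k - l) B A ^ (1 / ((k - l + 1 : ℕ) : ℝ)) *
      Bl p k h φ w m (l - 1) A B ^ (1 - 1 / ((k - l + 1 : ℕ) : ℝ)) := by
  have h2 : (2 : ℝ) ≤ ((k - l + 1 : ℕ) : ℝ) := by exact_mod_cast (by omega : 2 ≤ k - l + 1)
  obtain ⟨i1, i2⟩ := tri_interp hl hlk
  set θ : ℝ := 1 / ((k - l + 1 : ℕ) : ℝ) with hθ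
  have h0 : 0 < θ := by positivity
  have h1 : θ < 1 := by rw [hθ, div_lt_one (by linarith)]; linarith
  unfold Bl
  refine le_trans (le_of_eq ?_) (holder_geom (fun α => by positivity) (fun α => by positivity) h0 h1)
  refine sum_congr rfl fun α _ => ?_
  rw [mul_comm (‖Fs (p ^ (k * h)) φ w m B α‖ ^ (2 * tri (k - l)))]
  refine (geom_pow (norm_nonneg _) (norm_nonneg _) h0.le h1.le ?_ ?_).symm
  · push_cast; rw [← i1]; ring
  · push_cast; rw [← i2]; ring

/-- `Δ = C p^(ηh)` is admissible for decoupling into classes modulo `p^h`. -/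
def DecExp (p k : ℕ) [Fact p.Prime] (η : ℝ) : Prop :=
  ∃ C : ℝ, 0 < C ∧ ∀ h : ℕ, Dec p k h (C * (p : ℝ) ^ (η * h))

/-- The bilinear estimate with gain `g b` after `N` steps. -/
def St (p k : ℕ) [Fact p.Prime] (η : ℝ) (N l : ℕ) (g : ℝ) : Prop :=
  ∀ ε : ℝ, 0 < ε → ∃ C : ℝ, 0 < C ∧ ∀ (h b a : ℕ) (φ : Fin k → Polynomial ℤ) (w : ℤ → ℂ)
    (m : ℤ → ℤ) (A B : Finset ℤ) (r r' : ℤ), InC p φ → k.factorial ^ N ∣ b → 1 ≤ b →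
    b * k ^ N ≤ h → 1 ≤ a → l * a ≤ (k - l + 1) * b → (∀ n ∈ A, (p : ℤ) ^ a ∣ m n - r) →
    (∀ n ∈ B, (p : ℤ) ^ b ∣ m n - r') → ¬ (p : ℤ) ∣ r - r' →
    Bl p k h φ w m l A B ≤ (C * (p : ℝ) ^ (η * h - g * b + ε * h)) ^ tri k *
      (sg p k h φ w m A ^ tri l * sg p k h φ w m B ^ (tri k - tri l))

section
variable {p k : ℕ} [hp : Fact p.Prime] {η : ℝ}

lemma one_le_p : (1 : ℝ) ≤ p := by exact_mod_cast hp.out.one_lt.le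

/-- At `l = 0` only `B` is present; as it lies in one class modulo `p^b`, rescaling gains `η b`. -/
lemma St_zero (hk : 1 ≤ k) (hkp : k < p) (hD : DecExp p k η) (N : ℕ) : St p k η N 0 η := by
  intro ε hε
  obtain ⟨C, hC, hD⟩ := hD
  refine ⟨C, hC, ?_⟩
  intro h b a φ w m A B r r' hφ _ hb hbh _ _ _ hB _
  have hbh' : b ≤ h := le_trans (Nat.le_mul_of_pos_right _ (by positivity)) hbh
  have h1 := Dec.on_class (by positivity) hk hkp hbh' (hD (h - b)) hφ B w m r' hB
  have h2 : Bl p k h φ w m 0 A B =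
      (sqn (fun _ => 1) (2 * tri k) (Fs (p ^ (k * h)) φ w m B)) ^ tri k := by
    rw [sqn_pow (fun _ => zero_le_one) (by have := tri_pos hk; omega)]
    simp [Bl, tri]
  have h3 : sqn (fun _ => 1) (2 * tri k) (Fs (p ^ (k * h)) φ w m B) ≤
      C * (p : ℝ) ^ (η * h - η * b + ε * h) * sg p k h φ w m B := by
    refine h1.trans (mul_le_mul_of_nonneg_right ?_ (sg_nonneg p k h φ w m B))
    refine mul_le_mul_of_nonneg_left (rpow_le_rpow_of_exponent_le one_le_p ?_) hC.le
    push_cast [hbh']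
    have : 0 ≤ ε * h := by positivity
    linarith
  rw [h2]
  refine (pow_le_pow_left₀ (sqn_nonneg (fun _ => zero_le_one) _ _) h3 _).trans (le_of_eq ?_)
  rw [mul_pow]; simp [tri]

/-- The estimate without gain: Hölder separates the two factors, and each is decoupled directly. -/
lemma St_base (hk : 1 ≤ k) (hD : DecExp p k η) {l : ℕ} (hl : 1 ≤ l) (hlk : l < k) :
    St p k η 0 l 0 := by
  intro ε hε
  obtain ⟨C, hC, hD⟩ := hD
  refine ⟨C, hC, ?_⟩
  intro h b a φ w m A B r r' hφ _ hb hbh _ _ _ hB _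
  have ht := tri_pos hk
  have htl := tri_pos hl
  have htlk := tri_strict hlk
  have htk : (0 : ℝ) < tri k := by exact_mod_cast ht
  have htl' : (0 : ℝ) < tri l := by exact_mod_cast htl
  have htlk' : (tri l : ℝ) < tri k := by exact_mod_cast htlk
  set θ : ℝ := tri l / tri k with hθ
  have h0 : 0 < θ := by positivity
  have h1 : θ < 1 := by rw [hθ, div_lt_one htk]; exact htlk'
  set D := C * (p : ℝ) ^ (η * h - 0 * b + ε * h) with hDdef
  have hD0 : 0 ≤ D := by positivity
  have hS : ∀ S, ∑ α, ‖Fs (p ^ (k * h)) φ w m S α‖ ^ (2 * tri k) ≤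
      (D * sg p k h φ w m S) ^ tri k := by
    intro S
    have h3 := sqn_pow (W := fun _ => (1 : ℝ)) (fun _ => zero_le_one) (by omega : tri k ≠ 0)
      (Fs (p ^ (k * h)) φ w m S)
    simp only [one_mul] at h3
    rw [← h3]
    refine pow_le_pow_left₀ (sqn_nonneg (fun _ => zero_le_one) _ _) ?_ _
    refine (hD h φ hφ S w m).trans ?_
    refine mul_le_mul_of_nonneg_right ?_ (sg_nonneg p k h φ w m S)
    refine mul_le_mul_of_nonneg_left (rpow_le_rpow_of_exponent_le one_le_p ?_) hC.le
    have : 0 ≤ ε * h := by positivity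
    linarith
  have hc : ((tri k - tri l : ℕ) : ℝ) = tri k - tri l := by rw [Nat.cast_sub htlk.le]
  have e1 : θ * tri k = tri l := by rw [hθ]; field_simp
  calc Bl p k h φ w m l A B
      = ∑ α, (‖Fs (p ^ (k * h)) φ w m A α‖ ^ (2 * tri k)) ^ θ *
          (‖Fs (p ^ (k * h)) φ w m B α‖ ^ (2 * tri k)) ^ (1 - θ) := by
        unfold Bl
        refine sum_congr rfl fun α _ => ?_
        have := geom_pow (norm_nonneg (Fs (p ^ (k * h)) φ w m A α))
          (norm_nonneg (Fs (p ^ (k * h)) φ w m B α)) h0.le h1.le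
          (v1 := 2 * tri k) (v2 := 0) (u1 := 0) (u2 := 2 * tri k) (v := 2 * tri l)
          (u := 2 * (tri k - tri l)) (by push_cast; linarith)
          (by push_cast; rw [hc]; linarith)
        rw [← this]; simp
    _ ≤ (∑ α, ‖Fs (p ^ (k * h)) φ w m A α‖ ^ (2 * tri k)) ^ θ *
          (∑ α, ‖Fs (p ^ (k * h)) φ w m B α‖ ^ (2 * tri k)) ^ (1 - θ) :=
        holder_geom (fun α => by positivity) (fun α => by positivity) h0 h1
    _ ≤ ((D * sg p k h φ w m A) ^ tri k) ^ θ * ((D * sg p k h φ w m B) ^ tri k) ^ (1 - θ) := by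
        have := sg_nonneg p k h φ w m A
        have := sg_nonneg p k h φ w m B
        refine mul_le_mul (rpow_le_rpow (by positivity) (hS A) h0.le)
          (rpow_le_rpow (by positivity) (hS B) (by linarith)) (by positivity) (by positivity)
    _ = (D * sg p k h φ w m A) ^ tri l * (D * sg p k h φ w m B) ^ (tri k - tri l) := by
        have hA := sg_nonneg p k h φ w m A
        have hB := sg_nonneg p k h φ w m B
        have := geom_pow (mul_nonneg hD0 hA) (mul_nonneg hD0 hB) h0.le h1.le
          (v1 := tri k) (v2 := 0) (u1 := 0) (u2 := tri k) (v := tri l)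
          (u := tri k - tri l) (by push_cast; linarith) (by push_cast; rw [hc]; linarith)
        rw [← this]; simp
    _ = _ := by
        rw [mul_pow, mul_pow]
        have : D ^ tri k = D ^ tri l * D ^ (tri k - tri l) := by
          rw [← pow_add]; congr 1; omega
        rw [this]; ring

/-- One step of the iteration. Since `A` and `B` are transversal, freezing `B` leaves a curve of degree
`l` for `A`, so decoupling in degree `l < k` refines `A` to the scale `a'` with `l a' = (k - l + 1) b`.
Hölder then splits each term into a bilinear expression with the roles of `A` and `B` exchanged and one
of index `l - 1`. -/
lemma St_step (hkp : k < p) {N l : ℕ} (hl : 1 ≤ l) (hlk : l < k)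
    (hlow : ∀ ε : ℝ, 0 < ε → DecExp p l ε) {g1 g2 : ℝ} (h1 : St p k η N (k - l) g1)
    (h2 : St p k η N (l - 1) g2) :
    St p k η (N + 1) l (g1 / l + (1 - 1 / ((k - l + 1 : ℕ) : ℝ)) * g2) := by
  intro ε hε
  have hk0 : (0 : ℝ) < k := by exact_mod_cast (by omega : 0 < k)
  obtain ⟨C1, hC1, h1⟩ := h1 (ε / 2) (by positivity)
  obtain ⟨C2, hC2, h2⟩ := h2 (ε / 2) (by positivity)
  obtain ⟨C3, hC3, hlow⟩ := hlow (ε / (2 * k)) (by positivity)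
  have ht := tri_pos hl
  have htk := tri_strict hlk
  set C0 := max (max C1 C2) (max C3 1) with hC0
  have hC01 : C1 ≤ C0 := le_trans (le_max_left _ _) (le_max_left _ _)
  have hC02 : C2 ≤ C0 := le_trans (le_max_right _ _) (le_max_left _ _)
  have hC03 : C3 ≤ C0 := le_trans (le_max_left _ _) (le_max_right _ _)
  have hC04 : 1 ≤ C0 := le_trans (le_max_right _ _) (le_max_right _ _)
  have hC0p : 0 < C0 := by linarith
  refine ⟨C0 * C0, by positivity, ?_⟩
  intro h b a φ w m A B r r' hφ hdvd hb hbh ha hla hA hB hr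
  obtain ⟨b1, hb1⟩ : l ∣ b := (Nat.dvd_factorial (by omega) hlk.le).trans
    ((dvd_pow_self _ (by omega)).trans hdvd)
  have hfl : k.factorial ^ N ∣ b1 := by
    obtain ⟨q, hq⟩ := Nat.dvd_factorial (by omega) hlk.le
    have : l * k.factorial ^ N ∣ l * b1 := by
      rw [← hb1]
      refine dvd_trans ?_ hdvd
      rw [pow_succ, mul_comm l]
      exact mul_dvd_mul_left _ ⟨q, hq⟩
    exact Nat.dvd_of_mul_dvd_mul_left (by omega) this
  have hb11 : 1 ≤ b1 := by
    rcases Nat.eq_zero_or_pos b1 with h0 | h0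
    · subst h0; omega
    · exact h0
  set a' := (k - l + 1) * b1 with ha'
  have hla' : l * a' = (k - l + 1) * b := by rw [ha', hb1]; ring
  have haa : a ≤ a' := by
    have : l * a ≤ l * a' := by rw [hla']; exact hla
    exact Nat.le_of_mul_le_mul_left this (by omega)
  have hkN : 1 ≤ k ^ N := Nat.one_le_pow _ _ (by omega)
  have ha'kb : a' ≤ k * b := by
    rw [ha']; refine Nat.mul_le_mul (by omega) ?_
    rw [hb1]; exact Nat.le_mul_of_pos_left _ (by omega)
  have hkbh : (k * b) * k ^ N ≤ h := by
    calc _ = b * k ^ (N + 1) := by rw [pow_succ]; ring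
      _ ≤ h := hbh
  have ha'h : a' * k ^ N ≤ h := (Nat.mul_le_mul_right _ ha'kb).trans hkbh
  have ha'h' : a' ≤ h := le_trans (Nat.le_mul_of_pos_right _ hkN) ha'h
  have hbkb : b ≤ k * b := Nat.le_mul_of_pos_left _ (by omega)
  have hbhN : b * k ^ N ≤ h := (Nat.mul_le_mul_right _ hbkb).trans hkbh
  have hbh' : b ≤ h := le_trans (Nat.le_mul_of_pos_right _ hkN) hbhN
  have hkbh' : k * b ≤ h := le_trans (Nat.le_mul_of_pos_right _ hkN) hkbh
  have ha'1 : 1 ≤ a' := by omega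
  obtain ⟨i1, i2⟩ := tri_interp hl hlk
  have h2θ : (2 : ℝ) ≤ ((k - l + 1 : ℕ) : ℝ) := by exact_mod_cast (by omega : 2 ≤ k - l + 1)
  set θ : ℝ := 1 / ((k - l + 1 : ℕ) : ℝ) with hθ
  have hθ0 : 0 < θ := by positivity
  have hθ1 : θ < 1 := by rw [hθ, div_lt_one (by linarith)]; linarith
  set g := g1 / l + (1 - θ) * g2 with hg
  set E := C0 * (p : ℝ) ^ (η * h - g * b + ε / 2 * h) with hE
  have hp0 : (0 : ℝ) < p := by exact_mod_cast hp.out.pos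
  have hE0 : 0 < E := by positivity
  have hJ : ∀ J ⊆ A, ∀ rJ : ℤ, (∀ n ∈ J, (p : ℤ) ^ a' ∣ m n - rJ) → ¬ (p : ℤ) ∣ rJ - r' →
      Bl p k h φ w m l J B ≤ E ^ tri k *
        (sg p k h φ w m J ^ tri l * sg p k h φ w m B ^ (tri k - tri l)) := by
    intro J _ rJ hJ hrJ
    have hr' : ¬ (p : ℤ) ∣ r' - rJ := by rwa [← dvd_neg, neg_sub]
    have e1 := h1 h a' b φ w m B J r' rJ hφ (Dvd.dvd.mul_left hfl _) ha'1 ha'h hb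
      (by
        have : l * ((k - l) * b) ≤ l * ((k - (k - l) + 1) * a') := by
          calc l * ((k - l) * b) ≤ (l + 1) * ((k - l + 1) * b) :=
                Nat.mul_le_mul (by omega) (Nat.mul_le_mul_right _ (by omega))
            _ = (l + 1) * (l * a') := by rw [hla']
            _ = l * ((k - (k - l) + 1) * a') := by
                rw [show k - (k - l) = l by omega]; ring
        exact Nat.le_of_mul_le_mul_left this (by omega)) hB hJ hr'
    have e2 := h2 h b a' φ w m J B rJ r' hφ ((pow_dvd_pow _ (by omega)).trans hdvd) hb hbhN ha'1
      (by
        calc (l - 1) * a' ≤ l * a' := Nat.mul_le_mul_right _ (by omega)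
          _ = (k - l + 1) * b := hla'
          _ ≤ _ := Nat.mul_le_mul_right _ (by omega)) hJ hB hrJ
    have sJ := sg_nonneg p k h φ w m J
    have sB := sg_nonneg p k h φ w m B
    set E1 := C0 * (p : ℝ) ^ (η * h - g1 * a' + ε / 2 * h) with hE1
    set E2 := C0 * (p : ℝ) ^ (η * h - g2 * b + ε / 2 * h) with hE2
    have hEE : E = E1 ^ θ * E2 ^ (1 - θ) := by
      rw [hE, hE1, hE2, mul_rpow hC0p.le (by positivity), mul_rpow hC0p.le (by positivity),
        ← rpow_mul hp0.le, ← rpow_mul hp0.le]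
      have : C0 ^ θ * C0 ^ (1 - θ) = C0 := by
        rw [← rpow_add hC0p]; simp
      have h3 : ∀ x y : ℝ, C0 ^ θ * x * (C0 ^ (1 - θ) * y) = C0 * (x * y) := fun x y => by
        calc _ = (C0 ^ θ * C0 ^ (1 - θ)) * (x * y) := by ring
          _ = _ := by rw [this]
      rw [h3, ← rpow_add hp0]
      congr 2
      have hl0 : (l : ℝ) ≠ 0 := by exact_mod_cast (by omega : l ≠ 0)
      have h4 : θ * a' = b / l := by
        rw [hθ, ha', hb1]; push_cast; field_simp
      have h5 : g1 * a' * θ = g1 / l * b := by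
        calc _ = g1 * (θ * a') := by ring
          _ = _ := by rw [h4]; ring
      rw [hg]
      linear_combination h5
    have e1' : Bl p k h φ w m (k - l) B J ≤ E1 ^ tri k *
        (sg p k h φ w m J ^ (tri k - tri (k - l)) * sg p k h φ w m B ^ tri (k - l)) := by
      refine e1.trans ?_
      rw [mul_comm (sg p k h φ w m B ^ tri (k - l))]
      gcongr
      exact mul_le_mul_of_nonneg_right hC01 (by positivity)
    have e2' : Bl p k h φ w m (l - 1) J B ≤ E2 ^ tri k *
        (sg p k h φ w m J ^ tri (l - 1) * sg p k h φ w m B ^ (tri k - tri (l - 1))) := by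
      refine e2.trans ?_
      gcongr
      exact mul_le_mul_of_nonneg_right hC02 (by positivity)
    have hE10 : 0 ≤ E1 := by positivity
    have hE20 : 0 ≤ E2 := by positivity
    clear_value E1 E2 E
    calc Bl p k h φ w m l J B ≤ _ := Bl_holder φ w m hl hlk J B
      _ ≤ (E1 ^ tri k *
        (sg p k h φ w m J ^ (tri k - tri (k - l)) * sg p k h φ w m B ^ tri (k - l))) ^ θ *
        (E2 ^ tri k * (sg p k h φ w m J ^ tri (l - 1) *
          sg p k h φ w m B ^ (tri k - tri (l - 1)))) ^ (1 - θ) := by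
        refine mul_le_mul (rpow_le_rpow (Bl_nonneg ..) e1' hθ0.le)
          (rpow_le_rpow (Bl_nonneg ..) e2' (by linarith))
          (rpow_nonneg (Bl_nonneg ..) _) (by positivity)
      _ = ((E1 ^ tri k) ^ θ * (E2 ^ tri k) ^ (1 - θ)) *
          ((sg p k h φ w m J ^ (tri k - tri (k - l)) * sg p k h φ w m B ^ tri (k - l)) ^ θ *
          (sg p k h φ w m J ^ tri (l - 1) *
            sg p k h φ w m B ^ (tri k - tri (l - 1))) ^ (1 - θ)) := by
        rw [mul_rpow (pow_nonneg hE10 _) (by positivity),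
          mul_rpow (pow_nonneg hE20 _) (by positivity)]
        ring
      _ = _ := by
        rw [geom_pow sJ sB hθ0.le hθ1.le i1 i2]
        congr 1
        rw [hEE, mul_pow, ← rpow_natCast, ← rpow_natCast, ← rpow_natCast,
          ← rpow_natCast, ← rpow_mul hE10, ← rpow_mul hE20, ← rpow_mul hE10,
          ← rpow_mul hE20, mul_comm θ, mul_comm (1 - θ)]
  -- decouple `A` to the finer scale
  set Δ := C3 * (p : ℝ) ^ (ε / (2 * k) * ((a' - a : ℕ) : ℝ)) with hΔ
  have hΔ0 : 0 < Δ := by positivity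
  have hV4 := Dec.transversal (h := h) hΔ0.le hl hlk.le hkp ha haa hla'.le hbh' (hlow (a' - a)) hφ A B w m
    r r' hr hA hB (2 * (tri k - tri l))
  have hsq : ∀ S, sqn (fun α => ‖Fs (p ^ (k * h)) φ w m B α‖ ^ (2 * (tri k - tri l))) (2 * tri l)
      (Fs (p ^ (k * h)) φ w m S) ^ tri l = Bl p k h φ w m l S B := by
    intro S
    rw [sqn_pow (fun _ => by positivity) (by omega)]
    exact sum_congr rfl fun α _ => mul_comm _ _
  have hsq0 : ∀ S, 0 ≤ sqn (fun α => ‖Fs (p ^ (k * h)) φ w m B α‖ ^ (2 * (tri k - tri l)))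
      (2 * tri l) (Fs (p ^ (k * h)) φ w m S) := fun S => sqn_nonneg (fun _ => by positivity) _ _
  set R := (E ^ tri k * sg p k h φ w m B ^ (tri k - tri l)) ^ ((1 : ℝ) / tri l) with hR
  have sB := sg_nonneg p k h φ w m B
  have hR0 : 0 ≤ R := by positivity
  have htl : (tri l : ℝ) ≠ 0 := by exact_mod_cast (by omega : tri l ≠ 0)
  have hRp : R ^ tri l = E ^ tri k * sg p k h φ w m B ^ (tri k - tri l) := by
    rw [hR, ← rpow_natCast, ← rpow_mul (by positivity), one_div_mul_cancel htl,
      rpow_one]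
  have hcls : clsSum (fun n => ((m n : ℤ) : ZMod (p ^ a')))
        (fun S => sqn (fun α => ‖Fs (p ^ (k * h)) φ w m B α‖ ^ (2 * (tri k - tri l))) (2 * tri l)
          (Fs (p ^ (k * h)) φ w m S)) A ≤ R * sg p k h φ w m A := by
    have : clsSum (fun n => ((m n : ℤ) : ZMod (p ^ a'))) (fun S => R * sg p k h φ w m S) A =
        R * sg p k h φ w m A := by
      unfold sg
      rw [← clsSum_fiber (fun n => ((m n : ℤ) : ZMod (p ^ a')))
        (fun n => ((m n : ℤ) : ZMod (p ^ h))) _ A]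
      · simp only [clsSum, mul_sum]
      · intro n _ n' _ hnn
        rw [ZMod.intCast_eq_intCast_iff_dvd_sub] at hnn ⊢
        refine dvd_trans ?_ hnn
        exact_mod_cast pow_dvd_pow _ ha'h'
    rw [← this]
    refine clsSum_mono _ _ fun c hc => ?_
    obtain ⟨n0, hn0, rfl⟩ := mem_image.1 hc
    refine le_of_pow_le_pow_left₀ (n := tri l) (by omega)
      (mul_nonneg hR0 (sg_nonneg ..)) ?_
    rw [hsq, mul_pow, hRp]
    refine (hJ _ (filter_subset _ _) (m n0) ?_ ?_).trans (le_of_eq (by ring))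
    · intro n hn
      have h3 := (mem_filter.1 hn).2
      rw [eq_comm, ZMod.intCast_eq_intCast_iff_dvd_sub] at h3
      exact_mod_cast h3
    · intro h3
      apply hr
      have h4 : (p : ℤ) ∣ m n0 - r := (dvd_pow_self _ (by omega)).trans (hA n0 hn0)
      have : r - r' = (m n0 - r') - (m n0 - r) := by ring
      rw [this]; exact dvd_sub h3 h4
  have hfin : sqn (fun α => ‖Fs (p ^ (k * h)) φ w m B α‖ ^ (2 * (tri k - tri l))) (2 * tri l)
      (Fs (p ^ (k * h)) φ w m A) ≤ Δ * (R * sg p k h φ w m A) :=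
    hV4.trans (mul_le_mul_of_nonneg_left hcls hΔ0.le)
  have hΔE : Δ * E ≤ C0 * C0 * (p : ℝ) ^ (η * h - g * b + ε * h) := by
    rw [hΔ, hE]
    calc C3 * (p : ℝ) ^ (ε / (2 * k) * ((a' - a : ℕ) : ℝ)) *
          (C0 * (p : ℝ) ^ (η * h - g * b + ε / 2 * h))
        = C3 * C0 * ((p : ℝ) ^ (ε / (2 * k) * ((a' - a : ℕ) : ℝ)) *
          (p : ℝ) ^ (η * h - g * b + ε / 2 * h)) := by ring
      _ ≤ C0 * C0 * (p : ℝ) ^ (η * h - g * b + ε * h) := by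
        rw [← rpow_add hp0]
        refine mul_le_mul (mul_le_mul_of_nonneg_right hC03 hC0p.le)
          (rpow_le_rpow_of_exponent_le one_le_p ?_) (by positivity) (by positivity)
        have h5 : ((a' - a : ℕ) : ℝ) ≤ k * h := by
          have : a' - a ≤ k * h := by
            have : a' ≤ k * h := ha'kb.trans (Nat.mul_le_mul_left _ hbh')
            omega
          exact_mod_cast this
        have h6 : ε / (2 * k) * ((a' - a : ℕ) : ℝ) ≤ ε / (2 * k) * (k * h) :=
          mul_le_mul_of_nonneg_left h5 (by positivity)
        have h7 : ε / (2 * k) * (k * h) = ε / 2 * h := by field_simp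
        linarith
  have hΔ1 : Δ ^ tri l ≤ (max Δ 1) ^ tri k :=
    (pow_le_pow_left₀ hΔ0.le (le_max_left _ _) _).trans
      (pow_le_pow_right₀ (le_max_right _ _) htk.le)
  have hmaxE : max Δ 1 * E ≤ C0 * C0 * (p : ℝ) ^ (η * h - g * b + ε * h) := by
    rw [max_mul_of_nonneg _ _ hE0.le]
    refine max_le hΔE ?_
    rw [one_mul, hE]
    refine mul_le_mul (by nlinarith) (rpow_le_rpow_of_exponent_le one_le_p ?_)
      (by positivity) (by positivity)
    have : 0 ≤ ε / 2 * h := by positivity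
    linarith
  have sA := sg_nonneg p k h φ w m A
  clear_value Δ E R
  calc Bl p k h φ w m l A B
      ≤ (Δ * (R * sg p k h φ w m A)) ^ tri l := by
        rw [← hsq]; exact pow_le_pow_left₀ (hsq0 _) hfin _
    _ = Δ ^ tri l * E ^ tri k *
        (sg p k h φ w m A ^ tri l * sg p k h φ w m B ^ (tri k - tri l)) := by
        rw [mul_pow, mul_pow, hRp]; ring
    _ ≤ (max Δ 1 * E) ^ tri k *
        (sg p k h φ w m A ^ tri l * sg p k h φ w m B ^ (tri k - tri l)) := by
        rw [mul_pow (max Δ 1) E]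
        gcongr
    _ ≤ _ := by
        gcongr

/-- The gains in the bilinear iteration, normalised by the exponent. -/
noncomputable def gain (k : ℕ) : ℕ → ℕ → ℝ
  | 0, l => if l = 0 then 1 else 0
  | N + 1, l => if l = 0 then 1 else
      gain k N (k - l) / l + (1 - 1 / ((k - l + 1 : ℕ) : ℝ)) * gain k N (l - 1)

lemma gain_zero (k N : ℕ) : gain k N 0 = 1 := by cases N <;> simp [gain]

lemma sum_gain {k : ℕ} (hk : 2 ≤ k) (N : ℕ) :
    ∑ i ∈ range (k - 1), gain k N (i + 1) = N * (1 - 1 / (k : ℝ)) := by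
  induction N with
  | zero => simp [gain]
  | succ N ih =>
    obtain ⟨d, rfl⟩ : ∃ d, k = d + 2 := ⟨k - 2, by omega⟩
    have h1 : ∀ i ∈ range (d + 1), gain (d + 2) (N + 1) (i + 1) =
        gain (d + 2) N (d + 1 - i) / ((i : ℝ) + 1) +
          (1 - 1 / ((d + 2 - i : ℕ) : ℝ)) * gain (d + 2) N i := by
      intro i hi
      have hi' := mem_range.1 hi
      simp only [gain, Nat.add_eq_zero_iff, one_ne_zero, and_false, if_false,
        show d + 2 - (i + 1) = d + 1 - i by omega, show d + 1 - i + 1 = d + 2 - i by omega,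
        Nat.add_sub_cancel]
      push_cast; rfl
    rw [show d + 2 - 1 = d + 1 by omega] at ih ⊢
    rw [sum_congr rfl h1, sum_add_distrib,
      ← sum_range_reflect (fun i => gain (d + 2) N (d + 1 - i) / ((i : ℝ) + 1))]
    have h2 : ∀ i ∈ range (d + 1),
        gain (d + 2) N (d + 1 - (d + 1 - 1 - i)) / (((d + 1 - 1 - i : ℕ) : ℝ) + 1) =
        gain (d + 2) N (i + 1) * (1 / ((d + 1 - i : ℕ) : ℝ)) := by
      intro i hi
      have hi' := mem_range.1 hi
      rw [show d + 1 - (d + 1 - 1 - i) = i + 1 by omega,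
        show d + 1 - i = (d + 1 - 1 - i) + 1 by omega, div_eq_mul_one_div]
      push_cast; rfl
    rw [sum_congr rfl h2, sum_range_succ, sum_range_succ'
      (fun i => (1 - 1 / ((d + 2 - i : ℕ) : ℝ)) * gain (d + 2) N i)]
    have h3 : ∑ i ∈ range d, gain (d + 2) N (i + 1) * (1 / ((d + 1 - i : ℕ) : ℝ)) +
        ∑ i ∈ range d, (1 - 1 / ((d + 2 - (i + 1) : ℕ) : ℝ)) * gain (d + 2) N (i + 1) =
        ∑ i ∈ range d, gain (d + 2) N (i + 1) := by
      rw [← sum_add_distrib]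
      refine sum_congr rfl fun i _ => ?_
      rw [show d + 2 - (i + 1) = d + 1 - i by omega]; ring
    rw [sum_range_succ] at ih
    rw [gain_zero, show d + 1 - d = 1 by omega]
    push_cast at ih h3 ⊢
    linear_combination ih + h3

lemma exists_gain {k : ℕ} (hk : 2 ≤ k) (N : ℕ) : ∃ l, 1 ≤ l ∧ l < k ∧ (N : ℝ) / k ≤ gain k N l := by
  by_contra! hcon
  have h1 := sum_gain hk N
  have h2 : ∑ i ∈ range (k - 1), gain k N (i + 1) <
      ∑ i ∈ range (k - 1), (N : ℝ) / k := by
    refine sum_lt_sum_of_nonempty (by simp; omega) fun i hi => ?_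
    have := mem_range.1 hi
    exact hcon _ (by omega) (by omega)
  rw [h1] at h2
  simp only [sum_const, card_range, nsmul_eq_mul] at h2
  rw [Nat.cast_sub (by omega)] at h2
  have hk0 : (0 : ℝ) < k := by positivity
  have : ((k : ℝ) - (1 : ℕ)) * (N / k) = N * (1 - 1 / (k : ℝ)) := by field_simp; push_cast; ring
  linarith

lemma St_gain (hk : 2 ≤ k) (hkp : k < p) (hlow : ∀ l, 1 ≤ l → l < k → ∀ ε : ℝ, 0 < ε → DecExp p l ε)
    (hD : DecExp p k η) (N : ℕ) : ∀ l < k, St p k η N l (η * gain k N l) := by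
  induction N with
  | zero =>
    intro l hl
    rcases Nat.eq_zero_or_pos l with rfl | h0
    · simpa [gain] using St_zero (by omega) hkp hD 0
    · have : gain k 0 l = 0 := by simp [gain]; omega
      rw [this, mul_zero]
      exact St_base (by omega) hD h0 hl
  | succ N ih =>
    intro l hl
    rcases Nat.eq_zero_or_pos l with rfl | h0
    · simpa [gain] using St_zero (by omega) hkp hD (N + 1)
    · have := St_step hkp h0 hl (hlow l h0 hl) (ih (k - l) (by omega)) (ih (l - 1) (by omega))
      convert this using 1
      simp only [gain, h0.ne', if_false]
      ring

lemma sg_fiber {a h : ℕ} (hah : a ≤ h) (φ : Fin k → Polynomial ℤ) (w : ℤ → ℂ) (m : ℤ → ℤ)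
    (S : Finset ℤ) : clsSum (fun n => ((m n : ℤ) : ZMod (p ^ a))) (sg p k h φ w m) S =
      sg p k h φ w m S := by
  unfold sg
  refine clsSum_fiber _ _ _ _ ?_
  intro n _ n' _ hnn
  rw [ZMod.intCast_eq_intCast_iff_dvd_sub] at hnn ⊢
  refine dvd_trans ?_ hnn
  exact_mod_cast pow_dvd_pow _ hah

lemma sg_class_le {a h : ℕ} (hah : a ≤ h) (φ : Fin k → Polynomial ℤ) (w : ℤ → ℂ) (m : ℤ → ℤ)
    (S : Finset ℤ) (c : ZMod (p ^ a)) (hc : c ∈ S.image (fun n => ((m n : ℤ) : ZMod (p ^ a)))) :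
    sg p k h φ w m (S.filter fun n => ((m n : ℤ) : ZMod (p ^ a)) = c) ≤ sg p k h φ w m S := by
  rw [← sg_fiber hah φ w m S]
  unfold clsSum
  exact single_le_sum (f := fun c =>
    sg p k h φ w m (S.filter fun n => ((m n : ℤ) : ZMod (p ^ a)) = c))
    (fun _ _ => sg_nonneg ..) hc

lemma card_image_zmod_le {a : ℕ} (f : ℤ → ZMod (p ^ a)) (S : Finset ℤ) :
    ((S.image f).card : ℝ) ≤ (p : ℝ) ^ a := by
  have := (S.image f).card_le_univ
  rw [ZMod.card] at this
  exact_mod_cast this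

lemma norm_sum_pow_le {ι : Type*} (T : Finset ι) (z : ι → ℂ) {e : ℕ} (he : 1 ≤ e) :
    ‖∑ i ∈ T, z i‖ ^ e ≤ (T.card : ℝ) ^ (e - 1) * ∑ i ∈ T, ‖z i‖ ^ e := by
  obtain ⟨d, rfl⟩ : ∃ d, e = d + 1 := ⟨e - 1, by omega⟩
  refine (pow_le_pow_left₀ (norm_nonneg _) (norm_sum_le _ _) _).trans ?_
  rcases T.eq_empty_or_nonempty with rfl | hT
  · simp
  have h := pow_sum_div_card_le_sum_pow (s := T) (f := fun i => ‖z i‖) (fun i _ => norm_nonneg _) d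
  have hc : (0 : ℝ) < T.card := by exact_mod_cast hT.card_pos
  rw [div_le_iff₀ (by positivity)] at h
  simpa [mul_comm] using h

/-- A sum of at most `M` complex numbers is either dominated by one of them or by a product of two
comparable ones. -/
lemma broad_narrow {ι : Type*} [DecidableEq ι] (T : Finset ι) (z : ι → ℂ) {M ν : ℝ} (hM : (T.card : ℝ) ≤ M)
    (hM1 : 1 ≤ M) (hν : 0 < ν) {t : ℕ} (ht : 1 ≤ t) :
    ‖∑ i ∈ T, z i‖ ^ (2 * t) ≤ (1 + ν) ^ (2 * t) * ∑ i ∈ T, ‖z i‖ ^ (2 * t) +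
      M ^ (2 * t) * (M / ν) ^ t * ∑ i ∈ T, ∑ j ∈ T.erase i, (‖z i‖ * ‖z j‖) ^ t := by
  rcases T.eq_empty_or_nonempty with rfl | hT
  · simp [show t ≠ 0 by omega]
  obtain ⟨c, hc, hmax⟩ := T.exists_max_image (fun i => ‖z i‖) hT
  have hoff : 0 ≤ ∑ i ∈ T, ∑ j ∈ T.erase i, (‖z i‖ * ‖z j‖) ^ t :=
    sum_nonneg fun i _ => sum_nonneg fun j _ => by positivity
  have hM0 : 0 < M := by linarith
  by_cases hcase : ∀ j ∈ T.erase c, ‖z j‖ ≤ ν / M * ‖z c‖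
  · have h1 : ‖∑ i ∈ T, z i‖ ≤ (1 + ν) * ‖z c‖ := by
      rw [← add_sum_erase _ _ hc]
      refine (norm_add_le _ _).trans ?_
      have h2 : ‖∑ i ∈ T.erase c, z i‖ ≤ ∑ i ∈ T.erase c, ν / M * ‖z c‖ :=
        (norm_sum_le _ _).trans (sum_le_sum hcase)
      rw [sum_const, nsmul_eq_mul] at h2
      have h3 : ((T.erase c).card : ℝ) ≤ M :=
        le_trans (by exact_mod_cast card_le_card (erase_subset _ _)) hM
      have h4 : ((T.erase c).card : ℝ) * (ν / M * ‖z c‖) ≤ M * (ν / M * ‖z c‖) :=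
        mul_le_mul_of_nonneg_right h3 (by positivity)
      have h5 : M * (ν / M * ‖z c‖) = ν * ‖z c‖ := by field_simp
      linarith
    have h2 : ‖∑ i ∈ T, z i‖ ^ (2 * t) ≤ (1 + ν) ^ (2 * t) * ‖z c‖ ^ (2 * t) := by
      rw [← mul_pow]; exact pow_le_pow_left₀ (norm_nonneg _) h1 _
    have h3 : ‖z c‖ ^ (2 * t) ≤ ∑ i ∈ T, ‖z i‖ ^ (2 * t) :=
      single_le_sum (f := fun i => ‖z i‖ ^ (2 * t)) (fun i _ => by positivity) hc
    have h4 : (1 + ν) ^ (2 * t) * ‖z c‖ ^ (2 * t) ≤ (1 + ν) ^ (2 * t) * ∑ i ∈ T, ‖z i‖ ^ (2 * t) :=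
      mul_le_mul_of_nonneg_left h3 (by positivity)
    have : 0 ≤ M ^ (2 * t) * (M / ν) ^ t * ∑ i ∈ T, ∑ j ∈ T.erase i, (‖z i‖ * ‖z j‖) ^ t :=
      mul_nonneg (by positivity) hoff
    linarith
  · push Not at hcase
    obtain ⟨j, hj, hzj⟩ := hcase
    have h1 : ‖∑ i ∈ T, z i‖ ≤ M * ‖z c‖ := by
      refine (norm_sum_le _ _).trans ((sum_le_sum hmax).trans ?_)
      rw [sum_const, nsmul_eq_mul]
      exact mul_le_mul_of_nonneg_right hM (norm_nonneg _)
    have h2 : ‖z c‖ ≤ M / ν * ‖z j‖ := by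
      have : ν / M * ‖z c‖ * (M / ν) ≤ ‖z j‖ * (M / ν) :=
        mul_le_mul_of_nonneg_right hzj.le (by positivity)
      have h3 : ν / M * ‖z c‖ * (M / ν) = ‖z c‖ := by field_simp
      linarith
    have h3 : ‖∑ i ∈ T, z i‖ ^ (2 * t) ≤ M ^ (2 * t) * (M / ν) ^ t * (‖z c‖ * ‖z j‖) ^ t := by
      calc ‖∑ i ∈ T, z i‖ ^ (2 * t) ≤ (M * ‖z c‖) ^ (2 * t) := pow_le_pow_left₀ (norm_nonneg _) h1 _
        _ = M ^ (2 * t) * (‖z c‖ ^ t * ‖z c‖ ^ t) := by rw [mul_pow, ← pow_add]; congr 2; ring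
        _ ≤ M ^ (2 * t) * (‖z c‖ ^ t * (M / ν * ‖z j‖) ^ t) := by gcongr
        _ = _ := by rw [mul_pow, mul_pow]; ring
    have h4 : (‖z c‖ * ‖z j‖) ^ t ≤ ∑ i ∈ T, ∑ j ∈ T.erase i, (‖z i‖ * ‖z j‖) ^ t := by
      refine le_trans ?_ (single_le_sum (f := fun i => ∑ j ∈ T.erase i, (‖z i‖ * ‖z j‖) ^ t)
        (fun i _ => sum_nonneg fun j _ => by positivity) hc)
      exact single_le_sum (f := fun j => (‖z c‖ * ‖z j‖) ^ t) (fun j _ => by positivity) hj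
    have h5 := mul_le_mul_of_nonneg_left h4 (show 0 ≤ M ^ (2 * t) * (M / ν) ^ t by positivity)
    have : 0 ≤ (1 + ν) ^ (2 * t) * ∑ i ∈ T, ‖z i‖ ^ (2 * t) :=
      mul_nonneg (by positivity) (sum_nonneg fun i _ => by positivity)
    linarith

lemma mul_pow_le_bil {x y : ℝ} (hx : 0 ≤ x) (hy : 0 ≤ y) {t u : ℕ} (hu : u ≤ t) :
    (x * y) ^ t ≤ x ^ (2 * u) * y ^ (2 * (t - u)) + y ^ (2 * u) * x ^ (2 * (t - u)) := by
  refine le_of_pow_le_pow_left₀ (n := 2) (by norm_num) (by positivity) ?_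
  have h : ((x * y) ^ t) ^ 2 =
      (x ^ (2 * u) * y ^ (2 * (t - u))) * (y ^ (2 * u) * x ^ (2 * (t - u))) := by
    obtain ⟨v, rfl⟩ := Nat.exists_eq_add_of_le hu
    rw [Nat.add_sub_cancel_left]; ring
  rw [h]
  have h1 : 0 ≤ x ^ (2 * u) * y ^ (2 * (t - u)) := by positivity
  have h2 : 0 ≤ y ^ (2 * u) * x ^ (2 * (t - u)) := by positivity
  nlinarith

lemma Fs_split {N a : ℕ} [NeZero N] (φ : Fin k → Polynomial ℤ) (w : ℤ → ℂ) (m : ℤ → ℤ) (S : Finset ℤ)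
    (α : Fin k → ZMod N) : Fs N φ w m S α = ∑ c ∈ S.image (fun n => ((m n : ℤ) : ZMod (p ^ a))),
      Fs N φ w m (S.filter fun n => ((m n : ℤ) : ZMod (p ^ a)) = c) α :=
  (sum_clsSum _ _ _).symm

lemma Bl_split {h l b : ℕ} (hlk : l < k) (φ : Fin k → Polynomial ℤ) (w : ℤ → ℂ) (m : ℤ → ℤ)
    (A S : Finset ℤ) : Bl p k h φ w m l A S ≤ ((p : ℝ) ^ b) ^ (2 * tri k) *
      ∑ c ∈ S.image (fun n => ((m n : ℤ) : ZMod (p ^ b))),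
        Bl p k h φ w m l A (S.filter fun n => ((m n : ℤ) : ZMod (p ^ b)) = c) := by
  have htk := tri_strict hlk
  unfold Bl
  rw [sum_comm, mul_sum]
  refine sum_le_sum fun α _ => ?_
  rw [← mul_sum, mul_left_comm]
  refine mul_le_mul_of_nonneg_left ?_ (by positivity)
  rw [Fs_split (p := p) (a := b) φ w m S α]
  refine (norm_sum_pow_le _ _ (by omega)).trans ?_
  refine mul_le_mul_of_nonneg_right ?_ (sum_nonneg fun i _ => by positivity)
  refine (pow_le_pow_left₀ (by positivity) (card_image_zmod_le _ S) _).trans ?_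
  exact pow_le_pow_right₀ (one_le_pow₀ one_le_p) (by omega)

/-- The trivial decoupling inequality. -/
lemma Dec_trivial (hk : 1 ≤ k) (h : ℕ) : Dec p k h ((p : ℝ) ^ h) := by
  intro φ _ S w m
  have ht := tri_pos hk
  have hW : ∀ _ : Fin k → ZMod (p ^ (k * h)), (0 : ℝ) ≤ 1 := fun _ => zero_le_one
  set κ : ℤ → ZMod (p ^ h) := fun n => ((m n : ℤ) : ZMod (p ^ h)) with hκ
  set G : ZMod (p ^ h) → ℝ := fun c => sqn (fun _ => 1) (2 * tri k)
    (Fs (p ^ (k * h)) φ w m (S.filter fun n => κ n = c)) with hG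
  have hG0 : ∀ c, 0 ≤ G c := fun c => sqn_nonneg hW _ _
  have goal' : sqn (fun _ => 1) (2 * tri k) (Fs (p ^ (k * h)) φ w m S) ≤
      (p : ℝ) ^ h * ∑ c ∈ S.image κ, G c := by
    refine le_of_pow_le_pow_left₀ (n := tri k) (by omega)
      (mul_nonneg (by positivity) (sum_nonneg fun c _ => hG0 c)) ?_
    rw [sqn_pow hW (by omega)]
    simp only [one_mul]
    have hpt : ∀ α, ‖Fs (p ^ (k * h)) φ w m S α‖ ^ (2 * tri k) ≤ ((p : ℝ) ^ h) ^ tri k *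
        (∑ c ∈ S.image κ, ‖Fs (p ^ (k * h)) φ w m (S.filter fun n => κ n = c) α‖ ^ 2) ^ tri k := by
      intro α
      rw [pow_mul, ← mul_pow]
      refine pow_le_pow_left₀ (by positivity) ?_ _
      rw [Fs_split (p := p) (a := h) φ w m S α]
      refine (norm_sum_pow_le _ _ (by norm_num)).trans ?_
      refine mul_le_mul_of_nonneg_right ?_ (sum_nonneg fun i _ => by positivity)
      simpa using card_image_zmod_le κ S
    refine (sum_le_sum fun α _ => hpt α).trans ?_
    rw [← mul_sum, mul_pow]
    refine mul_le_mul_of_nonneg_left ?_ (by positivity)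
    have hmin := minkowski_weighted (W := fun _ : Fin k → ZMod (p ^ (k * h)) => (1 : ℝ)) hW ht (S.image κ)
      (fun c α => ‖Fs (p ^ (k * h)) φ w m (S.filter fun n => κ n = c) α‖ ^ 2)
      (fun _ _ => by positivity)
    have hGc : ∀ c, (∑ α : Fin k → ZMod (p ^ (k * h)), 1 * (‖Fs (p ^ (k * h)) φ w m (S.filter fun n => κ n = c) α‖ ^ 2) ^ tri k) ^
        ((1 : ℝ) / tri k) = G c := by
      intro c
      rw [hG]; unfold sqn
      simp_rw [← pow_mul]
      congr 1
      push_cast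
      have : (tri k : ℝ) ≠ 0 := by exact_mod_cast (by omega : tri k ≠ 0)
      field_simp
    simp_rw [hGc] at hmin
    have h0 : 0 ≤ ∑ α : Fin k → ZMod (p ^ (k * h)), (1 : ℝ) * (∑ c ∈ S.image κ,
      ‖Fs (p ^ (k * h)) φ w m (S.filter fun n => κ n = c) α‖ ^ 2) ^ tri k :=
      sum_nonneg fun _ _ => by positivity
    have := pow_le_pow_left₀ (rpow_nonneg h0 _) hmin (tri k)
    rw [← rpow_natCast, ← rpow_mul h0, one_div_mul_cancel
      (by exact_mod_cast (by omega : tri k ≠ 0)), rpow_one] at this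
    simpa using this
  exact goal'

lemma sum_pow_le_pow_sum' {ι : Type*} (T : Finset ι) (x : ι → ℝ) (hx : ∀ i ∈ T, 0 ≤ x i) {t : ℕ}
    (ht : 1 ≤ t) : ∑ i ∈ T, x i ^ t ≤ (∑ i ∈ T, x i) ^ t := by
  obtain ⟨d, rfl⟩ : ∃ d, t = d + 1 := ⟨t - 1, by omega⟩
  rw [pow_succ', sum_mul]
  refine sum_le_sum fun i hi => ?_
  rw [pow_succ']
  exact mul_le_mul_of_nonneg_left (pow_le_pow_left₀ (hx i hi) (single_le_sum hx hi) _) (hx i hi)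

/-- The broad-narrow step: single classes modulo `p` are treated by rescaling, with constant `Δ'`, and
products over two distinct classes by the bilinear bound `D`. -/
lemma Dec_recur (hk : 1 ≤ k) (hkp : k < p) {h l : ℕ} (hl : l < k) {Δ' Δ D ν : ℝ} (hΔ' : 0 ≤ Δ')
    (hΔ : 0 ≤ Δ) (hν : 0 < ν) (hD : Dec p k h Δ')
    (hoff : ∀ φ : Fin k → Polynomial ℤ, InC p φ → ∀ (S : Finset ℤ) (w : ℤ → ℂ) (m : ℤ → ℤ)
      (c c' : ZMod (p ^ 1)), c ≠ c' → c ∈ S.image (fun n => ((m n : ℤ) : ZMod (p ^ 1))) →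
      c' ∈ S.image (fun n => ((m n : ℤ) : ZMod (p ^ 1))) →
      Bl p k (h + 1) φ w m l (S.filter fun n => ((m n : ℤ) : ZMod (p ^ 1)) = c)
        (S.filter fun n => ((m n : ℤ) : ZMod (p ^ 1)) = c') ≤ D * sg p k (h + 1) φ w m S ^ tri k)
    (hD0 : 0 ≤ D)
    (hfin : (1 + ν) ^ (2 * tri k) * Δ' ^ tri k +
      (p : ℝ) ^ (2 * tri k) * (p / ν) ^ tri k * (2 * p ^ 2) * D ≤ Δ ^ tri k) :
    Dec p k (h + 1) Δ := by
  intro φ hφ S w m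
  have ht := tri_pos hk
  have hW : ∀ _ : Fin k → ZMod (p ^ (k * (h + 1))), (0 : ℝ) ≤ 1 := fun _ => zero_le_one
  have hp0 : (0 : ℝ) < p := by exact_mod_cast hp.out.pos
  set κ : ℤ → ZMod (p ^ 1) := fun n => ((m n : ℤ) : ZMod (p ^ 1)) with hκ
  set σ := sg p k (h + 1) φ w m S with hσ
  have hσ0 : 0 ≤ σ := sg_nonneg ..
  set T := S.image κ with hT
  set F : ZMod (p ^ 1) → (Fin k → ZMod (p ^ (k * (h + 1)))) → ℂ := fun c =>
    Fs (p ^ (k * (h + 1))) φ w m (S.filter fun n => κ n = c) with hF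
  have hcard : (T.card : ℝ) ≤ p := by simpa using card_image_zmod_le κ S
  have goal' : sqn (fun _ => 1) (2 * tri k) (Fs (p ^ (k * (h + 1))) φ w m S) ≤ Δ * σ := by
    refine le_of_pow_le_pow_left₀ (n := tri k) (by omega) (mul_nonneg hΔ hσ0) ?_
    rw [sqn_pow hW (by omega), mul_pow]
    simp only [one_mul]
    have hpt : ∀ α, ‖Fs (p ^ (k * (h + 1))) φ w m S α‖ ^ (2 * tri k) ≤
        (1 + ν) ^ (2 * tri k) * ∑ c ∈ T, ‖F c α‖ ^ (2 * tri k) +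
        (p : ℝ) ^ (2 * tri k) * (p / ν) ^ tri k *
          ∑ c ∈ T, ∑ c' ∈ T.erase c, (‖F c α‖ * ‖F c' α‖) ^ tri k := fun α => by
      rw [Fs_split (p := p) (a := 1) φ w m S α]
      exact broad_narrow T (fun c => F c α) hcard one_le_p hν ht
    refine (sum_le_sum fun α _ => hpt α).trans ?_
    rw [sum_add_distrib, ← mul_sum, ← mul_sum]
    have hdiag : ∑ α, ∑ c ∈ T, ‖F c α‖ ^ (2 * tri k) ≤ Δ' ^ tri k * σ ^ tri k := by
      rw [sum_comm]
      have h1 : ∀ c ∈ T, ∑ α, ‖F c α‖ ^ (2 * tri k) ≤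
          (Δ' * sg p k (h + 1) φ w m (S.filter fun n => κ n = c)) ^ tri k := by
        intro c hc
        obtain ⟨n0, hn0, rfl⟩ := mem_image.1 hc
        have h2 := Dec.on_class (a := 1) (h := h + 1) hΔ' hk hkp (by omega) hD hφ
          (S.filter fun n => κ n = κ n0) w m (m n0) (by
            intro n hn
            have h3 := (mem_filter.1 hn).2
            rw [eq_comm, ZMod.intCast_eq_intCast_iff_dvd_sub] at h3
            exact_mod_cast h3)
        have h3 := pow_le_pow_left₀ (sqn_nonneg hW _ _) h2 (tri k)
        rw [sqn_pow hW (by omega)] at h3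
        simp only [one_mul] at h3
        exact h3
      refine (sum_le_sum h1).trans ?_
      simp_rw [mul_pow]
      rw [← mul_sum]
      refine mul_le_mul_of_nonneg_left ?_ (by positivity)
      have h4 : σ = ∑ c ∈ T, sg p k (h + 1) φ w m (S.filter fun n => κ n = c) :=
        (sg_fiber (by omega) φ w m S).symm
      rw [h4]
      exact sum_pow_le_pow_sum' _ _ (fun c _ => sg_nonneg ..) ht
    have hoffd : ∑ α, ∑ c ∈ T, ∑ c' ∈ T.erase c, (‖F c α‖ * ‖F c' α‖) ^ tri k ≤
        2 * p ^ 2 * D * σ ^ tri k := by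
      rw [sum_comm]
      have h1 : ∀ c ∈ T, ∑ α, ∑ c' ∈ T.erase c, (‖F c α‖ * ‖F c' α‖) ^ tri k ≤
          p * (2 * D * σ ^ tri k) := by
        intro c hc
        rw [sum_comm]
        have h2 : ∀ c' ∈ T.erase c, ∑ α, (‖F c α‖ * ‖F c' α‖) ^ tri k ≤ 2 * D * σ ^ tri k := by
          intro c' hc'
          obtain ⟨hne, hc'⟩ := mem_erase.1 hc'
          have h3 := hoff φ hφ S w m c c' hne.symm hc hc'
          have h4 := hoff φ hφ S w m c' c hne hc' hc
          have h5 : ∑ α, (‖F c α‖ * ‖F c' α‖) ^ tri k ≤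
              Bl p k (h + 1) φ w m l (S.filter fun n => κ n = c) (S.filter fun n => κ n = c') +
              Bl p k (h + 1) φ w m l (S.filter fun n => κ n = c') (S.filter fun n => κ n = c) := by
            unfold Bl
            rw [← sum_add_distrib]
            exact sum_le_sum fun α _ =>
              mul_pow_le_bil (norm_nonneg _) (norm_nonneg _) (tri_mono hl.le)
          linarith
        refine (sum_le_sum h2).trans ?_
        rw [sum_const, nsmul_eq_mul]
        refine mul_le_mul_of_nonneg_right (le_trans ?_ hcard) (by positivity)
        exact_mod_cast card_le_card (erase_subset _ _)
      refine (sum_le_sum h1).trans ?_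
      rw [sum_const, nsmul_eq_mul]
      calc (T.card : ℝ) * (p * (2 * D * σ ^ tri k)) ≤ p * (p * (2 * D * σ ^ tri k)) :=
            mul_le_mul_of_nonneg_right hcard (by positivity)
        _ = _ := by ring
    calc _ ≤ (1 + ν) ^ (2 * tri k) * (Δ' ^ tri k * σ ^ tri k) +
          (p : ℝ) ^ (2 * tri k) * (p / ν) ^ tri k * (2 * p ^ 2 * D * σ ^ tri k) := by
          gcongr
      _ = ((1 + ν) ^ (2 * tri k) * Δ' ^ tri k +
      (p : ℝ) ^ (2 * tri k) * (p / ν) ^ tri k * (2 * p ^ 2) * D) * σ ^ tri k := by ring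
      _ ≤ _ := mul_le_mul_of_nonneg_right hfin (by positivity)
  exact goal'

/-- The bilinear estimate applied to two distinct classes modulo `p`, with net gain `p^(-b)`. -/
lemma offdiag_bound {N l : ℕ} {g : ℝ} (hl : 1 ≤ l) (hlk : l < k) (hg : 4 ≤ g)
    (hSt : St p k η N l g) (hN : 1 ≤ N) {ε : ℝ} (hε : 0 < ε) : ∃ C : ℝ, 0 < C ∧ ∀ h b : ℕ,
      k.factorial ^ N ∣ b → 1 ≤ b → b * k ^ N ≤ h → ∀ φ : Fin k → Polynomial ℤ, InC p φ →
      ∀ (S : Finset ℤ) (w : ℤ → ℂ) (m : ℤ → ℤ)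
      (c c' : ZMod (p ^ 1)), c ≠ c' → c ∈ S.image (fun n => ((m n : ℤ) : ZMod (p ^ 1))) →
      c' ∈ S.image (fun n => ((m n : ℤ) : ZMod (p ^ 1))) →
      Bl p k h φ w m l (S.filter fun n => ((m n : ℤ) : ZMod (p ^ 1)) = c)
        (S.filter fun n => ((m n : ℤ) : ZMod (p ^ 1)) = c') ≤
        C * (p : ℝ) ^ (tri k * η * h + tri k * ε * h - b) * sg p k h φ w m S ^ tri k := by
  obtain ⟨C, hC, hSt⟩ := hSt ε hε
  refine ⟨C ^ tri k, by positivity, ?_⟩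
  intro h b hdvd hb hbh φ hφ S w m c c' hcc hc hc'
  have ht : 1 ≤ tri k := tri_pos (by omega)
  have htlk := tri_strict hlk
  have hp0 : (0 : ℝ) < p := by exact_mod_cast hp.out.pos
  have hbh' : b ≤ h := le_trans (Nat.le_mul_of_pos_right _ (Nat.pow_pos (by omega))) hbh
  set κ : ℤ → ZMod (p ^ 1) := fun n => ((m n : ℤ) : ZMod (p ^ 1)) with hκ
  set σ := sg p k h φ w m S with hσ
  have hσ0 : 0 ≤ σ := sg_nonneg ..
  set S' := S.filter fun n => κ n = c' with hS'
  obtain ⟨n0, hn0, hn0c⟩ := mem_image.1 hc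
  obtain ⟨n1, hn1, hn1c⟩ := mem_image.1 hc'
  have hbk : l * 1 ≤ (k - l + 1) * b := by
    have h1 : k.factorial ≤ b := (Nat.le_self_pow (by omega) _).trans (Nat.le_of_dvd (by omega) hdvd)
    have h2 := Nat.self_le_factorial k
    calc l * 1 ≤ b := by omega
      _ ≤ _ := Nat.le_mul_of_pos_left _ (by omega)
  have hmem : ∀ x ∈ S, ∀ y ∈ S, (κ x = κ y ↔ (p : ℤ) ∣ m x - m y) := by
    intro x _ y _
    rw [eq_comm, hκ]; simp only
    rw [ZMod.intCast_eq_intCast_iff_dvd_sub]; simp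
  have hB : ∀ d ∈ S'.image (fun n => ((m n : ℤ) : ZMod (p ^ b))),
      Bl p k h φ w m l (S.filter fun n => κ n = c)
        (S'.filter fun n => ((m n : ℤ) : ZMod (p ^ b)) = d) ≤
      (C * (p : ℝ) ^ (η * h - g * b + ε * h)) ^ tri k * σ ^ tri k := by
    intro d hd
    obtain ⟨n2, hn2, rfl⟩ := mem_image.1 hd
    have hn2S := (mem_filter.1 hn2)
    have h1 := hSt h b 1 φ w m (S.filter fun n => κ n = c)
      (S'.filter fun n => ((m n : ℤ) : ZMod (p ^ b)) = ((m n2 : ℤ) : ZMod (p ^ b))) (m n0) (m n2) hφ hdvd hb hbh le_rfl hbk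
      (by
        intro n hn
        obtain ⟨h3, h4⟩ := mem_filter.1 hn
        rw [pow_one, ← hmem n h3 n0 hn0, h4, hn0c])
      (by
        intro n hn
        have h3 := (mem_filter.1 hn).2
        rw [eq_comm, ZMod.intCast_eq_intCast_iff_dvd_sub] at h3
        exact_mod_cast h3)
      (by
        rw [← hmem n0 hn0 n2 hn2S.1, hn0c, hn2S.2]; exact hcc)
    refine h1.trans (mul_le_mul_of_nonneg_left ?_ (by positivity))
    have s1 : sg p k h φ w m (S.filter fun n => κ n = c) ≤ σ :=
      sg_class_le (a := 1) (by omega) φ w m S c hc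
    have s2 : sg p k h φ w m S' ≤ σ := sg_class_le (a := 1) (by omega) φ w m S c' hc'
    have s3 : sg p k h φ w m (S'.filter fun n => ((m n : ℤ) : ZMod (p ^ b)) = ((m n2 : ℤ) : ZMod (p ^ b))) ≤ σ :=
      (sg_class_le hbh' φ w m S' _ hd).trans s2
    calc _ ≤ σ ^ tri l * σ ^ (tri k - tri l) :=
          mul_le_mul (pow_le_pow_left₀ (sg_nonneg ..) s1 _) (pow_le_pow_left₀ (sg_nonneg ..) s3 _)
            (pow_nonneg (sg_nonneg ..) _) (by positivity)
      _ = σ ^ tri k := by rw [← pow_add]; congr 1; omega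
  refine (Bl_split (b := b) hlk φ w m _ S').trans ?_
  calc _ ≤ ((p : ℝ) ^ b) ^ (2 * tri k) * ((p : ℝ) ^ b * ((C * (p : ℝ) ^ (η * h - g * b + ε * h)) ^ tri k * σ ^ tri k)) := by
        refine mul_le_mul_of_nonneg_left ?_ (by positivity)
        refine (sum_le_sum hB).trans ?_
        rw [sum_const, nsmul_eq_mul]
        exact mul_le_mul_of_nonneg_right (card_image_zmod_le _ S') (by positivity)
    _ = C ^ tri k * (p : ℝ) ^ ((b : ℝ) * (2 * tri k) + b + (η * h - g * b + ε * h) * tri k) * σ ^ tri k := by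
        generalize η * h - g * b + ε * h = q
        rw [rpow_add hp0, rpow_add hp0, rpow_mul hp0.le, rpow_mul hp0.le,
          rpow_natCast p b, rpow_natCast _ (tri k), mul_pow]
        have : ((p : ℝ) ^ b) ^ (2 * (tri k : ℝ)) = ((p : ℝ) ^ b) ^ (2 * tri k) := by
          rw [← rpow_natCast _ (2 * tri k)]; push_cast; rfl
        rw [this]; ring
    _ ≤ _ := by
        refine mul_le_mul_of_nonneg_right (mul_le_mul_of_nonneg_left
          (rpow_le_rpow_of_exponent_le one_le_p ?_) (by positivity)) (by positivity)
        have ht' : (1 : ℝ) ≤ tri k := by exact_mod_cast ht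
        have hb' : (1 : ℝ) ≤ b := by exact_mod_cast hb
        have h1 : 0 ≤ (g - 4) * (b * tri k) := mul_nonneg (by linarith) (by positivity)
        have h2 : 0 ≤ (tri k - 1 : ℝ) * b := mul_nonneg (by linarith) (by positivity)
        nlinarith

lemma Dec.mono {h : ℕ} {Δ Δ' : ℝ} (hD : Dec p k h Δ) (hΔ : Δ ≤ Δ') : Dec p k h Δ' :=
  fun φ hφ S w m => (hD φ hφ S w m).trans
    (mul_le_mul_of_nonneg_right hΔ (sg_nonneg p k h φ w m S))

lemma DecExp.mono {η' : ℝ} (hD : DecExp p k η) (h : η ≤ η') : DecExp p k η' := by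
  obtain ⟨C, hC, hD⟩ := hD
  refine ⟨C, hC, fun h' => (hD h').mono ?_⟩
  refine mul_le_mul_of_nonneg_left (rpow_le_rpow_of_exponent_le one_le_p ?_) hC.le
  exact mul_le_mul_of_nonneg_right h (by positivity)

set_option maxHeartbeats 1000000 in
/-- Granted the lower degrees, any exponent `η ≥ η0 > 0` can be lowered by a fixed amount: after enough
iterations the gain exceeds the loss. -/
lemma DecExp_improve (hk : 2 ≤ k) (hkp : k < p)
    (hlow : ∀ l, 1 ≤ l → l < k → ∀ ε : ℝ, 0 < ε → DecExp p l ε) {η0 : ℝ} (hη0 : 0 < η0) :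
    ∃ c : ℝ, 0 < c ∧ ∀ η, η0 ≤ η → DecExp p k η → DecExp p k (η - c) := by
  have hk0 : (0 : ℝ) < k := by positivity
  have hp0 : (0 : ℝ) < p := by exact_mod_cast hp.out.pos
  have hp1 : (1 : ℝ) < p := by exact_mod_cast hp.out.one_lt
  have ht : 1 ≤ tri k := tri_pos (by omega)
  have ht' : (1 : ℝ) ≤ tri k := by exact_mod_cast ht
  obtain ⟨t, htdef⟩ : ∃ t : ℝ, t = ((tri k : ℕ) : ℝ) := ⟨_, rfl⟩
  rw [← htdef] at ht'
  set N := ⌈4 * k / η0⌉₊ + 1 with hN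
  have hN4 : 4 * k / η0 ≤ N := by
    rw [hN]; push_cast
    have := Nat.le_ceil (4 * k / η0)
    linarith
  obtain ⟨l, hl, hlk, hgl⟩ := exists_gain hk N
  set M := k ^ N * k.factorial ^ N with hM
  have hfac : 0 < k.factorial ^ N := by positivity
  have hkN : 0 < k ^ N := by positivity
  have hM0 : 0 < M := by positivity
  set c1 : ℝ := 1 / (2 * (k : ℝ) ^ N) with hc1
  have hc10 : 0 < c1 := by positivity
  set c : ℝ := min (c1 / (2 * t)) (η0 / 2) with hc
  have hc0 : 0 < c := by rw [hc]; exact lt_min (by positivity) (by positivity)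
  have hct : t * c ≤ c1 / 2 := by
    calc t * c ≤ t * (c1 / (2 * t)) := mul_le_mul_of_nonneg_left (min_le_left _ _) (by positivity)
      _ = c1 / 2 := by field_simp
  have hcη : c ≤ η0 / 2 := min_le_right _ _
  refine ⟨c, hc0, ?_⟩
  intro η hη hD
  have hη' : 0 < η := by linarith
  have hg4 : 4 ≤ η * gain k N l := by
    have h1 : η0 * ((N : ℝ) / k) ≤ η * gain k N l :=
      mul_le_mul hη hgl (by positivity) hη'.le
    have h2 : 4 ≤ η0 * ((N : ℝ) / k) := by
      rw [div_le_iff₀ hη0] at hN4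
      rw [← mul_div_assoc, le_div_iff₀ hk0]; linarith
    linarith
  obtain ⟨C', hC', hoff⟩ := offdiag_bound hl hlk hg4 (St_gain hk hkp hlow hD N l hlk) (by omega)
    (ε := c1 / (2 * t)) (by positivity)
  rw [← htdef] at hoff
  have htε : t * (c1 / (2 * t)) = c1 / 2 := by field_simp
  set ν : ℝ := (p : ℝ) ^ (η0 / 8) - 1 with hν
  have hν0 : 0 < ν := by
    have := Real.one_lt_rpow hp1 (show 0 < η0 / 8 by positivity)
    rw [hν]; linarith
  have hν2 : (1 + ν) ^ (2 * tri k) = (p : ℝ) ^ (t * η0 / 4) := by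
    rw [hν, add_sub_cancel, ← rpow_natCast, ← rpow_mul hp0.le]
    congr 1; push_cast; rw [htdef]; ring
  set lam : ℝ := (p : ℝ) ^ (-(t * η0 / 4)) with hlam
  have hlam1 : lam < 1 := by
    rw [hlam]; exact Real.rpow_lt_one_of_one_lt_of_neg hp1 (by
      have : 0 < t * η0 / 4 := by positivity
      linarith)
  have hlam0 : 0 < lam := by positivity
  set K : ℝ := (p : ℝ) ^ (2 * tri k) * (p / ν) ^ tri k * (2 * p ^ 2) with hK
  have hK0 : 0 < K := by positivity
  set C : ℝ := max ((p : ℝ) ^ M) (K * C' / (1 - lam)) with hC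
  have hCM : (p : ℝ) ^ M ≤ C := le_max_left _ _
  have hC1 : 1 ≤ C := le_trans (one_le_pow₀ hp1.le) hCM
  have hC0 : 0 < C := by linarith
  have hCK : K * C' ≤ C * (1 - lam) := by
    rw [← div_le_iff₀ (by linarith)]; exact le_max_right _ _
  have hCt : K * C' ≤ C ^ tri k * (1 - lam) :=
    hCK.trans (mul_le_mul_of_nonneg_right (le_self_pow₀ hC1 (by omega)) (by linarith))
  refine ⟨C, hC0, ?_⟩
  have hsmall : ∀ h : ℕ, h ≤ M → Dec p k h (C * (p : ℝ) ^ ((η - c) * h)) := by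
    intro h hh
    refine (Dec_trivial (by omega) h).mono ?_
    have h1 : (p : ℝ) ^ h ≤ p ^ M := pow_le_pow_right₀ hp1.le hh
    have h2 : 1 ≤ (p : ℝ) ^ ((η - c) * h) :=
      Real.one_le_rpow hp1.le (mul_nonneg (by linarith) (by positivity))
    nlinarith
  intro h
  induction h with
  | zero => exact hsmall 0 (by omega)
  | succ h ih =>
    by_cases hh : h + 1 ≤ M
    · exact hsmall _ hh
    push Not at hh
    set q := (h + 1) / M with hq
    have hq1 : 1 ≤ q := (Nat.one_le_div_iff hM0).2 hh.le
    set b := k.factorial ^ N * q with hb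
    have hbh : b * k ^ N ≤ h + 1 := by
      calc b * k ^ N = (h + 1) / M * M := by rw [hb, hM, hq]; ring
        _ ≤ h + 1 := Nat.div_mul_le_self _ _
    have hbc : c1 * ((h + 1 : ℕ) : ℝ) ≤ b := by
      have h1 : h + 1 ≤ 2 * (M * q) := by
        have := Nat.lt_mul_div_succ (h + 1) hM0
        rw [← hq] at this
        nlinarith
      have h2 : ((h + 1 : ℕ) : ℝ) ≤ 2 * (k : ℝ) ^ N * b := by
        have : h + 1 ≤ 2 * k ^ N * b := by rw [hb]; refine h1.trans (le_of_eq ?_); rw [hM]; ring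
        exact_mod_cast this
      rw [hc1, div_mul_eq_mul_div, one_mul, div_le_iff₀ (by positivity)]
      linarith
    have hb1 : 1 ≤ b := Nat.mul_pos hfac hq1
    have hoff' := hoff (h + 1) b (Dvd.intro _ rfl) hb1 hbh
    refine Dec_recur (by omega) hkp hlk (by positivity) (by positivity) hν0 ih
      (fun φ hφ S w m c c' h1 h2 h3 => hoff' φ hφ S w m c c' h1 h2 h3) (by positivity) ?_
    rw [← hK, hν2, mul_pow, mul_pow, ← rpow_mul_natCast hp0.le, ← rpow_mul_natCast hp0.le, ← htdef]
    set Y := (p : ℝ) ^ ((η - c) * ((h + 1 : ℕ) : ℝ) * t) with hY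
    have hY0 : 0 < Y := by positivity
    have e1 : (p : ℝ) ^ (t * η0 / 4) * (C ^ tri k * (p : ℝ) ^ ((η - c) * h * t)) ≤
        C ^ tri k * lam * Y := by
      have : (p : ℝ) ^ (t * η0 / 4) * (p : ℝ) ^ ((η - c) * h * t) ≤ lam * Y := by
        rw [hlam, hY, ← rpow_add hp0, ← rpow_add hp0]
        refine rpow_le_rpow_of_exponent_le hp1.le ?_
        push_cast
        have : 0 ≤ t * (η - c - η0 / 2) := mul_nonneg (by positivity) (by linarith)
        nlinarith
      calc _ = C ^ tri k * ((p : ℝ) ^ (t * η0 / 4) * (p : ℝ) ^ ((η - c) * h * t)) := by ring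
        _ ≤ C ^ tri k * (lam * Y) := mul_le_mul_of_nonneg_left this (by positivity)
        _ = _ := by ring
    have e2 : (p : ℝ) ^ (t * η * ((h + 1 : ℕ) : ℝ) + t * (c1 / (2 * t)) * ((h + 1 : ℕ) : ℝ) - b) ≤ Y := by
      refine rpow_le_rpow_of_exponent_le hp1.le ?_
      rw [htε]
      have : 0 ≤ (c1 / 2 - t * c) * ((h + 1 : ℕ) : ℝ) := mul_nonneg (by linarith) (by positivity)
      nlinarith
    have e3 : K * (C' * (p : ℝ) ^ (t * η * ((h + 1 : ℕ) : ℝ) + t * (c1 / (2 * t)) * ((h + 1 : ℕ) : ℝ) - b)) ≤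
        C ^ tri k * (1 - lam) * Y := by
      calc _ = K * C' * _ := (mul_assoc _ _ _).symm
        _ ≤ K * C' * Y := mul_le_mul_of_nonneg_left e2 (by positivity)
        _ ≤ _ := mul_le_mul_of_nonneg_right hCt hY0.le
    linarith

lemma DecExp_of_lower (hk : 2 ≤ k) (hkp : k < p)
    (hlow : ∀ l, 1 ≤ l → l < k → ∀ ε : ℝ, 0 < ε → DecExp p l ε) {ε : ℝ} (hε : 0 < ε) :
    DecExp p k ε := by
  obtain ⟨c, hc, himp⟩ := DecExp_improve hk hkp hlow hε
  have key : ∀ j : ℕ, DecExp p k (max ε (1 - j * c)) := by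
    intro j
    induction j with
    | zero =>
      refine DecExp.mono (η := 1) ⟨1, one_pos, fun h => ?_⟩ (by simp)
      simpa using Dec_trivial (p := p) (k := k) (by omega) h
    | succ j ih =>
      rcases le_total (1 - j * c) ε with h | h
      · rw [max_eq_left h] at ih
        exact ih.mono (le_max_left _ _)
      · rw [max_eq_right h] at ih
        refine (himp _ h ih).mono ?_
        push_cast
        refine le_trans (le_of_eq ?_) (le_max_right _ _)
        ring
  obtain ⟨j, hj⟩ := exists_nat_gt (1 / c)
  rw [div_lt_iff₀ hc] at hj
  have := key j
  rwa [max_eq_left (by linarith)] at this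

/-- In degree one, orthogonality decouples without loss. -/
lemma DecExp_one {ε : ℝ} (hε : 0 < ε) : DecExp p 1 ε := by
  refine ⟨1, one_pos, fun h => ?_⟩
  have h1 : Dec p 1 h 1 := by
    intro φ hφ S w m
    have htri : tri 1 = 1 := rfl
    set κ : ℤ → ZMod (p ^ h) := fun n => ((m n : ℤ) : ZMod (p ^ h)) with hκ
    -- the curve is injective modulo `p^h`
    have hinj : ∀ x y : ℤ, (((φ 0).eval x - (φ 0).eval y : ℤ) : ZMod (p ^ (1 * h))) = 0 →
        ((x : ℤ) : ZMod (p ^ h)) = y := by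
      intro x y hxy
      have h2 : Polynomial.C (p : ℤ) ∣ φ 0 - Polynomial.X := by
        rw [Polynomial.C_dvd_iff_dvd_coeff]
        intro i
        have := hφ 0 i
        rw [Polynomial.coeff_sub, Polynomial.coeff_X]
        simpa [eq_comm] using this
      obtain ⟨ψ, hψ⟩ := h2
      have h3 : ∀ z, (φ 0).eval z = z + p * ψ.eval z := by
        intro z
        have := congrArg (Polynomial.eval z) hψ
        simp at this; linarith
      obtain ⟨d, hd⟩ := ψ.sub_dvd_eval_sub x y
      rw [ZMod.intCast_zmod_eq_zero_iff_dvd, one_mul, h3, h3,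
        show x + p * ψ.eval x - (y + p * ψ.eval y) = (x - y) * (1 + p * d) by
          linear_combination (p : ℤ) * hd] at hxy
      rw [eq_comm, ZMod.intCast_eq_intCast_iff_dvd_sub]
      have hcop : IsCoprime ((p ^ h : ℕ) : ℤ) (1 + p * d) := by
        push_cast
        exact IsCoprime.pow_left ⟨-d, 1, by ring⟩
      exact hcop.dvd_of_dvd_mul_right hxy
    have hsq : ∀ f : (Fin 1 → ZMod (p ^ (1 * h))) → ℂ, sqn (fun _ => 1) (2 * tri 1) f =
        ∑ α, ‖f α‖ ^ 2 := by
      intro f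
      have := sqn_pow (W := fun _ : (Fin 1 → ZMod (p ^ (1 * h))) => (1 : ℝ)) (fun _ => zero_le_one) (d := 1) one_ne_zero f
      simpa [htri] using this
    rw [one_mul (clsSum _ _ _)]
    simp only [clsSum, hsq]
    have horth : ∀ n n', κ n ≠ κ n' → ∑ α, ph (p ^ (1 * h)) φ α (m n) *
        (starRingEnd ℂ) (ph (p ^ (1 * h)) φ α (m n')) = 0 := by
      intro n n' hnn
      have h2 : ∀ α : Fin 1 → ZMod (p ^ (1 * h)), ph (p ^ (1 * h)) φ α (m n) *
        (starRingEnd ℂ) (ph (p ^ (1 * h)) φ α (m n')) =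
          ZMod.stdAddChar (α 0 * (((φ 0).eval (m n) - (φ 0).eval (m n') : ℤ) : ZMod (p ^ (1 * h)))) := by
        intro α
        unfold ph
        rw [← AddChar.map_neg_eq_conj, ← AddChar.map_add_eq_mul]
        congr 1
        simp; ring
      simp_rw [h2]
      rw [Fintype.sum_equiv (Equiv.funUnique (Fin 1) (ZMod (p ^ (1 * h)))) _
        (fun x => ZMod.stdAddChar (x * (((φ 0).eval (m n) - (φ 0).eval (m n') : ℤ) : ZMod (p ^ (1 * h)))))
        (fun α => by simp)]
      rw [AddChar.sum_mulShift _ (ZMod.isPrimitive_stdAddChar _), if_neg]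
      · simp
      · intro h3; exact hnn (hinj _ _ h3)
    set F : ZMod (p ^ h) → (Fin 1 → ZMod (p ^ (1 * h))) → ℂ := fun c α =>
      ∑ n ∈ S.filter (fun n => κ n = c), w n * ph (p ^ (1 * h)) φ α (m n) with hF
    have hcross : ∀ c c', c ≠ c' → ∑ α, F c α * (starRingEnd ℂ) (F c' α) = 0 := by
      intro c c' hcc
      simp only [hF, map_sum, map_mul, sum_mul_sum]
      rw [sum_comm]
      refine sum_eq_zero fun n hn => ?_
      rw [sum_comm]
      refine sum_eq_zero fun n' hn' => ?_
      have h3 := horth n n' (by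
        rw [(mem_filter.1 hn).2, (mem_filter.1 hn').2]; exact hcc)
      calc _ = w n * (starRingEnd ℂ) (w n') * ∑ α, ph (p ^ (1 * h)) φ α (m n) *
        (starRingEnd ℂ) (ph (p ^ (1 * h)) φ α (m n')) := by
            rw [mul_sum]; exact sum_congr rfl fun α _ => by ring
        _ = 0 := by rw [h3, mul_zero]
    have hfinal : (((∑ α, ‖∑ n ∈ S, w n * ph (p ^ (1 * h)) φ α (m n)‖ ^ 2 : ℝ)) : ℂ) =
        ((∑ c ∈ S.image κ, ∑ α, ‖F c α‖ ^ 2 : ℝ) : ℂ) := by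
      push_cast
      have h4 : ∀ z : ℂ, ((‖z‖ : ℂ)) ^ 2 = z * (starRingEnd ℂ) z := fun z =>
        (Complex.mul_conj' z).symm
      simp_rw [h4]
      have h5 : ∀ α, ∑ n ∈ S, w n * ph (p ^ (1 * h)) φ α (m n) = ∑ c ∈ S.image κ, F c α :=
        fun α => (sum_clsSum κ _ S).symm
      simp_rw [h5, map_sum, sum_mul_sum]
      rw [sum_comm]
      refine sum_congr rfl fun c hc => ?_
      rw [sum_comm, sum_eq_single c]
      · intro c' _ hne; exact hcross c c' hne.symm
      · intro h; exact absurd hc h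
    exact (Complex.ofReal_injective hfinal).le
  refine h1.mono ?_
  rw [one_mul]
  exact Real.one_le_rpow one_le_p (by positivity)

/-- Decoupling with arbitrarily small exponent. -/
theorem DecExp_all {k : ℕ} (hk : 1 ≤ k) (hkp : k < p) {ε : ℝ} (hε : 0 < ε) : DecExp p k ε := by
  induction k using Nat.strong_induction_on generalizing ε with
  | _ k ih =>
    rcases Nat.lt_or_ge k 2 with h | h
    · obtain rfl : k = 1 := by omega
      exact DecExp_one hε
    · exact DecExp_of_lower h hkp (fun l hl hlk ε hε => ih l hlk hl (by omega) hε) hε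

end

/-! ### The mean value theorem -/

/-- Pairs of `t`-tuples from `S`. -/
def prs (S : Finset ℤ) (t : ℕ) : Finset ((Fin t → ℤ) × (Fin t → ℤ)) :=
  (Fintype.piFinset fun _ : Fin t => S) ×ˢ (Fintype.piFinset fun _ : Fin t => S)

lemma norm_sum_pow_expand (S : Finset ℤ) (z : ℤ → ℂ) (t : ℕ) :
    ((‖∑ n ∈ S, z n‖ ^ (2 * t) : ℝ) : ℂ) =
      ∑ xy ∈ prs S t, (∏ i, z (xy.1 i)) * (starRingEnd ℂ) (∏ i, z (xy.2 i)) := by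
  unfold prs
  rw [sum_product]
  simp only
  push_cast
  rw [pow_mul, ← Complex.mul_conj', mul_pow, ← map_pow, sum_pow', map_sum,
    sum_mul_sum]

lemma addChar_sum {A ι : Type*} [AddCommMonoid A] (χ : AddChar A ℂ) (s : Finset ι) (f : ι → A) :
    χ (∑ i ∈ s, f i) = ∏ i ∈ s, χ (f i) := by
  classical
  induction s using Finset.induction_on with
  | empty => simp
  | insert a s ha ih => rw [sum_insert ha, prod_insert ha, AddChar.map_add_eq_mul, ih]

lemma sum_stdAddChar_pi {k N : ℕ} [NeZero N] (d : Fin k → ZMod N) :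
    ∑ α : Fin k → ZMod N, (ZMod.stdAddChar (∑ j, α j * d j) : ℂ) =
      if ∀ j, d j = 0 then (N : ℂ) ^ k else 0 := by
  have h1 : ∀ α : Fin k → ZMod N, (ZMod.stdAddChar (∑ j, α j * d j) : ℂ) =
      ∏ j, (ZMod.stdAddChar (α j * d j) : ℂ) := fun α => addChar_sum _ _ _
  simp_rw [h1]
  have h2 := prod_univ_sum (fun _ : Fin k => (univ : Finset (ZMod N)))
    (fun j a => (ZMod.stdAddChar (a * d j) : ℂ))
  rw [Fintype.piFinset_univ] at h2
  rw [← h2]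
  have h3 : ∀ j, ∑ a : ZMod N, (ZMod.stdAddChar (a * d j) : ℂ) = if d j = 0 then (N : ℂ) else 0 := by
    intro j
    rw [AddChar.sum_mulShift _ (ZMod.isPrimitive_stdAddChar _), ZMod.card]
    split_ifs <;> simp
  simp_rw [h3]
  split_ifs with h
  · simp [h]
  · push Not at h
    obtain ⟨j, hj⟩ := h
    exact prod_eq_zero (mem_univ j) (by simp [hj])

/-- Vinogradov's mean value theorem: the number of solutions in integers from `[-X, X]`, for
an arbitrary right-hand side. -/
theorem vmvt {k : ℕ} (hk : 1 ≤ k) {ε : ℝ} (hε : 0 < ε) : ∃ C : ℝ, 0 < C ∧ ∀ X : ℕ, 1 ≤ X →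
    ∀ v : Fin k → ℤ, (((prs (Icc (-(X : ℤ)) X) (tri k)).filter fun xy =>
      ∀ j : Fin k, ∑ i, xy.1 i ^ (j.val + 1) - ∑ i, xy.2 i ^ (j.val + 1) = v j).card : ℝ) ≤
      C * (X : ℝ) ^ ((tri k : ℝ) + ε) := by
  obtain ⟨p, hkp, hpp⟩ := Nat.exists_infinite_primes (k + 1)
  have : Fact p.Prime := ⟨hpp⟩
  have hp0 : (0 : ℝ) < p := by exact_mod_cast hpp.pos
  have hp1 : (1 : ℝ) ≤ p := by exact_mod_cast hpp.one_lt.le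
  have ht := tri_pos hk
  have ht' : (0 : ℝ) < tri k := by exact_mod_cast ht
  obtain ⟨C, hC, hD⟩ := DecExp_all (p := p) hk (by omega) (ε := ε / tri k) (by positivity)
  refine ⟨C ^ tri k * (3 * p : ℝ) ^ ε * 3 ^ tri k, by positivity, ?_⟩
  intro X hX v
  set S := Icc (-(X : ℤ)) X with hS
  set h := Nat.clog p (2 * X + 1) with hh
  have hX1 : (1 : ℝ) ≤ X := by exact_mod_cast hX
  have hph : 2 * X + 1 ≤ p ^ h := Nat.le_pow_clog hpp.one_lt _
  have hph2 : ((p ^ h : ℕ) : ℝ) ≤ 3 * p * X := by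
    have h1 : 1 ≤ h := by rw [hh]; exact Nat.clog_pos hpp.one_lt (by omega)
    have h2 : p ^ (h - 1) < 2 * X + 1 := by
      have := Nat.pow_pred_clog_lt_self hpp.one_lt (show 1 < 2 * X + 1 by omega)
      simpa [hh] using this
    have h3 : p ^ h = p * p ^ (h - 1) := by rw [← pow_succ']; congr 1; omega
    have h4 : p ^ h ≤ p * (3 * X) := by rw [h3]; exact Nat.mul_le_mul_left _ (by omega)
    calc ((p ^ h : ℕ) : ℝ) ≤ ((p * (3 * X) : ℕ) : ℝ) := by exact_mod_cast h4
      _ = _ := by push_cast; ring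
  set φ : Fin k → Polynomial ℤ := fun j => Polynomial.X ^ (j.val + 1) with hφ
  have hφC : InC p φ := by
    intro j i
    simp [hφ, Polynomial.coeff_X_pow]
  have key := hD h φ hφC S (fun _ => 1) id
  set N := p ^ (k * h) with hN
  set F : (Fin k → ZMod N) → ℂ := fun α => ∑ n ∈ S, 1 * ph N φ α (id n) with hF
  -- all classes are singletons
  have hcls : clsSum (fun n => ((id n : ℤ) : ZMod (p ^ h))) (fun A => sqn (fun _ => 1) (2 * tri k)
      (fun α => ∑ n ∈ A, (1 : ℂ) * ph N φ α (id n))) S ≤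
      (3 * X) * ((N : ℝ) ^ k) ^ ((1 : ℝ) / tri k) := by
    unfold clsSum
    have hinj : ∀ n ∈ S, ∀ n' ∈ S, ((n : ℤ) : ZMod (p ^ h)) = n' → n = n' := by
      intro n hn n' hn' hnn
      rw [ZMod.intCast_eq_intCast_iff_dvd_sub] at hnn
      rw [hS, mem_Icc] at hn hn'
      have h1 := Int.eq_zero_of_abs_lt_dvd hnn (by
        have : ((2 * X + 1 : ℕ) : ℤ) ≤ (p ^ h : ℕ) := by exact_mod_cast hph
        push_cast at this
        rw [abs_lt]; push_cast; constructor <;> linarith [hn.1, hn.2, hn'.1, hn'.2])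
      linarith
    have h1 : ∀ c ∈ S.image (fun n => ((id n : ℤ) : ZMod (p ^ h))), sqn (fun _ => 1) (2 * tri k)
      (fun α => ∑ n ∈ S.filter (fun n => ((id n : ℤ) : ZMod (p ^ h)) = c), (1 : ℂ) * ph N φ α (id n))
        = ((N : ℝ) ^ k) ^ ((1 : ℝ) / tri k) := by
      intro c hc
      obtain ⟨n0, hn0, rfl⟩ := mem_image.1 hc
      have h2 : S.filter (fun n => ((id n : ℤ) : ZMod (p ^ h)) = ((id n0 : ℤ) : ZMod (p ^ h))) = {n0} := by
        ext n
        simp only [mem_filter, mem_singleton, id]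
        constructor
        · rintro ⟨h3, h4⟩; exact hinj n h3 n0 hn0 h4
        · rintro rfl; exact ⟨hn0, rfl⟩
      rw [h2]
      unfold sqn
      simp only [sum_singleton, one_mul, ph, norm_stdAddChar, one_pow]
      simp only [sum_const, card_univ, Fintype.card_pi, ZMod.card, prod_const,
        Fintype.card_fin, nsmul_eq_mul, mul_one]
      push_cast
      congr 1
      field_simp
    rw [sum_congr rfl h1, sum_const, nsmul_eq_mul]
    refine mul_le_mul_of_nonneg_right ?_ (by positivity)
    have h5 : (S.image (fun n => ((id n : ℤ) : ZMod (p ^ h)))).card ≤ 3 * X := by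
      refine card_image_le.trans ?_
      rw [hS, Int.card_Icc]; omega
    exact_mod_cast h5
  have hmain : ∑ α, ‖F α‖ ^ (2 * tri k) ≤
      C ^ tri k * (3 * p : ℝ) ^ ε * 3 ^ tri k * (X : ℝ) ^ ((tri k : ℝ) + ε) * (N : ℝ) ^ k := by
    have h1 := sqn_pow (W := fun _ : Fin k → ZMod N => (1 : ℝ)) (fun _ => zero_le_one)
      (by omega : tri k ≠ 0) F
    simp only [one_mul] at h1
    rw [← h1]
    refine (pow_le_pow_left₀ (sqn_nonneg (fun _ => zero_le_one) _ _) (key.trans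
      (mul_le_mul_of_nonneg_left hcls (by positivity))) _).trans ?_
    rw [mul_pow, mul_pow, mul_pow, mul_pow, ← rpow_mul_natCast hp0.le,
      ← rpow_mul_natCast (by positivity), one_div_mul_cancel ht'.ne', rpow_one]
    have h2 : (p : ℝ) ^ (ε / tri k * h * tri k) ≤ (3 * p : ℝ) ^ ε * (X : ℝ) ^ ε := by
      rw [show ε / tri k * h * tri k = h * ε by field_simp, rpow_mul hp0.le,
        rpow_natCast, ← mul_rpow (by positivity) (by positivity)]
      refine rpow_le_rpow (by positivity) ?_ hε.le
      exact_mod_cast hph2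
    rw [rpow_add (by linarith), rpow_natCast]
    calc C ^ tri k * (p : ℝ) ^ (ε / tri k * h * tri k) * (3 ^ tri k * (X : ℝ) ^ tri k * (N : ℝ) ^ k)
        ≤ C ^ tri k * ((3 * p : ℝ) ^ ε * (X : ℝ) ^ ε) * (3 ^ tri k * (X : ℝ) ^ tri k * (N : ℝ) ^ k) := by
          gcongr
      _ = _ := by ring
  -- count by orthogonality
  have hN0 : (0 : ℝ) < (N : ℝ) ^ k := by
    have : (0 : ℝ) < N := by exact_mod_cast Nat.pos_of_ne_zero (NeZero.ne N)
    positivity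
  refine le_of_mul_le_mul_right (le_trans ?_ hmain) hN0
  set D : ((Fin (tri k) → ℤ) × (Fin (tri k) → ℤ)) → Fin k → ZMod N := fun xy j =>
    ((∑ i, xy.1 i ^ (j.val + 1) - ∑ i, xy.2 i ^ (j.val + 1) - v j : ℤ) : ZMod N) with hDd
  have hexp : ∑ α, ((‖F α‖ ^ (2 * tri k) : ℝ) : ℂ) * ZMod.stdAddChar (-∑ j, α j * ((v j : ℤ) : ZMod N)) =
      (((prs S (tri k)).filter fun xy => ∀ j, D xy j = 0).card : ℂ) * (N : ℂ) ^ k := by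
    have h1 : ∀ α, ((‖F α‖ ^ (2 * tri k) : ℝ) : ℂ) * ZMod.stdAddChar (-∑ j, α j * ((v j : ℤ) : ZMod N)) =
        ∑ xy ∈ prs S (tri k), ZMod.stdAddChar (∑ j, α j * D xy j) := by
      intro α
      rw [hF, norm_sum_pow_expand, sum_mul]
      refine sum_congr rfl fun xy _ => ?_
      simp only [one_mul, ph, id]
      rw [← addChar_sum, ← addChar_sum, ← AddChar.map_neg_eq_conj,
        ← AddChar.map_add_eq_mul, ← AddChar.map_add_eq_mul]
      congr 1
      rw [sum_comm, sum_comm (s := (univ : Finset (Fin (tri k)))), ← sum_neg_distrib, ← sum_neg_distrib, ← sum_add_distrib,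
        ← sum_add_distrib]
      refine sum_congr rfl fun j _ => ?_
      rw [hDd]
      simp only [hφ, Polynomial.eval_pow, Polynomial.eval_X]
      rw [← mul_sum, ← mul_sum]
      push_cast
      ring
    simp_rw [h1]
    rw [sum_comm]
    simp_rw [sum_stdAddChar_pi]
    rw [← sum_filter, sum_const, nsmul_eq_mul]
  have hle : ‖∑ α, ((‖F α‖ ^ (2 * tri k) : ℝ) : ℂ) * ZMod.stdAddChar (-∑ j, α j * ((v j : ℤ) : ZMod N))‖ ≤
      ∑ α, ‖F α‖ ^ (2 * tri k) := by
    refine (norm_sum_le _ _).trans (le_of_eq (sum_congr rfl fun α _ => ?_))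
    rw [norm_mul, norm_stdAddChar, mul_one, Complex.norm_real, Real.norm_of_nonneg (by positivity)]
  rw [hexp, norm_mul, norm_pow, Complex.norm_natCast, Complex.norm_natCast] at hle
  refine le_trans (mul_le_mul_of_nonneg_right ?_ hN0.le) hle
  norm_cast
  refine card_le_card fun xy hxy => ?_
  rw [mem_filter] at hxy ⊢
  refine ⟨hxy.1, fun j => ?_⟩
  rw [hDd]; simp only [hxy.2 j, sub_self, Int.cast_zero]

/-! ### Mean values over the torus -/

/-- The half-open cube `(w, w + N]^m`; for integral `N` it consists of `N^m` fundamental domains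
of `ℝ^m / ℤ^m`. -/
def cube (m : ℕ) (w : ℝ) (N : ℕ) : Set (Fin m → ℝ) := Set.univ.pi fun _ => Set.Ioc w (w + N)

lemma measurableSet_cube (m : ℕ) (w : ℝ) (N : ℕ) : MeasurableSet (cube m w N) :=
  MeasurableSet.univ_pi fun _ => measurableSet_Ioc

lemma cube_subset (m : ℕ) (w : ℝ) (N : ℕ) :
    cube m w N ⊆ Set.Icc (fun _ => w) (fun _ => w + N) := by
  intro z hz
  rw [cube, Set.mem_univ_pi] at hz
  exact ⟨fun i => (hz i).1.le, fun i => (hz i).2⟩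

lemma cont_integrableOn_cube {E : Type*} [NormedAddCommGroup E] {m : ℕ} {w : ℝ} {N : ℕ}
    {f : (Fin m → ℝ) → E} (hf : Continuous f) : IntegrableOn f (cube m w N) :=
  (hf.continuousOn.integrableOn_compact isCompact_Icc).mono_set (cube_subset m w N)

lemma integral_e_Ioc (w : ℝ) (N : ℕ) (v : ℤ) :
    ∫ z in Set.Ioc w (w + N), e (z * v) = if v = 0 then (N : ℂ) else 0 := by
  split_ifs with h
  · subst h; simp [e_zero]
  · rw [← intervalIntegral.integral_of_le (by simp)]
    have hc : (2 * Real.pi * I * v : ℂ) ≠ 0 := by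
      simp [Real.pi_ne_zero, h]
    have h1 : ∀ z : ℝ, e (z * v) = Complex.exp ((2 * Real.pi * I * v) * z) := by
      intro z; unfold e; congr 1; push_cast; ring
    simp_rw [h1]
    rw [integral_exp_mul_complex hc, ← h1, ← h1]
    have h2 : e ((w + N) * v) = e (w * v) := by
      rw [show (w + N) * v = w * v + ((N * v : ℤ) : ℝ) by push_cast; ring, e_add_int]
    rw [h2, sub_self, zero_div]

lemma orth {m : ℕ} (w : ℝ) (N : ℕ) (v : Fin m → ℤ) :
    ∫ z in cube m w N, e (∑ i, z i * v i) = if v = 0 then (N : ℂ) ^ m else 0 := by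
  unfold cube
  rw [volume_pi, Measure.restrict_pi_pi]
  simp_rw [e_sum]
  rw [integral_fintype_prod_eq_prod (f := fun i z => e (z * v i))]
  simp_rw [integral_e_Ioc]
  split_ifs with h
  · simp [h]
  · obtain ⟨j, hj⟩ := Function.ne_iff.1 h
    exact prod_eq_zero (mem_univ j) (by rw [if_neg (by simpa using hj)])

lemma mean_square {ι : Type*} {m : ℕ} (w : ℝ) (N : ℕ) (A : Finset ι) (φ : ι → Fin m → ℤ)
    (b : ι → ℂ) (M : ℝ) (hb : ∀ x ∈ A, ‖b x‖ ≤ M) :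
    ∫ z in cube m w N, ‖∑ x ∈ A, b x * e (∑ i, z i * φ x i)‖ ^ 2 ≤
      (N : ℝ) ^ m * M ^ 2 * ((A ×ˢ A).filter fun xy => φ xy.1 = φ xy.2).card := by
  have h1 : ∀ z : Fin m → ℝ, ((‖∑ x ∈ A, b x * e (∑ i, z i * φ x i)‖ ^ 2 : ℝ) : ℂ) =
      ∑ xy ∈ A ×ˢ A, b xy.1 * (starRingEnd ℂ) (b xy.2) *
        e (∑ i, z i * (φ xy.1 - φ xy.2 : Fin m → ℤ) i) := by
    intro z
    push_cast
    rw [← Complex.mul_conj', map_sum, sum_mul_sum, ← sum_product']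
    refine sum_congr rfl fun xy _ => ?_
    rw [map_mul, ← e_neg]
    have : e (∑ i, z i * (φ xy.1 - φ xy.2 : Fin m → ℤ) i) =
        e (∑ i, z i * φ xy.1 i) * e (-∑ i, z i * φ xy.2 i) := by
      rw [← e_add]; congr 1
      rw [← sum_neg_distrib, ← sum_add_distrib]
      refine sum_congr rfl fun i _ => ?_
      simp only [Pi.sub_apply]; push_cast; ring
    rw [this]; ring
  have h2 : ((∫ z in cube m w N, ‖∑ x ∈ A, b x * e (∑ i, z i * φ x i)‖ ^ 2 : ℝ) : ℂ) =
      ∑ xy ∈ A ×ˢ A, b xy.1 * (starRingEnd ℂ) (b xy.2) *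
        (if φ xy.1 - φ xy.2 = 0 then (N : ℂ) ^ m else 0) := by
    rw [← integral_complex_ofReal]
    simp_rw [h1]
    rw [integral_finsetSum]
    · refine sum_congr rfl fun xy _ => ?_
      rw [integral_const_mul, orth]
    · intro xy _
      refine cont_integrableOn_cube ?_
      exact continuous_const.mul (continuous_e.comp (by fun_prop))
  have h3 : 0 ≤ ∫ z in cube m w N, ‖∑ x ∈ A, b x * e (∑ i, z i * φ x i)‖ ^ 2 :=
    integral_nonneg fun z => by positivity
  rw [← Real.norm_of_nonneg h3, ← Complex.norm_real, h2]
  refine (norm_sum_le _ _).trans ?_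
  have h4 : ∀ xy ∈ A ×ˢ A, ‖b xy.1 * (starRingEnd ℂ) (b xy.2) *
        (if φ xy.1 - φ xy.2 = 0 then (N : ℂ) ^ m else 0)‖ ≤
      if φ xy.1 = φ xy.2 then (N : ℝ) ^ m * M ^ 2 else 0 := by
    intro xy hxy
    rw [mem_product] at hxy
    by_cases h : φ xy.1 = φ xy.2
    · have hM : 0 ≤ M := (norm_nonneg _).trans (hb _ hxy.1)
      simp only [h, sub_self, if_true, norm_mul, RCLike.norm_conj, norm_pow, Complex.norm_natCast]
      have := mul_le_mul (hb _ hxy.1) (hb _ hxy.2) (norm_nonneg _) hM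
      calc _ ≤ M * M * (N : ℝ) ^ m := by gcongr
        _ = _ := by ring
    · simp [h, sub_eq_zero]
  refine (sum_le_sum h4).trans ?_
  rw [← sum_filter, sum_const, nsmul_eq_mul, mul_comm]

/-- The exponential sum `∑_{|x| ≤ P} e(∑_i γ_i x^{d_i})`. -/
noncomputable def wsum {m : ℕ} (d : Fin m → ℕ) (P : ℕ) (γ : Fin m → ℝ) : ℂ :=
  ∑ x ∈ Icc (-(P : ℤ)) P, e (∑ i, γ i * (x : ℝ) ^ d i)

lemma continuous_wsum {m : ℕ} (d : Fin m → ℕ) (P : ℕ) : Continuous (wsum d P) := by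
  unfold wsum
  exact continuous_finsetSum _ fun x _ => continuous_e.comp (by fun_prop)

lemma norm_wsum_le {m : ℕ} (d : Fin m → ℕ) (P : ℕ) (hP : 1 ≤ P) (γ : Fin m → ℝ) :
    ‖wsum d P γ‖ ≤ 3 * P := by
  unfold wsum
  refine (norm_sum_le _ _).trans ?_
  simp_rw [norm_e]
  rw [sum_const, nsmul_eq_mul, mul_one, Int.card_Icc]
  have : ((P : ℤ) + 1 - -(P : ℤ)).toNat ≤ 3 * P := by omega
  exact_mod_cast this

lemma sum_missing {n K : ℕ} (k : Fin n → ℕ) (hk : StrictMono k) (h1 : ∀ i, 1 ≤ k i)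
    (hK : ∀ i, k i ≤ K) :
    ∑ j ∈ (univ : Finset (Fin K)).filter (fun j => ¬ ∃ i, k i = j.val + 1), (j.val + 1)
      + ∑ i, k i = tri K := by
  have e1 : ∑ i, k i = ∑ j ∈ (univ : Finset (Fin K)).filter
      (fun j => ∃ i, k i = j.val + 1), (j.val + 1) := by
    refine sum_bij (fun i _ => (⟨k i - 1, by have := h1 i; have := hK i; omega⟩ : Fin K))
      ?_ ?_ ?_ ?_
    · intro i _
      simp only [mem_filter, mem_univ, true_and]
      exact ⟨i, by have := h1 i; omega⟩
    · intro i _ i' _ h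
      rw [Fin.mk.injEq] at h
      exact hk.injective (by have := h1 i; have := h1 i'; omega)
    · intro j hj
      obtain ⟨i, hi⟩ := (mem_filter.1 hj).2
      exact ⟨i, mem_univ _, Fin.ext (by simp [hi])⟩
    · intro i _
      have := h1 i
      simp only; omega
  rw [e1, add_comm, sum_filter_add_sum_filter_not]
  rw [Fin.sum_univ_eq_sum_range (fun j => j + 1)]
  have h3 := two_mul_tri K
  have h2 : ∑ i ∈ range K, (i + 1) = ∑ i ∈ range (K + 1), i := by
    rw [sum_range_succ']; simp
  have h4 := sum_range_id_mul_two (K + 1)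
  rw [h2]; simp only [Nat.add_sub_cancel] at h4
  nlinarith

/-- The mean value theorem for an incomplete system: sum over the values of the power sums of
the missing degrees. -/
lemma count_incomplete {n K : ℕ} (k : Fin n → ℕ) (hk : StrictMono k) (h1 : ∀ i, 1 ≤ k i)
    (hK : ∀ i, k i ≤ K) (hK1 : 1 ≤ K) {ε : ℝ} (hε : 0 < ε) : ∃ C : ℝ, 0 < C ∧ ∀ P : ℕ, 1 ≤ P →
      (((prs (Icc (-(P : ℤ)) P) (tri K)).filter fun xy =>
        ∀ i : Fin n, ∑ l, xy.1 l ^ k i = ∑ l, xy.2 l ^ k i).card : ℝ) ≤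
      C * (P : ℝ) ^ (2 * (tri K : ℝ) - ∑ i, (k i : ℝ) + ε) := by
  classical
  obtain ⟨C, hC, hv⟩ := vmvt hK1 hε
  have ht := tri_pos hK1
  refine ⟨C * (5 * tri K : ℝ) ^ K, by positivity, fun P hP => ?_⟩
  have hP1 : (1 : ℝ) ≤ P := by exact_mod_cast hP
  set A := (prs (Icc (-(P : ℤ)) P) (tri K)).filter fun xy =>
        ∀ i : Fin n, ∑ l, xy.1 l ^ k i = ∑ l, xy.2 l ^ k i with hA
  set V : Finset (Fin K → ℤ) := Fintype.piFinset fun j : Fin K =>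
    if ∃ i, k i = j.val + 1 then ({0} : Finset ℤ) else
      Icc (-((2 * tri K * P ^ (j.val + 1) : ℕ) : ℤ)) ((2 * tri K * P ^ (j.val + 1) : ℕ) : ℤ) with hV
  set F : (Fin (tri K) → ℤ) × (Fin (tri K) → ℤ) → Fin K → ℤ := fun xy j =>
    ∑ l, xy.1 l ^ (j.val + 1) - ∑ l, xy.2 l ^ (j.val + 1) with hF
  have hmaps : ∀ xy ∈ A, F xy ∈ V := by
    intro xy hxy
    rw [hA, mem_filter] at hxy
    obtain ⟨hx, hy⟩ := hxy
    rw [prs, mem_product, Fintype.mem_piFinset, Fintype.mem_piFinset] at hx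
    rw [hV, Fintype.mem_piFinset]
    intro j
    split_ifs with hj
    · obtain ⟨i, hi⟩ := hj
      rw [mem_singleton, hF]
      simp only
      rw [← hi, hy i, sub_self]
    · have hb : ∀ x : Fin (tri K) → ℤ, (∀ l, x l ∈ Icc (-(P : ℤ)) P) →
          |∑ l, x l ^ (j.val + 1)| ≤ tri K * (P : ℤ) ^ (j.val + 1) := by
        intro x hx
        refine (abs_sum_le_sum_abs _ _).trans ?_
        have : ∀ l ∈ (univ : Finset (Fin (tri K))), |x l ^ (j.val + 1)| ≤ (P : ℤ) ^ (j.val + 1) := by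
          intro l _
          rw [abs_pow]
          refine pow_le_pow_left₀ (abs_nonneg _) ?_ _
          have := mem_Icc.1 (hx l)
          exact abs_le.2 this
        refine (sum_le_sum this).trans ?_
        simp
      have b1 := abs_le.1 (hb _ hx.1)
      have b2 := abs_le.1 (hb _ hx.2)
      rw [mem_Icc, hF]
      push_cast
      constructor <;> linarith [b1.1, b1.2, b2.1, b2.2]
  have hfib : ∀ v ∈ V, ((A.filter fun xy => F xy = v).card : ℝ) ≤ C * (P : ℝ) ^ ((tri K : ℝ) + ε) := by
    intro v _
    refine le_trans ?_ (hv P hP v)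
    norm_cast
    refine card_le_card fun xy hxy => ?_
    rw [mem_filter, hA, mem_filter] at hxy
    rw [mem_filter]
    exact ⟨hxy.1.1, fun j => by rw [← hxy.2]⟩
  rw [card_eq_sum_card_fiberwise hmaps]
  push_cast
  refine (sum_le_sum hfib).trans ?_
  rw [sum_const, nsmul_eq_mul]
  have hVc : (V.card : ℝ) ≤ (5 * tri K : ℝ) ^ K * (P : ℝ) ^ ((tri K : ℝ) - ∑ i, (k i : ℝ)) := by
    rw [hV, Fintype.card_piFinset]
    push_cast
    have h2 : ∀ j ∈ (univ : Finset (Fin K)), (((if ∃ i, k i = j.val + 1 then ({0} : Finset ℤ) else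
      Icc (-((2 * tri K * P ^ (j.val + 1) : ℕ) : ℤ)) ((2 * tri K * P ^ (j.val + 1) : ℕ) : ℤ)).card : ℕ) : ℝ)
        ≤ (5 * tri K : ℝ) * (if ¬ ∃ i, k i = j.val + 1 then (P : ℝ) ^ (j.val + 1) else 1) := by
      intro j _
      have hT : (1 : ℝ) ≤ tri K := by exact_mod_cast ht
      by_cases hj : ∃ i, k i = j.val + 1
      · simp only [hj, if_true, not_true, if_false, card_singleton]
        push_cast; linarith
      · simp only [hj, if_false, not_false_iff, if_true, Int.card_Icc]
        have : 1 ≤ tri K * P ^ (j.val + 1) := Nat.mul_pos ht (Nat.pow_pos hP)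
        have h5 : (((2 * tri K * P ^ (j.val + 1) : ℕ) : ℤ) + 1 - -((2 * tri K * P ^ (j.val + 1) : ℕ) : ℤ)).toNat
          ≤ 5 * (tri K * P ^ (j.val + 1)) := by
            rw [mul_assoc]
            generalize tri K * P ^ (j.val + 1) = y at *
            omega
        calc _ ≤ ((5 * (tri K * P ^ (j.val + 1)) : ℕ) : ℝ) := by exact_mod_cast h5
          _ = _ := by push_cast; ring
    refine (prod_le_prod (fun j _ => by positivity) h2).trans ?_
    rw [prod_mul_distrib, prod_const, card_univ, Fintype.card_fin,
      ← prod_filter, prod_pow_eq_pow_sum]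
    have h6 := sum_missing k hk h1 hK
    have h7 : ((tri K : ℝ) - ∑ i, (k i : ℝ)) = ((∑ j ∈ (univ : Finset (Fin K)).filter
        (fun j => ¬ ∃ i, k i = j.val + 1), (j.val + 1) : ℕ) : ℝ) := by
      rw [← h6]; push_cast; ring
    rw [h7, rpow_natCast]
  calc _ ≤ (5 * tri K : ℝ) ^ K * (P : ℝ) ^ ((tri K : ℝ) - ∑ i, (k i : ℝ)) *
        (C * (P : ℝ) ^ ((tri K : ℝ) + ε)) := by gcongr
    _ = _ := by
      have h8 : (P : ℝ) ^ (2 * (tri K : ℝ) - ∑ i, (k i : ℝ) + ε) =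
          (P : ℝ) ^ ((tri K : ℝ) - ∑ i, (k i : ℝ)) * (P : ℝ) ^ ((tri K : ℝ) + ε) := by
        rw [← rpow_add (by linarith)]; congr 1; ring
      rw [h8]; ring

lemma wsum_pow {m : ℕ} (d : Fin m → ℕ) (P t : ℕ) (γ : Fin m → ℝ) :
    wsum d P γ ^ t = ∑ x ∈ Fintype.piFinset fun _ : Fin t => Icc (-(P : ℤ)) P,
      e (∑ i, γ i * ((∑ l, x l ^ d i : ℤ) : ℝ)) := by
  unfold wsum
  rw [sum_pow']
  refine sum_congr rfl fun x _ => ?_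
  rw [← e_sum, sum_comm]
  congr 1
  refine sum_congr rfl fun i _ => ?_
  push_cast
  rw [mul_sum]

lemma mean_value {n K : ℕ} (k : Fin n → ℕ) (hk : StrictMono k) (h1 : ∀ i, 1 ≤ k i)
    (hK : ∀ i, k i ≤ K) (hK1 : 1 ≤ K) {ε : ℝ} (hε : 0 < ε) : ∃ C : ℝ, 0 < C ∧ ∀ P : ℕ, 1 ≤ P →
      ∀ (w : ℝ) (u : Fin n → ℤ), (∀ i, u i ≠ 0) →
      ∫ α in cube n w 1, ‖wsum k P (fun i => α i * u i)‖ ^ (2 * tri K) ≤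
      C * (P : ℝ) ^ (2 * (tri K : ℝ) - ∑ i, (k i : ℝ) + ε) := by
  obtain ⟨C, hC, hc⟩ := count_incomplete k hk h1 hK hK1 hε
  refine ⟨C, hC, fun P hP w u hu => le_trans ?_ (hc P hP)⟩
  set A := Fintype.piFinset fun _ : Fin (tri K) => Icc (-(P : ℤ)) P with hA
  have := mean_square w 1 A (fun x i => u i * ∑ l, x l ^ k i) (fun _ => 1) 1 (by simp)
  simp only [Nat.cast_one, one_pow, one_mul] at this
  refine le_trans (le_of_eq ?_) (this.trans ?_)
  · congr 1
    funext α
    rw [mul_comm 2, pow_mul, ← norm_pow, wsum_pow]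
    congr 2
    refine sum_congr rfl fun x _ => ?_
    congr 1
    refine sum_congr rfl fun i _ => ?_
    push_cast; ring
  · norm_cast
    refine card_le_card fun xy hxy => ?_
    rw [mem_filter] at hxy ⊢
    refine ⟨hxy.1, fun i => ?_⟩
    exact mul_left_cancel₀ (hu i) (congrFun hxy.2 i)

/-! ### The large sieve and Weyl's inequality -/

lemma norm_e_sub_one_le (x : ℝ) : ‖e x - 1‖ ≤ 2 * Real.pi * |x| := by
  unfold e
  have h := Real.norm_exp_I_mul_ofReal_sub_one_le (x := 2 * Real.pi * x)
  have h2 : (2 * Real.pi * I * x : ℂ) = I * ((2 * Real.pi * x : ℝ) : ℂ) := by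
    push_cast; ring
  rw [h2]
  refine h.trans (le_of_eq ?_)
  rw [Real.norm_eq_abs, abs_mul, abs_of_pos (by positivity : (0:ℝ) < 2 * Real.pi)]

lemma norm_e_sub_le (x y : ℝ) : ‖e x - e y‖ ≤ 2 * Real.pi * |x - y| := by
  have : e x - e y = e y * (e (x - y) - 1) := by
    rw [mul_sub, ← e_add]; ring_nf
  rw [this, norm_mul, norm_e, one_mul]
  exact norm_e_sub_one_le _

lemma sq_integral_le {X : Type*} [MeasurableSpace X] {μ : Measure X} [IsFiniteMeasure μ]
    {f : X → ℝ} (hf : Integrable f μ) (hf2 : Integrable (fun x => f x ^ 2) μ) :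
    (∫ x, f x ∂μ) ^ 2 ≤ μ.real Set.univ * ∫ x, f x ^ 2 ∂μ := by
  set M := μ.real Set.univ with hM
  set I := ∫ x, f x ∂μ with hI
  have h0 : 0 ≤ ∫ x, (M * f x - I) ^ 2 ∂μ := integral_nonneg fun x => sq_nonneg _
  have h1 : ∫ x, (M * f x - I) ^ 2 ∂μ = M * (M * (∫ x, f x ^ 2 ∂μ) - I ^ 2) := by
    have : ∀ x, (M * f x - I) ^ 2 = M ^ 2 * f x ^ 2 - 2 * M * I * f x + I ^ 2 := fun x => by ring
    simp_rw [this]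
    rw [integral_add, integral_sub, integral_const_mul, integral_const_mul, integral_const,
      smul_eq_mul, ← hI, ← hM]
    · ring
    · exact hf2.const_mul _
    · exact hf.const_mul _
    · exact (hf2.const_mul _).sub (hf.const_mul _)
    · exact integrable_const _
  rw [h1] at h0
  have hM0 : 0 ≤ M := measureReal_nonneg
  rcases hM0.eq_or_lt with h | h
  · have : μ = 0 := by
      rw [hM] at h
      have h3 := (measureReal_eq_zero_iff (μ := μ) (s := Set.univ)).1 h.symm
      exact Measure.measure_univ_eq_zero.1 h3
    have hI0 : I = 0 := by rw [hI, this]; simp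
    rw [hI0, ← h]; simp
  · linarith [(mul_nonneg_iff_of_pos_left h).1 h0]

/-- The large sieve inequality in several variables, for points that may cluster: `L` bounds the
number of points in a box with half-sides `η`. -/
lemma large_sieve {ι κ : Type*} {m : ℕ} (A : Finset ι) (φ : ι → Fin m → ℤ) (b : ι → ℂ)
    (hb : ∀ x ∈ A, ‖b x‖ ≤ 1) (η : Fin m → ℝ) (hη : ∀ i, 0 < η i) (hη1 : ∀ i, η i ≤ 1)
    (hφ : ∀ x ∈ A, 2 * Real.pi * ∑ i, η i * |(φ x i : ℝ)| ≤ 1 / 2)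
    (Y : Finset κ) (z : κ → Fin m → ℝ) (hz0 : ∀ y ∈ Y, ∀ i, 0 ≤ z y i) (hz1 : ∀ y ∈ Y, ∀ i, z y i < 1)
    (L : ℝ) (hL : ∀ ζ : Fin m → ℝ, ((Y.filter fun y => ∀ i, |ζ i - z y i| ≤ η i).card : ℝ) ≤ L) :
    ∑ y ∈ Y, ‖∑ x ∈ A, b x * e (∑ i, z y i * φ x i)‖ ^ 2 ≤
      4 ^ (m + 1) * L * ((A ×ˢ A).filter fun xy => φ xy.1 = φ xy.2).card / ∏ i, (2 * η i) := by
  classical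
  set J : ℝ := (((A ×ˢ A).filter fun xy => φ xy.1 = φ xy.2).card : ℝ) with hJ
  set V : ℝ := ∏ i, (2 * η i) with hV
  have hV0 : 0 < V := prod_pos fun i _ => by have := hη i; linarith
  set R : (Fin m → ℝ) → Set (Fin m → ℝ) := fun ζ => Set.Icc (ζ - η) (ζ + η) with hR
  have hRvol : ∀ ζ, volume.real (R ζ) = V := by
    intro ζ
    rw [Measure.real, hR]
    simp only
    rw [Real.volume_Icc_pi, ENNReal.toReal_prod]
    refine prod_congr rfl fun i _ => ?_
    rw [ENNReal.toReal_ofReal] <;> simp only [Pi.add_apply, Pi.sub_apply] <;> linarith [hη i]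
  have hRfin : ∀ ζ, volume (R ζ) < ⊤ := fun ζ => isCompact_Icc.measure_lt_top
  have hRint : ∀ {E : Type} [NormedAddCommGroup E] (ζ) (f : (Fin m → ℝ) → E), Continuous f →
      IntegrableOn f (R ζ) := fun ζ f hf => hf.continuousOn.integrableOn_compact isCompact_Icc
  set g : (Fin m → ℤ) → ℂ := fun v => ∫ θ in R 0, e (∑ i, θ i * v i) with hg
  have hcont : ∀ v : Fin m → ℤ, Continuous fun θ : Fin m → ℝ => e (∑ i, θ i * v i) :=
    fun v => continuous_e.comp (by fun_prop)
  have hgV : ∀ x ∈ A, V / 2 ≤ ‖g (φ x)‖ := by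
    intro x hx
    have h1 : ‖g (φ x) - V‖ ≤ 1 / 2 * V := by
      have h2 : g (φ x) - V = ∫ θ in R 0, (e (∑ i, θ i * φ x i) - 1) := by
        rw [integral_sub (hRint _ _ (hcont _)) (hRint _ _ continuous_const)]
        rw [setIntegral_const, hRvol]; simp [hg]
      rw [h2]
      refine (norm_setIntegral_le_of_norm_le_const (hRfin 0) (C := 1 / 2) ?_).trans
        (by rw [hRvol])
      intro θ hθ
      refine (norm_e_sub_one_le _).trans (le_trans ?_ (hφ x hx))
      refine mul_le_mul_of_nonneg_left ?_ (by positivity)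
      refine (abs_sum_le_sum_abs _ _).trans (sum_le_sum fun i _ => ?_)
      rw [abs_mul]
      refine mul_le_mul_of_nonneg_right ?_ (abs_nonneg _)
      have h3 := hθ.1 i
      have h4 := hθ.2 i
      simp only [Pi.add_apply, Pi.sub_apply, Pi.zero_apply] at h3 h4
      rw [abs_le]; constructor <;> linarith
    have h5 : ‖(V : ℂ)‖ = V := by rw [Complex.norm_real, Real.norm_of_nonneg hV0.le]
    have h6 := norm_sub_norm_le (V : ℂ) (V - g (φ x))
    rw [norm_sub_rev (V : ℂ) (g (φ x)), h5] at h6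
    simp only [sub_sub_cancel] at h6
    linarith
  have hg0 : ∀ x ∈ A, g (φ x) ≠ 0 := by
    intro x hx h
    have := hgV x hx
    rw [h, norm_zero] at this; linarith
  set S' : (Fin m → ℝ) → ℂ := fun ζ => ∑ x ∈ A, (b x / g (φ x)) * e (∑ i, ζ i * φ x i) with hS'
  have hS'c : Continuous S' := continuous_finsetSum _ fun x _ => continuous_const.mul (hcont _)
  have hinteg : ∀ ζ, ∫ θ in R ζ, S' θ = ∑ x ∈ A, b x * e (∑ i, ζ i * φ x i) := by
    intro ζ
    rw [hS', integral_finsetSum]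
    · refine sum_congr rfl fun x hx => ?_
      rw [integral_const_mul]
      have h1 : ∫ θ in R ζ, e (∑ i, θ i * φ x i) = e (∑ i, ζ i * φ x i) * g (φ x) := by
        rw [hg]
        simp only
        rw [← integral_const_mul, ← integral_indicator measurableSet_Icc,
          ← integral_indicator measurableSet_Icc,
          ← integral_add_right_eq_self _ ζ]
        congr 1
        funext θ
        have h2 : θ + ζ ∈ R ζ ↔ θ ∈ R 0 := by
          simp only [hR, Set.mem_Icc, Pi.le_def, Pi.add_apply, Pi.sub_apply, Pi.zero_apply]
          constructor <;> rintro ⟨h3, h4⟩ <;>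
            exact ⟨fun i => by linarith [h3 i], fun i => by linarith [h4 i]⟩
        by_cases h3 : θ ∈ R 0
        · rw [Set.indicator_of_mem (h2.2 h3), Set.indicator_of_mem h3, ← e_add]
          congr 1
          rw [← sum_add_distrib]
          refine sum_congr rfl fun i _ => ?_
          simp only [Pi.add_apply]; ring
        · rw [Set.indicator_of_notMem (fun h => h3 (h2.1 h)), Set.indicator_of_notMem h3]
      rw [h1]
      field_simp [hg0 x hx]
    · intro x _
      exact hRint _ _ (continuous_const.mul (hcont _))
  have hcs : ∀ ζ, ‖∑ x ∈ A, b x * e (∑ i, ζ i * φ x i)‖ ^ 2 ≤ V * ∫ θ in R ζ, ‖S' θ‖ ^ 2 := by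
    intro ζ
    rw [← hinteg]
    have : IsFiniteMeasure (volume.restrict (R ζ)) := ⟨by rw [Measure.restrict_apply_univ]; exact hRfin ζ⟩
    have h1 := sq_integral_le (μ := volume.restrict (R ζ)) (f := fun θ => ‖S' θ‖)
      (hRint ζ _ hS'c.norm) (hRint ζ _ (hS'c.norm.pow 2))
    rw [measureReal_restrict_apply_univ, hRvol] at h1
    refine le_trans ?_ h1
    exact pow_le_pow_left₀ (norm_nonneg _) (norm_integral_le_integral_norm _) 2
  have hL0 : 0 ≤ L := (Nat.cast_nonneg _).trans (hL 0)
  have hsum : ∑ y ∈ Y, ∫ θ in R (z y), ‖S' θ‖ ^ 2 ≤ L * ∫ θ in cube m (-2) 4, ‖S' θ‖ ^ 2 := by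
    have hcub : IntegrableOn (fun θ => ‖S' θ‖ ^ 2) (cube m (-2) 4) :=
      cont_integrableOn_cube (hS'c.norm.pow 2)
    rw [← integral_const_mul]
    have h1 : ∀ y ∈ Y, ∫ θ in R (z y), ‖S' θ‖ ^ 2 =
        ∫ θ in cube m (-2) 4, (R (z y)).indicator (fun θ => ‖S' θ‖ ^ 2) θ := by
      intro y hy
      rw [setIntegral_indicator measurableSet_Icc]
      congr 2
      symm
      apply Set.inter_eq_right.2
      intro θ hθ
      rw [cube, Set.mem_univ_pi]
      intro i
      have h3 := hθ.1 i
      have h4 := hθ.2 i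
      simp only [Pi.add_apply, Pi.sub_apply] at h3 h4
      have := hz0 y hy i; have := hz1 y hy i; have := hη1 i
      constructor <;> push_cast <;> linarith
    rw [sum_congr rfl h1, ← integral_finsetSum]
    · refine setIntegral_mono_on ?_ (hcub.const_mul _) (measurableSet_cube _ _ _) ?_
      · exact integrable_finsetSum _ fun y _ => hcub.indicator measurableSet_Icc
      · intro θ _
        have h2 : ∀ y ∈ Y, (R (z y)).indicator (fun θ => ‖S' θ‖ ^ 2) θ =
            if ∀ i, |θ i - z y i| ≤ η i then ‖S' θ‖ ^ 2 else 0 := by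
          intro y _
          rw [Set.indicator_apply]
          refine if_congr ?_ rfl rfl
          simp only [hR, Set.mem_Icc, Pi.le_def, Pi.add_apply, Pi.sub_apply]
          constructor
          · rintro ⟨h3, h4⟩ i
            rw [abs_le]; constructor <;> linarith [h3 i, h4 i]
          · intro h
            exact ⟨fun i => by linarith [(abs_le.1 (h i)).1], fun i => by linarith [(abs_le.1 (h i)).2]⟩
        rw [sum_congr rfl h2, ← sum_filter, sum_const, nsmul_eq_mul]
        exact mul_le_mul_of_nonneg_right (hL θ) (by positivity)
    · intro y _
      exact hcub.indicator measurableSet_Icc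
  have hms := mean_square (-2) 4 A φ (fun x => b x / g (φ x)) (2 / V) (by
    intro x hx
    rw [norm_div, div_le_div_iff₀ (by linarith [hgV x hx]) hV0]
    have := hb x hx; have := hgV x hx
    nlinarith)
  have hms' : ∫ θ in cube m (-2) 4, ‖S' θ‖ ^ 2 ≤ 4 ^ m * (2 / V) ^ 2 * J := by
    exact_mod_cast hms
  calc ∑ y ∈ Y, ‖∑ x ∈ A, b x * e (∑ i, z y i * φ x i)‖ ^ 2
      ≤ ∑ y ∈ Y, V * ∫ θ in R (z y), ‖S' θ‖ ^ 2 := sum_le_sum fun y _ => hcs _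
    _ = V * ∑ y ∈ Y, ∫ θ in R (z y), ‖S' θ‖ ^ 2 := by rw [mul_sum]
    _ ≤ V * (L * (4 ^ m * (2 / V) ^ 2 * J)) := by
        gcongr
        exact hsum.trans (mul_le_mul_of_nonneg_left hms' hL0)
    _ = _ := by field_simp; ring

/-- `x` is within `δ` of an integer. -/
def NI (x δ : ℝ) : Prop := ∃ b : ℤ, |x - b| ≤ δ

lemma NI.mono {x δ δ' : ℝ} (h : NI x δ) (hd : δ ≤ δ') : NI x δ' :=
  let ⟨b, hb⟩ := h; ⟨b, hb.trans hd⟩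

lemma NI.int_mul {x δ : ℝ} (h : NI x δ) (a : ℤ) : NI (a * x) (|(a : ℝ)| * δ) := by
  obtain ⟨b, hb⟩ := h
  refine ⟨a * b, ?_⟩
  push_cast
  rw [← mul_sub, abs_mul]
  exact mul_le_mul_of_nonneg_left hb (abs_nonneg _)

lemma NI.sub {x y δ δ' : ℝ} (h : NI x δ) (h' : NI y δ') : NI (x - y) (δ + δ') := by
  obtain ⟨b, hb⟩ := h
  obtain ⟨b', hb'⟩ := h'
  refine ⟨b - b', ?_⟩
  push_cast
  rw [show x - y - (b - b') = (x - b) - (y - b') by ring]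
  exact (abs_sub _ _).trans (add_le_add hb hb')

lemma NI.sum {ι : Type*} (S : Finset ι) (x δ : ι → ℝ) (h : ∀ i ∈ S, NI (x i) (δ i)) :
    NI (∑ i ∈ S, x i) (∑ i ∈ S, δ i) := by
  choose! b hb using h
  refine ⟨∑ i ∈ S, b i, ?_⟩
  push_cast
  rw [← sum_sub_distrib]
  exact (abs_sum_le_sum_abs _ _).trans (sum_le_sum hb)

/-- The coefficient of `x^j` in `p(x + y)` where `p = ∑_{i ≤ K} g_i x^i`. -/
noncomputable def tc (K : ℕ) (g : ℕ → ℝ) (j : ℕ) (y : ℝ) : ℝ :=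
  ∑ i ∈ range (K + 1), (i.choose j : ℝ) * g i * y ^ (i - j)

lemma tc_expand (K : ℕ) (g : ℕ → ℝ) (x y : ℝ) :
    ∑ i ∈ range (K + 1), g i * (x + y) ^ i = ∑ j ∈ range (K + 1), tc K g j y * x ^ j := by
  unfold tc
  simp_rw [sum_mul]
  rw [sum_comm]
  refine sum_congr rfl fun i hi => ?_
  rw [add_pow, mul_sum]
  rw [← sum_subset (range_mono (by have := mem_range.1 hi; omega : i + 1 ≤ K + 1))]
  · refine sum_congr rfl fun j _ => by ring
  · intro j _ hj
    rw [Nat.choose_eq_zero_of_lt (by simpa using hj)]; simp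

lemma tc_top (K : ℕ) (g : ℕ → ℝ) (y : ℝ) : tc K g K y = g K := by
  unfold tc
  rw [sum_eq_single K]
  · simp
  · intro i hi hne
    rw [Nat.choose_eq_zero_of_lt (by have := mem_range.1 hi; omega)]; simp
  · simp

/-- Differences of the Taylor coefficients at two points determine the coefficients of degree at
least two, up to a bounded factor times the distance of the points. -/
lemma descent (K : ℕ) (r : ℕ) : ∃ D : ℝ, 0 ≤ D ∧ ∀ (g : ℕ → ℝ) (P y y' : ℕ) (η : ℝ), 0 ≤ η →
    1 ≤ P → y < y' → y' ≤ P →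
    (∀ j, 1 ≤ j → j < K → NI (tc K g j y' - tc K g j y) (η / (P : ℝ) ^ j)) →
    ∀ i, 2 ≤ i → i ≤ K → K < i + r →
      NI (((K.factorial ^ r * (y' - y) : ℕ) : ℝ) * g i) (D * η * P / (P : ℝ) ^ i) := by
  induction r with
  | zero => exact ⟨0, le_rfl, fun g P y y' η _ _ _ _ _ i _ _ _ => by omega⟩
  | succ r ih =>
    obtain ⟨D, hD, hdes⟩ := ih
    set M : ℕ := K.factorial with hM
    have hM0 : 0 < M := Nat.factorial_pos K
    refine ⟨(M : ℝ) ^ (r + 1) + (K + 1) * (M * 2 ^ K * K * D), by positivity, ?_⟩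
    intro g P y y' η hη hP hyy hyP hNI i hi2 hiK hir
    have hP1 : (1 : ℝ) ≤ P := by exact_mod_cast hP
    have hPpos : (0 : ℝ) < P := by linarith
    obtain ⟨M', hM'⟩ : i ∣ M := Nat.dvd_factorial (by omega) hiK
    have hM'le : (M' : ℝ) ≤ M := by
      have : M' ≤ M := by rw [hM']; exact Nat.le_mul_of_pos_left _ (by omega)
      exact_mod_cast this
    set s : ℕ → ℕ := fun l => ∑ a ∈ range (l - (i - 1)), y' ^ a * y ^ (l - (i - 1) - 1 - a) with hs
    have hsl : ∀ l, (s l : ℝ) * ((y' : ℝ) - y) = (y' : ℝ) ^ (l - (i - 1)) - (y : ℝ) ^ (l - (i - 1)) := by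
      intro l
      rw [hs]; push_cast
      exact geom_sum₂_mul _ _ _
    have hd : ((y' - y : ℕ) : ℝ) = (y' : ℝ) - y := by rw [Nat.cast_sub hyy.le]
    have hexp : tc K g (i - 1) y' - tc K g (i - 1) y =
        ∑ l ∈ range (K + 1), (l.choose (i - 1) : ℝ) * g l * (s l * ((y' - y : ℕ) : ℝ)) := by
      unfold tc
      rw [← sum_sub_distrib]
      refine sum_congr rfl fun l _ => ?_
      rw [hd, hsl]; ring
    -- isolate the term of degree `i`
    have hiso : (((M ^ (r + 1) * (y' - y) : ℕ) : ℝ) * g i) =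
        ((M ^ r * M' : ℕ) : ℤ) * (tc K g (i - 1) y' - tc K g (i - 1) y) -
        ∑ l ∈ (range (K + 1)).filter (fun l => i < l),
          ((M' * l.choose (i - 1) * s l : ℕ) : ℤ) * (((M ^ r * (y' - y) : ℕ) : ℝ) * g l) := by
      rw [hexp, mul_sum]
      have h1 : ∑ l ∈ range (K + 1), (((M ^ r * M' : ℕ) : ℤ) : ℝ) *
          ((l.choose (i - 1) : ℝ) * g l * (s l * ((y' - y : ℕ) : ℝ))) =
          ∑ l ∈ (range (K + 1)).filter (fun l => i < l),
            ((M' * l.choose (i - 1) * s l : ℕ) : ℤ) * (((M ^ r * (y' - y) : ℕ) : ℝ) * g l) +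
          (((M ^ (r + 1) * (y' - y) : ℕ) : ℝ) * g i) := by
        rw [← sum_filter_add_sum_filter_not (range (K + 1)) (fun l => i < l)]
        congr 1
        · refine sum_congr rfl fun l _ => ?_
          push_cast; ring
        · rw [sum_eq_single i]
          · have h2 : s i = 1 := by
              rw [hs]; simp only
              rw [show i - (i - 1) = 1 by omega]; simp
            have h3 : i.choose (i - 1) = i := by
              have := Nat.choose_symm_of_eq_add (show i = (i - 1) + 1 by omega)
              rw [this, Nat.choose_one_right]
            rw [h2, h3, show ((M ^ (r + 1) * (y' - y) : ℕ) : ℝ) = (M : ℝ) ^ r * M * ((y' - y : ℕ) : ℝ) by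
              push_cast; ring]
            have h4 : (M : ℝ) = i * M' := by rw [hM']; push_cast; ring
            push_cast
            rw [h4]
            ring
          · intro l hl hne
            simp only [mem_filter, mem_range, not_lt] at hl
            have : s l = 0 := by
              rw [hs]; simp only
              rw [show l - (i - 1) = 0 by omega]; simp
            simp [this]
          · intro h; exfalso; apply h; simp; omega
      rw [h1]; ring
    rw [hiso]
    have hA := (hNI (i - 1) (by omega) (by omega)).int_mul ((M ^ r * M' : ℕ) : ℤ)
    have hB := NI.sum ((range (K + 1)).filter (fun l => i < l))
      (fun l => ((M' * l.choose (i - 1) * s l : ℕ) : ℤ) * (((M ^ r * (y' - y) : ℕ) : ℝ) * g l)) _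
      (fun l hl => by
        simp only [mem_filter, mem_range] at hl
        exact (hdes g P y y' η hη hP hyy hyP hNI l (by omega) (by omega) (by omega)).int_mul _)
    refine (hA.sub hB).mono ?_
    have hPi : (P : ℝ) ^ i = (P : ℝ) ^ (i - 1) * P := by
      rw [← pow_succ]; congr 1; omega
    have e1 : |(((M ^ r * M' : ℕ) : ℤ) : ℝ)| * (η / (P : ℝ) ^ (i - 1)) ≤
        (M : ℝ) ^ (r + 1) * η * P / (P : ℝ) ^ i := by
      rw [hPi, mul_div_mul_right _ _ hPpos.ne', mul_div_assoc]
      refine mul_le_mul_of_nonneg_right ?_ (by positivity)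
      rw [Int.cast_natCast, abs_of_nonneg (by positivity)]
      push_cast
      rw [pow_succ]
      gcongr
    have e2 : ∑ l ∈ (range (K + 1)).filter (fun l => i < l),
        |(((M' * l.choose (i - 1) * s l : ℕ) : ℤ) : ℝ)| * (D * η * P / (P : ℝ) ^ l) ≤
        (K + 1) * (M * 2 ^ K * K * D) * η * P / (P : ℝ) ^ i := by
      have h5 : ∀ l ∈ (range (K + 1)).filter (fun l => i < l),
        |(((M' * l.choose (i - 1) * s l : ℕ) : ℤ) : ℝ)| * (D * η * P / (P : ℝ) ^ l) ≤
          (M * 2 ^ K * K * D) * η * P / (P : ℝ) ^ i := by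
        intro l hl
        simp only [mem_filter, mem_range] at hl
        have h6 : (s l : ℝ) ≤ K * (P : ℝ) ^ (l - i) := by
          rw [hs]; push_cast
          have h7 : ∀ a ∈ range (l - (i - 1)), (y' : ℝ) ^ a * (y : ℝ) ^ (l - (i - 1) - 1 - a) ≤ (P : ℝ) ^ (l - i) := by
            intro a ha
            rw [mem_range] at ha
            have h8 : (y' : ℝ) ≤ P := by exact_mod_cast hyP
            have h9 : (y : ℝ) ≤ P := by exact_mod_cast (hyy.le.trans hyP)
            calc _ ≤ (P : ℝ) ^ a * (P : ℝ) ^ (l - (i - 1) - 1 - a) := by gcongr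
              _ = _ := by rw [← pow_add]; congr 1; omega
          refine (sum_le_sum h7).trans ?_
          rw [sum_const, card_range, nsmul_eq_mul]
          refine mul_le_mul_of_nonneg_right ?_ (by positivity)
          exact_mod_cast (by omega : l - (i - 1) ≤ K)
        have h10 : (l.choose (i - 1) : ℝ) ≤ 2 ^ K := by
          have : l.choose (i - 1) ≤ 2 ^ K := (Nat.choose_le_two_pow _ _).trans
            (Nat.pow_le_pow_right (by norm_num) (by omega))
          exact_mod_cast this
        have h11 : (P : ℝ) ^ l = (P : ℝ) ^ (l - i) * (P : ℝ) ^ i := by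
          rw [← pow_add]; congr 1; omega
        rw [Int.cast_natCast, abs_of_nonneg (by positivity)]
        push_cast
        calc (M' : ℝ) * (l.choose (i - 1)) * (s l) * (D * η * P / (P : ℝ) ^ l)
            ≤ M * 2 ^ K * (K * (P : ℝ) ^ (l - i)) * (D * η * P / (P : ℝ) ^ l) := by gcongr
          _ = _ := by rw [h11]; field_simp
      refine (sum_le_card_nsmul _ _ _ h5).trans ?_
      rw [nsmul_eq_mul]
      have h12 : (((range (K + 1)).filter (fun l => i < l)).card : ℝ) ≤ K + 1 := by
        have := card_filter_le (range (K + 1)) (fun l => i < l)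
        rw [card_range] at this
        exact_mod_cast this
      calc _ ≤ (K + 1 : ℝ) * ((M * 2 ^ K * K * D) * η * P / (P : ℝ) ^ i) := by gcongr
        _ = _ := by ring
    refine (add_le_add e1 e2).trans (le_of_eq ?_)
    ring

lemma ev_rpow (C : ℝ) {a b : ℝ} (h : a < b) :
    ∀ᶠ P : ℕ in atTop, C * (P : ℝ) ^ a ≤ (P : ℝ) ^ b := by
  have h1 : Tendsto (fun P : ℕ => (P : ℝ) ^ (b - a)) atTop atTop :=
    (tendsto_rpow_atTop (by linarith)).comp tendsto_natCast_atTop_atTop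
  filter_upwards [h1.eventually_ge_atTop C, Filter.eventually_ge_atTop 1] with P hP hP1
  have hP0 : (0 : ℝ) < P := by exact_mod_cast hP1
  have h2 : (P : ℝ) ^ b = (P : ℝ) ^ (b - a) * (P : ℝ) ^ a := by
    rw [← rpow_add hP0]; congr 1; ring
  rw [h2]
  exact mul_le_mul_of_nonneg_right hP (by positivity)

lemma sum_shift_one (F : ℤ → ℂ) (a : ℤ) (N : ℕ) :
    ∑ x ∈ Icc a (a + N), F (x + 1) - ∑ x ∈ Icc a (a + N), F x = F (a + N + 1) - F a := by
  induction N with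
  | zero => simp
  | succ N ih =>
    have h : Icc a (a + (N + 1 : ℕ)) = insert (a + N + 1) (Icc a (a + N)) := by
      ext x; simp only [mem_Icc, mem_insert]; push_cast; omega
    have hn : a + N + 1 ∉ Icc a (a + N) := by simp
    rw [h, sum_insert hn, sum_insert hn]
    push_cast
    rw [← add_assoc]
    linear_combination ih

lemma sum_shift (F : ℤ → ℂ) (hF : ∀ x, ‖F x‖ ≤ 1) (P y : ℕ) :
    ‖∑ x ∈ Icc (-(P : ℤ)) P, F (x + y) - ∑ x ∈ Icc (-(P : ℤ)) P, F x‖ ≤ 2 * y := by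
  induction y with
  | zero => simp
  | succ y ih =>
    have h := sum_shift_one (fun x => F (x + y)) (-(P : ℤ)) (2 * P)
    rw [show -(P : ℤ) + (2 * P : ℕ) = P by push_cast; ring] at h
    have h1 : ∑ x ∈ Icc (-(P : ℤ)) P, F (x + (y + 1 : ℕ)) - ∑ x ∈ Icc (-(P : ℤ)) P, F x =
        (F (P + 1 + y) - F (-(P : ℤ) + y)) +
        (∑ x ∈ Icc (-(P : ℤ)) P, F (x + y) - ∑ x ∈ Icc (-(P : ℤ)) P, F x) := by
      rw [← h]
      simp only [sub_add_sub_cancel]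
      congr 1
      refine sum_congr rfl fun x _ => ?_
      congr 1; push_cast; ring
    rw [h1]
    refine (norm_add_le _ _).trans ?_
    have := norm_sub_le (F (P + 1 + y)) (F (-(P : ℤ) + y))
    have := hF (P + 1 + y)
    have := hF (-(P : ℤ) + y)
    push_cast; linarith

lemma separated_card (T : Finset ℕ) (Y H : ℕ) (hH : 1 ≤ H) (hT : ∀ y ∈ T, y < Y)
    (hsep : ∀ y ∈ T, ∀ y' ∈ T, y < y' → H < y' - y) : T.card ≤ Y / H + 1 := by
  have h1 : (T.image fun y => y / H).card = T.card := by
    refine card_image_of_injOn fun y hy y' hy' h => ?_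
    have key : ∀ a ∈ T, ∀ b ∈ T, a / H = b / H → ¬ a < b := by
      intro a ha b hb hab hlt
      have := hsep a ha b hb hlt
      have h2 := Nat.div_add_mod a H
      have h3 := Nat.div_add_mod b H
      have h4 := Nat.mod_lt b hH
      rw [hab] at h2
      omega
    have := key y hy y' hy' h
    have := key y' hy' y hy h.symm
    omega
  rw [← h1]
  have h2 : (T.image fun y => y / H) ⊆ range (Y / H + 1) := by
    intro z hz
    obtain ⟨y, hy, rfl⟩ := mem_image.1 hz
    rw [mem_range]
    have := Nat.div_le_div_right (c := H) (hT y hy).le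
    omega
  simpa using card_le_card h2

/-- If no two shifts at distance at most `H` have nearly equal Taylor coefficients, then the
exponential sum is small. -/
lemma weyl_sieve {m : ℕ} (hm : 1 ≤ m) {ε η : ℝ} (hε : 0 < ε) (hη : 0 < η) (hη1 : η ≤ 1)
    (hη2 : 2 * Real.pi * (m * η * tri m) ≤ 1 / 2) :
    ∃ C : ℝ, 0 < C ∧ ∀ (g : ℕ → ℝ) (P Y H : ℕ) (U : ℝ), 1 ≤ P → 1 ≤ H → 0 ≤ U →
      (∀ y < Y, U ≤ ‖∑ x ∈ Icc (-(P : ℤ)) P,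
        e (∑ i ∈ range (m + 1 + 1), g i * ((x + (y : ℕ) : ℤ) : ℝ) ^ i)‖) →
      (∀ y y', y < y' → y' < Y → y' - y ≤ H → ¬ ∀ j, 1 ≤ j → j < m + 1 →
        NI (tc (m + 1) g j y' - tc (m + 1) g j y) (2 * η / (P : ℝ) ^ j)) →
      Y * U ^ (2 * tri m) ≤ C * (Y / H + 1) * (P : ℝ) ^ (2 * (tri m : ℝ) + ε) := by
  classical
  obtain ⟨C, hC, hv⟩ := vmvt hm hε
  refine ⟨4 ^ (m + 1) * C / (2 * η) ^ m, by positivity, ?_⟩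
  intro g P Y H U hP hH hU hlow hsep
  have hP1 : (1 : ℝ) ≤ P := by exact_mod_cast hP
  have hP0 : (0 : ℝ) < P := by linarith
  set t := tri m with ht
  set A := Fintype.piFinset fun _ : Fin t => Icc (-(P : ℤ)) P with hA
  set φ : (Fin t → ℤ) → Fin m → ℤ := fun x j => ∑ l, x l ^ (j.val + 1) with hφ
  set b : (Fin t → ℤ) → ℂ := fun x => ∏ l, e (g (m + 1) * (x l : ℝ) ^ (m + 1)) with hb
  set z : ℕ → Fin m → ℝ := fun y j => Int.fract (tc (m + 1) g (j.val + 1) y) with hz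
  have hφb : ∀ x ∈ A, ∀ j, |(φ x j : ℝ)| ≤ t * (P : ℝ) ^ (j.val + 1) := by
    intro x hx j
    rw [hφ]; push_cast
    refine (abs_sum_le_sum_abs _ _).trans ?_
    have h : ∀ l ∈ (univ : Finset (Fin t)), |(x l : ℝ) ^ (j.val + 1)| ≤ (P : ℝ) ^ (j.val + 1) := by
      intro l _
      rw [abs_pow]
      refine pow_le_pow_left₀ (abs_nonneg _) ?_ _
      have := mem_Icc.1 (Fintype.mem_piFinset.1 hx l)
      exact_mod_cast abs_le.2 this
    refine (sum_le_sum h).trans ?_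
    simp
  have hls := large_sieve A φ b (fun x _ => by rw [hb, norm_prod]; simp [norm_e])
    (fun j => η / (P : ℝ) ^ (j.val + 1)) (fun j => by positivity)
    (fun j => by
      rw [div_le_one (by positivity)]
      exact hη1.trans (one_le_pow₀ hP1)) (by
      intro x hx
      refine le_trans (mul_le_mul_of_nonneg_left ?_ (by positivity)) hη2
      have : ∀ j ∈ (univ : Finset (Fin m)), η / (P : ℝ) ^ (j.val + 1) * |(φ x j : ℝ)| ≤ η * t := by
        intro j _
        calc _ ≤ η / (P : ℝ) ^ (j.val + 1) * (t * (P : ℝ) ^ (j.val + 1)) := by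
              gcongr; exact hφb x hx j
          _ = _ := by field_simp
      refine (sum_le_sum this).trans (le_of_eq ?_)
      simp; ring)
    (range Y) z (fun y _ j => Int.fract_nonneg _) (fun y _ j => Int.fract_lt_one _)
    ((Y : ℝ) / H + 1) (by
      intro ζ
      have h1 := separated_card ((range Y).filter fun y => ∀ i : Fin m,
        |ζ i - z y i| ≤ η / (P : ℝ) ^ (i.val + 1)) Y H hH
        (fun y hy => mem_range.1 (mem_filter.1 hy).1) (by
          intro y hy y' hy' hlt
          by_contra hcon
          rw [mem_filter, mem_range] at hy hy'
          refine hsep y y' hlt hy'.1 (by omega) fun j hj1 hj2 => ?_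
          have h2 := hy.2 ⟨j - 1, by omega⟩
          have h3 := hy'.2 ⟨j - 1, by omega⟩
          simp only [hz, show j - 1 + 1 = j by omega] at h2 h3
          refine ⟨⌊tc (m + 1) g j y'⌋ - ⌊tc (m + 1) g j y⌋, ?_⟩
          push_cast
          have h4 : tc (m + 1) g j y' - tc (m + 1) g j y - (⌊tc (m + 1) g j y'⌋ - ⌊tc (m + 1) g j y⌋ : ℝ)
              = Int.fract (tc (m + 1) g j y') - Int.fract (tc (m + 1) g j y) := by
            unfold Int.fract; ring
          rw [h4, mul_div_assoc]
          rw [abs_le] at h2 h3 ⊢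
          constructor <;> linarith [h2.1, h2.2, h3.1, h3.2])
      calc _ ≤ ((Y / H + 1 : ℕ) : ℝ) := by exact_mod_cast h1
        _ ≤ _ := by push_cast; gcongr; exact Nat.cast_div_le)
  have hS : ∀ y, ‖∑ x ∈ A, b x * e (∑ j, z y j * φ x j)‖ =
      ‖∑ x ∈ Icc (-(P : ℤ)) P,
        e (∑ i ∈ range (m + 1 + 1), g i * ((x + (y : ℕ) : ℤ) : ℝ) ^ i)‖ ^ t := by
    intro y
    have h1 : ∀ x : ℤ, e (∑ i ∈ range (m + 1 + 1), g i * ((x + (y : ℕ) : ℤ) : ℝ) ^ i) =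
        e (tc (m + 1) g 0 y) * (e (g (m + 1) * (x : ℝ) ^ (m + 1)) *
          e (∑ j : Fin m, z y j * ((x ^ (j.val + 1) : ℤ) : ℝ))) := by
      intro x
      have h2 : e (∑ j : Fin m, z y j * ((x ^ (j.val + 1) : ℤ) : ℝ)) =
          e (∑ j : Fin m, tc (m + 1) g (j.val + 1) y * (x : ℝ) ^ (j.val + 1)) := by
        have h3 : ∑ j : Fin m, tc (m + 1) g (j.val + 1) y * (x : ℝ) ^ (j.val + 1) =
            ∑ j : Fin m, z y j * ((x ^ (j.val + 1) : ℤ) : ℝ) +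
            ((∑ j : Fin m, ⌊tc (m + 1) g (j.val + 1) y⌋ * x ^ (j.val + 1) : ℤ) : ℝ) := by
          push_cast
          rw [← sum_add_distrib]
          refine sum_congr rfl fun j _ => ?_
          rw [← add_mul]
          congr 1
          exact (Int.fract_add_floor _).symm
        rw [h3, e_add_int]
      rw [h2, ← e_add, ← e_add]
      congr 1
      push_cast
      rw [tc_expand, sum_range_succ, sum_range_succ', tc_top,
        Fin.sum_univ_eq_sum_range (fun j => tc (m + 1) g (j + 1) y * (x : ℝ) ^ (j + 1))]
      ring
    simp_rw [h1]
    rw [← mul_sum, norm_mul, norm_e, one_mul, ← norm_pow, sum_pow']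
    congr 1
    refine sum_congr rfl fun x _ => ?_
    rw [prod_mul_distrib]
    congr 1
    rw [← e_sum, sum_comm]
    congr 1
    refine sum_congr rfl fun j _ => ?_
    rw [hφ]; push_cast
    rw [mul_sum]
  have hJ : ((((A ×ˢ A).filter fun xy => φ xy.1 = φ xy.2).card : ℕ) : ℝ) ≤ C * (P : ℝ) ^ ((t : ℝ) + ε) := by
    refine le_trans ?_ (hv P hP 0)
    norm_cast
    refine card_le_card fun xy hxy => ?_
    rw [mem_filter] at hxy ⊢
    refine ⟨hxy.1, fun j => ?_⟩
    rw [Pi.zero_apply, sub_eq_zero]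
    exact congrFun hxy.2 j
  have hV : ∏ j : Fin m, (2 * (η / (P : ℝ) ^ (j.val + 1))) = (2 * η) ^ m / (P : ℝ) ^ t := by
    have h1 : ∀ j : Fin m, 2 * (η / (P : ℝ) ^ (j.val + 1)) = 2 * η / (P : ℝ) ^ (j.val + 1) :=
      fun j => by ring
    simp_rw [h1]
    rw [prod_div_distrib, prod_const, card_univ, Fintype.card_fin,
      prod_pow_eq_pow_sum]
    congr 2
    have := sum_missing (n := 0) (K := m) (fun _ => 0) (fun i => i.elim0) (fun i => i.elim0) (fun i => i.elim0)
    simpa using this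
  rw [hV] at hls
  have hlow2 : Y * U ^ (2 * t) ≤ ∑ y ∈ range Y, ‖∑ x ∈ A, b x * e (∑ j, z y j * φ x j)‖ ^ 2 := by
    have h1 : ∀ y ∈ range Y, U ^ (2 * t) ≤ ‖∑ x ∈ A, b x * e (∑ j, z y j * φ x j)‖ ^ 2 := by
      intro y hy
      rw [hS, ← pow_mul, mul_comm t 2]
      exact pow_le_pow_left₀ hU (hlow y (mem_range.1 hy)) _
    have := card_nsmul_le_sum _ _ _ h1
    rwa [card_range, nsmul_eq_mul] at this
  refine hlow2.trans (hls.trans ?_)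
  have h5 : (P : ℝ) ^ (2 * (t : ℝ) + ε) = (P : ℝ) ^ ((t : ℝ) + ε) * (P : ℝ) ^ t := by
    rw [← rpow_natCast, ← rpow_add hP0]; congr 1; ring
  rw [h5]
  calc _ ≤ 4 ^ (m + 1) * ((Y : ℝ) / H + 1) * (C * (P : ℝ) ^ ((t : ℝ) + ε)) / ((2 * η) ^ m / (P : ℝ) ^ t) := by
        gcongr
    _ = _ := by field_simp

/-- Weyl's inequality in inverse form, with the exponents furnished by the mean value theorem in
degree `m`: a large exponential sum of degree `m + 1` has coefficients of degree at least two
well approximated with a common small denominator. -/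
theorem weyl {m : ℕ} (hm : 1 ≤ m) {τ ε c : ℝ} (hτ : 0 < τ) (hε : 0 < ε) (hc : 0 < c)
    (h : (2 * (tri m : ℝ) + 1) * τ + ε < 1) :
    ∀ᶠ P : ℕ in atTop, ∀ g : ℕ → ℝ,
      (P : ℝ) ^ (1 - τ) ≤ ‖∑ x ∈ Icc (-(P : ℤ)) P,
        e (∑ i ∈ range (m + 1 + 1), g i * (x : ℝ) ^ i)‖ →
      ∃ q : ℕ, 1 ≤ q ∧ (q : ℝ) ≤ (P : ℝ) ^ (2 * (tri m : ℝ) * τ + ε) ∧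
        ∀ i, 2 ≤ i → i ≤ m + 1 → NI (q * g i) (c * P / (P : ℝ) ^ i) := by
  obtain ⟨D, hD, hdes⟩ := descent (m + 1) (m + 1)
  have ht := tri_pos hm
  have ht1 : (1 : ℝ) ≤ tri m := by exact_mod_cast ht
  have hm1 : (1 : ℝ) ≤ m := by exact_mod_cast hm
  set η := min (1 / (16 * (m * tri m : ℝ))) (c / (2 * D + 1)) with hη
  have hη0 : 0 < η := lt_min (by positivity) (by positivity)
  have hηa : η * (16 * (m * tri m : ℝ)) ≤ 1 := by
    rw [← le_div_iff₀ (by positivity)]; exact min_le_left _ _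
  have hηb : η * (2 * D + 1) ≤ c := by
    rw [← le_div_iff₀ (by positivity)]; exact min_le_right _ _
  have hη1 : η ≤ 1 := by
    have : (1 : ℝ) ≤ m * tri m := one_le_mul_of_one_le_of_one_le hm1 ht1
    nlinarith
  have hη2 : 2 * Real.pi * (m * η * tri m) ≤ 1 / 2 := by
    have h1 := Real.pi_lt_four
    have h2 : (m : ℝ) * η * tri m ≤ 1 / 16 := by linarith
    have h3 : 0 ≤ (m : ℝ) * η * tri m := by positivity
    nlinarith [Real.pi_pos]
  obtain ⟨C, hC, hsv⟩ := weyl_sieve hm (half_pos hε) hη0 hη1 hη2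
  set M : ℕ := (m + 1).factorial ^ (m + 1) with hM
  have hM0 : 0 < M := Nat.pow_pos (Nat.factorial_pos _)
  have hM1 : (1 : ℝ) ≤ M := by exact_mod_cast hM0
  clear_value η M
  have htτ : 0 ≤ 2 * (tri m : ℝ) * τ := by positivity
  filter_upwards [Filter.eventually_ge_atTop 1,
    ev_rpow (2 * M) (show 0 < 2 * (tri m : ℝ) * τ + ε by linarith),
    ev_rpow (C * 4 ^ tri m * 8 * M) (show 0 < ε / 2 by linarith),
    ev_rpow (C * 4 ^ tri m * 64) (show 2 * (tri m : ℝ) * τ + ε / 2 < 1 - τ by nlinarith),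
    ev_rpow 16 (show 0 < 1 - τ by nlinarith)] with P hP hB1 hB2 hB3 hB4 g hg
  rw [Real.rpow_zero, mul_one] at hB1 hB2 hB4
  have hP1 : (1 : ℝ) ≤ P := by exact_mod_cast hP
  have hP0 : (0 : ℝ) < P := by linarith
  set Z := (P : ℝ) ^ (1 - τ) with hZ
  set Y := ⌊Z / 8⌋₊ with hY
  set B := (P : ℝ) ^ (2 * (tri m : ℝ) * τ + ε) with hB
  set H := ⌊B / M⌋₊ with hH
  have hY1 : (Y : ℝ) ≤ Z / 8 := Nat.floor_le (by positivity)
  have hY2 : Z / 16 ≤ Y := by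
    have := Nat.lt_floor_add_one (Z / 8)
    rw [← hY] at this; linarith
  have hH1 : (H : ℝ) * M ≤ B := by
    rw [← le_div_iff₀ (by positivity)]; exact Nat.floor_le (by positivity)
  have hBM : 2 ≤ B / M := by rw [le_div_iff₀ (by positivity)]; exact hB1
  have hH2 : B ≤ 2 * M * H := by
    have h1 := Nat.lt_floor_add_one (B / M)
    rw [← hH] at h1
    have h2 : B / M / 2 ≤ H := by linarith
    rw [div_div, div_le_iff₀ (by positivity)] at h2
    linarith
  have hH3 : 1 ≤ H := by
    rw [hH]; exact Nat.le_floor (by push_cast; linarith)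
  have hZP : Z ≤ P := by
    rw [hZ]
    calc (P : ℝ) ^ (1 - τ) ≤ (P : ℝ) ^ (1 : ℝ) := rpow_le_rpow_of_exponent_le hP1 (by linarith)
      _ = P := rpow_one _
  have hYP : Y ≤ P := by
    have : (Y : ℝ) ≤ P := by linarith
    exact_mod_cast this
  by_cases hex : ∃ y y', y < y' ∧ y' < Y ∧ y' - y ≤ H ∧ ∀ j, 1 ≤ j → j < m + 1 →
        NI (tc (m + 1) g j y' - tc (m + 1) g j y) (2 * η / (P : ℝ) ^ j)
  · obtain ⟨y, y', h1, h2, h3, h4⟩ := hex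
    refine ⟨M * (y' - y), Nat.mul_pos hM0 (by omega), ?_, ?_⟩
    · push_cast [Nat.cast_sub h1.le]
      have h5 : ((y' : ℝ) - y) ≤ H := by
        rw [← Nat.cast_sub h1.le]; exact_mod_cast h3
      nlinarith
    · intro i hi2 hiK
      have h5 := hdes g P y y' (2 * η) (by positivity) hP h1 (by omega) h4 i hi2 hiK (by omega)
      refine h5.mono ?_
      gcongr
      linarith
  · exfalso
    push Not at hex
    have h1 := hsv g P Y H (Z / 2) hP hH3 (by positivity) (by
      intro y hy
      have h2 := sum_shift (fun x : ℤ => e (∑ i ∈ range (m + 1 + 1), g i * (x : ℝ) ^ i))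
        (fun x => (norm_e _).le) P y
      rw [norm_sub_rev] at h2
      have h3 := (norm_sub_norm_le _ _).trans h2
      have h4 : (y : ℝ) ≤ Y := by exact_mod_cast hy.le
      linarith) (by
      intro y y' a b c d
      obtain ⟨j, hj1, hj2, hj3⟩ := hex y y' a b c
      exact hj3 (d j hj1 hj2))
    have hU : (Z / 2) ^ (2 * tri m) = (P : ℝ) ^ (2 * (tri m : ℝ) * (1 - τ)) / 4 ^ tri m := by
      rw [div_pow, hZ, ← rpow_mul_natCast hP0.le, pow_mul 2 2]
      norm_num
      ring_nf
    have hsplit : (P : ℝ) ^ (2 * (tri m : ℝ) + ε / 2) = (P : ℝ) ^ (2 * (tri m : ℝ) * (1 - τ)) *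
        (P : ℝ) ^ (2 * (tri m : ℝ) * τ + ε / 2) := by
      rw [← rpow_add hP0]; congr 1; ring
    set W := (P : ℝ) ^ (2 * (tri m : ℝ) * τ + ε / 2) with hW
    have hBW : B = W * (P : ℝ) ^ (ε / 2) := by
      rw [hB, hW, ← rpow_add hP0]; congr 1; ring
    rw [hU, hsplit] at h1
    have hpos : 0 < (P : ℝ) ^ (2 * (tri m : ℝ) * (1 - τ)) := by positivity
    have h2 : (Y : ℝ) ≤ C * 4 ^ tri m * (Y / H + 1) * W := by
      have h3 : (P : ℝ) ^ (2 * (tri m : ℝ) * (1 - τ)) * Y ≤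
          (P : ℝ) ^ (2 * (tri m : ℝ) * (1 - τ)) * (C * 4 ^ tri m * (Y / H + 1) * W) := by
        have h4 := mul_le_mul_of_nonneg_right h1 (show (0:ℝ) ≤ 4 ^ tri m by positivity)
        calc _ = Y * ((P : ℝ) ^ (2 * (tri m : ℝ) * (1 - τ)) / 4 ^ tri m) * 4 ^ tri m := by field_simp
          _ ≤ _ := h4
          _ = _ := by ring
      exact le_of_mul_le_mul_left h3 hpos
    have hHpos : (0 : ℝ) < H := by exact_mod_cast hH3
    have hW0 : 0 < W := by positivity
    have hE0 : 0 < (P : ℝ) ^ (ε / 2) := by positivity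
    have h5 : C * 4 ^ tri m * W / H ≤ 1 / 4 := by
      rw [div_le_iff₀ hHpos]
      have h6 : C * 4 ^ tri m * 8 * M * W ≤ 2 * M * H := by
        calc _ ≤ (P : ℝ) ^ (ε / 2) * W := by gcongr
          _ = B := by rw [hBW]; ring
          _ ≤ _ := hH2
      have h7 : (M : ℝ) * (8 * (C * 4 ^ tri m * W)) ≤ M * (2 * H) := by linarith
      have := le_of_mul_le_mul_left h7 (by positivity)
      linarith
    have h8 : C * 4 ^ tri m * (Y / H + 1) * W = (C * 4 ^ tri m * W / H) * Y + C * 4 ^ tri m * W := by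
      field_simp
    rw [h8] at h2
    have h9 : (C * 4 ^ tri m * W / H) * Y ≤ 1 / 4 * Y := by gcongr
    linarith

/-! ### Comparing sums with integrals -/

/-- The entire function `(exp z - 1) / z`. -/
noncomputable def ez : ℂ → ℂ := dslope Complex.exp 0

/-- The entire function `((exp z - 1) / z - 1) / z`. -/
noncomputable def ez2 : ℂ → ℂ := dslope ez 0

lemma differentiable_ez : Differentiable ℂ ez := by
  rw [← differentiableOn_univ]
  exact (Complex.differentiableOn_dslope Filter.univ_mem).2 Complex.differentiable_exp.differentiableOn

lemma differentiable_ez2 : Differentiable ℂ ez2 := by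
  rw [← differentiableOn_univ]
  exact (Complex.differentiableOn_dslope Filter.univ_mem).2 differentiable_ez.differentiableOn

lemma ez_zero : ez 0 = 1 := by simp [ez]

lemma mul_ez (z : ℂ) : z * ez z = Complex.exp z - 1 := by
  have := sub_smul_dslope Complex.exp 0 z
  simpa [ez] using this

lemma mul_ez2 (z : ℂ) : z * ez2 z = ez z - 1 := by
  have := sub_smul_dslope ez 0 z
  rw [ez_zero] at this
  simpa [ez2] using this

lemma ez_ne_zero {θ : ℝ} (h : |θ| ≤ 3 / 4) : ez (2 * Real.pi * I * θ) ≠ 0 := by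
  intro h0
  have h1 := mul_ez (2 * Real.pi * I * θ)
  rw [h0, mul_zero, eq_comm, sub_eq_zero, Complex.exp_eq_one_iff] at h1
  obtain ⟨m, hm⟩ := h1
  have h2 : (θ : ℂ) = m := by
    have hπ : (2 * Real.pi * I : ℂ) ≠ 0 := Complex.two_pi_I_ne_zero
    apply mul_left_cancel₀ hπ
    rw [hm]; ring
  have h3 : θ = m := by exact_mod_cast h2
  have h4 : m = 0 := by
    rw [h3] at h
    have : |m| < 1 := by
      have : (|m| : ℝ) < 1 := by linarith
      exact_mod_cast this
    exact Int.abs_lt_one_iff.1 this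
  rw [h3, h4] at h0
  simp [ez_zero] at h0

/-- The correction term `1 / (e(θ) - 1) - 1 / (2πiθ)`, made continuous at `θ = 0`. -/
noncomputable def hc (θ : ℝ) : ℂ :=
  -ez2 (2 * Real.pi * I * θ) / ez (2 * Real.pi * I * θ)

lemma hc_mul {θ : ℝ} (h : |θ| ≤ 3 / 4) :
    hc θ * (e θ - 1) = 1 - ez (2 * Real.pi * I * θ) := by
  have h1 := mul_ez (2 * Real.pi * I * θ)
  have h2 := mul_ez2 (2 * Real.pi * I * θ)
  have h3 := ez_ne_zero h
  unfold hc e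
  rw [← h1]
  field_simp
  linear_combination -h2

/-- `hc` is bounded and Lipschitz on `|θ| ≤ 3/4`. -/
lemma hc_bound : ∃ C > 0, (∀ θ, |θ| ≤ 3 / 4 → ‖hc θ‖ ≤ C) ∧
    ∀ θ θ', |θ| ≤ 3 / 4 → |θ'| ≤ 3 / 4 → ‖hc θ - hc θ'‖ ≤ C * |θ - θ'| := by
  let U : Set ℂ := {z | ez z ≠ 0}
  have hU : IsOpen U := isOpen_ne_fun differentiable_ez.continuous continuous_const
  let G : ℂ → ℂ := fun z => -ez2 z / ez z
  have hG : DifferentiableOn ℂ G U := fun z hz =>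
    ((differentiable_ez2.neg z).div (differentiable_ez z) hz).differentiableWithinAt
  have hG' : ContinuousOn (deriv G) U := (hG.deriv hU).continuousOn
  have hmaps : Set.MapsTo (fun θ : ℝ => (2 * Real.pi * I * θ : ℂ)) (Set.Icc (-(3/4)) (3/4)) U :=
    fun θ hθ => ez_ne_zero (abs_le.2 ⟨hθ.1, hθ.2⟩)
  have hcl : Continuous (fun θ : ℝ => (2 * Real.pi * I * θ : ℂ)) := by fun_prop
  obtain ⟨C1, h1⟩ := (isCompact_Icc (a := (-(3/4) : ℝ)) (b := 3/4)).exists_bound_of_continuousOn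
    (hG.continuousOn.comp hcl.continuousOn hmaps)
  obtain ⟨C2, h2⟩ := (isCompact_Icc (a := (-(3/4) : ℝ)) (b := 3/4)).exists_bound_of_continuousOn
    (hG'.comp hcl.continuousOn hmaps)
  have hd : ∀ θ ∈ Set.Icc (-(3/4) : ℝ) (3/4), HasDerivWithinAt hc
      (deriv G (2 * Real.pi * I * θ) * (2 * Real.pi * I)) (Set.Icc (-(3/4)) (3/4)) θ := by
    intro θ hθ
    have a := (hG.differentiableAt (hU.mem_nhds (hmaps hθ))).hasDerivAt
    have b : HasDerivAt (fun θ : ℝ => (2 * Real.pi * I * θ : ℂ)) (2 * Real.pi * I) θ := by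
      have := (Complex.ofRealCLM.hasDerivAt (x := θ)).const_mul (2 * Real.pi * I : ℂ)
      simpa using this
    exact (HasDerivAt.comp θ a b).hasDerivWithinAt
  refine ⟨|C1| + |C2| * (2 * Real.pi) + 1, by positivity, fun θ hθ => ?_, fun θ θ' hθ hθ' => ?_⟩
  · have := h1 θ (abs_le.1 hθ)
    have h3 : 0 ≤ |C2| * (2 * Real.pi) := by positivity
    have := le_abs_self C1
    change ‖G _‖ ≤ _
    simp only [Function.comp] at *
    linarith
  · have := (convex_Icc (-(3/4) : ℝ) (3/4)).norm_image_sub_le_of_norm_hasDerivWithin_le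
      (C := |C2| * (2 * Real.pi)) hd (fun x hx => by
        have := h2 x hx
        simp only [Function.comp] at this
        rw [norm_mul]
        have h5 : ‖(2 * Real.pi * I : ℂ)‖ = 2 * Real.pi := by
          simp [abs_of_pos Real.pi_pos]
        rw [h5]
        gcongr
        exact this.trans (le_abs_self _)) (abs_le.1 hθ') (abs_le.1 hθ)
    refine this.trans ?_
    rw [Real.norm_eq_abs]
    gcongr
    have := abs_nonneg C1
    linarith

lemma integral_e_mul (θ : ℝ) : ∫ y in (0:ℝ)..1, e (θ * y) = ez (2 * Real.pi * I * θ) := by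
  rcases eq_or_ne θ 0 with rfl | h
  · simp [e_zero, ez_zero]
  · have hz : (2 * Real.pi * I * θ : ℂ) ≠ 0 :=
      mul_ne_zero Complex.two_pi_I_ne_zero (by exact_mod_cast h)
    have h1 := integral_exp_mul_complex (a := 0) (b := 1) hz
    have h2 := mul_ez (2 * Real.pi * I * θ)
    have h3 : (fun y : ℝ => e (θ * y)) = fun y : ℝ => Complex.exp (2 * Real.pi * I * θ * y) := by
      funext y; unfold e; congr 1; push_cast; ring
    rw [h3, h1]
    simp only [Complex.ofReal_one, mul_one, Complex.ofReal_zero, mul_zero, Complex.exp_zero]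
    rw [← h2, mul_div_cancel_left₀ _ hz]

/-- One step of the comparison of an exponential sum with the corresponding integral. -/
lemma sum_int_step : ∃ C > 0, ∀ (F F' : ℝ → ℝ) (η a : ℝ), (∀ x, HasDerivAt F (F' x) x) →
    (∀ x ∈ Set.Icc a (a + 1), |F' x| ≤ 3 / 4) →
    (∀ x ∈ Set.Icc a (a + 1), |F' x - F' a| ≤ η) →
    ‖(e (F (a + 1)) * hc (F' (a + 1)) - e (F a) * hc (F' a)) -
      (e (F a) - ∫ x in a..(a + 1), e (F x))‖ ≤ C * η := by
  obtain ⟨C, hC, hb, hl⟩ := hc_bound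
  refine ⟨2 * Real.pi * C + C + 2 * Real.pi, by positivity, fun F F' η a hF h1 h2 => ?_⟩
  have hη : 0 ≤ η := (abs_nonneg _).trans (h2 a ⟨le_rfl, by linarith⟩)
  have hma : a ∈ Set.Icc a (a + 1) := ⟨le_rfl, by linarith⟩
  have hmb : a + 1 ∈ Set.Icc a (a + 1) := ⟨by linarith, le_rfl⟩
  have hT : ∀ x ∈ Set.Icc a (a + 1), |F x - (F a + F' a * (x - a))| ≤ η := by
    intro x hx
    have := norm_image_sub_le_of_norm_deriv_le_segment' (f := fun x => F x - F' a * (x - a))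
      (f' := fun x => F' x - F' a) (a := a) (b := a + 1) (C := η)
      (fun y hy => by
        have h5 := ((hasDerivAt_id y).sub_const a).const_mul (F' a)
        rw [mul_one] at h5
        exact ((hF y).sub h5).hasDerivWithinAt) (fun y hy => h2 y ⟨hy.1, hy.2.le⟩) x hx
    simp only [sub_self, mul_zero, sub_zero, Real.norm_eq_abs] at this
    have h3 : F x - (F a + F' a * (x - a)) = F x - F' a * (x - a) - F a := by ring
    rw [h3]
    exact this.trans (by nlinarith [hx.1, hx.2])
  have hFc : Continuous F := continuous_iff_continuousAt.2 fun x => (hF x).continuousAt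
  have hinteg : ‖(∫ x in a..(a + 1), e (F x)) - e (F a) * ez (2 * Real.pi * I * F' a)‖
      ≤ 2 * Real.pi * η := by
    have h4 : e (F a) * ez (2 * Real.pi * I * F' a) =
        ∫ x in a..(a + 1), e (F a + F' a * (x - a)) := by
      rw [← integral_e_mul, ← intervalIntegral.integral_const_mul]
      have := intervalIntegral.integral_comp_sub_right (a := a) (b := a + 1)
        (fun y => e (F a) * e (F' a * y)) a
      simp only [sub_self, add_sub_cancel_left] at this
      rw [← this]
      simp only [e_add]
    have hc1 : Continuous fun x => e (F x) := continuous_e.comp hFc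
    have hc2 : Continuous fun x => e (F a + F' a * (x - a)) := continuous_e.comp (by fun_prop)
    rw [h4, ← intervalIntegral.integral_sub (hc1.intervalIntegrable _ _)
      (hc2.intervalIntegrable _ _)]
    have := intervalIntegral.norm_integral_le_of_norm_le_const (a := a) (b := a + 1)
      (C := 2 * Real.pi * η) (f := fun x => e (F x) - e (F a + F' a * (x - a))) (fun x hx => by
        rw [Set.uIoc_of_le (by linarith)] at hx
        refine (norm_e_sub_le _ _).trans ?_
        gcongr
        exact hT x ⟨hx.1.le, hx.2⟩)
    simpa using this
  have hA : ‖(e (F (a + 1)) - e (F a) * e (F' a)) * hc (F' (a + 1))‖ ≤ 2 * Real.pi * η * C := by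
    rw [norm_mul]
    gcongr
    · rw [← e_add]
      refine (norm_e_sub_le _ _).trans ?_
      gcongr
      simpa using hT (a + 1) hmb
    · exact hb _ (h1 _ hmb)
  have hB : ‖e (F a) * e (F' a) * (hc (F' (a + 1)) - hc (F' a))‖ ≤ C * η := by
    rw [norm_mul, norm_mul, norm_e, norm_e, one_mul, one_mul]
    exact (hl _ _ (h1 _ hmb) (h1 _ hma)).trans (by gcongr; exact h2 _ hmb)
  have h6 := hc_mul (h1 a hma)
  have h7 : (e (F (a + 1)) * hc (F' (a + 1)) - e (F a) * hc (F' a)) -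
      (e (F a) - ∫ x in a..(a + 1), e (F x)) =
      (e (F (a + 1)) - e (F a) * e (F' a)) * hc (F' (a + 1)) +
      e (F a) * e (F' a) * (hc (F' (a + 1)) - hc (F' a)) +
      ((∫ x in a..(a + 1), e (F x)) - e (F a) * ez (2 * Real.pi * I * F' a)) := by
    linear_combination e (F a) * h6
  rw [h7]
  refine (norm_add₃_le).trans ?_
  linarith

/-- An exponential sum whose phase has derivative at most `3/4` is close to the integral. -/
lemma sum_int : ∃ C > 0, ∀ (F F' : ℝ → ℝ) (η a : ℝ) (N : ℕ), (∀ x, HasDerivAt F (F' x) x) →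
    (∀ x ∈ Set.Icc a (a + N), |F' x| ≤ 3 / 4) →
    (∀ x ∈ Set.Icc a (a + N), ∀ y ∈ Set.Icc a (a + N), |x - y| ≤ 1 → |F' x - F' y| ≤ η) →
    ‖∑ i ∈ range N, e (F (a + i)) - ∫ x in a..(a + N), e (F x)‖ ≤ C * (1 + η * N) := by
  obtain ⟨C1, hC1, hb, -⟩ := hc_bound
  obtain ⟨C, hC, hst⟩ := sum_int_step
  refine ⟨C + 2 * C1, by positivity, fun F F' η a N hF h1 h2 => ?_⟩
  have hFc : Continuous F := continuous_iff_continuousAt.2 fun x => (hF x).continuousAt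
  have hI : ∫ x in a..(a + N), e (F x) =
      ∑ i ∈ range N, ∫ x in (a + i)..(a + i + 1), e (F x) := by
    have := intervalIntegral.sum_integral_adjacent_intervals (a := fun i : ℕ => a + i) (n := N)
      (f := fun x => e (F x)) (μ := volume)
      (fun i _ => (continuous_e.comp hFc).intervalIntegrable _ _)
    simp only [Nat.cast_zero, add_zero] at this
    rw [← this]
    refine sum_congr rfl fun i _ => ?_
    push_cast; rw [add_assoc]
  let H : ℕ → ℂ := fun i => e (F (a + i)) * hc (F' (a + i))
  have hH : ∀ i ≤ N, ‖H i‖ ≤ C1 := fun i hi => by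
    have : (i : ℝ) ≤ N := by exact_mod_cast hi
    simp only [H]
    rw [norm_mul, norm_e, one_mul]
    exact hb _ (h1 _ ⟨by simp, by linarith⟩)
  have hη : 0 ≤ η := (abs_nonneg _).trans (h2 a ⟨le_rfl, by simp⟩ a ⟨le_rfl, by simp⟩ (by simp))
  have hS : ‖(H N - H 0) - ∑ i ∈ range N, (e (F (a + i)) - ∫ x in (a + i)..(a + i + 1), e (F x))‖
      ≤ N * (C * η) := by
    rw [← sum_range_sub, ← sum_sub_distrib]
    refine (norm_sum_le _ _).trans ?_
    rw [← nsmul_eq_mul, ← card_range N, ← sum_const]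
    simp only [card_range]
    refine sum_le_sum fun i hi => ?_
    have hi' : (i : ℝ) + 1 ≤ N := by exact_mod_cast mem_range.1 hi
    have hi0 : (0 : ℝ) ≤ i := by positivity
    have := hst F F' η (a + i) hF (fun x hx => h1 x ⟨by linarith [hx.1], by linarith [hx.2]⟩)
      (fun x hx => h2 x ⟨by linarith [hx.1], by linarith [hx.2]⟩ _ ⟨by linarith, by linarith⟩
        (by rw [abs_le]; constructor <;> linarith [hx.1, hx.2]))
    simp only [H]
    push_cast
    rw [← add_assoc]
    exact this
  rw [hI, ← sum_sub_distrib]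
  rw [norm_sub_rev] at hS
  have h3 := (norm_sub_norm_le _ _).trans hS
  have h4 := norm_sub_le (H N) (H 0)
  have h5 := hH N le_rfl
  have h6 := hH 0 (Nat.zero_le _)
  have h7 : 0 ≤ C1 * η * N := by positivity
  nlinarith

section
variable {n s : ℕ} (k : Fin n → ℕ) (u : Fin n → Fin s → ℤ)

lemma e_div_congr {q : ℕ} (hq : 1 ≤ q) {A B : ℤ} (h : (q : ℤ) ∣ A - B) :
    e ((A : ℝ) / q) = e ((B : ℝ) / q) := by
  obtain ⟨m, hm⟩ := h
  have hq0 : (q : ℝ) ≠ 0 := by positivity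
  have h1 : (A : ℝ) / q = B / q + m := by
    have : (A : ℝ) - B = q * m := by exact_mod_cast hm
    field_simp
    linarith
  rw [h1, e_add_int]

/-- The normalised complete exponential sum `q⁻¹ ∑_{r mod q} e((b₁ r^{k₁} + ⋯) / q)`. -/
noncomputable def csum (q : ℕ) (b : Fin n → ℤ) : ℂ :=
  (1 / (q : ℂ)) * ∑ r ∈ range q, e (((∑ i, b i * (r : ℤ) ^ k i : ℤ) : ℝ) / q)

/-- The oscillatory integral `∫_{-1}^1 e(β₁ t^{k₁} + ⋯) dt`. -/
noncomputable def oint (β : Fin n → ℝ) : ℂ :=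
  ∫ t in (-1 : ℝ)..1, e (∑ i, β i * t ^ k i)

lemma norm_oint_le (β : Fin n → ℝ) : ‖oint k β‖ ≤ 2 := by
  have := intervalIntegral.norm_integral_le_of_norm_le_const (a := (-1 : ℝ)) (b := 1) (C := 1)
    (f := fun t => e (∑ i, β i * t ^ k i)) (fun x _ => (norm_e _).le)
  refine this.trans ?_
  norm_num

lemma norm_csum_le (q : ℕ) (b : Fin n → ℤ) : ‖csum k q b‖ ≤ 1 := by
  unfold csum
  rw [norm_mul, norm_div, norm_one, Complex.norm_natCast]
  have h := norm_sum_le (range q) fun r => e (((∑ i, b i * (r : ℤ) ^ k i : ℤ) : ℝ) / q)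
  simp only [norm_e, sum_const, card_range, nsmul_eq_mul, mul_one] at h
  calc 1 / (q : ℝ) * _ ≤ 1 / (q : ℝ) * q := by gcongr
    _ ≤ 1 := by rw [one_div]; exact inv_mul_le_one

lemma scale_oint (β : Fin n → ℝ) {P : ℕ} (hP : 1 ≤ P) :
    ∫ x in (-(P : ℝ))..P, e (∑ i, β i * x ^ k i) = P * oint k (fun i => β i * (P : ℝ) ^ k i) := by
  have hP0 : (P : ℝ) ≠ 0 := by positivity
  have h := intervalIntegral.integral_comp_mul_right (a := -1) (b := 1)
    (fun x => e (∑ i, β i * x ^ k i)) hP0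
  unfold oint
  simp only [mul_pow] at h
  have h2 : ∀ (x : ℝ) i, β i * (P : ℝ) ^ k i * x ^ k i = β i * (x ^ k i * (P : ℝ) ^ k i) := by
    intro x i; ring
  simp only [h2, h]
  simp only [neg_mul, one_mul, Complex.real_smul]
  push_cast
  rw [mul_inv_cancel_left₀ (by exact_mod_cast hP0)]

lemma sum_residue {q : ℕ} (hq : 1 ≤ q) (N : ℕ) (f : ℤ → ℂ) :
    ∑ x ∈ Ico (-((q * N : ℕ) : ℤ)) (q * N : ℕ), f x =
      ∑ r ∈ range q, ∑ i ∈ range (2 * N), f (q * ((i : ℤ) - N) + r) := by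
  rw [← sum_product']
  symm
  have hq0 : (0 : ℤ) < q := by exact_mod_cast hq
  refine sum_nbij' (fun p => q * ((p.2 : ℤ) - N) + p.1)
    (fun x => ((x % q).toNat, (x / q + N).toNat)) ?_ ?_ ?_ ?_ ?_
  · rintro ⟨r, i⟩ h
    simp only [mem_product, mem_range, mem_Ico] at h ⊢
    have h1 : (r : ℤ) + 1 ≤ q := by omega
    have h2 : (i : ℤ) + 1 ≤ 2 * N := by omega
    push_cast
    constructor <;> nlinarith
  · intro x h
    simp only [mem_product, mem_range, mem_Ico] at h ⊢
    push_cast at h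
    have h1 := Int.emod_nonneg x hq0.ne'
    have h2 := Int.emod_lt_of_pos x hq0
    have h3 : x / q < N := Int.ediv_lt_of_lt_mul hq0 (by linarith)
    have h4 : -(N : ℤ) ≤ x / q := (Int.le_ediv_iff_mul_le hq0).2 (by linarith)
    constructor <;> omega
  · rintro ⟨r, i⟩ h
    simp only [mem_product, mem_range] at h
    have h1 : (r : ℤ) < q := by omega
    have h2 : ((q : ℤ) * ((i : ℤ) - N) + r) % q = r := by
      rw [add_comm, Int.add_mul_emod_self_left, Int.emod_eq_of_lt (by omega) h1]
    have h3 : ((q : ℤ) * ((i : ℤ) - N) + r) / q = i - N := by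
      rw [add_comm, Int.add_mul_ediv_left _ _ hq0.ne', Int.ediv_eq_zero_of_lt (by omega) h1, zero_add]
    simp only [h2, h3, Prod.mk.injEq]
    constructor <;> omega
  · intro x h
    simp only [mem_Ico] at h
    push_cast at h
    have h1 := Int.emod_nonneg x hq0.ne'
    have h4 : -(N : ℤ) ≤ x / q := (Int.le_ediv_iff_mul_le hq0).2 (by linarith)
    simp only
    rw [Int.toNat_of_nonneg h1, Int.toNat_of_nonneg (by omega)]
    have := Int.emod_add_mul_ediv x q
    linarith
  · rintro ⟨r, i⟩ _; rfl

/-- Major arc approximation: near `b / q` the exponential sum is the product of a complete sum and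
an oscillatory integral, up to an error `O(q)`. -/
lemma approx {K : ℕ} (hK : ∀ i, k i ≤ K) :
    ∃ C > 0, ∀ (P q : ℕ) (b : Fin n → ℤ) (β : Fin n → ℝ), 1 ≤ q → q ≤ P →
      (q : ℝ) * ∑ i, (k i : ℝ) * |β i| * ((P : ℝ) + q) ^ (k i - 1) ≤ 3 / 4 →
      ‖wsum k P (fun i => (b i : ℝ) / q + β i) -
        P * csum k q b * oint k (fun i => β i * (P : ℝ) ^ k i)‖ ≤ C * q := by
  obtain ⟨C, hC, hs⟩ := sum_int
  refine ⟨C * (1 + 2 * K) + 4 + 2, by positivity, fun P q b β hq hqP hβ => ?_⟩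
  have hP : 1 ≤ P := hq.trans hqP
  have hq0 : (0 : ℝ) < q := by positivity
  have hP0 : (0 : ℝ) < P := by positivity
  set N := P / q with hN
  have hN1 : q * N ≤ P := Nat.mul_div_le P q
  have hN2 : P < q * N + q := by
    rw [hN]
    have := Nat.div_add_mod P q; have := Nat.mod_lt P hq
    omega
  have hN1' : (q : ℝ) * N ≤ P := by exact_mod_cast hN1
  have hN2' : (P : ℝ) ≤ q * N + q := by exact_mod_cast hN2.le
  set R := (P : ℝ) + q with hR
  have hR0 : 0 < R := by positivity
  clear_value N R
  let ψ : ℝ → ℝ := fun x => ∑ i, β i * x ^ k i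
  let ψ' : ℝ → ℝ := fun x => ∑ i, β i * ((k i : ℝ) * x ^ (k i - 1))
  have hψ : ∀ x, HasDerivAt ψ (ψ' x) x := fun x =>
    HasDerivAt.fun_sum fun i _ => (hasDerivAt_pow (k i) x).const_mul (β i)
  have hψc : Continuous ψ := continuous_iff_continuousAt.2 fun x => (hψ x).continuousAt
  have hb1 : ∀ x, |x| ≤ R → q * |ψ' x| ≤ 3 / 4 := fun x hx => by
    refine le_trans ?_ hβ
    gcongr
    refine (abs_sum_le_sum_abs _ _).trans (sum_le_sum fun i _ => ?_)
    rw [abs_mul, abs_mul, abs_pow, Nat.abs_cast]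
    calc |β i| * (k i * |x| ^ (k i - 1)) ≤ |β i| * (k i * R ^ (k i - 1)) := by gcongr
      _ = _ := by ring
  have hb2 : ∀ x y, |x| ≤ R → |y| ≤ R → |x - y| ≤ q → q * |ψ' x - ψ' y| ≤ K * q / R := by
    intro x y hx hy hxy
    have h2 : |ψ' x - ψ' y| ≤ (∑ i, (k i : ℝ) * |β i| * R ^ (k i - 1)) * (K * q / R) := by
      simp only [ψ']
      rw [← sum_sub_distrib, sum_mul]
      refine (abs_sum_le_sum_abs _ _).trans (sum_le_sum fun i _ => ?_)
      have h3 : |x ^ (k i - 1) - y ^ (k i - 1)| ≤ R ^ (k i - 1) * (K * q / R) := by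
        refine (abs_pow_sub_pow_le x y (k i - 1)).trans ?_
        rcases Nat.eq_zero_or_pos (k i - 1) with h0 | h0
        · rw [h0]; simp; positivity
        · have h4 : R ^ (k i - 1) = R ^ (k i - 1 - 1) * R := by
            rw [← pow_succ]; congr 1; omega
          have h5 : ((k i - 1 : ℕ) : ℝ) ≤ K := by
            have := hK i
            exact_mod_cast (by omega : k i - 1 ≤ K)
          calc _ ≤ q * K * R ^ (k i - 1 - 1) := by
                gcongr
                exact max_le hx hy
            _ = _ := by rw [h4]; field_simp
      have h4 : β i * (k i * x ^ (k i - 1)) - β i * (k i * y ^ (k i - 1)) =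
        (k i * β i) * (x ^ (k i - 1) - y ^ (k i - 1)) := by ring
      rw [h4, abs_mul, abs_mul, Nat.abs_cast, mul_assoc (_ * _) (R ^ _)]
      gcongr
    calc q * |ψ' x - ψ' y| ≤ q * ((∑ i, (k i : ℝ) * |β i| * R ^ (k i - 1)) * (K * q / R)) := by gcongr
      _ = (q * (∑ i, (k i : ℝ) * |β i| * R ^ (k i - 1))) * (K * q / R) := by ring
      _ ≤ 1 * (K * q / R) := by gcongr; linarith
      _ = _ := one_mul _
  set J : ℂ := ∫ x in (-(P : ℝ))..P, e (ψ x) with hJ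
  have hcont : Continuous fun x => e (ψ x) := continuous_e.comp hψc
  have key : ∀ r < q, ‖∑ i ∈ range (2 * N), e (ψ (q * ((i : ℝ) - N) + r)) - (1 / (q : ℂ)) * J‖
      ≤ C * (1 + 2 * K) + 4 := by
    intro r hr
    have hr' : (r : ℝ) ≤ q := by exact_mod_cast hr.le
    have hr0 : (0 : ℝ) ≤ r := by positivity
    have hin : ∀ y ∈ Set.Icc (-(N : ℝ)) (-N + (2 * N : ℕ)), |q * y + r| ≤ R := by
      intro y hy
      push_cast at hy
      rw [abs_le, hR]
      constructor <;> nlinarith [hy.1, hy.2]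
    have h2 := hs (fun y => ψ (q * y + r)) (fun y => ψ' (q * y + r) * q) (K * q / R) (-N) (2 * N)
      (fun x => by
        have h3 : HasDerivAt (fun y : ℝ => (q : ℝ) * y + r) q x := by
          simpa using ((hasDerivAt_id x).const_mul (q : ℝ)).add_const (r : ℝ)
        exact HasDerivAt.comp (h₂ := ψ) x (hψ _) h3)
      (fun x hx => by
        rw [abs_mul, Nat.abs_cast, mul_comm]
        exact hb1 _ (hin x hx))
      (fun x hx y hy hxy => by
        rw [← sub_mul, abs_mul, Nat.abs_cast, mul_comm]
        refine hb2 _ _ (hin x hx) (hin y hy) ?_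
        rw [add_sub_add_right_eq_sub, ← mul_sub, abs_mul, Nat.abs_cast]
        nlinarith)
    have h3 : K * q / R * ((2 * N : ℕ) : ℝ) ≤ 2 * K := by
      rw [div_mul_eq_mul_div, div_le_iff₀ hR0]
      push_cast
      have : (q : ℝ) * N ≤ R := by linarith
      nlinarith [(Nat.cast_nonneg K : (0 : ℝ) ≤ K)]
    have h4 : ∫ x in (-(N : ℝ))..(-N + (2 * N : ℕ)), e (ψ (q * x + r)) =
        (1 / (q : ℂ)) * ∫ x in (q * (-(N : ℝ)) + r)..(q * N + r), e (ψ x) := by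
      have := intervalIntegral.integral_comp_mul_add (a := -(N : ℝ)) (b := N)
        (fun x => e (ψ x)) hq0.ne' (r : ℝ)
      have h5 : -(N : ℝ) + (2 * N : ℕ) = N := by push_cast; ring
      rw [h5, this, Complex.real_smul]
      push_cast; rw [one_div]
    have h5 : ‖(∫ x in (q * (-(N : ℝ)) + r)..(q * N + r), e (ψ x)) - J‖ ≤ 4 * q := by
      rw [hJ, intervalIntegral.integral_interval_sub_interval_comm
        (hcont.intervalIntegrable _ _) (hcont.intervalIntegrable _ _) (hcont.intervalIntegrable _ _)]
      refine (norm_sub_le _ _).trans ?_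
      have a1 := intervalIntegral.norm_integral_le_of_norm_le_const (a := q * (-(N : ℝ)) + r)
        (b := -(P : ℝ)) (C := 1) (f := fun t => e (ψ t)) (fun x _ => (norm_e _).le)
      have a2 := intervalIntegral.norm_integral_le_of_norm_le_const (a := q * (N : ℝ) + r)
        (b := (P : ℝ)) (C := 1) (f := fun t => e (ψ t)) (fun x _ => (norm_e _).le)
      have a3 : |-(P : ℝ) - (q * (-(N : ℝ)) + r)| ≤ 2 * q := by
        rw [abs_le]; constructor <;> linarith
      have a4 : |(P : ℝ) - (q * (N : ℝ) + r)| ≤ 2 * q := by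
        rw [abs_le]; constructor <;> linarith
      linarith
    have h6 : ‖(1 / (q : ℂ)) * (∫ x in (q * (-(N : ℝ)) + r)..(q * N + r), e (ψ x)) -
        (1 / (q : ℂ)) * J‖ ≤ 4 := by
      rw [← mul_sub, norm_mul, norm_div, norm_one, Complex.norm_natCast, one_div,
        inv_mul_le_iff₀ hq0]
      linarith
    rw [h4] at h2
    have h7 : ∀ i : ℕ, (q : ℝ) * (-(N : ℝ) + i) = q * ((i : ℝ) - N) := fun i => by ring
    simp only [h7] at h2
    refine (norm_sub_le_norm_sub_add_norm_sub _ _ _).trans (add_le_add (h2.trans ?_) h6)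
    gcongr
  have hpart : wsum k P (fun i => (b i : ℝ) / q + β i) -
      ∑ x ∈ Ico (-((q * N : ℕ) : ℤ)) (q * N : ℕ),
        e (∑ i, ((b i : ℝ) / q + β i) * (x : ℝ) ^ k i) =
      ∑ x ∈ Icc (-(P : ℤ)) P \ Ico (-((q * N : ℕ) : ℤ)) (q * N : ℕ),
        e (∑ i, ((b i : ℝ) / q + β i) * (x : ℝ) ^ k i) := by
    unfold wsum
    rw [sub_eq_iff_eq_add, sum_sdiff]
    intro x hx
    simp only [mem_Ico, mem_Icc] at hx ⊢
    omega
  have hbd : ‖wsum k P (fun i => (b i : ℝ) / q + β i) -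
      ∑ x ∈ Ico (-((q * N : ℕ) : ℤ)) (q * N : ℕ),
        e (∑ i, ((b i : ℝ) / q + β i) * (x : ℝ) ^ k i)‖ ≤ 2 * q := by
    rw [hpart]
    refine (norm_sum_le _ _).trans ?_
    simp only [norm_e, sum_const, nsmul_eq_mul, mul_one]
    rw [card_sdiff_of_subset (by
      intro x hx
      simp only [mem_Ico, mem_Icc] at hx ⊢
      omega)]
    simp only [Int.card_Icc, Int.card_Ico]
    have : ((P : ℤ) + 1 - -P).toNat - (((q * N : ℕ) : ℤ) - -((q * N : ℕ) : ℤ)).toNat ≤ 2 * q := by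
      omega
    exact_mod_cast this
  have hphase : ∀ (r i : ℕ), e (∑ l, ((b l : ℝ) / q + β l) * ((q * ((i : ℤ) - N) + r : ℤ) : ℝ) ^ k l) =
      e (((∑ l, b l * (r : ℤ) ^ k l : ℤ) : ℝ) / q) * e (ψ (q * ((i : ℝ) - N) + r)) := by
    intro r i
    have a1 : ∑ l, ((b l : ℝ) / q + β l) * ((q * ((i : ℤ) - N) + r : ℤ) : ℝ) ^ k l =
        ((∑ l, b l * (q * ((i : ℤ) - N) + r) ^ k l : ℤ) : ℝ) / q + ψ (q * ((i : ℝ) - N) + r) := by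
      simp only [ψ]
      push_cast
      rw [sum_div, ← sum_add_distrib]
      refine sum_congr rfl fun l _ => ?_
      ring
    rw [a1, e_add]
    congr 1
    refine e_div_congr hq ?_
    rw [← sum_sub_distrib]
    refine dvd_sum fun l _ => ?_
    rw [← mul_sub]
    refine Dvd.dvd.mul_left ?_ _
    refine dvd_trans ?_ (sub_dvd_pow_sub_pow _ _ _)
    simp
  rw [sum_residue hq] at hbd
  simp only [hphase, ← mul_sum] at hbd
  have hfin : ‖∑ r ∈ range q, e (((∑ l, b l * (r : ℤ) ^ k l : ℤ) : ℝ) / q) *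
      (∑ i ∈ range (2 * N), e (ψ (q * ((i : ℝ) - N) + r))) - csum k q b * J‖ ≤
      (C * (1 + 2 * K) + 4) * q := by
    unfold csum
    rw [mul_comm (1 / (q : ℂ)), mul_assoc, sum_mul, ← sum_sub_distrib]
    refine (norm_sum_le _ _).trans ?_
    have : ∀ r ∈ range q, ‖e (((∑ l, b l * (r : ℤ) ^ k l : ℤ) : ℝ) / q) *
      (∑ i ∈ range (2 * N), e (ψ (q * ((i : ℝ) - N) + r))) -
        e (((∑ l, b l * (r : ℤ) ^ k l : ℤ) : ℝ) / q) * (1 / (q : ℂ) * J)‖ ≤ C * (1 + 2 * K) + 4 := by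
      intro r hr
      rw [← mul_sub, norm_mul, norm_e, one_mul]
      exact key r (mem_range.1 hr)
    refine (sum_le_sum this).trans ?_
    rw [sum_const, card_range, nsmul_eq_mul, mul_comm]
  have hJ2 : J = P * oint k (fun i => β i * (P : ℝ) ^ k i) := scale_oint k β hP
  have h8 : (P : ℂ) * csum k q b * oint k (fun i => β i * (P : ℝ) ^ k i) = csum k q b * J := by
    rw [hJ2]; ring
  rw [h8]
  refine (norm_sub_le_norm_sub_add_norm_sub _ _ _).trans ((add_le_add hbd hfin).trans (le_of_eq ?_))
  ring

/-! ### Oscillatory integrals -/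

section
open Polynomial

lemma hasDerivAt_e (x : ℝ) : HasDerivAt e (2 * Real.pi * I * e x) x := by
  have h1 : HasDerivAt (fun x : ℝ => (2 * Real.pi * I * x : ℂ)) (2 * Real.pi * I) x := by
    have := (Complex.ofRealCLM.hasDerivAt (x := x)).const_mul (2 * Real.pi * I : ℂ)
    simpa using this
  have := h1.cexp
  rw [mul_comm (Complex.exp _)] at this
  exact this

/-- Integration by parts for an oscillatory integral without stationary point. -/
lemma vdc_one (p : ℝ[X]) {a b lam M : ℝ} (hab : a ≤ b) (hl : 0 < lam)
    (h1 : ∀ x ∈ Set.Icc a b, lam ≤ |(derivative p).eval x|)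
    (h2 : ∫ x in a..b, |(derivative (derivative p)).eval x| / (derivative p).eval x ^ 2 ≤ M) :
    ‖∫ x in a..b, e (p.eval x)‖ ≤ 2 / lam + M := by
  set p1 := derivative p with hp1
  set p2 := derivative p1 with hp2
  have hne : ∀ x ∈ Set.Icc a b, p1.eval x ≠ 0 := fun x hx h0 => by
    have := h1 x hx
    rw [h0, abs_zero] at this
    linarith
  have hu : Set.uIcc a b = Set.Icc a b := Set.uIcc_of_le hab
  have hce : Continuous fun x => e (p.eval x) := continuous_e.comp p.continuous
  let c : ℂ := 2 * Real.pi * I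
  have hc : c ≠ 0 := Complex.two_pi_I_ne_zero
  have hcn : 1 ≤ ‖c‖ := by
    have : ‖c‖ = 2 * Real.pi := by simp [c, abs_of_pos Real.pi_pos]
    rw [this]; linarith [Real.pi_gt_three]
  have hG : ∀ x ∈ Set.uIcc a b, HasDerivAt (fun x => e (p.eval x) / (c * (p1.eval x : ℝ)))
      (e (p.eval x) - e (p.eval x) * ((p2.eval x / p1.eval x ^ 2 : ℝ) : ℂ) / c) x := by
    intro x hx
    rw [hu] at hx
    have hx0 : ((p1.eval x : ℝ) : ℂ) ≠ 0 := by exact_mod_cast hne x hx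
    have d1 : HasDerivAt (fun x => e (p.eval x)) (2 * Real.pi * I * e (p.eval x) * (p1.eval x : ℝ)) x := by
      have := HasDerivAt.scomp x (hasDerivAt_e (p.eval x)) (p.hasDerivAt x)
      rw [Complex.real_smul, mul_comm] at this
      exact this
    have d2 : HasDerivAt (fun x => c * ((p1.eval x : ℝ) : ℂ)) (c * (p2.eval x : ℝ)) x :=
      (p1.hasDerivAt x).ofReal_comp.const_mul c
    have := d1.div d2 (mul_ne_zero hc hx0)
    refine this.congr_deriv ?_
    push_cast
    change (c * _ * _ * _ - _) / _ = _
    field_simp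
  have hc1 : ContinuousOn (fun x => p2.eval x / p1.eval x ^ 2) (Set.uIcc a b) := by
    rw [hu]
    exact p2.continuous.continuousOn.div (p1.continuous.pow 2).continuousOn
      (fun x hx => pow_ne_zero 2 (hne x hx))
  have hi2 : IntervalIntegrable (fun x => e (p.eval x) * ((p2.eval x / p1.eval x ^ 2 : ℝ) : ℂ) / c)
      volume a b :=
    ((hce.continuousOn.mul (Complex.continuous_ofReal.comp_continuousOn hc1)).div_const c).intervalIntegrable
  have hFT := intervalIntegral.integral_eq_sub_of_hasDerivAt hG
    ((hce.intervalIntegrable a b).sub hi2)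
  rw [intervalIntegral.integral_sub (hce.intervalIntegrable a b) hi2, sub_eq_iff_eq_add] at hFT
  rw [hFT]
  have hend : ∀ x ∈ Set.Icc a b, ‖e (p.eval x) / (c * (p1.eval x : ℝ))‖ ≤ 1 / lam := by
    intro x hx
    rw [norm_div, norm_e, norm_mul, Complex.norm_real, Real.norm_eq_abs]
    have := h1 x hx
    gcongr
    nlinarith
  have hI : ‖∫ x in a..b, e (p.eval x) * ((p2.eval x / p1.eval x ^ 2 : ℝ) : ℂ) / c‖ ≤ M := by
    refine le_trans ?_ h2
    refine intervalIntegral.norm_integral_le_of_norm_le hab (ae_of_all _ fun x hx => ?_)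
      (ContinuousOn.intervalIntegrable ?_)
    · rw [norm_div, norm_mul, norm_e, one_mul, Complex.norm_real, Real.norm_eq_abs, abs_div,
        abs_of_nonneg (sq_nonneg (p1.eval x))]
      exact div_le_self (by positivity) hcn
    · rw [hu]
      exact p2.continuous.abs.continuousOn.div (p1.continuous.pow 2).continuousOn
        (fun x hx => pow_ne_zero 2 (hne x hx))
  refine (norm_add_le _ _).trans (add_le_add ((norm_sub_le _ _).trans ?_) hI)
  have := hend a ⟨le_rfl, hab⟩
  have := hend b ⟨hab, le_rfl⟩
  rw [show 2 / lam = 1 / lam + 1 / lam by ring]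
  linarith

/-- The first derivative test for a monotone derivative: `1 / p'` has total variation at most `2 / lam`. -/
lemma vdc_mono (p : ℝ[X]) {a b lam : ℝ} (hab : a ≤ b) (hl : 0 < lam)
    (h1 : ∀ x ∈ Set.Icc a b, lam ≤ |(derivative p).eval x|)
    (h2 : (∀ x ∈ Set.Icc a b, 0 ≤ (derivative (derivative p)).eval x) ∨
      ∀ x ∈ Set.Icc a b, (derivative (derivative p)).eval x ≤ 0) :
    ‖∫ x in a..b, e (p.eval x)‖ ≤ 4 / lam := by
  have hne : ∀ x ∈ Set.Icc a b, (derivative p).eval x ≠ 0 := fun x hx h0 => by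
    have := h1 x hx
    rw [h0, abs_zero] at this
    linarith
  have hu : Set.uIcc a b = Set.Icc a b := Set.uIcc_of_le hab
  have hM : ∫ x in a..b, |(derivative (derivative p)).eval x| / (derivative p).eval x ^ 2 ≤ 2 / lam := by
    have hFT := intervalIntegral.integral_eq_sub_of_hasDerivAt (a := a) (b := b)
      (f := fun x => -((derivative p).eval x)⁻¹)
      (f' := fun x => (derivative (derivative p)).eval x / (derivative p).eval x ^ 2)
      (fun x hx => by
        rw [hu] at hx
        have := (((derivative p).hasDerivAt x).fun_inv (hne x hx)).neg
        rw [neg_div, neg_neg] at this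
        exact this)
      (ContinuousOn.intervalIntegrable (by
        rw [hu]
        exact (derivative (derivative p)).continuous.continuousOn.div
          ((derivative p).continuous.pow 2).continuousOn (fun x hx => pow_ne_zero 2 (hne x hx))))
    have hend : ∀ x ∈ Set.Icc a b, |((derivative p).eval x)⁻¹| ≤ 1 / lam := fun x hx => by
      rw [abs_inv, inv_eq_one_div]
      have := h1 x hx
      gcongr
    have ha := abs_le.1 (hend a ⟨le_rfl, hab⟩)
    have hb := abs_le.1 (hend b ⟨hab, le_rfl⟩)
    have h3 : (2 : ℝ) / lam = 1 / lam + 1 / lam := by ring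
    rcases h2 with h2 | h2
    · rw [intervalIntegral.integral_congr (g := fun x =>
        (derivative (derivative p)).eval x / (derivative p).eval x ^ 2) (fun x hx => by
        rw [hu] at hx
        simp only [abs_of_nonneg (h2 x hx)]), hFT]
      linarith [ha.1, hb.2]
    · rw [intervalIntegral.integral_congr (g := fun x =>
        -((derivative (derivative p)).eval x / (derivative p).eval x ^ 2)) (fun x hx => by
        rw [hu] at hx
        simp only [abs_of_nonpos (h2 x hx), neg_div]), intervalIntegral.integral_neg, hFT]
      linarith [ha.2, hb.1]
  refine (vdc_one p hab hl h1 hM).trans (le_of_eq (by ring))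

lemma sign_const (g : ℝ[X]) {a b : ℝ} (hg : ∀ x ∈ Set.Icc a b, g.eval x ≠ 0) :
    (∀ x ∈ Set.Icc a b, 0 ≤ g.eval x) ∨ ∀ x ∈ Set.Icc a b, g.eval x ≤ 0 := by
  by_contra h
  push Not at h
  obtain ⟨⟨x, hx, h1⟩, y, hy, h2⟩ := h
  obtain ⟨z, hz, h3⟩ := isPreconnected_Icc.intermediate_value hx hy g.continuous.continuousOn
    (show (0 : ℝ) ∈ Set.Icc _ _ from ⟨h1.le, h2.le⟩)
  exact hg z hz h3

/-- Van der Corput's lemma: the `k`-th derivative test for oscillatory integrals. -/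
lemma vdc (k : ℕ) : ∃ C > 0, ∀ (p : ℝ[X]) (a b lam : ℝ), a ≤ b → 0 < lam →
    (∀ x ∈ Set.Icc a b, lam ≤ |(derivative^[k + 1] p).eval x|) →
    (k = 0 → (∀ x ∈ Set.Icc a b, 0 ≤ (derivative (derivative p)).eval x) ∨
      ∀ x ∈ Set.Icc a b, (derivative (derivative p)).eval x ≤ 0) →
    ‖∫ x in a..b, e (p.eval x)‖ ≤ C * lam ^ (-(1 / ((k : ℝ) + 1))) := by
  induction k with
  | zero =>
    refine ⟨4, by norm_num, fun p a b lam hab hl h1 h2 => ?_⟩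
    have := vdc_mono p hab hl h1 (h2 rfl)
    simpa [Real.rpow_neg_one, div_eq_mul_inv] using this
  | succ k ih =>
    obtain ⟨C, hC, ih⟩ := ih
    refine ⟨2 * C + 4, by positivity, fun p a b lam hab hl h1 _ => ?_⟩
    set g := derivative^[k + 1] p with hg
    have hg' : derivative^[k + 1 + 1] p = derivative g := by
      exact Function.iterate_succ_apply' _ _ _
    rw [hg'] at h1
    have hmvt : ∀ x ∈ Set.Icc a b, ∀ y ∈ Set.Icc a b, x < y → lam * |x - y| ≤ |g.eval x - g.eval y| := by
      intro x hx y hy hxy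
      obtain ⟨z, hz, h⟩ := exists_hasDerivAt_eq_slope (fun x => g.eval x) (fun x => (derivative g).eval x)
        hxy g.continuous.continuousOn (fun z _ => g.hasDerivAt z)
      have h3 := h1 z ⟨hx.1.trans hz.1.le, hz.2.le.trans hy.2⟩
      rw [h, abs_div, le_div_iff₀ (abs_pos.2 (sub_ne_zero.2 hxy.ne'))] at h3
      rwa [abs_sub_comm, abs_sub_comm (g.eval x)]
    have hmvt' : ∀ x ∈ Set.Icc a b, ∀ y ∈ Set.Icc a b, lam * |x - y| ≤ |g.eval x - g.eval y| := by
      intro x hx y hy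
      rcases lt_trichotomy x y with h | h | h
      · exact hmvt x hx y hy h
      · simp [h]
      · rw [abs_sub_comm, abs_sub_comm (g.eval x)]; exact hmvt y hy x hx h
    obtain ⟨c, hc, hmin⟩ := isCompact_Icc.exists_isMinOn (Set.nonempty_Icc.2 hab)
      (g.continuous.abs.continuousOn (s := Set.Icc a b))
    -- away from its smallest value, `|g|` grows linearly
    have hgrow : ∀ x ∈ Set.Icc a b, lam * |x - c| ≤ 2 * |g.eval x| := by
      intro x hx
      have h3 := hmvt' x hx c hc
      have h4 : |g.eval c| ≤ |g.eval x| := hmin hx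
      have := abs_sub (g.eval x) (g.eval c)
      linarith
    set θ : ℝ := 1 / ((k : ℝ) + 1 + 1) with hθ
    set del := lam ^ ((k + 1) * θ) with hdel
    have hd0 : 0 < del := by positivity
    have hk0 : (0 : ℝ) < (k : ℝ) + 1 := by positivity
    have e1 : del ^ (-(1 / ((k : ℝ) + 1))) = lam ^ (-θ) := by
      rw [hdel, ← rpow_mul hl.le]; congr 1; field_simp
    have e2 : del / lam = lam ^ (-θ) := by
      rw [hdel]
      nth_rewrite 2 [← rpow_one lam]
      rw [← Real.rpow_sub hl]; congr 1; rw [hθ]; field_simp; ring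
    set w := 2 * (del / lam) with hw
    have hw0 : 0 < w := by positivity
    have hwd : lam * w = 2 * del := by rw [hw]; field_simp
    clear_value w del
    set c1 := max a (c - w) with hc1
    set c2 := min b (c + w) with hc2
    have hac1 : a ≤ c1 := le_max_left _ _
    have hc2b : c2 ≤ b := min_le_left _ _
    have hc1c : c1 ≤ c := max_le hc.1 (by linarith)
    have hcc2 : c ≤ c2 := le_min hc.2 (by linarith)
    have hsgn : ∀ x y, Set.Icc x y ⊆ Set.Icc a b → k = 0 →
        (∀ z ∈ Set.Icc x y, 0 ≤ (derivative (derivative p)).eval z) ∨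
        ∀ z ∈ Set.Icc x y, (derivative (derivative p)).eval z ≤ 0 := by
      intro x y hxy hk
      subst hk
      refine sign_const _ fun z hz h0 => ?_
      have h3 := h1 z (hxy hz)
      have h4 : (derivative g).eval z = 0 := h0
      rw [h4, abs_zero] at h3
      linarith
    have hL : ‖∫ x in a..c1, e (p.eval x)‖ ≤ C * lam ^ (-θ) := by
      have hsub : Set.Icc a c1 ⊆ Set.Icc a b := Set.Icc_subset_Icc_right (hc1c.trans hc.2)
      rw [← e1]
      rcases hac1.eq_or_lt with h | h
      · rw [← h]; simp; positivity
      · refine ih p a c1 del hac1 hd0 (fun x hx => ?_) (hsgn _ _ hsub)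
        have h3 := hgrow x (hsub hx)
        have h4 : c1 = c - w := by
          rcases max_choice a (c - w) with h5 | h5
          · rw [hc1, h5] at h; exact absurd h (lt_irrefl _)
          · exact h5
        have h5 : w ≤ |x - c| := by
          rw [abs_sub_comm]; exact le_trans (by linarith [hx.2]) (le_abs_self _)
        nlinarith
    have hR : ‖∫ x in c2..b, e (p.eval x)‖ ≤ C * lam ^ (-θ) := by
      have hsub : Set.Icc c2 b ⊆ Set.Icc a b := Set.Icc_subset_Icc_left (hc.1.trans hcc2)
      rw [← e1]
      rcases hc2b.eq_or_lt with h | h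
      · rw [h]; simp; positivity
      · refine ih p c2 b del hc2b hd0 (fun x hx => ?_) (hsgn _ _ hsub)
        have h3 := hgrow x (hsub hx)
        have h4 : c2 = c + w := by
          rcases min_choice b (c + w) with h5 | h5
          · rw [hc2, h5] at h; exact absurd h (lt_irrefl _)
          · exact h5
        have h5 : w ≤ |x - c| := le_trans (by linarith [hx.1]) (le_abs_self _)
        nlinarith
    have hMid : ‖∫ x in c1..c2, e (p.eval x)‖ ≤ 4 * lam ^ (-θ) := by
      have := intervalIntegral.norm_integral_le_of_norm_le_const (a := c1) (b := c2) (C := 1)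
        (f := fun x => e (p.eval x)) (fun x _ => (norm_e _).le)
      refine this.trans ?_
      have h5 : c - w ≤ c1 := le_max_right _ _
      have h6 : c2 ≤ c + w := min_le_right _ _
      rw [one_mul, abs_of_nonneg (by linarith), ← e2]
      linarith
    have hce : Continuous fun x => e (p.eval x) := continuous_e.comp p.continuous
    have hsplit : ∫ x in a..b, e (p.eval x) = (∫ x in a..c1, e (p.eval x)) +
        (∫ x in c1..c2, e (p.eval x)) + ∫ x in c2..b, e (p.eval x) := by
      rw [intervalIntegral.integral_add_adjacent_intervals (hce.intervalIntegrable _ _)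
        (hce.intervalIntegrable _ _), intervalIntegral.integral_add_adjacent_intervals
        (hce.intervalIntegrable _ _) (hce.intervalIntegrable _ _)]
    rw [hsplit]
    push_cast
    rw [← hθ]
    refine norm_add₃_le.trans ?_
    linarith

/-- Decay of order `B ^ (-1/K)` on an interval where some derivative of order `j ≤ K` has size at least `c B`. -/
lemma vdc_piece (K : ℕ) {c M : ℝ} (hc : 0 < c) (hM : 0 < M) : ∃ C > 0, ∀ (p : ℝ[X]) (a b B : ℝ)
    (j : ℕ), 1 ≤ j → j ≤ K → 1 ≤ B → a ≤ b → b ≤ a + 2 →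
    (∀ x ∈ Set.Icc a b, c * B ≤ |(derivative^[j] p).eval x|) →
    (∀ x ∈ Set.Icc a b, |(derivative (derivative p)).eval x| ≤ M * B) →
    ‖∫ x in a..b, e (p.eval x)‖ ≤ C * B ^ (-(1 / (K : ℝ))) := by
  choose Cv hCv hv using vdc
  refine ⟨∑ j ∈ range K, Cv j * c ^ (-(1 / ((j : ℝ) + 1))) + (2 / c + 2 * M / c ^ 2), by
    have : 0 ≤ ∑ j ∈ range K, Cv j * c ^ (-(1 / ((j : ℝ) + 1))) :=
      sum_nonneg fun j _ => by have := hCv j; positivity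
    positivity, fun p a b B j hj1 hjK hB hab hba h1 h2 => ?_⟩
  have hB0 : 0 < B := by linarith
  have hK1 : (1 : ℝ) ≤ K := by exact_mod_cast hj1.trans hjK
  have hnn : ∀ j ∈ range K, 0 ≤ Cv j * c ^ (-(1 / ((j : ℝ) + 1))) := fun j _ => by
    have := hCv j; positivity
  have hBp : 0 < B ^ (-(1 / (K : ℝ))) := by positivity
  rcases hj1.eq_or_lt with h | h
  · subst h
    have h3 := vdc_one p (M := 2 * M / c ^ 2 * B⁻¹) hab (by positivity : 0 < c * B) h1 (by
      have h5 := intervalIntegral.norm_integral_le_of_norm_le_const (a := a) (b := b)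
        (C := M * B / (c * B) ^ 2) (f := fun x => |(derivative (derivative p)).eval x| /
          (derivative p).eval x ^ 2) (fun x hx => by
          rw [Set.uIoc_of_le hab] at hx
          have hx' : x ∈ Set.Icc a b := ⟨hx.1.le, hx.2⟩
          have h6 := h1 x hx'
          simp only [Function.iterate_one] at h6
          rw [Real.norm_eq_abs, abs_div, abs_abs, abs_of_nonneg (sq_nonneg (eval x (derivative p))),
            ← sq_abs (eval x (derivative p))]
          gcongr
          exact h2 x hx')
      refine (le_abs_self _).trans (h5.trans ?_)
      rw [abs_of_nonneg (by linarith)]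
      calc M * B / (c * B) ^ 2 * (b - a) ≤ M * B / (c * B) ^ 2 * 2 := by gcongr; linarith
        _ = _ := by field_simp)
    have h4 : B⁻¹ ≤ B ^ (-(1 / (K : ℝ))) := by
      rw [← Real.rpow_neg_one]
      refine rpow_le_rpow_of_exponent_le hB ?_
      rw [neg_le_neg_iff, div_le_one (by linarith)]
      exact hK1
    have h5 : 2 / (c * B) + 2 * M / c ^ 2 * B⁻¹ = (2 / c + 2 * M / c ^ 2) * B⁻¹ := by field_simp
    rw [h5] at h3
    refine h3.trans ?_
    have := sum_nonneg hnn
    calc (2 / c + 2 * M / c ^ 2) * B⁻¹ ≤ (2 / c + 2 * M / c ^ 2) * B ^ (-(1 / (K : ℝ))) := by gcongr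
      _ ≤ _ := mul_le_mul_of_nonneg_right (by linarith) hBp.le
  · obtain ⟨i, rfl⟩ : ∃ i, j = i + 1 := ⟨j - 1, by omega⟩
    have h3 := hv i p a b (c * B) hab (by positivity) h1 (fun h0 => by omega)
    refine h3.trans ?_
    rw [mul_rpow hc.le hB0.le, ← mul_assoc]
    have h4 := single_le_sum hnn (mem_range.2 (by omega : i < K))
    have h5 : 0 ≤ 2 / c + 2 * M / c ^ 2 := by positivity
    have h6 : ((i : ℝ) + 1) ≤ K := by exact_mod_cast hjK
    have := hCv i
    have hi0 : (0 : ℝ) < (i : ℝ) + 1 := by positivity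
    refine mul_le_mul (by linarith) ?_ (by positivity) (by linarith [hnn i (mem_range.2 (by omega))])
    refine rpow_le_rpow_of_exponent_le hB ?_
    rw [neg_le_neg_iff]
    gcongr

/-- The phase polynomial `β₁ X^{k₁} + ⋯`. -/
noncomputable def phasePoly (β : Fin n → ℝ) : ℝ[X] := ∑ i, C (β i) * X ^ k i

lemma phasePoly_eval (β : Fin n → ℝ) (x : ℝ) :
    (phasePoly k β).eval x = ∑ i, β i * x ^ k i := by
  simp [phasePoly, eval_finsetSum]

lemma phasePoly_deriv (β : Fin n → ℝ) (j : ℕ) (x : ℝ) :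
    (derivative^[j] (phasePoly k β)).eval x = ∑ i, β i * (derivative^[j] (X ^ k i : ℝ[X])).eval x := by
  simp [phasePoly, eval_finsetSum, iterate_derivative_sum, iterate_derivative_C_mul]

lemma phasePoly_zero {K : ℕ} (hk : Function.Injective k) (h1 : ∀ i, 1 ≤ k i)
    (hK : ∀ i, k i ≤ K) (β : Fin n → ℝ) (t : ℝ)
    (h : ∀ j ∈ Icc 1 K, (derivative^[j] (phasePoly k β)).eval t = 0) : β = 0 := by
  set p := phasePoly k β with hp
  have hdeg : p.natDegree ≤ K := by
    refine natDegree_sum_le_of_forall_le _ _ fun i _ => ?_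
    exact (natDegree_C_mul_X_pow_le _ _).trans (hK i)
  have h2 : taylor t p = C ((taylor t p).coeff 0) := by
    ext j
    rcases Nat.eq_zero_or_pos j with rfl | hj
    · simp
    · rw [coeff_C_of_ne_zero (by omega)]
      by_cases hjK : j ≤ K
      · have h3 := h j (mem_Icc.2 ⟨hj, hjK⟩)
        have h4 := congrArg (eval t) (congrFun (factorial_smul_hasseDeriv (R := ℝ) j) p)
        rw [h3] at h4
        simp only [LinearMap.smul_apply, eval_smul, smul_eq_zero] at h4
        rw [taylor_coeff]
        rcases h4 with h4 | h4
        · exact absurd h4 (Nat.factorial_ne_zero j)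
        · exact h4
      · exact coeff_eq_zero_of_natDegree_lt (by rw [natDegree_taylor]; omega)
  have h3 : p = C ((taylor t p).coeff 0) := by
    apply taylor_injective t
    rw [taylor_C]; exact h2
  funext i
  have h4 : p.coeff (k i) = β i := by
    simp only [hp, phasePoly, finsetSum_coeff, coeff_C_mul, coeff_X_pow]
    rw [sum_eq_single i]
    · simp
    · intro j _ hj
      rw [if_neg (fun h5 => hj (hk h5).symm), mul_zero]
    · simp
  rw [← h4, h3, coeff_C_of_ne_zero (by have := h1 i; omega)]
  rfl

/-- Decay of the oscillatory integral. -/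
lemma oint_decay {K : ℕ} (hk : Function.Injective k) (h1 : ∀ i, 1 ≤ k i)
    (hK : ∀ i, k i ≤ K) (hK1 : 1 ≤ K) : ∃ C > 0, ∀ β : Fin n → ℝ,
      ‖oint k β‖ ≤ C * (1 + ‖β‖) ^ (-(1 / (K : ℝ))) := by
  classical
  let D : ℕ → (Fin n → ℝ) → ℝ → ℝ := fun j β t => (derivative^[j] (phasePoly k β)).eval t
  have hDc : ∀ j, Continuous fun z : (Fin n → ℝ) × ℝ => D j z.1 z.2 := fun j => by
    simp only [D, phasePoly_deriv]
    refine continuous_finsetSum _ fun i _ => Continuous.mul (by fun_prop) ?_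
    exact (Polynomial.continuous _).comp continuous_snd
  have hDs : ∀ j (r : ℝ) β t, D j (r • β) t = r * D j β t := fun j r β t => by
    simp only [D, phasePoly_deriv, Pi.smul_apply, smul_eq_mul, mul_sum, mul_assoc]
  let Z : Set ((Fin n → ℝ) × ℝ) := Metric.sphere 0 1 ×ˢ Set.Icc (-1) 1
  have hZ : IsCompact Z := (isCompact_sphere _ _).prod isCompact_Icc
  have hnorm : ∀ β : Fin n → ℝ, β ≠ 0 → ‖β‖⁻¹ • β ∈ Metric.sphere (0 : Fin n → ℝ) 1 := fun β hβ => by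
    rw [mem_sphere_zero_iff_norm, norm_smul, norm_inv, norm_norm, inv_mul_cancel₀ (norm_ne_zero_iff.2 hβ)]
  -- lower bound for the derivatives, by compactness
  obtain ⟨c, hc, hlow⟩ : ∃ c > 0, ∀ β : Fin n → ℝ, β ≠ 0 → ∀ t ∈ Set.Icc (-1 : ℝ) 1,
      c * ‖β‖ ≤ ∑ j ∈ Icc 1 K, |D j β t| := by
    have hpos : ∀ z ∈ Z, 0 < ∑ j ∈ Icc 1 K, |D j z.1 z.2| := by
      intro z hz
      refine lt_of_le_of_ne (sum_nonneg fun _ _ => abs_nonneg _) fun h0 => ?_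
      rw [eq_comm, sum_eq_zero_iff_of_nonneg (fun _ _ => abs_nonneg _)] at h0
      have := phasePoly_zero k hk h1 hK z.1 z.2 (fun j hj => abs_eq_zero.1 (h0 j hj))
      have h3 : ‖z.1‖ = 1 := mem_sphere_zero_iff_norm.1 hz.1
      rw [this, norm_zero] at h3
      exact zero_ne_one h3
    obtain ⟨c, hc, h⟩ := hZ.exists_forall_le' (a := 0) (f := fun z => ∑ j ∈ Icc 1 K, |D j z.1 z.2|)
      (continuous_finsetSum _ fun j _ => (hDc j).abs).continuousOn hpos
    refine ⟨c, hc, fun β hβ t ht => ?_⟩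
    have h3 := h (‖β‖⁻¹ • β, t) ⟨hnorm β hβ, ht⟩
    simp only [hDs, abs_mul, abs_inv, abs_norm, ← mul_sum] at h3
    rwa [← div_eq_inv_mul, le_div_iff₀ (norm_pos_iff.2 hβ)] at h3
  obtain ⟨M, hM, hup⟩ : ∃ M > 0, ∀ β : Fin n → ℝ, β ≠ 0 → ∀ t ∈ Set.Icc (-1 : ℝ) 1,
      ∀ j ≤ K + 1, |D j β t| ≤ M * ‖β‖ := by
    obtain ⟨M, h⟩ := hZ.exists_bound_of_continuousOn (f := fun z => ∑ j ∈ range (K + 2), |D j z.1 z.2|)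
      (continuous_finsetSum _ fun j _ => (hDc j).abs).continuousOn
    refine ⟨|M| + 1, by positivity, fun β hβ t ht j hj => ?_⟩
    have h3 := (le_abs_self _).trans (h (‖β‖⁻¹ • β, t) ⟨hnorm β hβ, ht⟩)
    simp only [hDs, abs_mul, abs_inv, abs_norm, ← mul_sum] at h3
    rw [← div_eq_inv_mul, div_le_iff₀ (norm_pos_iff.2 hβ)] at h3
    have h4 := single_le_sum (f := fun j => |D j β t|) (fun _ _ => abs_nonneg _)
      (mem_range.2 (by omega : j < K + 2))
    refine h4.trans (h3.trans ?_)
    gcongr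
    linarith [le_abs_self M]
  have hK0 : (0 : ℝ) < K := by exact_mod_cast hK1
  obtain ⟨L, hL⟩ := exists_nat_gt (2 / (c / K / 2 / M))
  have hL0 : (0 : ℝ) < L := lt_of_le_of_lt (by positivity) hL
  have hL1 : 1 ≤ L := by exact_mod_cast hL0
  obtain ⟨Cp, hCp, hpiece⟩ := vdc_piece K (c := c / K / 2) (M := M) (by positivity) hM
  have hmain : ∀ β : Fin n → ℝ, 1 ≤ ‖β‖ → ‖oint k β‖ ≤ L * (Cp * ‖β‖ ^ (-(1 / (K : ℝ)))) := by
    intro β hβ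
    have hβ0 : β ≠ 0 := fun h => by rw [h, norm_zero] at hβ; linarith
    let h : ℝ := 2 / L
    have hh0 : 0 < h := by positivity
    have hh : M * h ≤ c / K / 2 := by
      simp only [h]
      rw [div_lt_iff₀ (by positivity)] at hL
      rw [mul_div_assoc', div_le_iff₀ hL0]
      have : (L : ℝ) * (c / K / 2 / M) * M = L * (c / K / 2) := by field_simp
      nlinarith
    have hLh : L * h = 2 := by simp only [h]; field_simp
    have hce : Continuous fun x => e (∑ i, β i * x ^ k i) := continuous_e.comp (by fun_prop)
    have hsum : oint k β = ∑ l ∈ range L,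
        ∫ t in (-1 + l * h)..(-1 + (l + 1 : ℕ) * h), e (∑ i, β i * t ^ k i) := by
      rw [intervalIntegral.sum_integral_adjacent_intervals (a := fun l : ℕ => -1 + (l : ℝ) * h)
        (fun i _ => hce.intervalIntegrable _ _)]
      unfold oint
      simp only [Nat.cast_zero, zero_mul, add_zero, hLh]
      norm_num
    rw [hsum]
    refine (norm_sum_le _ _).trans ?_
    rw [← nsmul_eq_mul, ← card_range L, ← sum_const, card_range L]
    refine sum_le_sum fun l hl => ?_
    have hl' : ((l : ℝ) + 1) ≤ L := by exact_mod_cast mem_range.1 hl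
    have hl0 : (0 : ℝ) ≤ l := by positivity
    set t0 := -1 + (l : ℝ) * h with ht0
    have ht1 : -1 + ((l + 1 : ℕ) : ℝ) * h = t0 + h := by rw [ht0]; push_cast; ring
    have hsub : Set.Icc t0 (t0 + h) ⊆ Set.Icc (-1) 1 := by
      apply Set.Icc_subset_Icc
      · rw [ht0]; nlinarith
      · rw [ht0]; nlinarith
    rw [ht1]
    have ht0m : t0 ∈ Set.Icc (-1 : ℝ) 1 := hsub ⟨le_rfl, by linarith⟩
    have hex : ∃ j ∈ Icc 1 K, c / K * ‖β‖ ≤ |D j β t0| := by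
      by_contra hcon
      push Not at hcon
      have h5 := hlow β hβ0 t0 ht0m
      have h6 := sum_lt_sum_of_nonempty (s := Icc 1 K) ⟨1, mem_Icc.2 ⟨le_rfl, hK1⟩⟩ hcon
      rw [sum_const, Nat.card_Icc, Nat.add_sub_cancel, nsmul_eq_mul] at h6
      have h7 : (K : ℝ) * (c / K * ‖β‖) = c * ‖β‖ := by field_simp
      linarith
    obtain ⟨j, hj, hjb⟩ := hex
    rw [mem_Icc] at hj
    have hp := hpiece (phasePoly k β) t0 (t0 + h) ‖β‖ j hj.1 hj.2 hβ (by linarith)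
      (by
        have : h ≤ 2 := by
          simp only [h]; rw [div_le_iff₀ hL0]
          have : (1 : ℝ) ≤ L := by exact_mod_cast hL1
          linarith
        linarith)
      (fun x hx => by
        have h8 := norm_image_sub_le_of_norm_deriv_le_segment' (f := fun x => D j β x)
          (f' := fun x => D (j + 1) β x) (a := t0) (b := t0 + h) (C := M * ‖β‖)
          (fun y _ => by
            simp only [D]
            rw [Function.iterate_succ_apply']
            exact (Polynomial.hasDerivAt _ _).hasDerivWithinAt)
          (fun y hy => hup β hβ0 y (hsub ⟨hy.1, hy.2.le⟩) (j + 1) (by omega)) x hx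
        rw [Real.norm_eq_abs] at h8
        have h9 := abs_sub_abs_le_abs_sub (D j β t0) (D j β x)
        rw [abs_sub_comm] at h9
        change _ ≤ |D j β x|
        have h10 : M * ‖β‖ * (x - t0) ≤ c / K / 2 * ‖β‖ := by
          calc M * ‖β‖ * (x - t0) ≤ M * ‖β‖ * h := by gcongr; linarith [hx.2]
            _ = M * h * ‖β‖ := by ring
            _ ≤ _ := by gcongr
        have h11 : c / K * ‖β‖ = c / K / 2 * ‖β‖ + c / K / 2 * ‖β‖ := by ring
        linarith)
      (fun x hx => hup β hβ0 x (hsub hx) 2 (by omega))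
    simp only [phasePoly_eval] at hp
    exact hp
  refine ⟨(L * Cp + 2) * 2, by positivity, fun β => ?_⟩
  have hpos : 0 < (1 + ‖β‖) ^ (-(1 / (K : ℝ))) := by positivity
  have h2K : (2 : ℝ) ^ (1 / (K : ℝ)) ≤ 2 := by
    calc (2 : ℝ) ^ (1 / (K : ℝ)) ≤ 2 ^ (1 : ℝ) := by
          refine rpow_le_rpow_of_exponent_le (by norm_num) ?_
          rw [div_le_one hK0]; exact_mod_cast hK1
      _ = 2 := rpow_one 2
  have hhalf : ∀ x : ℝ, 0 < x → (x / 2) ^ (-(1 / (K : ℝ))) ≤ 2 * x ^ (-(1 / (K : ℝ))) := by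
    intro x hx
    rw [Real.div_rpow hx.le (by norm_num), rpow_neg (by norm_num : (0 : ℝ) ≤ 2), div_inv_eq_mul, mul_comm]
    gcongr
  rcases le_total 1 ‖β‖ with h | h
  · refine (hmain β h).trans ?_
    have h3 : ‖β‖ ^ (-(1 / (K : ℝ))) ≤ ((1 + ‖β‖) / 2) ^ (-(1 / (K : ℝ))) := by
      refine Real.rpow_le_rpow_of_nonpos (by positivity) (by linarith) ?_
      rw [Left.neg_nonpos_iff]; positivity
    have h4 := h3.trans (hhalf _ (by positivity))
    calc L * (Cp * ‖β‖ ^ (-(1 / (K : ℝ)))) ≤ L * (Cp * (2 * (1 + ‖β‖) ^ (-(1 / (K : ℝ))))) := by gcongr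
      _ ≤ _ := by nlinarith
  · refine (norm_oint_le k β).trans ?_
    have h3 : (1 : ℝ) ≤ ((1 + ‖β‖) / 2) ^ (-(1 / (K : ℝ))) := by
      refine Real.one_le_rpow_of_pos_of_le_one_of_nonpos (by positivity) (by linarith) ?_
      rw [Left.neg_nonpos_iff]; positivity
    have h4 := h3.trans (hhalf _ (by positivity))
    have h5 : 0 ≤ L * Cp * (2 * (1 + ‖β‖) ^ (-(1 / (K : ℝ)))) := by positivity
    nlinarith

end

/-! ### Rational approximation from large exponential sums -/

/-- The integers `a₁, …, aₙ, q` have no common factor. -/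
def Prim {n : ℕ} (a : Fin n → ℤ) (q : ℕ) : Prop := ∀ d : ℕ, d ∣ q → (∀ i, (d : ℤ) ∣ a i) → d = 1

lemma Prim.dvd {n : ℕ} {a a' : Fin n → ℤ} {q q' : ℕ} (hq : 1 ≤ q) (h : Prim a q)
    (heq : ∀ i, a i * q' = a' i * q) : q ∣ q' := by
  have hg : 0 < Nat.gcd q q' := Nat.gcd_pos_of_pos_left _ hq
  obtain ⟨q1, h1⟩ := Nat.gcd_dvd_left q q'
  obtain ⟨q2, h2⟩ := Nat.gcd_dvd_right q q'
  have hcop : Nat.Coprime q1 q2 := by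
    have h3 : q.gcd q' = q.gcd q' * Nat.gcd q1 q2 := by
      rw [← Nat.gcd_mul_left, ← h1, ← h2]
    exact Nat.eq_of_mul_eq_mul_left hg (by rw [← h3, mul_one])
  obtain ⟨g, hgdef⟩ : ∃ g, g = q.gcd q' := ⟨_, rfl⟩
  rw [← hgdef] at h1 h2 hg
  have h3 := h q1 ⟨_, by rw [mul_comm]; exact h1⟩ (fun i => by
    have h4 := heq i
    have hg' : (g : ℤ) ≠ 0 := by exact_mod_cast hg.ne'
    have h1z : (q : ℤ) = g * q1 := by exact_mod_cast h1
    have h2z : (q' : ℤ) = g * q2 := by exact_mod_cast h2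
    have h5 : a i * q2 = a' i * q1 := by
      apply mul_left_cancel₀ hg'
      linear_combination h4 - a i * h2z + a' i * h1z
    refine IsCoprime.dvd_of_dvd_mul_right (Nat.isCoprime_iff_coprime.2 hcop) ?_
    exact ⟨a' i, by rw [h5]; ring⟩)
  rw [h3, mul_one] at h1
  rw [h1]; exact ⟨q2, h2⟩

lemma Prim.eq {n : ℕ} {a a' : Fin n → ℤ} {q q' : ℕ} (hq : 1 ≤ q) (hq' : 1 ≤ q') (h : Prim a q)
    (h' : Prim a' q') (heq : ∀ i, a i * q' = a' i * q) : q = q' ∧ a = a' := by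
  have hqq : q = q' := Nat.dvd_antisymm (h.dvd hq heq) (h'.dvd hq' fun i => (heq i).symm)
  refine ⟨hqq, funext fun i => ?_⟩
  have := heq i
  rw [hqq] at this
  exact mul_right_cancel₀ (by exact_mod_cast (by omega : q' ≠ 0)) this

lemma exists_prim {n : ℕ} (q : ℕ) : ∀ (a : Fin n → ℤ), 1 ≤ q → ∃ (q' : ℕ) (a' : Fin n → ℤ), 1 ≤ q' ∧
    q' ≤ q ∧ Prim a' q' ∧ ∀ i, (a i : ℝ) / q = a' i / q' := by
  induction q using Nat.strong_induction_on with
  | _ q ih =>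
    intro a hq
    by_cases h : Prim a q
    · exact ⟨q, a, hq, le_rfl, h, fun _ => rfl⟩
    · unfold Prim at h
      push Not at h
      obtain ⟨d, ⟨q1, hd⟩, h2, h3⟩ := h
      choose a1 ha1 using h2
      have hd0 : d ≠ 0 := by rintro rfl; omega
      have hq1 : q1 ≠ 0 := by rintro rfl; omega
      have hlt : q1 < q := by rw [hd]; nlinarith [Nat.pos_of_ne_zero hq1, (by omega : 2 ≤ d)]
      obtain ⟨q', a', e1, e2, e3, e4⟩ := ih q1 hlt a1 (by omega)
      refine ⟨q', a', e1, by omega, e3, fun i => ?_⟩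
      rw [← e4 i, ha1 i, hd]
      have : (d : ℝ) ≠ 0 := by exact_mod_cast hd0
      have : (q1 : ℝ) ≠ 0 := by exact_mod_cast hq1
      push_cast
      field_simp

/-- Distinct primitive fractions are separated in some coordinate. -/
lemma Prim.sep {n : ℕ} {a a' : Fin n → ℤ} {q q' : ℕ} (hq : 1 ≤ q) (hq' : 1 ≤ q') (h : Prim a q)
    (h' : Prim a' q') (hlt : ∀ i, |(a i : ℝ) / q - a' i / q'| < 1 / ((q : ℝ) * q')) :
    q = q' ∧ a = a' := by
  refine h.eq hq hq' h' fun i => ?_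
  have h1 := hlt i
  have hq0 : (0 : ℝ) < q := by positivity
  have hq0' : (0 : ℝ) < q' := by positivity
  rw [div_sub_div _ _ hq0.ne' hq0'.ne', abs_div, abs_of_pos (mul_pos hq0 hq0'),
    div_lt_div_iff_of_pos_right (by positivity)] at h1
  have h2 : |a i * q' - q * a' i| < 1 := by exact_mod_cast h1
  have := Int.abs_lt_one_iff.1 h2
  linarith

/-- A large exponential sum forces simultaneous rational approximation to the coefficients. -/
lemma major_one {K : ℕ} (hk : Function.Injective k) (h1 : ∀ i, 1 ≤ k i)
    (hK : ∀ i, k i ≤ K) (hK2 : 2 ≤ K) {τ ε : ℝ} (hτ : 0 < τ) (hε : 0 < ε)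
    (h : ((K : ℝ) * (K - 1) + 1) * τ + ε < 1) :
    ∀ᶠ P : ℕ in atTop, ∀ γ : Fin n → ℝ, (P : ℝ) ^ (1 - τ) ≤ ‖wsum k P γ‖ →
      ∃ (q : ℕ) (b : Fin n → ℤ), 1 ≤ q ∧ (q : ℝ) ≤ (P : ℝ) ^ ((K : ℝ) * (K - 1) * τ + ε) ∧
        ∀ i, |γ i - b i / q| ≤ (P : ℝ) ^ (-(k i : ℝ) + K * τ + ε) := by
  classical
  obtain ⟨m, rfl⟩ : ∃ m, K = m + 1 := ⟨K - 1, by omega⟩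
  have htri : 2 * (tri m : ℝ) = ((m + 1 : ℕ) : ℝ) * (((m + 1 : ℕ) : ℝ) - 1) := by
    have := two_mul_tri m
    have h2 : (2 * tri m : ℝ) = m * (m + 1) := by exact_mod_cast this
    rw [h2]; push_cast; ring
  obtain ⟨CI, hCI, hdec⟩ := oint_decay k hk h1 hK (by omega)
  obtain ⟨CA, hCA, happ⟩ := approx k hK
  set K := m + 1 with hKm
  have hKr : (2 : ℝ) ≤ K := by exact_mod_cast hK2
  set c : ℝ := 1 / (4 * (n + 1) * K * 2 ^ K) with hc
  have hc0 : 0 < c := by positivity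
  rw [← htri] at h ⊢
  have hw := weyl (m := m) (by omega) hτ hε hc0 h
  have hlt1 : 2 * (tri m : ℝ) * τ + ε < 1 - τ := by linarith
  filter_upwards [hw, ev_rpow (2 * CA) hlt1, ev_rpow ((2 * CI) ^ K) (show K * τ < K * τ + ε by linarith),
    Filter.eventually_ge_atTop 1] with P hw e1 e2 hP γ hγ
  have hP1 : (1 : ℝ) ≤ P := by exact_mod_cast hP
  have hP0 : (0 : ℝ) < P := by linarith
  let g : ℕ → ℝ := fun d => ∑ i, if k i = d then γ i else 0
  have hgk : ∀ i, g (k i) = γ i := fun i => by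
    simp only [g]
    rw [sum_eq_single i]
    · simp
    · intro j _ hj; rw [if_neg (fun h => hj (hk h))]
    · simp
  have hgs : ∀ x : ℝ, ∑ d ∈ range (m + 1 + 1), g d * x ^ d = ∑ i, γ i * x ^ k i := by
    intro x
    simp only [g, sum_mul]
    rw [sum_comm]
    refine sum_congr rfl fun i _ => ?_
    rw [sum_eq_single (k i)]
    · simp
    · intro d _ hd; rw [if_neg (Ne.symm hd), zero_mul]
    · intro hd; exact absurd (mem_range.2 (by have := hK i; omega)) hd
  obtain ⟨q, hq, hqP, happr⟩ := hw g (by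
    simp only [hgs]
    exact hγ)
  have hq0 : (0 : ℝ) < q := by positivity
  have hqle : (q : ℝ) ≤ P := by
    refine hqP.trans ?_
    calc (P : ℝ) ^ (2 * (tri m : ℝ) * τ + ε) ≤ (P : ℝ) ^ (1 : ℝ) :=
          rpow_le_rpow_of_exponent_le hP1 (by linarith)
      _ = P := rpow_one _
  have hb : ∀ i, ∃ b : ℤ, |q * γ i - b| ≤ if k i = 1 then 1 / 2 else c * P / (P : ℝ) ^ k i := by
    intro i
    split_ifs with hi
    · exact ⟨round (q * γ i), abs_sub_round _⟩
    · have := happr (k i) (by have := h1 i; omega) (hK i)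
      rw [hgk] at this
      exact this
  choose b hb using hb
  refine ⟨q, b, hq, hqP, ?_⟩
  set β : Fin n → ℝ := fun i => γ i - b i / q with hβ
  have hβq : ∀ i, q * |β i| = |q * γ i - b i| := fun i => by
    rw [← abs_of_pos hq0, ← abs_mul, abs_of_pos hq0]
    congr 1
    simp only [hβ]; field_simp
  have hcond : (q : ℝ) * ∑ i, (k i : ℝ) * |β i| * ((P : ℝ) + q) ^ (k i - 1) ≤ 3 / 4 := by
    have hterm : ∀ i, q * ((k i : ℝ) * |β i| * ((P : ℝ) + q) ^ (k i - 1)) ≤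
        (if k i = 1 then 1 / 2 else 0) + 1 / (4 * ((n : ℝ) + 1)) := by
      intro i
      have h3 := hb i
      rw [← hβq] at h3
      split_ifs at h3 ⊢ with hi
      · rw [hi]
        have : (0 : ℝ) ≤ 1 / (4 * ((n : ℝ) + 1)) := by positivity
        simp only [Nat.cast_one, Nat.sub_self, pow_zero]
        nlinarith
      · have h4 : (k i : ℝ) ≤ K := by exact_mod_cast hK i
        have h5 : (P : ℝ) ^ k i = P ^ (k i - 1) * P := by
          rw [← pow_succ]; congr 1; have := h1 i; omega
        have h6 : ((P : ℝ) + q) ^ (k i - 1) ≤ 2 ^ K * P ^ (k i - 1) := by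
          calc ((P : ℝ) + q) ^ (k i - 1) ≤ (2 * P) ^ (k i - 1) := by gcongr; linarith
            _ = 2 ^ (k i - 1) * P ^ (k i - 1) := mul_pow _ _ _
            _ ≤ 2 ^ K * P ^ (k i - 1) := by
              gcongr
              · norm_num
              · have := hK i; omega
        calc q * ((k i : ℝ) * |β i| * ((P : ℝ) + q) ^ (k i - 1))
            = k i * (q * |β i|) * ((P : ℝ) + q) ^ (k i - 1) := by ring
          _ ≤ K * (c * P / (P : ℝ) ^ k i) * (2 ^ K * P ^ (k i - 1)) := by gcongr
          _ = 0 + 1 / (4 * ((n : ℝ) + 1)) := by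
            rw [h5, hc]; field_simp; ring
    rw [mul_sum]
    refine (sum_le_sum fun i _ => hterm i).trans ?_
    rw [sum_add_distrib, sum_ite, sum_const, sum_const_zero, sum_const,
      card_univ, Fintype.card_fin, nsmul_eq_mul, nsmul_eq_mul]
    have hcard : ((univ.filter fun i => k i = 1).card : ℝ) ≤ 1 := by
      have : (univ.filter fun i => k i = 1).card ≤ 1 := by
        rw [card_le_one]
        intro i hi j hj
        simp only [mem_filter] at hi hj
        exact hk (hi.2.trans hj.2.symm)
      exact_mod_cast this
    have hn : (n : ℝ) * (1 / (4 * ((n : ℝ) + 1))) ≤ 1 / 4 := by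
      rw [mul_one_div, div_le_div_iff₀ (by positivity) (by norm_num)]
      linarith
    linarith
  have happ' := happ P q b β hq (by exact_mod_cast hqle) hcond
  have hγβ : (fun i => (b i : ℝ) / q + β i) = γ := by funext i; simp [hβ]
  rw [hγβ] at happ'
  set B := fun i => β i * (P : ℝ) ^ k i with hB
  have h7 : (P : ℝ) ^ (1 - τ) ≤ P * (CI * (1 + ‖B‖) ^ (-(1 / (K : ℝ)))) + CA * q := by
    refine hγ.trans ?_
    have h8 := norm_le_norm_add_norm_sub' (wsum k P γ) (P * csum k q b * oint k B)
    refine h8.trans (add_le_add ?_ happ')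
    rw [norm_mul, norm_mul, Complex.norm_natCast]
    calc P * ‖csum k q b‖ * ‖oint k B‖ ≤ P * 1 * (CI * (1 + ‖B‖) ^ (-(1 / (K : ℝ)))) := by
          gcongr
          · exact norm_csum_le _ _ _
          · exact hdec B
      _ = _ := by ring
  have h8 : CA * q ≤ (P : ℝ) ^ (1 - τ) / 2 := by
    have : CA * q ≤ CA * (P : ℝ) ^ (2 * (tri m : ℝ) * τ + ε) := by gcongr
    linarith
  have hsp : (P : ℝ) ^ (1 - τ) = P * (P : ℝ) ^ (-τ) := by
    rw [sub_eq_add_neg, rpow_add hP0, rpow_one]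
  have hN0 : 0 < 1 + ‖B‖ := by positivity
  have h9 : (P : ℝ) ^ (-τ) ≤ 2 * CI * (1 + ‖B‖) ^ (-(1 / (K : ℝ))) := by
    have : P * (P : ℝ) ^ (-τ) ≤ P * (2 * CI * (1 + ‖B‖) ^ (-(1 / (K : ℝ)))) := by
      rw [hsp] at h7 h8; linarith
    exact le_of_mul_le_mul_left this hP0
  have h10 : (1 + ‖B‖) ^ (1 / (K : ℝ)) ≤ 2 * CI * (P : ℝ) ^ τ := by
    rw [rpow_neg hP0.le, rpow_neg hN0.le, ← div_eq_mul_inv, inv_eq_one_div,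
      div_le_div_iff₀ (by positivity) (by positivity)] at h9
    linarith
  have h11 : 1 + ‖B‖ ≤ (P : ℝ) ^ (K * τ + ε) := by
    have h12 := pow_le_pow_left₀ (by positivity) h10 K
    rw [← rpow_natCast, ← rpow_mul hN0.le, one_div, inv_mul_cancel₀ (by positivity),
      rpow_one, mul_pow, ← rpow_mul_natCast hP0.le, mul_comm τ] at h12
    exact h12.trans e2
  intro i
  have h12 : |B i| ≤ (P : ℝ) ^ (K * τ + ε) := by
    have := norm_le_pi_norm B i
    rw [Real.norm_eq_abs] at this
    linarith
  simp only [hB] at h12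
  rw [abs_mul, abs_of_pos (pow_pos hP0 _)] at h12
  have h13 : (P : ℝ) ^ (-(k i : ℝ) + K * τ + ε) = (P : ℝ) ^ (K * τ + ε) / (P : ℝ) ^ k i := by
    rw [← rpow_natCast, ← Real.rpow_sub hP0]; congr 1; ring
  rw [h13, le_div_iff₀ (by positivity)]
  exact h12

/-- The version of `major_one` for the coefficients `α i * u i`, with a fraction in lowest terms. -/
lemma major {K : ℕ} (hk : Function.Injective k) (h1 : ∀ i, 1 ≤ k i)
    (hK : ∀ i, k i ≤ K) (hK2 : 2 ≤ K) {τ ε : ℝ} (hτ : 0 < τ) (hε : 0 < ε)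
    (h : ((K : ℝ) * (K - 1) + 1) * τ + ε < 1) (u : Fin n → ℤ) (hu : ∀ i, u i ≠ 0) :
    ∀ᶠ P : ℕ in atTop, ∀ α : Fin n → ℝ,
      (P : ℝ) ^ (1 - τ) ≤ ‖wsum k P (fun i => α i * u i)‖ →
      ∃ (q : ℕ) (a : Fin n → ℤ), 1 ≤ q ∧ (q : ℝ) ≤ (P : ℝ) ^ ((K : ℝ) * (K - 1) * τ + ε) ∧
        Prim a q ∧ ∀ i, |α i - a i / q| ≤ (P : ℝ) ^ (-(k i : ℝ) + K * τ + ε) := by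
  classical
  set U : ℕ := ∏ i, (u i).natAbs with hU
  have hU0 : U ≠ 0 := prod_ne_zero_iff.2 fun i _ => Int.natAbs_ne_zero.2 (hu i)
  filter_upwards [major_one k hk h1 hK hK2 hτ (half_pos hε) (by linarith),
    ev_rpow U (show (K : ℝ) * (K - 1) * τ + ε / 2 < (K : ℝ) * (K - 1) * τ + ε by linarith),
    Filter.eventually_ge_atTop 1] with P hm e1 hP α hα
  have hP1 : (1 : ℝ) ≤ P := by exact_mod_cast hP
  obtain ⟨q, b, hq, hqP, hb⟩ := hm _ hα
  have hdvd : ∀ i, u i ∣ (U : ℤ) := fun i =>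
    Int.natAbs_dvd.1 (by exact_mod_cast dvd_prod_of_mem (fun i => (u i).natAbs) (mem_univ i))
  choose v hv using hdvd
  obtain ⟨q', a', g1, g2, g3, g4⟩ := exists_prim (q * U) (fun i => b i * v i)
    (Nat.mul_pos hq (Nat.pos_of_ne_zero hU0))
  refine ⟨q', a', g1, ?_, g3, fun i => ?_⟩
  · have h3 : (q' : ℝ) ≤ q * U := by exact_mod_cast g2
    refine h3.trans (le_trans ?_ e1)
    rw [mul_comm]; gcongr
  · rw [← g4 i]
    have hui : (u i : ℝ) ≠ 0 := by exact_mod_cast hu i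
    have hvi : (v i : ℝ) ≠ 0 := by
      intro h0
      have : v i = 0 := by exact_mod_cast h0
      have h9 := hv i
      rw [this, mul_zero] at h9
      exact hU0 (by exact_mod_cast h9)
    have hUr : (U : ℝ) = u i * v i := by exact_mod_cast hv i
    have hq0 : (q : ℝ) ≠ 0 := by positivity
    have h4 : α i - ((b i * v i : ℤ) : ℝ) / ((q * U : ℕ) : ℝ) = (α i * u i - b i / q) / u i := by
      push_cast; rw [hUr]; field_simp
    have h5 : (1 : ℝ) ≤ |(u i : ℝ)| := by exact_mod_cast Int.one_le_abs (hu i)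
    rw [h4, abs_div]
    calc _ ≤ |α i * u i - b i / q| := div_le_self (abs_nonneg _) h5
      _ ≤ _ := hb i
      _ ≤ _ := rpow_le_rpow_of_exponent_le hP1 (by linarith)

/-! ### Generating functions and their mean values -/

/-- The residue vectors `a` modulo `q` occurring in the singular series. -/
def Aset (n q : ℕ) : Finset (Fin n → ℕ) :=
  (Fintype.piFinset fun _ : Fin n => Icc 1 q).filter
    (fun a => Nat.gcd (univ.gcd a) q = 1)

lemma mem_Aset {n q : ℕ} {a : Fin n → ℕ} :
    a ∈ Aset n q ↔ (∀ i, 1 ≤ a i ∧ a i ≤ q) ∧ Prim (fun i => (a i : ℤ)) q := by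
  unfold Aset Prim
  simp only [mem_filter, Fintype.mem_piFinset, mem_Icc]
  refine and_congr_right fun _ => ⟨fun h d h1 h2 => ?_, fun h => ?_⟩
  · have : d ∣ Nat.gcd (univ.gcd a) q :=
      Nat.dvd_gcd (dvd_gcd fun i _ => by exact_mod_cast h2 i) h1
    rw [h] at this
    exact Nat.dvd_one.1 this
  · exact h _ (Nat.gcd_dvd_right _ _) fun i => by
      exact_mod_cast (Nat.gcd_dvd_left _ _).trans (gcd_dvd (mem_univ i))

/-- The reduced fractions `a / q` with `q ≤ R`. -/
def Fr (n R : ℕ) : Finset ((_ : ℕ) × (Fin n → ℕ)) := (Icc 1 R).sigma fun q => Aset n q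

/-- The box centred at the fraction `a / q` with side lengths `2 r i`. -/
def bx {n : ℕ} (r : Fin n → ℝ) (x : (_ : ℕ) × (Fin n → ℕ)) : Set (Fin n → ℝ) :=
  Set.Icc (fun i => (x.2 i : ℝ) / x.1 - r i) (fun i => (x.2 i : ℝ) / x.1 + r i)

lemma mem_bx {n : ℕ} {r : Fin n → ℝ} {x : (_ : ℕ) × (Fin n → ℕ)} {α : Fin n → ℝ} :
    α ∈ bx r x ↔ ∀ i, |α i - x.2 i / x.1| ≤ r i := by
  unfold bx
  simp only [Set.mem_Icc, Pi.le_def, abs_le, ← forall_and]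
  refine forall_congr' fun i => ⟨fun h => ⟨by linarith [h.1], by linarith [h.2]⟩,
    fun h => ⟨by linarith [h.1], by linarith [h.2]⟩⟩

lemma mem_Fr {n R : ℕ} {x : (_ : ℕ) × (Fin n → ℕ)} : x ∈ Fr n R ↔
    (1 ≤ x.1 ∧ x.1 ≤ R) ∧ (∀ i, 1 ≤ x.2 i ∧ x.2 i ≤ x.1) ∧ Prim (fun i => (x.2 i : ℤ)) x.1 := by
  unfold Fr
  rw [mem_sigma, mem_Icc, mem_Aset]

lemma bx_disj {n R : ℕ} {r : Fin n → ℝ} (hr : ∀ i, 2 * r i * R ^ 2 < 1) :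
    (Fr n R : Set ((_ : ℕ) × (Fin n → ℕ))).Pairwise (Function.onFun Disjoint (bx r)) := by
  rintro ⟨q, a⟩ hx ⟨q', a'⟩ hy hne
  rw [mem_coe, mem_Fr] at hx hy
  obtain ⟨⟨h1, h2⟩, -, h3⟩ := hx
  obtain ⟨⟨h1', h2'⟩, -, h3'⟩ := hy
  dsimp only at h1 h2 h3 h1' h2' h3'
  refine Set.disjoint_left.2 fun α hα hα' => hne ?_
  rw [mem_bx] at hα hα'
  obtain ⟨rfl, h5⟩ := h3.sep h1 h1' h3' fun i => by
    have e1 := hα i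
    have e2 := hα' i
    dsimp only at e1 e2
    have hR : (0 : ℝ) < q * q' := by positivity
    have hqR : (q : ℝ) * q' ≤ R ^ 2 := by
      rw [sq]; exact_mod_cast Nat.mul_le_mul h2 h2'
    have h0 : 0 ≤ r i := (abs_nonneg _).trans e1
    rw [lt_div_iff₀ hR]
    have h6 : |((a i : ℤ) : ℝ) / q - ((a' i : ℤ) : ℝ) / q'| ≤ 2 * r i := by
      push_cast
      have := abs_sub_le ((a i : ℝ) / q) (α i) (a' i / q')
      rw [abs_sub_comm _ (α i)] at this
      linarith
    calc _ ≤ 2 * r i * R ^ 2 := by gcongr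
      _ < 1 := hr i
  have h6 : a = a' := by funext i; exact_mod_cast congrFun h5 i
  rw [h6]

lemma bx_sub {n R : ℕ} {r : Fin n → ℝ} {w : ℝ} (h1 : ∀ i, r i ≤ w) (h2 : ∀ i, w + r i < 1 / R)
    {x : (_ : ℕ) × (Fin n → ℕ)} (hx : x ∈ Fr n R) : bx r x ⊆ cube n w 1 := by
  intro α hα i _
  rw [mem_bx] at hα
  rw [mem_Fr] at hx
  obtain ⟨⟨g1, g2⟩, g3, -⟩ := hx
  have h3 := abs_le.1 (hα i)
  have hq : (0 : ℝ) < x.1 := by exact_mod_cast g1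
  have h4 : 1 / (R : ℝ) ≤ x.2 i / x.1 := by
    have g4 : (1 : ℝ) ≤ x.2 i := by exact_mod_cast (g3 i).1
    have g5 : (x.1 : ℝ) ≤ R := by exact_mod_cast g2
    exact div_le_div₀ (by linarith) g4 hq g5
  have h5 : (x.2 i : ℝ) / x.1 ≤ 1 := by
    rw [div_le_one hq]; exact_mod_cast (g3 i).2
  refine ⟨?_, ?_⟩
  · linarith [h3.1, h2 i]
  · push_cast; linarith [h3.2, h1 i]

lemma measurableSet_bx {n : ℕ} (r : Fin n → ℝ) (x) : MeasurableSet (bx r x) := measurableSet_Icc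

lemma volume_bx {n : ℕ} {r : Fin n → ℝ} (hr : ∀ i, 0 ≤ r i) (x) :
    (volume (bx r x)).toReal = ∏ i, (2 * r i) := by
  unfold bx
  rw [Real.volume_Icc_pi, ENNReal.toReal_prod]
  refine prod_congr rfl fun i _ => ?_
  rw [ENNReal.toReal_ofReal] <;> linarith [hr i]

lemma sum_bx_le {n R : ℕ} {r : Fin n → ℝ} {w : ℝ} (h1 : ∀ i, r i ≤ w) (h2 : ∀ i, w + r i < 1 / R)
    (hr : ∀ i, 2 * r i * R ^ 2 < 1) {g : (Fin n → ℝ) → ℝ} (hg : Continuous g) (hg0 : ∀ α, 0 ≤ g α) :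
    ∑ x ∈ Fr n R, ∫ α in bx r x, g α ≤ ∫ α in cube n w 1, g α := by
  have hi : IntegrableOn g (cube n w 1) := cont_integrableOn_cube hg
  have hsub : (⋃ x ∈ Fr n R, bx r x) ⊆ cube n w 1 := Set.iUnion₂_subset fun x hx => bx_sub h1 h2 hx
  have h3 := integral_biUnion_finset (μ := volume) (f := g) (Fr n R) (s := bx r)
    (fun x _ => measurableSet_bx r x) (bx_disj hr) fun x hx => hi.mono_set (bx_sub h1 h2 hx)
  rw [← h3]
  exact setIntegral_mono_set hi (Eventually.of_forall hg0) (Eventually.of_forall hsub)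

/-- The generating function attached to the `j`-th variable. -/
noncomputable def fS (P : ℕ) (j : Fin s)
    (α : Fin n → ℝ) : ℂ := wsum k P fun i => α i * u i j

lemma continuous_fS (P : ℕ) (j : Fin s) :
    Continuous (fS k u P j) := (continuous_wsum k P).comp (by fun_prop)

lemma prod_le_sum_pow {ι : Type*} (J : Finset ι) (hJ : J.Nonempty) (g : ι → ℝ) (h0 : ∀ j, 0 ≤ g j) :
    ∏ j ∈ J, g j ≤ ∑ j ∈ J, g j ^ J.card := by
  obtain ⟨j0, h1, h2⟩ := J.exists_max_image g hJ
  calc ∏ j ∈ J, g j ≤ ∏ j ∈ J, g j0 := prod_le_prod (fun j _ => h0 j) h2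
    _ = g j0 ^ J.card := by rw [prod_const]
    _ ≤ _ := single_le_sum (f := fun j => g j ^ J.card) (fun j _ => pow_nonneg (h0 j) _) h1

lemma sum_le_tri {K : ℕ} (hk : Function.Injective k) (hK : ∀ i, k i ≤ K) :
    ∑ i, k i ≤ tri K := by
  classical
  have h1 : ∑ i, k i = ∑ x ∈ univ.image k, x := by
    rw [sum_image fun a _ b _ h => hk h]
  have h2 : ∑ x ∈ univ.image k, x ≤ ∑ x ∈ range (K + 1), x :=
    sum_le_sum_of_subset fun x hx => by
      obtain ⟨i, -, rfl⟩ := mem_image.1 hx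
      exact mem_range.2 (by have := hK i; omega)
  have h3 := sum_range_id_mul_two (K + 1)
  have h4 := two_mul_tri K
  simp only [Nat.add_sub_cancel] at h3
  nlinarith

/-- Mean value estimate for products of at least `K(K+1)` generating functions, each of which may be
enlarged by an error `E ≤ √P`. -/
lemma mvE {K : ℕ} (hk : StrictMono k) (h1 : ∀ i, 1 ≤ k i) (hK : ∀ i, k i ≤ K)
    (hK1 : 1 ≤ K) (u : Fin n → Fin s → ℤ) (hu : ∀ i j, u i j ≠ 0) (J : Finset (Fin s))
    (hJ : 2 * tri K ≤ J.card) {ε : ℝ} (hε : 0 < ε) :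
    ∃ C : ℝ, 0 < C ∧ ∀ P : ℕ, 1 ≤ P → ∀ (w E : ℝ), 0 ≤ E → E ≤ (P : ℝ) ^ (1 / 2 : ℝ) →
      ∫ α in cube n w 1, ∏ j ∈ J, (‖fS k u P j α‖ + E) ≤
        C * (P : ℝ) ^ ((J.card : ℝ) - ∑ i, (k i : ℝ) + ε) := by
  obtain ⟨C, hC, hmv⟩ := mean_value k hk h1 hK hK1 hε
  have ht := tri_pos hK1
  have hJn : J.Nonempty := card_pos.1 (by omega)
  have hcard : 0 < J.card := by omega
  refine ⟨J.card * (4 ^ (J.card - 2 * tri K) * (2 ^ (2 * tri K) * (C + 1))), by positivity,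
    fun P hP w E hE0 hE => ?_⟩
  have hP1 : (1 : ℝ) ≤ P := by exact_mod_cast hP
  have hP0 : (0 : ℝ) < P := by linarith
  have hEP : E ≤ P := hE.trans (by
    calc (P : ℝ) ^ (1 / 2 : ℝ) ≤ (P : ℝ) ^ (1 : ℝ) :=
          rpow_le_rpow_of_exponent_le hP1 (by norm_num)
      _ = P := rpow_one _)
  have hE2 : E ^ (2 * tri K) ≤ (P : ℝ) ^ (2 * (tri K : ℝ) - ∑ i, (k i : ℝ) + ε) := by
    calc E ^ (2 * tri K) ≤ ((P : ℝ) ^ (1 / 2 : ℝ)) ^ (2 * tri K) := by gcongr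
      _ = (P : ℝ) ^ (tri K : ℝ) := by
        rw [← rpow_mul_natCast hP0.le]; congr 1; push_cast; ring
      _ ≤ _ := by
        apply rpow_le_rpow_of_exponent_le hP1
        have : (∑ i, (k i : ℝ)) ≤ tri K := by exact_mod_cast sum_le_tri k hk.injective hK
        linarith
  have hinteg : ∀ j, ∫ α in cube n w 1, (‖fS k u P j α‖ + E) ^ J.card ≤
      4 ^ (J.card - 2 * tri K) * (2 ^ (2 * tri K) * (C + 1)) *
        (P : ℝ) ^ ((J.card : ℝ) - ∑ i, (k i : ℝ) + ε) := by
    intro j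
    have hc := continuous_fS k u P j
    have hpt : ∀ α, (‖fS k u P j α‖ + E) ^ J.card ≤ (4 * (P : ℝ)) ^ (J.card - 2 * tri K) *
        (2 ^ (2 * tri K) * (‖fS k u P j α‖ ^ (2 * tri K) + E ^ (2 * tri K))) := by
      intro α
      have e1 : ‖fS k u P j α‖ + E ≤ 4 * P := by
        have := norm_wsum_le k P hP (fun i => α i * u i j)
        unfold fS; linarith
      have e2 : (‖fS k u P j α‖ + E) ^ (2 * tri K) ≤
          2 ^ (2 * tri K) * (‖fS k u P j α‖ ^ (2 * tri K) + E ^ (2 * tri K)) := by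
        refine (add_pow_le (norm_nonneg _) hE0 _).trans ?_
        gcongr
        · norm_num
        · omega
      calc (‖fS k u P j α‖ + E) ^ J.card
          = (‖fS k u P j α‖ + E) ^ (J.card - 2 * tri K) * (‖fS k u P j α‖ + E) ^ (2 * tri K) := by
            rw [← pow_add]; congr 1; omega
        _ ≤ _ := by gcongr
    have hvol : ∫ _ in cube n w 1, E ^ (2 * tri K) = E ^ (2 * tri K) := by
      rw [setIntegral_const]
      have hv : volume.real (cube n w 1) = 1 := by
        unfold cube
        simp [Measure.real, volume_pi, Measure.pi_pi]
      rw [hv, one_smul]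
    calc ∫ α in cube n w 1, (‖fS k u P j α‖ + E) ^ J.card
        ≤ ∫ α in cube n w 1, (4 * (P : ℝ)) ^ (J.card - 2 * tri K) *
          (2 ^ (2 * tri K) * (‖fS k u P j α‖ ^ (2 * tri K) + E ^ (2 * tri K))) := by
          refine setIntegral_mono (cont_integrableOn_cube (by fun_prop))
            (cont_integrableOn_cube (by fun_prop)) hpt
      _ = (4 * (P : ℝ)) ^ (J.card - 2 * tri K) * (2 ^ (2 * tri K) *
          ((∫ α in cube n w 1, ‖fS k u P j α‖ ^ (2 * tri K)) + E ^ (2 * tri K))) := by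
          rw [integral_const_mul, integral_const_mul, integral_add
            (cont_integrableOn_cube (by fun_prop)) (cont_integrableOn_cube (by fun_prop)), hvol]
      _ ≤ (4 * (P : ℝ)) ^ (J.card - 2 * tri K) * (2 ^ (2 * tri K) *
          (C * (P : ℝ) ^ (2 * (tri K : ℝ) - ∑ i, (k i : ℝ) + ε) +
            (P : ℝ) ^ (2 * (tri K : ℝ) - ∑ i, (k i : ℝ) + ε))) := by
          gcongr
          exact hmv P hP w (fun i => u i j) fun i => hu i j
      _ = _ := by
        have : (P : ℝ) ^ ((J.card : ℝ) - ∑ i, (k i : ℝ) + ε) = (P : ℝ) ^ (J.card - 2 * tri K) *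
            (P : ℝ) ^ (2 * (tri K : ℝ) - ∑ i, (k i : ℝ) + ε) := by
          rw [← rpow_natCast, ← rpow_add hP0]
          congr 1
          rw [Nat.cast_sub hJ]; push_cast; ring
        rw [this, mul_pow]; ring
  calc ∫ α in cube n w 1, ∏ j ∈ J, (‖fS k u P j α‖ + E)
      ≤ ∫ α in cube n w 1, ∑ j ∈ J, (‖fS k u P j α‖ + E) ^ J.card := by
        refine setIntegral_mono (cont_integrableOn_cube ?_) (cont_integrableOn_cube ?_) fun α => ?_
        · exact continuous_finsetProd _ fun j _ => ((continuous_fS k u P j).norm).add continuous_const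
        · exact continuous_finsetSum _ fun j _ =>
            (((continuous_fS k u P j).norm).add continuous_const).pow _
        · exact prod_le_sum_pow J hJn _ fun j => by positivity
    _ = ∑ j ∈ J, ∫ α in cube n w 1, (‖fS k u P j α‖ + E) ^ J.card := by
        rw [integral_finsetSum]
        intro j _
        exact cont_integrableOn_cube ((((continuous_fS k u P j).norm).add continuous_const).pow _)
    _ ≤ ∑ j ∈ J, 4 ^ (J.card - 2 * tri K) * (2 ^ (2 * tri K) * (C + 1)) *
        (P : ℝ) ^ ((J.card : ℝ) - ∑ i, (k i : ℝ) + ε) := sum_le_sum fun j _ => hinteg j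
    _ = _ := by rw [sum_const, nsmul_eq_mul]; ring

/-- The normalised complete exponential sum attached to the `j`-th variable. -/
noncomputable def Ts (q : ℕ) (a : Fin n → ℕ)
    (j : Fin s) : ℂ := csum k q fun i => (a i : ℤ) * u i j

/-- The oscillatory integral attached to the `j`-th variable. -/
noncomputable def Is (j : Fin s)
    (β : Fin n → ℝ) : ℂ := oint k fun i => β i * u i j

lemma norm_Ts_le (q a j) :
    ‖Ts k u q a j‖ ≤ 1 := norm_csum_le _ _ _

lemma exists_U {n s : ℕ} (u : Fin n → Fin s → ℤ) :
    ∃ U : ℝ, 1 ≤ U ∧ ∀ i j, |(u i j : ℝ)| ≤ U := by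
  refine ⟨1 + ∑ i, ∑ j, |(u i j : ℝ)|, ?_, fun i j => ?_⟩
  · have : 0 ≤ ∑ i, ∑ j, |(u i j : ℝ)| := by positivity
    linarith
  · have h1 : |(u i j : ℝ)| ≤ ∑ j, |(u i j : ℝ)| :=
      single_le_sum (f := fun j => |(u i j : ℝ)|) (fun _ _ => abs_nonneg _) (mem_univ j)
    have h2 : ∑ j, |(u i j : ℝ)| ≤ ∑ i, ∑ j, |(u i j : ℝ)| :=
      single_le_sum (f := fun i => ∑ j, |(u i j : ℝ)|)
        (fun _ _ => sum_nonneg fun _ _ => abs_nonneg _) (mem_univ i)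
    linarith

/-- Approximation of the generating functions near the fraction `a / q`. -/
lemma f_approx {K : ℕ} (h1 : ∀ i, 1 ≤ k i) (hK : ∀ i, k i ≤ K) (hK1 : 1 ≤ K)
    (u : Fin n → Fin s → ℤ) :
    ∃ C : ℝ, 0 < C ∧ ∃ c : ℝ, 0 < c ∧ ∀ (P q : ℕ) (a : Fin n → ℕ) (β : Fin n → ℝ) (B : ℝ) (j : Fin s),
      1 ≤ q → q ≤ P → (∀ i, |β i| * (P : ℝ) ^ k i ≤ B) → q * B ≤ c * P →
      ‖fS k u P j (fun i => (a i : ℝ) / q + β i) -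
        P * Ts k u q a j * Is k u j (fun i => β i * (P : ℝ) ^ k i)‖ ≤ C * q := by
  obtain ⟨C, hC, happ⟩ := approx k hK
  obtain ⟨U, hU1, hU⟩ := exists_U u
  have hKp : (0 : ℝ) < K := by exact_mod_cast hK1
  refine ⟨C, hC, 3 / 4 / ((n + 1) * (K * U * 2 ^ K)), by positivity, fun P q a β B j hq hqP hβ hB => ?_⟩
  have hP0 : (0 : ℝ) < P := by exact_mod_cast (by omega : 0 < P)
  have hq0 : (0 : ℝ) < q := by exact_mod_cast hq
  have hqP' : (q : ℝ) ≤ P := by exact_mod_cast hqP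
  have h := happ P q (fun i => (a i : ℤ) * u i j) (fun i => β i * u i j) hq hqP ?_
  · convert h using 3
    · unfold fS
      congr 1
      funext i; push_cast; ring
    · unfold Ts Is
      congr 2
      funext i; ring
  rcases Nat.eq_zero_or_pos n with rfl | hn
  · simp; norm_num
  have hB0 : 0 ≤ B := le_trans (by positivity) (hβ ⟨0, hn⟩)
  have hterm : ∀ i, (k i : ℝ) * |β i * u i j| * ((P : ℝ) + q) ^ (k i - 1) ≤
      K * U * 2 ^ K * (B / P) := by
    intro i
    have h4 : (k i : ℝ) ≤ K := by exact_mod_cast hK i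
    have h5 : (P : ℝ) ^ k i = P ^ (k i - 1) * P := by
      rw [← pow_succ]; congr 1; have := h1 i; omega
    have h6 : ((P : ℝ) + q) ^ (k i - 1) ≤ 2 ^ K * P ^ (k i - 1) := by
      calc ((P : ℝ) + q) ^ (k i - 1) ≤ (2 * P) ^ (k i - 1) := by gcongr; linarith
        _ = 2 ^ (k i - 1) * P ^ (k i - 1) := mul_pow _ _ _
        _ ≤ 2 ^ K * P ^ (k i - 1) := by
          gcongr
          · norm_num
          · have := hK i; omega
    have h7 : |β i| * P ^ (k i - 1) ≤ B / P := by
      rw [le_div_iff₀ hP0, mul_assoc, ← h5]; exact hβ i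
    rw [abs_mul]
    calc (k i : ℝ) * (|β i| * |(u i j : ℝ)|) * ((P : ℝ) + q) ^ (k i - 1)
        ≤ K * (|β i| * U) * (2 ^ K * P ^ (k i - 1)) := by gcongr; exact hU i j
      _ = K * U * 2 ^ K * (|β i| * P ^ (k i - 1)) := by ring
      _ ≤ _ := by gcongr
  calc (q : ℝ) * ∑ i, (k i : ℝ) * |β i * u i j| * ((P : ℝ) + q) ^ (k i - 1)
      ≤ q * ∑ i : Fin n, K * U * 2 ^ K * (B / P) :=
      mul_le_mul_of_nonneg_left (sum_le_sum fun i _ => hterm i) hq0.le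
    _ = n * (K * U * 2 ^ K) * (q * B / P) := by
      rw [sum_const, card_univ, Fintype.card_fin, nsmul_eq_mul]; ring
    _ ≤ (n + 1) * (K * U * 2 ^ K) * (3 / 4 / ((n + 1) * (K * U * 2 ^ K))) := by
      have h8 : q * B / P ≤ 3 / 4 / ((n + 1) * (K * U * 2 ^ K)) := by rw [div_le_iff₀ hP0]; exact hB
      refine mul_le_mul ?_ h8 (by positivity) (by positivity)
      gcongr
      linarith
    _ = 3 / 4 := by field_simp

lemma oint_near (γ : Fin n → ℝ) :
    ‖oint k γ - 2‖ ≤ 4 * Real.pi * ∑ i, |γ i| := by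
  have hc : Continuous fun t : ℝ => e (∑ i, γ i * t ^ k i) := continuous_e.comp (by fun_prop)
  have h2 : (2 : ℂ) = ∫ _ in (-1 : ℝ)..1, (1 : ℂ) := by simp; norm_num
  have h3 : oint k γ - 2 = ∫ t in (-1 : ℝ)..1, (e (∑ i, γ i * t ^ k i) - 1) := by
    rw [intervalIntegral.integral_sub (hc.intervalIntegrable _ _) (by simp), ← h2]; rfl
  rw [h3]
  have := intervalIntegral.norm_integral_le_of_norm_le_const (a := (-1 : ℝ)) (b := 1)
    (f := fun t : ℝ => e (∑ i, γ i * t ^ k i) - 1) (C := 2 * Real.pi * ∑ i, |γ i|) fun t ht => by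
      rw [Set.uIoc_of_le (by norm_num)] at ht
      have e1 := norm_e_sub_le (∑ i, γ i * t ^ k i) 0
      rw [e_zero, sub_zero] at e1
      refine e1.trans ?_
      gcongr
      refine (abs_sum_le_sum_abs _ _).trans (sum_le_sum fun i _ => ?_)
      rw [abs_mul, abs_pow]
      have : |t| ≤ 1 := abs_le.2 ⟨ht.1.le, ht.2⟩
      exact mul_le_of_le_one_right (abs_nonneg _) (pow_le_one₀ (abs_nonneg _) this)
  refine this.trans (le_of_eq ?_)
  norm_num
  ring

/-- The moments of the complete sums over all fractions of height at most `R`. -/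
lemma moment {K : ℕ} (hk : StrictMono k) (h1 : ∀ i, 1 ≤ k i) (hK : ∀ i, k i ≤ K)
    (hK1 : 1 ≤ K) (u : Fin n → Fin s → ℤ) (hu : ∀ i j, u i j ≠ 0) (J : Finset (Fin s))
    (hJ : 2 * tri K ≤ J.card) {ε : ℝ} (hε : 0 < ε) :
    ∃ C : ℝ, 0 < C ∧ ∀ R : ℕ, 1 ≤ R →
      ∑ x ∈ Fr n R, ∏ j ∈ J, ‖Ts k u x.1 x.2 j‖ ≤ C * (R : ℝ) ^ ε := by
  obtain ⟨C1, hC1, c, hc, happ⟩ := f_approx k h1 hK hK1 u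
  obtain ⟨C2, hC2, hmv⟩ := mvE k hk h1 hK hK1 u hu J hJ (half_pos hε)
  obtain ⟨U, hU1, hU⟩ := exists_U u
  set c1 : ℝ := min (min c 1) (1 / (4 * Real.pi * ((n + 1) * U))) with hc1
  have hc10 : 0 < c1 := by positivity
  have hc1a : c1 ≤ c := (min_le_left _ _).trans (min_le_left _ _)
  have hc1b : c1 ≤ 1 := (min_le_left _ _).trans (min_le_right _ _)
  have hc1c : c1 ≤ 1 / (4 * Real.pi * ((n + 1) * U)) := min_le_right _ _
  clear_value c1
  obtain ⟨M, hM⟩ := exists_nat_ge (max (C1 ^ 2) 8)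
  have hM1 : C1 ^ 2 ≤ M := (le_max_left _ _).trans hM
  have hM2 : (8 : ℝ) ≤ M := (le_max_right _ _).trans hM
  refine ⟨(M : ℝ) ^ (ε / 2) * C2 * (1 / (2 * c1) ^ n), by positivity, fun R hR => ?_⟩
  have hR1 : (1 : ℝ) ≤ R := by exact_mod_cast hR
  set P : ℕ := M * R ^ 2 with hPdef
  have hPr : (P : ℝ) = M * R ^ 2 := by rw [hPdef]; push_cast; ring
  have hRR : (R : ℝ) ≤ R ^ 2 := by nlinarith
  have hP8 : 8 * (R : ℝ) ^ 2 ≤ P := by rw [hPr]; gcongr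
  have hP8' : 8 * (R : ℝ) ≤ P := by linarith
  have hP1 : (1 : ℝ) ≤ P := by linarith
  have hP0 : (0 : ℝ) < P := by linarith
  have hPpos : 1 ≤ P := by exact_mod_cast hP1
  clear_value P
  let r : Fin n → ℝ := fun i => c1 / (P : ℝ) ^ k i
  have hr : ∀ i, r i ≤ 1 / P := fun i => by
    simp only [r]
    refine div_le_div₀ (by norm_num) hc1b hP0 ?_
    exact le_self_pow₀ hP1 (by have := h1 i; omega)
  have hr0 : ∀ i, 0 ≤ r i := fun i => by positivity
  have hPR : 1 / (P : ℝ) ≤ 1 / (8 * R) := one_div_le_one_div_of_le (by positivity) hP8'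
  have hw1 : ∀ i, r i ≤ 1 / (8 * R) := fun i => (hr i).trans hPR
  have hw2 : ∀ i, 1 / (8 * (R : ℝ)) + r i < 1 / R := fun i => by
    have := hw1 i
    have e1 : 1 / (R : ℝ) = 8 * (1 / (8 * R)) := by field_simp
    have e2 : 0 < 1 / (8 * (R : ℝ)) := by positivity
    linarith
  have hw3 : ∀ i, 2 * r i * R ^ 2 < 1 := fun i => by
    have : r i * R ^ 2 ≤ 1 / P * R ^ 2 := by gcongr; exact hr i
    have e1 : 1 / (P : ℝ) * R ^ 2 ≤ 1 / 8 := by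
      rw [one_div_mul_eq_div, div_le_div_iff₀ hP0 (by norm_num)]; linarith
    linarith
  have hE : C1 * R ≤ (P : ℝ) ^ (1 / 2 : ℝ) := by
    rw [← Real.sqrt_eq_rpow]
    apply Real.le_sqrt_of_sq_le
    rw [hPr, mul_pow]; gcongr
  have hg : Continuous fun α => ∏ j ∈ J, (‖fS k u P j α‖ + C1 * R) :=
    continuous_finsetProd _ fun j _ => ((continuous_fS k u P j).norm).add continuous_const
  have key := sum_bx_le hw1 hw2 hw3 hg (fun α => prod_nonneg fun j _ => by positivity)
  have key2 := key.trans (hmv P hPpos _ _ (by positivity) hE)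
  have hbox : ∀ x ∈ Fr n R, (2 * c1) ^ n * (P : ℝ) ^ (-∑ i, (k i : ℝ)) *
      ((P : ℝ) ^ J.card * ∏ j ∈ J, ‖Ts k u x.1 x.2 j‖) ≤
      ∫ α in bx r x, ∏ j ∈ J, (‖fS k u P j α‖ + C1 * R) := by
    intro x hx
    have hx' := hx
    rw [mem_Fr] at hx'
    obtain ⟨⟨g1, g2⟩, -, -⟩ := hx'
    have g2' : (x.1 : ℝ) ≤ R := by exact_mod_cast g2
    have hpt : ∀ α ∈ bx r x, (P : ℝ) ^ J.card * ∏ j ∈ J, ‖Ts k u x.1 x.2 j‖ ≤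
        ∏ j ∈ J, (‖fS k u P j α‖ + C1 * R) := by
      intro α hα
      rw [mem_bx] at hα
      rw [← prod_const, ← prod_mul_distrib]
      refine prod_le_prod (fun j _ => by positivity) fun j _ => ?_
      have hβ : ∀ i, |α i - x.2 i / x.1| * (P : ℝ) ^ k i ≤ c1 := fun i => by
        have := hα i
        simp only [r] at this
        rwa [le_div_iff₀ (by positivity)] at this
      have h3 := happ P x.1 x.2 (fun i => α i - x.2 i / x.1) c1 j g1
        (by exact_mod_cast (show (x.1 : ℝ) ≤ P by linarith)) hβ (by
          calc (x.1 : ℝ) * c1 ≤ P * c := mul_le_mul (by linarith) hc1a hc10.le hP0.le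
            _ = c * P := mul_comm _ _)
      have h4 : (fun i => (x.2 i : ℝ) / x.1 + (α i - x.2 i / x.1)) = α := by funext i; ring
      rw [h4] at h3
      have h5 : 1 ≤ ‖Is k u j fun i => (α i - x.2 i / x.1) * (P : ℝ) ^ k i‖ := by
        have h6 := oint_near k fun i => (α i - x.2 i / x.1) * (P : ℝ) ^ k i * u i j
        have h7 : ∑ i, |(α i - x.2 i / x.1) * (P : ℝ) ^ k i * u i j| ≤ (n + 1) * (c1 * U) := by
          calc _ ≤ ∑ i : Fin n, c1 * U := by
                refine sum_le_sum fun i _ => ?_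
                rw [abs_mul, abs_mul, abs_of_pos (pow_pos hP0 _)]
                gcongr
                · exact hβ i
                · exact hU i j
            _ = n * (c1 * U) := by simp
            _ ≤ _ := by gcongr; linarith
        have h8 : 4 * Real.pi * ((n + 1) * (c1 * U)) ≤ 1 := by
          have := Real.pi_pos
          rw [le_div_iff₀ (by positivity)] at hc1c
          linarith
        have h9 : ‖oint k (fun i => (α i - x.2 i / x.1) * (P : ℝ) ^ k i * u i j) - 2‖ ≤ 1 := by
          refine h6.trans (le_trans ?_ h8)
          gcongr
        have h10 := norm_sub_norm_le (2 : ℂ) (oint k fun i => (α i - x.2 i / x.1) * (P : ℝ) ^ k i * u i j)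
        rw [norm_sub_rev, Complex.norm_ofNat] at h10
        unfold Is
        linarith
      have h6 := norm_sub_norm_le (P * Ts k u x.1 x.2 j *
        Is k u j fun i => (α i - x.2 i / x.1) * (P : ℝ) ^ k i) (fS k u P j α)
      rw [norm_sub_rev, norm_mul, norm_mul, Complex.norm_natCast] at h6
      have h7 : P * ‖Ts k u x.1 x.2 j‖ ≤ P * ‖Ts k u x.1 x.2 j‖ *
          ‖Is k u j fun i => (α i - x.2 i / x.1) * (P : ℝ) ^ k i‖ :=
        le_mul_of_one_le_right (by positivity) h5
      have h8 : C1 * x.1 ≤ C1 * R := by gcongr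
      linarith
    have hconst := setIntegral_mono_on (μ := volume) (s := bx r x)
      (f := fun _ => (P : ℝ) ^ J.card * ∏ j ∈ J, ‖Ts k u x.1 x.2 j‖)
      (integrableOn_const (by exact (isCompact_Icc.measure_lt_top).ne))
      ((cont_integrableOn_cube hg).mono_set (bx_sub hw1 hw2 hx)) (measurableSet_bx r x) hpt
    rw [setIntegral_const, Measure.real, volume_bx hr0, smul_eq_mul] at hconst
    refine le_trans (le_of_eq ?_) hconst
    congr 1
    simp only [r]
    rw [rpow_neg hP0.le, Real.rpow_sum_of_pos hP0, ← prod_inv_distrib]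
    have : ∀ i, 2 * (c1 / (P : ℝ) ^ k i) = (2 * c1) * ((P : ℝ) ^ (k i : ℝ))⁻¹ := fun i => by
      rw [rpow_natCast]; ring
    simp only [this]
    rw [prod_mul_distrib, prod_const, card_univ, Fintype.card_fin]
  have h3 := (sum_le_sum hbox).trans key2
  rw [← mul_sum, ← mul_sum] at h3
  have h4 : (P : ℝ) ^ ((J.card : ℝ) - ∑ i, (k i : ℝ) + ε / 2) =
      (P : ℝ) ^ (-∑ i, (k i : ℝ)) * (P : ℝ) ^ J.card * (P : ℝ) ^ (ε / 2) := by
    rw [← rpow_natCast, ← rpow_add hP0, ← rpow_add hP0]; congr 1; ring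
  have h5 : (P : ℝ) ^ (ε / 2) = (M : ℝ) ^ (ε / 2) * (R : ℝ) ^ ε := by
    rw [hPr, mul_rpow (by positivity) (by positivity), ← rpow_natCast, ← rpow_mul (by positivity)]
    congr 2; push_cast; ring
  rw [h4, h5] at h3
  have hY : 0 < (P : ℝ) ^ (-∑ i, (k i : ℝ)) * (P : ℝ) ^ J.card := by positivity
  set Y := (P : ℝ) ^ (-∑ i, (k i : ℝ)) * (P : ℝ) ^ J.card with hYd
  set S := ∑ x ∈ Fr n R, ∏ j ∈ J, ‖Ts k u x.1 x.2 j‖ with hS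
  have h6 : Y * ((2 * c1) ^ n * S) ≤ Y * (C2 * ((M : ℝ) ^ (ε / 2) * (R : ℝ) ^ ε)) := by
    calc _ = (2 * c1) ^ n * (P : ℝ) ^ (-∑ i, (k i : ℝ)) * ((P : ℝ) ^ J.card * S) := by rw [hYd]; ring
      _ ≤ _ := h3
      _ = _ := by ring
  have h7 := le_of_mul_le_mul_left h6 hY
  have h8 : S ≤ C2 * ((M : ℝ) ^ (ε / 2) * (R : ℝ) ^ ε) / (2 * c1) ^ n := by
    rw [le_div_iff₀ (by positivity)]; linarith
  refine h8.trans (le_of_eq ?_)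
  ring

/-! ### The singular series -/

/-- Weyl's inequality at the point `a / q` bounds the complete exponential sums. -/
lemma Ts_bound {K : ℕ} (hk : Function.Injective k) (h1 : ∀ i, 1 ≤ k i)
    (hK : ∀ i, k i ≤ K) (hK2 : 2 ≤ K) (u : Fin n → Fin s → ℤ) (hu : ∀ i j, u i j ≠ 0)
    (j : Fin s) {ε : ℝ} (hε : 0 < ε) :
    ∃ C : ℝ, 0 < C ∧ ∀ (q : ℕ) (a : Fin n → ℕ), 1 ≤ q → Prim (fun i => (a i : ℤ)) q →
      ‖Ts k u q a j‖ ≤ C * (q : ℝ) ^ (-(1 / ((K : ℝ) * (K - 1))) + ε) := by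
  obtain ⟨C, hC, c, hc, happ⟩ := f_approx k h1 hK (by omega) u
  have hKr : (2 : ℝ) ≤ K := by exact_mod_cast hK2
  set L : ℝ := (K : ℝ) * (K - 1) with hL
  have hL2 : 2 ≤ L := by rw [hL]; nlinarith
  have hKL : (K : ℝ) ≤ L := by rw [hL]; nlinarith
  set ε' : ℝ := min (ε / 8) (1 / 32) with hε'
  have hε0 : 0 < ε' := by positivity
  have hεa : ε' ≤ ε / 8 := min_le_left _ _
  have hεb : ε' ≤ 1 / 32 := min_le_right _ _
  clear_value ε'
  set τ : ℝ := (1 / 4 - 2 * ε') / L with hτd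
  have hτ : 0 < τ := by rw [hτd]; apply div_pos <;> linarith
  have hLτ : L * τ = 1 / 4 - 2 * ε' := by rw [hτd]; field_simp
  have hτ8 : τ ≤ 1 / 8 := by rw [hτd, div_le_iff₀ (by linarith)]; nlinarith
  have hKτ : K * τ ≤ L * τ := by gcongr
  have hm := major k hk h1 hK hK2 hτ hε0 (by rw [add_mul, ← hL, hLτ]; linarith)
    (fun i => u i j) (fun i => hu i j)
  have ht : Tendsto (fun q : ℕ => q ^ 4) atTop atTop :=
    Filter.tendsto_pow_atTop (by norm_num)
  obtain ⟨q0, hq0⟩ := Filter.eventually_atTop.1 (ht.eventually hm)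
  have hρ1 : 1 / L ≤ 1 := by rw [div_le_one (by linarith)]; linarith
  have hρ0 : 0 < 1 / L := by positivity
  refine ⟨q0 + 2 + C, by positivity, fun q a hq hprim => ?_⟩
  have hq1 : (1 : ℝ) ≤ q := by exact_mod_cast hq
  have hqp : (0 : ℝ) < q := by linarith
  have hY : (0 : ℝ) < (q : ℝ) ^ (-(1 / L) + ε) := by positivity
  by_cases hsmall : q < q0 + 2
  · have h3 : (q : ℝ)⁻¹ ≤ (q : ℝ) ^ (-(1 / L) + ε) := by
      rw [← Real.rpow_neg_one]
      exact rpow_le_rpow_of_exponent_le hq1 (by linarith)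
    have h4 : (q : ℝ) ≤ q0 + 2 := by exact_mod_cast hsmall.le
    calc ‖Ts k u q a j‖ ≤ 1 := norm_Ts_le _ _ _ _ _
      _ = q * (q : ℝ)⁻¹ := by field_simp
      _ ≤ (q0 + 2 + C) * (q : ℝ) ^ (-(1 / L) + ε) := by gcongr; linarith
  push Not at hsmall
  have hq2 : (1 : ℝ) < q := by exact_mod_cast (by omega : 1 < q)
  set P : ℕ := q ^ 4 with hPd
  have hPr : (P : ℝ) = (q : ℝ) ^ (4 : ℝ) := by
    rw [hPd]; push_cast; rw [← rpow_natCast]; norm_num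
  have hPq : ∀ x : ℝ, (P : ℝ) ^ x = (q : ℝ) ^ (4 * x) := fun x => by
    rw [hPr, ← rpow_mul hqp.le]
  have hP0 : (0 : ℝ) < P := by rw [hPr]; positivity
  have hP1 : (1 : ℝ) < P := by rw [hPr]; exact Real.one_lt_rpow hq2 (by norm_num)
  have hf : ‖fS k u P j (fun i => (a i : ℝ) / q)‖ < (P : ℝ) ^ (1 - τ) := by
    by_contra hcon
    push Not at hcon
    obtain ⟨q', a', g1, g2, g3, g4⟩ := hq0 q (by omega) _ hcon
    rw [← hPd, hPq, ← hL, hLτ] at g2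
    have g5 : (q' : ℝ) < q := by
      refine g2.trans_lt ?_
      conv_rhs => rw [← rpow_one (q : ℝ)]
      exact Real.rpow_lt_rpow_of_exponent_lt hq2 (by linarith)
    have := hprim.sep hq g1 g3 fun i => by
      refine (le_of_eq ?_).trans_lt ((g4 i).trans_lt ?_)
      · push_cast; rfl
      · rw [← hPd, hPq]
        have hk1 : (1 : ℝ) ≤ k i := by exact_mod_cast h1 i
        have g6 : (q : ℝ) ^ (4 * (-(k i : ℝ) + K * τ + ε')) < (q : ℝ) ^ (-2 : ℝ) :=
          Real.rpow_lt_rpow_of_exponent_lt hq2 (by linarith)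
        refine g6.trans_le ?_
        have hq'0 : (0 : ℝ) < q' := by exact_mod_cast g1
        rw [rpow_neg hqp.le, inv_eq_one_div]
        apply one_div_le_one_div_of_le (by positivity)
        rw [Real.rpow_two, sq]; gcongr
    rw [this.1] at g5
    exact lt_irrefl _ g5
  have hqP : q ≤ P := by rw [hPd]; exact Nat.le_self_pow (by norm_num) q
  have h5 := happ P q a (fun _ => 0) 0 j hq hqP (fun i => by simp) (by simp; positivity)
  have h6 : Is k u j (fun i => 0 * (P : ℝ) ^ k i) = 2 := by
    have := oint_near k (fun i => 0 * (P : ℝ) ^ k i * u i j)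
    simp only [zero_mul, abs_zero, sum_const_zero, mul_zero] at this
    have := norm_le_zero_iff.1 this
    unfold Is
    simp only [zero_mul]
    exact sub_eq_zero.1 this
  rw [h6] at h5
  simp only [add_zero] at h5
  have h7 := norm_sub_norm_le (P * Ts k u q a j * 2) (fS k u P j (fun i => (a i : ℝ) / q))
  rw [norm_sub_rev, norm_mul, norm_mul, Complex.norm_natCast, Complex.norm_ofNat] at h7
  have h8 : P * ‖Ts k u q a j‖ ≤ P * ((P : ℝ) ^ (-τ) + C * (q * (P : ℝ)⁻¹)) := by
    have e1 : (P : ℝ) ^ (1 - τ) = P * (P : ℝ) ^ (-τ) := by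
      rw [sub_eq_add_neg, rpow_add hP0, rpow_one]
    have e2 : P * (C * (q * (P : ℝ)⁻¹)) = C * q := by field_simp
    have e3 : 0 ≤ P * ‖Ts k u q a j‖ := by positivity
    rw [mul_add, e2, ← e1]
    linarith
  have h9 := le_of_mul_le_mul_left h8 hP0
  have h10 : (P : ℝ) ^ (-τ) ≤ (q : ℝ) ^ (-(1 / L) + ε) := by
    rw [hPq]
    apply rpow_le_rpow_of_exponent_le hq1
    rw [hτd]
    have : 8 * ε' / L ≤ ε := by rw [div_le_iff₀ (by linarith)]; nlinarith
    have e1 : 4 * -((1 / 4 - 2 * ε') / L) = -(1 / L) + 8 * ε' / L := by field_simp; ring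
    linarith
  have h11 : q * (P : ℝ)⁻¹ ≤ (q : ℝ) ^ (-(1 / L) + ε) := by
    have e1 : q * (P : ℝ)⁻¹ = (q : ℝ) ^ (-3 : ℝ) := by
      rw [hPr, ← rpow_neg hqp.le]
      nth_rewrite 1 [← rpow_one (q : ℝ)]
      rw [← rpow_add hqp]; norm_num
    rw [e1]
    exact rpow_le_rpow_of_exponent_le hq1 (by linarith)
  calc ‖Ts k u q a j‖ ≤ (P : ℝ) ^ (-τ) + C * (q * (P : ℝ)⁻¹) := h9
    _ ≤ (q : ℝ) ^ (-(1 / L) + ε) + C * (q : ℝ) ^ (-(1 / L) + ε) := by gcongr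
    _ ≤ (q0 + 2 + C) * (q : ℝ) ^ (-(1 / L) + ε) := by
      have : (0 : ℝ) ≤ q0 := by positivity
      nlinarith

lemma prod_Ts (q : ℕ) (hq : 1 ≤ q)
    (a : Fin n → ℕ) : 1 / (q : ℂ) ^ s * ∑ r ∈ Fintype.piFinset fun _ : Fin s => Icc 1 q,
      e ((∑ i, (a i : ℝ) * ((dF k u i fun j => ((r j : ℤ))) : ℝ)) / q) = ∏ j, Ts k u q a j := by
  have h1 : ∀ r : Fin s → ℕ, e ((∑ i, (a i : ℝ) * ((dF k u i fun j => ((r j : ℤ))) : ℝ)) / q) =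
      ∏ j, e (((∑ i, (a i : ℤ) * u i j * (r j : ℤ) ^ k i : ℤ) : ℝ) / q) := by
    intro r
    rw [← e_sum]
    congr 1
    rw [← sum_div]
    congr 1
    simp only [dF]
    push_cast
    simp only [mul_sum]
    rw [sum_comm]
    simp only [mul_assoc]
  simp only [h1]
  rw [← prod_univ_sum (fun _ : Fin s => Icc 1 q)
    (fun j r => e (((∑ i, (a i : ℤ) * u i j * (r : ℤ) ^ k i : ℤ) : ℝ) / q))]
  have h2 : ∀ j, Ts k u q a j = 1 / (q : ℂ) *
      ∑ r ∈ Icc 1 q, e (((∑ i, (a i : ℤ) * u i j * (r : ℤ) ^ k i : ℤ) : ℝ) / q) := by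
    intro j
    unfold Ts csum
    congr 1
    have h3 : e (((∑ i, (a i : ℤ) * u i j * ((q : ℕ) : ℤ) ^ k i : ℤ) : ℝ) / q) =
        e (((∑ i, (a i : ℤ) * u i j * ((0 : ℕ) : ℤ) ^ k i : ℤ) : ℝ) / q) := by
      apply e_div_congr hq
      rw [← sum_sub_distrib]
      refine dvd_sum fun i _ => ?_
      rw [← mul_sub]
      have := sub_dvd_pow_sub_pow ((q : ℕ) : ℤ) ((0 : ℕ) : ℤ) (k i)
      rw [Nat.cast_zero, sub_zero] at this
      rw [Nat.cast_zero]
      exact this.mul_left _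
    have h4 : Icc 1 q = Ico 1 (q + 1) := by ext; simp
    rw [h4, sum_Ico_eq_sum_range, Nat.add_sub_cancel]
    obtain ⟨m, rfl⟩ : ∃ m, q = m + 1 := ⟨q - 1, by omega⟩
    rw [sum_range_succ', sum_range_succ, ← h3, add_comm 1 m]
    congr 1
    exact sum_congr rfl fun x _ => by rw [add_comm 1 x]
  simp only [h2]
  rw [prod_mul_distrib, prod_const, card_univ, Fintype.card_fin, one_div_pow]

/-- The term of the singular series factors as a product of one-variable sums. -/
lemma singSerTerm_eq (q : ℕ) (hq : 1 ≤ q) :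
    singSerTerm k u q = ∑ a ∈ Aset n q, ∏ j, Ts k u q a j := by
  unfold singSerTerm Aset
  rw [mul_sum]
  exact sum_congr rfl fun a _ => prod_Ts k u q hq a

/-- Absolute convergence of the singular series, with a bound for its tail. -/
lemma series {K : ℕ} (hk : StrictMono k) (h1 : ∀ i, 1 ≤ k i)
    (hK : ∀ i, k i ≤ K) (hK2 : 2 ≤ K) (u : Fin n → Fin s → ℤ) (hu : ∀ i j, u i j ≠ 0)
    (hs : 1 + 2 * tri K ≤ s) {ε : ℝ} (hε : 0 < ε) (hε1 : ε ≤ 1 / ((K : ℝ) * (K - 1))) :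
    Summable (fun q : ℕ => ‖singSerTerm k u (q + 1)‖) ∧
    ∃ C : ℝ, 0 < C ∧ ∀ R : ℕ, ‖singSer k u - ∑ q ∈ Icc 1 R, singSerTerm k u q‖ ≤
      C * ((R : ℝ) + 1) ^ (-(1 / ((K : ℝ) * (K - 1))) + ε) := by
  set ρ : ℝ := 1 / ((K : ℝ) * (K - 1)) with hρ
  let j0 : Fin s := ⟨0, by omega⟩
  let J : Finset (Fin s) := univ.erase j0
  have hJ : 2 * tri K ≤ J.card := by
    rw [card_erase_of_mem (mem_univ _), card_univ, Fintype.card_fin]; omega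
  obtain ⟨C1, hC1, hT⟩ := Ts_bound k hk.injective h1 hK hK2 u hu j0 (half_pos hε)
  obtain ⟨C2, hC2, hM⟩ := moment k hk h1 hK (by omega) u hu J hJ (show 0 < ε / 4 by linarith)
  let c : ℕ → ℝ := fun q => ∑ a ∈ Aset n q, ∏ j ∈ J, ‖Ts k u q a j‖
  have hc0 : ∀ q, 0 ≤ c q := fun q =>
    sum_nonneg fun a _ => prod_nonneg fun j _ => norm_nonneg _
  have hMc : ∀ R : ℕ, 1 ≤ R → ∑ q ∈ Icc 1 R, c q ≤ C2 * (R : ℝ) ^ (ε / 4) := fun R hR => by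
    have := hM R hR
    unfold Fr at this
    rwa [sum_sigma] at this
  have hls : LSeriesSummable (fun q => (c q : ℂ)) ((ε / 2 : ℝ) : ℂ) := by
    refine LSeriesSummable_of_sum_norm_bigO (r := ε / 4) ?_ (by linarith) (by simp; linarith)
    refine Asymptotics.IsBigO.of_bound C2 ?_
    filter_upwards [Filter.eventually_ge_atTop 1] with R hR
    have h3 : ∀ q, ‖(c q : ℂ)‖ = c q := fun q => by
      rw [Complex.norm_real, Real.norm_of_nonneg (hc0 q)]
    simp only [h3]
    rw [Real.norm_of_nonneg (sum_nonneg fun q _ => hc0 q), Real.norm_of_nonneg (by positivity)]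
    exact hMc R hR
  let g : ℕ → ℝ := fun q => (((q + 1 : ℕ)) : ℝ) ^ (-(ε / 2)) * c (q + 1)
  have hg0 : ∀ q, 0 ≤ g q := fun q => mul_nonneg (by positivity) (hc0 _)
  have hg : Summable g := by
    have h3 := (summable_nat_add_iff 1).2 (Summable.norm hls)
    refine h3.congr fun q => ?_
    rw [LSeries.norm_term_eq, if_neg (Nat.succ_ne_zero q), Complex.norm_real,
      Real.norm_of_nonneg (hc0 _), Complex.ofReal_re]
    simp only [g]
    rw [rpow_neg (by positivity), div_eq_inv_mul]
  have hterm : ∀ q : ℕ, ‖singSerTerm k u (q + 1)‖ ≤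
      C1 * (((q + 1 : ℕ)) : ℝ) ^ (-ρ + ε) * g q := by
    intro q
    have hq0 : (0 : ℝ) < ((q + 1 : ℕ) : ℝ) := by positivity
    rw [singSerTerm_eq k u (q + 1) (by omega)]
    have h3 : C1 * (((q + 1 : ℕ)) : ℝ) ^ (-ρ + ε) * g q =
        ∑ a ∈ Aset n (q + 1), C1 * (((q + 1 : ℕ)) : ℝ) ^ (-ρ + ε / 2) *
          ∏ j ∈ J, ‖Ts k u (q + 1) a j‖ := by
      rw [← mul_sum]
      have : (((q + 1 : ℕ)) : ℝ) ^ (-ρ + ε / 2) =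
          (((q + 1 : ℕ)) : ℝ) ^ (-ρ + ε) * (((q + 1 : ℕ)) : ℝ) ^ (-(ε / 2)) := by
        rw [← rpow_add hq0]; congr 1; ring
      rw [this]
      simp only [g, c]; ring
    rw [h3]
    refine (norm_sum_le _ _).trans (sum_le_sum fun a ha => ?_)
    rw [norm_prod, ← mul_prod_erase _ _ (mem_univ j0)]
    gcongr
    exact hT (q + 1) a (by omega) (mem_Aset.1 ha).2
  have hsum : Summable (fun q : ℕ => ‖singSerTerm k u (q + 1)‖) := by
    refine Summable.of_nonneg_of_le (fun _ => norm_nonneg _) (fun q => (hterm q).trans ?_)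
      (hg.mul_left C1)
    have : (((q + 1 : ℕ)) : ℝ) ^ (-ρ + ε) ≤ 1 :=
      Real.rpow_le_one_of_one_le_of_nonpos (by push_cast; linarith [(Nat.cast_nonneg q : (0 : ℝ) ≤ q)])
        (by linarith)
    calc _ ≤ C1 * 1 * g q := by gcongr
      _ = _ := by ring
  have hgpos : 0 ≤ ∑' q, g q := tsum_nonneg hg0
  refine ⟨hsum, C1 * (∑' q, g q + 1), mul_pos hC1 (by linarith), fun R => ?_⟩
  have h4 := hsum.of_norm.sum_add_tsum_nat_add R
  have h5 : ∑ q ∈ Icc 1 R, singSerTerm k u q = ∑ q ∈ range R, singSerTerm k u (q + 1) := by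
    have : Icc 1 R = Ico 1 (R + 1) := by ext; simp
    rw [this, sum_Ico_eq_sum_range]
    simp [add_comm]
  rw [h5]
  unfold singSer
  rw [← h4, add_sub_cancel_left]
  have hgR : Summable fun q => g (q + R) := (summable_nat_add_iff R).2 hg
  have hle : ∀ q, ‖singSerTerm k u (q + R + 1)‖ ≤ C1 * ((R : ℝ) + 1) ^ (-ρ + ε) * g (q + R) := by
    intro q
    refine (hterm (q + R)).trans ?_
    have : (((q + R + 1 : ℕ)) : ℝ) ^ (-ρ + ε) ≤ ((R : ℝ) + 1) ^ (-ρ + ε) := by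
      apply Real.rpow_le_rpow_of_nonpos (by positivity) _ (by linarith)
      push_cast; linarith [(Nat.cast_nonneg q : (0 : ℝ) ≤ q)]
    gcongr
  calc ‖∑' q, singSerTerm k u (q + R + 1)‖ ≤ ∑' q, ‖singSerTerm k u (q + R + 1)‖ :=
        norm_tsum_le_tsum_norm ((summable_nat_add_iff (f := fun q => ‖singSerTerm k u (q + 1)‖) R).2 hsum)
    _ ≤ ∑' q, C1 * ((R : ℝ) + 1) ^ (-ρ + ε) * g (q + R) :=
        Summable.tsum_le_tsum hle ((summable_nat_add_iff (f := fun q => ‖singSerTerm k u (q + 1)‖) R).2 hsum)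
          (hgR.mul_left _)
    _ = C1 * ((R : ℝ) + 1) ^ (-ρ + ε) * ∑' q, g (q + R) := tsum_mul_left
    _ ≤ C1 * ((R : ℝ) + 1) ^ (-ρ + ε) * (∑' q, g q + 1) := by
        gcongr
        have h6 := hg.sum_add_tsum_nat_add R
        have h7 : 0 ≤ ∑ i ∈ range R, g i := sum_nonneg fun i _ => hg0 i
        linarith
    _ = _ := by ring

/-! ### The singular integral -/

lemma singIntInner_eq (β : Fin n → ℝ) :
    singIntInner k u β = ∏ j, Is k u j β := by
  unfold singIntInner Is oint
  have h1 : ∀ t : Fin s → ℝ, e (∑ i, β i * dF k u i t) = ∏ j, e (∑ i, β i * u i j * t j ^ k i) := by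
    intro t
    rw [← e_sum]
    congr 1
    simp only [dF, mul_sum]
    rw [sum_comm]
    simp only [mul_assoc]
  simp only [h1]
  rw [← Set.pi_univ_Icc, volume_pi, Measure.restrict_pi_pi,
    integral_fintype_prod_eq_prod (fun j (x : ℝ) => e (∑ i, β i * u i j * x ^ k i))]
  refine prod_congr rfl fun j _ => ?_
  rw [intervalIntegral.integral_of_le (by norm_num), integral_Icc_eq_integral_Ioc]

lemma continuous_oint : Continuous (oint k) := by
  unfold oint
  apply intervalIntegral.continuous_parametric_intervalIntegral_of_continuous'
  exact continuous_e.comp (by fun_prop)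

lemma continuous_Is (j : Fin s) :
    Continuous (Is k u j) := (continuous_oint k).comp (by fun_prop)

lemma card_le_of_strictMono {K : ℕ} (hk : Function.Injective k)
    (h1 : ∀ i, 1 ≤ k i) (hK : ∀ i, k i ≤ K) : n ≤ K := by
  have := card_le_card_of_injOn (s := (univ : Finset (Fin n))) (t := Icc 1 K) k
    (fun i _ => mem_coe.2 (mem_Icc.2 ⟨h1 i, hK i⟩)) hk.injOn
  simpa using this

/-- Absolute convergence of the singular integral, with a bound for its tail. -/
lemma sing_integral {K : ℕ} (hk : Function.Injective k) (h1 : ∀ i, 1 ≤ k i)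
    (hK : ∀ i, k i ≤ K) (hK1 : 1 ≤ K) (u : Fin n → Fin s → ℤ) (hu : ∀ i j, u i j ≠ 0)
    (hs : 1 + 2 * tri K ≤ s) :
    Integrable (singIntInner k u) ∧ ∃ C : ℝ, 0 < C ∧ ∀ B : ℝ, 0 < B →
      ‖singInt k u - ∫ β in Set.Icc (fun _ : Fin n => -B) (fun _ => B), singIntInner k u β‖ ≤ C / B := by
  obtain ⟨C, hC, hdec⟩ := oint_decay k hk h1 hK hK1
  have hK0 : (0 : ℝ) < K := by exact_mod_cast hK1
  have hn := card_le_of_strictMono k hk h1 hK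
  have hsK : (n : ℝ) + 1 < s / K := by
    rw [lt_div_iff₀ hK0]
    have h2 := two_mul_tri K
    have h3 : (n + 1) * K < s := by nlinarith
    exact_mod_cast h3
  have hbd : ∀ β, ‖singIntInner k u β‖ ≤ C ^ s * (1 + ‖β‖) ^ (-((s : ℝ) / K)) := by
    intro β
    rw [singIntInner_eq, norm_prod]
    have hpos : 0 < 1 + ‖β‖ := by positivity
    have h2 : ∀ j, ‖Is k u j β‖ ≤ C * (1 + ‖β‖) ^ (-(1 / (K : ℝ))) := by
      intro j
      refine (hdec _).trans ?_
      gcongr ?_ * ?_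
      apply Real.rpow_le_rpow_of_nonpos hpos
      · gcongr 1 + ?_
        refine (pi_norm_le_iff_of_nonneg (norm_nonneg _)).2 fun i => ?_
        refine le_trans ?_ (norm_le_pi_norm (fun i => β i * (u i j : ℝ)) i)
        rw [norm_mul]
        have h5 : (1 : ℝ) ≤ ‖(u i j : ℝ)‖ := by
          rw [Real.norm_eq_abs]; exact_mod_cast Int.one_le_abs (hu i j)
        exact le_mul_of_one_le_right (norm_nonneg _) h5
      · have : 0 < 1 / (K : ℝ) := by positivity
        linarith
    calc ∏ j, ‖Is k u j β‖ ≤ ∏ _j : Fin s, C * (1 + ‖β‖) ^ (-(1 / (K : ℝ))) :=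
          prod_le_prod (fun _ _ => norm_nonneg _) fun j _ => h2 j
      _ = _ := by
        rw [prod_const, card_univ, Fintype.card_fin, mul_pow,
          ← rpow_mul_natCast hpos.le]
        congr 2; ring
  have hcont : Continuous (singIntInner k u) := by
    have : singIntInner k u = fun β => ∏ j, Is k u j β := funext (singIntInner_eq k u)
    rw [this]
    exact continuous_finsetProd _ fun j _ => continuous_Is k u j
  have hinteg1 : Integrable (fun β : Fin n → ℝ => (1 + ‖β‖) ^ (-((s : ℝ) / K))) :=
    integrable_one_add_norm (by simp; linarith)
  have hinteg2 : Integrable (fun β : Fin n → ℝ => (1 + ‖β‖) ^ (-((s : ℝ) / K - 1))) :=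
    integrable_one_add_norm (by simp; linarith)
  have hI : Integrable (singIntInner k u) :=
    (hinteg1.const_mul (C ^ s)).mono' hcont.aestronglyMeasurable (Eventually.of_forall hbd)
  have hD0 : 0 ≤ ∫ β : Fin n → ℝ, (1 + ‖β‖) ^ (-((s : ℝ) / K - 1)) :=
    integral_nonneg fun β => by positivity
  refine ⟨hI, C ^ s * ((∫ β : Fin n → ℝ, (1 + ‖β‖) ^ (-((s : ℝ) / K - 1))) + 1), by positivity,
    fun B hB => ?_⟩
  set S := Set.Icc (fun _ : Fin n => -B) (fun _ => B) with hS
  have hSm : MeasurableSet S := measurableSet_Icc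
  have h3 : singInt k u - ∫ β in S, singIntInner k u β = ∫ β in Sᶜ, singIntInner k u β := by
    unfold singInt
    rw [← integral_add_compl hSm hI]; ring
  rw [h3]
  have hmem : ∀ β ∈ Sᶜ, B ≤ ‖β‖ := by
    intro β hβ
    by_contra hlt
    push Not at hlt
    refine hβ ⟨fun i => ?_, fun i => ?_⟩
    · have := (abs_le.1 ((norm_le_pi_norm β i).trans hlt.le)).1; exact this
    · have := (abs_le.1 ((norm_le_pi_norm β i).trans hlt.le)).2; exact this
  calc ‖∫ β in Sᶜ, singIntInner k u β‖ ≤ ∫ β in Sᶜ, ‖singIntInner k u β‖ := norm_integral_le_integral_norm _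
    _ ≤ ∫ β in Sᶜ, C ^ s / B * (1 + ‖β‖) ^ (-((s : ℝ) / K - 1)) := by
      refine setIntegral_mono_on hI.norm.integrableOn (hinteg2.const_mul _).integrableOn hSm.compl
        fun β hβ => (hbd β).trans ?_
      have hpos : 0 < 1 + ‖β‖ := by positivity
      have e1 : (1 + ‖β‖) ^ (-((s : ℝ) / K)) = (1 + ‖β‖)⁻¹ * (1 + ‖β‖) ^ (-((s : ℝ) / K - 1)) := by
        rw [← Real.rpow_neg_one, ← rpow_add hpos]; congr 1; ring
      rw [e1, div_eq_mul_inv (C ^ s), mul_assoc (C ^ s)]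
      have e2 : (1 + ‖β‖)⁻¹ ≤ B⁻¹ := inv_anti₀ hB (by have := hmem β hβ; linarith)
      gcongr
    _ ≤ ∫ β, C ^ s / B * (1 + ‖β‖) ^ (-((s : ℝ) / K - 1)) :=
      setIntegral_le_integral (hinteg2.const_mul _) (Eventually.of_forall fun β => by positivity)
    _ = C ^ s * (∫ β : Fin n → ℝ, (1 + ‖β‖) ^ (-((s : ℝ) / K - 1))) / B := by
      rw [integral_const_mul]; ring
    _ ≤ _ := by gcongr; linarith

/-! ### Major and minor arcs -/

/-- The counting function as an integral over a unit cube. -/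
lemma NF_eq (P : ℕ) (w : ℝ) :
    (NF k u P : ℂ) = ∫ α in cube n w 1, ∏ j, fS k u P j α := by
  classical
  have h1 : ∀ α : Fin n → ℝ, ∏ j, fS k u P j α =
      ∑ x ∈ Fintype.piFinset fun _ : Fin s => Icc (-(P : ℤ)) P,
        e (∑ i, α i * ((dF k u i x : ℤ) : ℝ)) := by
    intro α
    unfold fS wsum
    rw [prod_univ_sum]
    refine sum_congr rfl fun x _ => ?_
    rw [← e_sum]
    congr 1
    simp only [dF]
    push_cast
    simp only [mul_sum]
    rw [sum_comm]
    simp only [mul_assoc]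
  simp only [h1]
  rw [integral_finsetSum]
  · have h2 : ∀ x : Fin s → ℤ, ∫ α in cube n w 1, e (∑ i, α i * ((dF k u i x : ℤ) : ℝ)) =
        if (∀ i, dF k u i x = 0) then 1 else 0 := by
      intro x
      rw [orth]
      simp only [Nat.cast_one, one_pow, funext_iff, Pi.zero_apply]
    simp only [h2]
    rw [sum_boole]
    congr 1
    unfold NF
    rw [Nat.card_coe_set_eq, ← Set.ncard_coe_finset]
    congr 1
    ext x
    simp only [Set.mem_ofPred_eq, coe_filter, Fintype.mem_piFinset, mem_Icc, ← abs_le]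
    refine and_congr_left fun _ => forall_congr' fun j => ?_
    exact_mod_cast Iff.rfl
  · intro x _
    exact cont_integrableOn_cube (continuous_e.comp (by fun_prop))

/-- Replacing each factor of a product by an approximation. -/
lemma prod_diff {ι : Type*} [DecidableEq ι] (S : Finset ι) (f g : ι → ℂ) {E : ℝ} (hE : 0 ≤ E)
    (h : ∀ j, ‖f j - g j‖ ≤ E) :
    ‖∏ j ∈ S, f j - ∏ j ∈ S, g j‖ ≤ ∑ j ∈ S, E * ∏ i ∈ S.erase j, (‖f i‖ + E) := by
  have hg : ∀ j, ‖g j‖ ≤ ‖f j‖ + E := fun j => by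
    have := norm_sub_norm_le (g j) (f j)
    rw [norm_sub_rev] at this
    linarith [h j]
  induction S using Finset.induction_on with
  | empty => simp
  | insert a S ha ih =>
    rw [prod_insert ha, prod_insert ha, sum_insert ha, erase_insert ha]
    have e1 : f a * ∏ j ∈ S, f j - g a * ∏ j ∈ S, g j =
        (f a - g a) * ∏ j ∈ S, f j + g a * (∏ j ∈ S, f j - ∏ j ∈ S, g j) := by ring
    rw [e1]
    refine (norm_add_le _ _).trans (add_le_add ?_ ?_)
    · rw [norm_mul, norm_prod]
      gcongr with i _
      · exact h a
      · linarith
    · rw [norm_mul]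
      refine (mul_le_mul (hg a) ih (norm_nonneg _) (by positivity)).trans (le_of_eq ?_)
      rw [mul_sum]
      refine sum_congr rfl fun j hj => ?_
      have hja : a ≠ j := by rintro rfl; exact ha hj
      rw [erase_insert_of_ne hja, prod_insert (by simp [ha])]
      ring

/-- Change of variables from an arc around `x.2 / x.1` to a cube. -/
lemma integral_bx (P : ℝ) (hP : 0 < P) (B : ℝ) (r : Fin n → ℝ)
    (hr : ∀ i, r i * P ^ k i = B) (x : (_ : ℕ) × (Fin n → ℕ)) (G : (Fin n → ℝ) → ℂ)
    (hG : Continuous G) :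
    ∫ α in bx r x, G (fun i => (α i - x.2 i / x.1) * P ^ k i) =
      (((P ^ ∑ i, k i)⁻¹ : ℝ) : ℂ) * ∫ β in Set.Icc (fun _ : Fin n => -B) (fun _ => B), G β := by
  classical
  set D : Fin n → ℝ := fun i => P ^ k i with hD
  have hdet : (Matrix.diagonal D).det = P ^ ∑ i, k i := by
    rw [Matrix.det_diagonal, prod_pow_eq_pow_sum]
  have hY : 0 < P ^ ∑ i, k i := by positivity
  have hmap := Real.smul_map_diagonal_volume_pi (D := D) (by rw [hdet]; exact hY.ne')
  rw [hdet, abs_of_pos hY] at hmap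
  set S := Set.Icc (fun _ : Fin n => -B) (fun _ => B) with hS
  have hSm : MeasurableSet S := measurableSet_Icc
  have hTc : Continuous (Matrix.toLin' (Matrix.diagonal D)) := LinearMap.continuous_of_finiteDimensional _
  have h1 : ∫ β in S, G β = ((P ^ ∑ i, k i : ℝ) : ℂ) *
      ∫ α, S.indicator G (Matrix.toLin' (Matrix.diagonal D) α) := by
    rw [← integral_indicator hSm]
    conv_lhs => rw [← hmap]
    rw [integral_smul_measure, integral_map hTc.aemeasurable
      (hG.stronglyMeasurable.indicator hSm).aestronglyMeasurable, ENNReal.toReal_ofReal hY.le]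
    rw [Complex.real_smul]
  have hshift := integral_sub_right_eq_self (μ := (volume : Measure (Fin n → ℝ)))
    (fun α => S.indicator G (Matrix.toLin' (Matrix.diagonal D) α)) (fun i => (x.2 i : ℝ) / x.1)
  rw [h1, ← mul_assoc, ← Complex.ofReal_mul, inv_mul_cancel₀ hY.ne', Complex.ofReal_one, one_mul,
    ← hshift, ← integral_indicator (measurableSet_bx r x)]
  congr 1
  funext α
  have h2 : Matrix.toLin' (Matrix.diagonal D) (α - fun i => (x.2 i : ℝ) / x.1) =
      fun i => (α i - x.2 i / x.1) * P ^ k i := by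
    funext i
    rw [Matrix.toLin'_apply, Matrix.mulVec_diagonal, Pi.sub_apply, hD, mul_comm]
  rw [h2]
  have h3 : α ∈ bx r x ↔ (fun i => (α i - x.2 i / x.1) * P ^ k i) ∈ S := by
    rw [mem_bx]
    simp only [S, Set.mem_Icc, Pi.le_def, ← forall_and, ← abs_le]
    refine forall_congr' fun i => ?_
    rw [abs_mul, abs_of_pos (pow_pos hP (k i)), ← hr i]
    exact (mul_le_mul_iff_left₀ (pow_pos hP (k i))).symm
  by_cases hα : α ∈ bx r x
  · rw [Set.indicator_of_mem hα, Set.indicator_of_mem (h3.1 hα)]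
  · rw [Set.indicator_of_notMem hα, Set.indicator_of_notMem (fun h => hα (h3.2 h))]

/-- The major boxes around fractions with denominator at most `P ^ δ` are disjoint and lie in the
unit cube with corner `P ^ (-1 + κ)`. -/
lemma geometry (h1 : ∀ i, 1 ≤ k i) {δ κ : ℝ} (hδ : 0 < δ)
    (h : 2 * δ + κ < 1) : ∀ᶠ P : ℕ in atTop, 1 ≤ P ∧ 1 ≤ ⌊(P : ℝ) ^ δ⌋₊ ∧
      (∀ i, (P : ℝ) ^ (-(k i : ℝ) + κ) ≤ (P : ℝ) ^ (-1 + κ)) ∧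
      (∀ i, (P : ℝ) ^ (-1 + κ) + (P : ℝ) ^ (-(k i : ℝ) + κ) < 1 / (⌊(P : ℝ) ^ δ⌋₊ : ℝ)) ∧
      ∀ i, 2 * (P : ℝ) ^ (-(k i : ℝ) + κ) * (⌊(P : ℝ) ^ δ⌋₊ : ℝ) ^ 2 < 1 := by
  filter_upwards [ev_rpow 4 (show -1 + κ < -(2 * δ) by linarith), Filter.eventually_ge_atTop 1]
    with P e1 hP
  have hP1 : (1 : ℝ) ≤ P := by exact_mod_cast hP
  have hP0 : (0 : ℝ) < P := by linarith
  have hR : 1 ≤ ⌊(P : ℝ) ^ δ⌋₊ := Nat.le_floor (by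
    rw [Nat.cast_one]; exact Real.one_le_rpow hP1 hδ.le)
  have hRle : (⌊(P : ℝ) ^ δ⌋₊ : ℝ) ≤ (P : ℝ) ^ δ := Nat.floor_le (by positivity)
  have hRp : (1 : ℝ) ≤ (⌊(P : ℝ) ^ δ⌋₊ : ℝ) := by exact_mod_cast hR
  have hr : ∀ i, (P : ℝ) ^ (-(k i : ℝ) + κ) ≤ (P : ℝ) ^ (-1 + κ) := fun i => by
    apply rpow_le_rpow_of_exponent_le hP1
    have : (1 : ℝ) ≤ k i := by exact_mod_cast h1 i
    linarith
  have hR2 : (⌊(P : ℝ) ^ δ⌋₊ : ℝ) ^ 2 ≤ (P : ℝ) ^ (2 * δ) := by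
    rw [mul_comm, rpow_mul hP0.le, Real.rpow_two]; gcongr
  have h4 : 4 * (P : ℝ) ^ (-1 + κ) * (⌊(P : ℝ) ^ δ⌋₊ : ℝ) ^ 2 ≤ 1 := by
    calc _ ≤ (P : ℝ) ^ (-(2 * δ)) * (P : ℝ) ^ (2 * δ) := by gcongr
      _ = 1 := by rw [← rpow_add hP0]; simp
  have hw0 : 0 < (P : ℝ) ^ (-1 + κ) := by positivity
  refine ⟨hP, hR, hr, fun i => ?_, fun i => ?_⟩
  · rw [lt_div_iff₀ (by linarith)]
    have := hr i
    nlinarith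
  · have := hr i
    have h5 : 2 * (P : ℝ) ^ (-(k i : ℝ) + κ) * (⌊(P : ℝ) ^ δ⌋₊ : ℝ) ^ 2 ≤
      2 * (P : ℝ) ^ (-1 + κ) * (⌊(P : ℝ) ^ δ⌋₊ : ℝ) ^ 2 := by gcongr
    nlinarith

/-- Outside the major boxes the generating function is small. -/
lemma cover {K : ℕ} (hk : Function.Injective k) (h1 : ∀ i, 1 ≤ k i)
    (hK : ∀ i, k i ≤ K) (hK2 : 2 ≤ K) (u : Fin n → Fin s → ℤ) (hu : ∀ i j, u i j ≠ 0) (j : Fin s)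
    {τ ε δ κ : ℝ} (hτ : 0 < τ) (hε : 0 < ε) (hm : ((K : ℝ) * (K - 1) + 1) * τ + ε < 1) (hδ : 0 < δ)
    (h : 2 * δ + κ < 1) (hδ2 : (K : ℝ) * (K - 1) * τ + ε ≤ δ) (hκ : K * τ + ε ≤ κ) :
    ∀ᶠ P : ℕ in atTop, ∀ α ∈ cube n ((P : ℝ) ^ (-1 + κ)) 1,
      (∀ x ∈ Fr n ⌊(P : ℝ) ^ δ⌋₊, α ∉ bx (fun i => (P : ℝ) ^ (-(k i : ℝ) + κ)) x) →
      ‖fS k u P j α‖ ≤ (P : ℝ) ^ (1 - τ) := by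
  filter_upwards [geometry k h1 hδ h, major k hk h1 hK hK2 hτ hε hm (fun i => u i j) fun i => hu i j]
    with P ⟨hP, hR, g1, g2, g3⟩ hmaj α hα hnot
  by_contra hcon
  push Not at hcon
  obtain ⟨q, a, hq, hqP, hprim, happ⟩ := hmaj α hcon.le
  have hP1 : (1 : ℝ) ≤ P := by exact_mod_cast hP
  have hqR : q ≤ ⌊(P : ℝ) ^ δ⌋₊ :=
    Nat.le_floor (hqP.trans (rpow_le_rpow_of_exponent_le hP1 hδ2))
  have happ' : ∀ i, |α i - a i / q| ≤ (P : ℝ) ^ (-(k i : ℝ) + κ) := fun i =>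
    (happ i).trans (rpow_le_rpow_of_exponent_le hP1 (by linarith))
  have hq0 : (0 : ℝ) < q := by exact_mod_cast hq
  have hqR' : 1 / (⌊(P : ℝ) ^ δ⌋₊ : ℝ) ≤ 1 / q :=
    one_div_le_one_div_of_le hq0 (by exact_mod_cast hqR)
  have ha : ∀ i, 1 ≤ a i ∧ a i ≤ q := by
    intro i
    have e1 := hα i (Set.mem_univ i)
    obtain ⟨e2, e3⟩ := e1
    push_cast at e3
    have e4 := abs_le.1 (happ' i)
    have e5 := g1 i
    have e6 := g2 i
    constructor
    · have : 0 < (a i : ℝ) / q := by linarith [e4.2]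
      rw [div_pos_iff_of_pos_right hq0] at this
      have : 0 < a i := by exact_mod_cast this
      omega
    · have : (a i : ℝ) / q < 1 + 1 / q := by linarith [e4.1]
      have e7 : 1 + 1 / (q : ℝ) = (q + 1) / q := by field_simp
      rw [e7, div_lt_div_iff_of_pos_right hq0] at this
      have : a i < q + 1 := by exact_mod_cast this
      omega
  have hcast : ∀ i, ((a i).toNat : ℤ) = a i := fun i => Int.toNat_of_nonneg (by linarith [(ha i).1])
  refine hnot ⟨q, fun i => (a i).toNat⟩ (mem_Fr.2 ⟨⟨hq, hqR⟩, fun i => ?_, ?_⟩) (mem_bx.2 fun i => ?_)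
  · have := ha i; dsimp only; omega
  · simp only [hcast]; exact hprim
  · have h3 : (((a i).toNat : ℕ) : ℝ) = a i := by exact_mod_cast hcast i
    dsimp only
    rw [h3]; exact happ' i

/-- The contribution of the major boxes. -/
lemma major_arcs {K : ℕ} (hk : StrictMono k) (h1 : ∀ i, 1 ≤ k i)
    (hK : ∀ i, k i ≤ K) (hK1 : 1 ≤ K) (u : Fin n → Fin s → ℤ) (hu : ∀ i j, u i j ≠ 0)
    (hs : 1 + 2 * tri K ≤ s) {ε δ κ : ℝ} (hε : 0 < ε) (hδ : 0 < δ) (hδ2 : δ < 1 / 2)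
    (h : 2 * δ + κ < 1) : ∃ C : ℝ, ∀ᶠ P : ℕ in atTop,
      ‖(∑ x ∈ Fr n ⌊(P : ℝ) ^ δ⌋₊,
          ∫ α in bx (fun i => (P : ℝ) ^ (-(k i : ℝ) + κ)) x, ∏ j, fS k u P j α) -
        (P : ℂ) ^ s * ((((P : ℝ) ^ ∑ i, k i)⁻¹ : ℝ) : ℂ) *
          (∑ q ∈ Icc 1 ⌊(P : ℝ) ^ δ⌋₊, singSerTerm k u q) *
          ∫ β in Set.Icc (fun _ : Fin n => -(P : ℝ) ^ κ) (fun _ => (P : ℝ) ^ κ), singIntInner k u β‖ ≤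
      C * (P : ℝ) ^ ((s : ℝ) - 1 - ∑ i, (k i : ℝ) + δ + ε) := by
  classical
  obtain ⟨C1, hC1, c, hc, happ⟩ := f_approx k h1 hK hK1 u
  have hmv : ∀ j : Fin s, ∃ C : ℝ, 0 < C ∧ ∀ P : ℕ, 1 ≤ P → ∀ (w E : ℝ), 0 ≤ E →
      E ≤ (P : ℝ) ^ (1 / 2 : ℝ) → ∫ α in cube n w 1, ∏ i ∈ univ.erase j, (‖fS k u P i α‖ + E) ≤
        C * (P : ℝ) ^ ((s : ℝ) - 1 - ∑ i, (k i : ℝ) + ε) := fun j => by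
    have hcard : (univ.erase j).card = s - 1 := by
      rw [card_erase_of_mem (mem_univ _), card_univ, Fintype.card_fin]
    have := mvE k hk h1 hK hK1 u hu (univ.erase j) (by rw [hcard]; omega) hε
    rw [hcard, Nat.cast_sub (by omega), Nat.cast_one] at this
    exact this
  choose C2 hC2 hmv using hmv
  refine ⟨∑ j, C1 * C2 j, ?_⟩
  filter_upwards [geometry k h1 hδ h, ev_rpow C1 hδ2, ev_rpow c⁻¹ (show δ + κ < 1 by linarith)]
    with P ⟨hP, hR, g1, g2, g3⟩ e1 e2
  have hP1 : (1 : ℝ) ≤ P := by exact_mod_cast hP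
  have hP0 : (0 : ℝ) < P := by linarith
  set R := ⌊(P : ℝ) ^ δ⌋₊ with hRd
  have hRle : (R : ℝ) ≤ (P : ℝ) ^ δ := Nat.floor_le (by positivity)
  set r : Fin n → ℝ := fun i => (P : ℝ) ^ (-(k i : ℝ) + κ) with hr
  have hrB : ∀ i, r i * (P : ℝ) ^ k i = (P : ℝ) ^ κ := fun i => by
    simp only [hr]
    rw [← rpow_natCast, ← rpow_add hP0]; congr 1; ring
  have hRP : (R : ℝ) ≤ P := by
    refine hRle.trans ?_
    calc (P : ℝ) ^ δ ≤ (P : ℝ) ^ (1 : ℝ) := rpow_le_rpow_of_exponent_le hP1 (by linarith)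
      _ = P := rpow_one _
  have hRB : R * (P : ℝ) ^ κ ≤ c * P := by
    rw [rpow_one, inv_mul_le_iff₀ hc] at e2
    refine le_trans ?_ e2
    rw [rpow_add hP0]; gcongr
  set E : ℝ := C1 * (P : ℝ) ^ δ with hE
  have hE0 : 0 ≤ E := by positivity
  let g : ((_ : ℕ) × (Fin n → ℕ)) → Fin s → (Fin n → ℝ) → ℂ := fun x j α =>
    P * Ts k u x.1 x.2 j * Is k u j (fun i => (α i - x.2 i / x.1) * (P : ℝ) ^ k i)
  have hgc : ∀ x j, Continuous (g x j) := fun x j =>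
    continuous_const.mul ((continuous_Is k u j).comp (by fun_prop))
  have hmain : ∀ x, ∫ α in bx r x, ∏ j, g x j α = (P : ℂ) ^ s * (∏ j, Ts k u x.1 x.2 j) *
      (((((P : ℝ) ^ ∑ i, k i)⁻¹ : ℝ) : ℂ) *
      ∫ β in Set.Icc (fun _ : Fin n => -(P : ℝ) ^ κ) (fun _ => (P : ℝ) ^ κ), singIntInner k u β) := by
    intro x
    simp only [g, prod_mul_distrib, prod_const, card_univ, Fintype.card_fin]
    rw [integral_const_mul]
    congr 1
    have := integral_bx k P hP0 ((P : ℝ) ^ κ) r hrB x (fun β => ∏ j, Is k u j β)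
      (continuous_finsetProd _ fun j _ => continuous_Is k u j)
    rw [this]
    congr 2
    funext β
    rw [singIntInner_eq]
  have hsumT : ∑ x ∈ Fr n R, ∏ j, Ts k u x.1 x.2 j = ∑ q ∈ Icc 1 R, singSerTerm k u q := by
    unfold Fr
    rw [sum_sigma]
    refine sum_congr rfl fun q hq => ?_
    rw [singSerTerm_eq k u q (mem_Icc.1 hq).1]
  have hmain2 : (P : ℂ) ^ s * ((((P : ℝ) ^ ∑ i, k i)⁻¹ : ℝ) : ℂ) *
      (∑ q ∈ Icc 1 R, singSerTerm k u q) *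
      ∫ β in Set.Icc (fun _ : Fin n => -(P : ℝ) ^ κ) (fun _ => (P : ℝ) ^ κ), singIntInner k u β =
      ∑ x ∈ Fr n R, ∫ α in bx r x, ∏ j, g x j α := by
    simp only [hmain]
    rw [← sum_mul, ← mul_sum, hsumT]
    ring
  have hfc : Continuous fun α => ∏ j, fS k u P j α :=
    continuous_finsetProd _ fun j _ => continuous_fS k u P j
  have hHc : Continuous fun α => ∑ j : Fin s, E * ∏ i ∈ univ.erase j, (‖fS k u P i α‖ + E) :=
    continuous_finsetSum _ fun j _ => continuous_const.mul
      (continuous_finsetProd _ fun i _ => (continuous_fS k u P i).norm.add continuous_const)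
  have hioc : ∀ {F : Type} [NormedAddCommGroup F] (G : (Fin n → ℝ) → F), Continuous G → ∀ x,
      IntegrableOn G (bx r x) := fun G hG x => hG.continuousOn.integrableOn_compact isCompact_Icc
  rw [hmain2, ← sum_sub_distrib]
  calc ‖∑ x ∈ Fr n R, ((∫ α in bx r x, ∏ j, fS k u P j α) - ∫ α in bx r x, ∏ j, g x j α)‖
      ≤ ∑ x ∈ Fr n R, ∫ α in bx r x, ∑ j, E * ∏ i ∈ univ.erase j, (‖fS k u P i α‖ + E) := by
        refine (norm_sum_le _ _).trans (sum_le_sum fun x hx => ?_)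
        obtain ⟨⟨q1, q2⟩, -, -⟩ := mem_Fr.1 hx
        have q3 : (x.1 : ℝ) ≤ R := by exact_mod_cast q2
        have hgxc : Continuous fun α => ∏ j, g x j α := continuous_finsetProd _ fun j _ => hgc x j
        rw [← integral_sub (hioc _ hfc x) (hioc _ hgxc x)]
        refine norm_integral_le_of_norm_le (hioc _ hHc x) ?_
        refine (ae_restrict_iff' (measurableSet_bx r x)).2 (Eventually.of_forall fun α hα => ?_)
        refine prod_diff _ _ _ hE0 fun j => ?_
        rw [mem_bx] at hα
        have h4 := happ P x.1 x.2 (fun i => α i - x.2 i / x.1) ((P : ℝ) ^ κ) j q1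
          (by exact_mod_cast (q3.trans hRP)) (fun i => by
            rw [← hrB i]; exact mul_le_mul_of_nonneg_right (hα i) (by positivity))
          (le_trans (mul_le_mul_of_nonneg_right q3 (by positivity)) hRB)
        have h5 : (fun i => (x.2 i : ℝ) / x.1 + (α i - x.2 i / x.1)) = α := by funext i; ring
        rw [h5] at h4
        exact h4.trans (mul_le_mul_of_nonneg_left (q3.trans hRle) hC1.le)
    _ ≤ ∫ α in cube n ((P : ℝ) ^ (-1 + κ)) 1,
          ∑ j, E * ∏ i ∈ univ.erase j, (‖fS k u P i α‖ + E) :=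
        sum_bx_le g1 g2 g3 hHc fun α => sum_nonneg fun j _ =>
          mul_nonneg hE0 (prod_nonneg fun i _ => by positivity)
    _ = ∑ j, E * ∫ α in cube n ((P : ℝ) ^ (-1 + κ)) 1,
          ∏ i ∈ univ.erase j, (‖fS k u P i α‖ + E) := by
        rw [integral_finsetSum]
        · simp only [integral_const_mul]
        · exact fun j _ => cont_integrableOn_cube (continuous_const.mul
            (continuous_finsetProd _ fun i _ => (continuous_fS k u P i).norm.add continuous_const))
    _ ≤ ∑ j, E * (C2 j * (P : ℝ) ^ ((s : ℝ) - 1 - ∑ i, (k i : ℝ) + ε)) :=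
        sum_le_sum fun j _ => mul_le_mul_of_nonneg_left (hmv j P hP _ E hE0 e1) hE0
    _ = _ := by
        have : (P : ℝ) ^ ((s : ℝ) - 1 - ∑ i, (k i : ℝ) + δ + ε) =
            (P : ℝ) ^ δ * (P : ℝ) ^ ((s : ℝ) - 1 - ∑ i, (k i : ℝ) + ε) := by
          rw [← rpow_add hP0]; congr 1; ring
        rw [this, sum_mul, hE]
        exact sum_congr rfl fun j _ => by ring

/-- The contribution of the complement of the major boxes. -/
lemma minor_arcs {K : ℕ} (hk : StrictMono k) (h1 : ∀ i, 1 ≤ k i)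
    (hK : ∀ i, k i ≤ K) (hK2 : 2 ≤ K) (u : Fin n → Fin s → ℤ) (hu : ∀ i j, u i j ≠ 0)
    (hs : 1 + 2 * tri K ≤ s) {τ ε δ κ : ℝ} (hτ : 0 < τ) (hε : 0 < ε)
    (hm : ((K : ℝ) * (K - 1) + 1) * τ + ε < 1) (hδ : 0 < δ)
    (h : 2 * δ + κ < 1) (hδ2 : (K : ℝ) * (K - 1) * τ + ε ≤ δ) (hκ : K * τ + ε ≤ κ) :
    ∃ C : ℝ, ∀ᶠ P : ℕ in atTop,
      ‖(NF k u P : ℂ) - ∑ x ∈ Fr n ⌊(P : ℝ) ^ δ⌋₊,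
          ∫ α in bx (fun i => (P : ℝ) ^ (-(k i : ℝ) + κ)) x, ∏ j, fS k u P j α‖ ≤
        C * (P : ℝ) ^ ((s : ℝ) - ∑ i, (k i : ℝ) - τ + ε) := by
  classical
  let j0 : Fin s := ⟨0, by omega⟩
  have hcard : (univ.erase j0).card = s - 1 := by
    rw [card_erase_of_mem (mem_univ _), card_univ, Fintype.card_fin]
  obtain ⟨C, hC, hmv⟩ := mvE k hk h1 hK (by omega) u hu (univ.erase j0)
    (by rw [hcard]; omega) hε
  rw [hcard, Nat.cast_sub (by omega), Nat.cast_one] at hmv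
  refine ⟨C, ?_⟩
  filter_upwards [geometry k h1 hδ h, cover k hk.injective h1 hK hK2 u hu j0 hτ hε hm hδ h hδ2 hκ]
    with P ⟨hP, hR, g1, g2, g3⟩ hcov
  have hP1 : (1 : ℝ) ≤ P := by exact_mod_cast hP
  have hP0 : (0 : ℝ) < P := by linarith
  set R := ⌊(P : ℝ) ^ δ⌋₊
  set r : Fin n → ℝ := fun i => (P : ℝ) ^ (-(k i : ℝ) + κ)
  set w : ℝ := (P : ℝ) ^ (-1 + κ)
  have hfc : Continuous fun α => ∏ j, fS k u P j α :=
    continuous_finsetProd _ fun j _ => continuous_fS k u P j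
  have hgc : Continuous fun α => (P : ℝ) ^ (1 - τ) * ∏ j ∈ univ.erase j0, (‖fS k u P j α‖ + 0) :=
    continuous_const.mul
      (continuous_finsetProd _ fun j _ => (continuous_fS k u P j).norm.add continuous_const)
  have hi := cont_integrableOn_cube (w := w) (N := 1) hfc
  have hgi := cont_integrableOn_cube (w := w) (N := 1) hgc
  have hsub : (⋃ x ∈ Fr n R, bx r x) ⊆ cube n w 1 := Set.iUnion₂_subset fun x hx => bx_sub g1 g2 hx
  have h3 := integral_biUnion_finset (μ := volume) (f := fun α => ∏ j, fS k u P j α) (Fr n R)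
    (s := bx r) (fun x _ => measurableSet_bx r x) (bx_disj g3)
    fun x hx => hi.mono_set (bx_sub g1 g2 hx)
  have hU : MeasurableSet (⋃ x ∈ Fr n R, bx r x) :=
    measurableSet_biUnion _ fun x _ => measurableSet_bx r x
  rw [NF_eq k u P w, ← h3, ← setIntegral_sdiff hU hi hsub]
  calc _ ≤ ∫ α in cube n w 1 \ ⋃ x ∈ Fr n R, bx r x,
        (P : ℝ) ^ (1 - τ) * ∏ j ∈ univ.erase j0, (‖fS k u P j α‖ + 0) := by
        refine norm_integral_le_of_norm_le (hgi.mono_set Set.sdiff_subset) ?_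
        refine (ae_restrict_iff' ((measurableSet_cube n w 1).diff hU)).2
          (Eventually.of_forall fun α hα => ?_)
        rw [norm_prod, ← mul_prod_erase _ _ (mem_univ j0)]
        simp only [add_zero]
        refine mul_le_mul_of_nonneg_right (hcov α hα.1 fun x hx hxα => hα.2 ?_)
          (prod_nonneg fun _ _ => norm_nonneg _)
        exact Set.mem_biUnion hx hxα
    _ ≤ ∫ α in cube n w 1,
        (P : ℝ) ^ (1 - τ) * ∏ j ∈ univ.erase j0, (‖fS k u P j α‖ + 0) :=
        setIntegral_mono_set hgi (Eventually.of_forall fun α =>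
          mul_nonneg (by positivity) (prod_nonneg fun _ _ => by positivity))
          (Eventually.of_forall Set.sdiff_subset)
    _ ≤ (P : ℝ) ^ (1 - τ) * (C * (P : ℝ) ^ ((s : ℝ) - 1 - ∑ i, (k i : ℝ) + ε)) := by
        rw [integral_const_mul]
        exact mul_le_mul_of_nonneg_left (hmv P hP w 0 le_rfl (by positivity)) (by positivity)
    _ = _ := by
        rw [mul_left_comm, ← rpow_add hP0]; congr 2; ring

/-- The asymptotic formula for large integral `P`, from the major and minor arcs. -/
lemma asymp_nat {n K s : ℕ} (hn : 2 ≤ n) (k : Fin n → ℕ) (hk : StrictMono k) (h1 : ∀ i, 1 ≤ k i)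
    (hK : ∀ i, k i ≤ K) (hK2 : 2 ≤ K) (u : Fin n → Fin s → ℤ) (hu : ∀ i j, u i j ≠ 0)
    (hs : 1 + 2 * tri K ≤ s) {ε : ℝ} (hε : 0 < ε) : ∃ C : ℝ, 0 < C ∧ ∀ᶠ P : ℕ in atTop,
      ‖(NF k u P : ℂ) - singInt k u * singSer k u *
          (((P : ℝ) ^ ((s : ℝ) - ∑ i, (k i : ℝ)) : ℝ) : ℂ)‖ ≤
        C * (P : ℝ) ^ ((s : ℝ) - ∑ i, (k i : ℝ) - 1 / ((n : ℝ) * (K : ℝ) ^ 2) + ε) := by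
  have hn' : (2 : ℝ) ≤ n := by exact_mod_cast hn
  have hK' : (2 : ℝ) ≤ K := by exact_mod_cast hK2
  have hτd : (1 / ((n : ℝ) * (K : ℝ) ^ 2)) * (n * (K : ℝ) ^ 2) = 1 := by field_simp
  set τ : ℝ := 1 / ((n : ℝ) * (K : ℝ) ^ 2) with hτ
  have hτ0 : 0 < τ := by positivity
  clear_value τ
  have hKτ : (K : ℝ) ^ 2 * τ ≤ 1 / 2 := by nlinarith [mul_nonneg (sq_nonneg (K : ℝ)) hτ0.le]
  set ρ : ℝ := 1 / ((K : ℝ) * (K - 1)) with hρ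
  have hKK : (2 : ℝ) ≤ (K : ℝ) * (K - 1) := by nlinarith
  have hρ0 : 0 < ρ := by rw [hρ]; apply div_pos one_pos; linarith
  have hρ1 : (K : ℝ) * (K - 1) * ρ = 1 := by rw [hρ, mul_one_div_cancel]; linarith
  clear_value ρ
  set δ : ℝ := (K : ℝ) * (K - 1) * τ with hδ
  have hδρ : δ * ρ = τ := by rw [hδ]; linear_combination τ * hρ1
  have hδ0 : 0 < δ := by positivity
  have hδ2 : δ < 1 / 2 := by rw [hδ]; nlinarith
  set κ : ℝ := K * τ with hκ
  have hδκ : 2 * δ + κ < 1 := by rw [hδ, hκ]; nlinarith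
  have hκτ : τ ≤ κ := by rw [hκ]; nlinarith
  have hδτ : δ + τ ≤ 1 := by rw [hδ]; nlinarith
  have hδ1 : (K : ℝ) * (K - 1) * τ = δ := rfl
  have hκ1 : (K : ℝ) * τ = κ := rfl
  clear_value δ κ
  set ε1 : ℝ := min (ε / 2) (τ / 2) with hε1
  have e0 : 0 < ε1 := lt_min (by linarith) (by linarith)
  have e1 : ε1 ≤ ε / 2 := min_le_left _ _
  have e2 : ε1 ≤ τ / 2 := min_le_right _ _
  clear_value ε1
  have e3 : ε1 ≤ ρ := by nlinarith
  obtain ⟨Cm, hm⟩ := minor_arcs (τ := τ - ε1) (κ := κ) k hk h1 hK hK2 u hu hs (by linarith) e0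
    (by nlinarith) hδ0 hδκ (by nlinarith) (by nlinarith)
  obtain ⟨CM, hM⟩ := major_arcs k hk h1 hK (by omega) u hu hs e0 hδ0 hδ2 hδκ
  obtain ⟨-, CS, hCS, hS⟩ := series k hk h1 hK hK2 u hu hs e0 (hρ ▸ e3)
  obtain ⟨-, CI, hCI, hI⟩ := sing_integral k hk.injective h1 hK (by omega) u hu hs
  set A := ‖singInt k u‖ with hA
  set B := ‖singSer k u‖ with hB
  have hA0 : 0 ≤ A := norm_nonneg _
  have hB0 : 0 ≤ B := norm_nonneg _
  refine ⟨|Cm| + |CM| + (A * CS + (B + CS) * CI) , by positivity, ?_⟩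
  filter_upwards [hm, hM, Filter.eventually_ge_atTop 1] with P a1 a2 hP
  have hP1 : (1 : ℝ) ≤ P := by exact_mod_cast hP
  have hP0 : (0 : ℝ) < P := by linarith
  set R := ⌊(P : ℝ) ^ δ⌋₊
  set SR := ∑ q ∈ Icc 1 R, singSerTerm k u q
  set IB := ∫ β in Set.Icc (fun _ : Fin n => -(P : ℝ) ^ κ) (fun _ => (P : ℝ) ^ κ), singIntInner k u β
  set Mj := ∑ x ∈ Fr n R, ∫ α in bx (fun i => (P : ℝ) ^ (-(k i : ℝ) + κ)) x, ∏ j, fS k u P j α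
  set σ := ∑ i, (k i : ℝ) with hσ
  have b1 : ‖singSer k u - SR‖ ≤ CS * (P : ℝ) ^ (-τ + ε) := by
    refine (hS R).trans (mul_le_mul_of_nonneg_left ?_ hCS.le)
    rw [← hρ]
    calc _ ≤ ((P : ℝ) ^ δ) ^ (-ρ + ε1) := Real.rpow_le_rpow_of_nonpos (by positivity)
          (Nat.lt_floor_add_one _).le (by linarith)
      _ = (P : ℝ) ^ (-τ + δ * ε1) := by rw [← rpow_mul hP0.le, ← hδρ]; congr 1; ring
      _ ≤ _ := rpow_le_rpow_of_exponent_le hP1 (by nlinarith)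
  have b2 : ‖SR‖ ≤ B + CS := by
    have : ‖singSer k u - SR‖ ≤ CS := by
      refine (hS R).trans (mul_le_of_le_one_right hCS.le ?_)
      rw [← hρ]
      exact Real.rpow_le_one_of_one_le_of_nonpos (by have := R.cast_nonneg (α := ℝ); linarith) (by linarith)
    have := norm_sub_norm_le SR (singSer k u)
    rw [norm_sub_rev] at this
    linarith
  have b3 : ‖singInt k u - IB‖ ≤ CI * (P : ℝ) ^ (-τ + ε) := by
    refine (hI _ (by positivity)).trans ?_
    rw [div_eq_mul_inv, ← rpow_neg hP0.le]
    exact mul_le_mul_of_nonneg_left (rpow_le_rpow_of_exponent_le hP1 (by linarith)) hCI.le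
  have b4 : (P : ℂ) ^ s * ((((P : ℝ) ^ ∑ i, k i)⁻¹ : ℝ) : ℂ) = (((P : ℝ) ^ ((s : ℝ) - σ) : ℝ) : ℂ) := by
    have : (P : ℝ) ^ ((s : ℝ) - σ) = (P : ℝ) ^ s * ((P : ℝ) ^ ∑ i, k i)⁻¹ := by
      rw [Real.rpow_sub hP0, rpow_natCast, hσ, ← Nat.cast_sum, rpow_natCast, div_eq_mul_inv]
    rw [this]; push_cast; rfl
  rw [b4] at a2
  have b5 : ‖singInt k u * singSer k u - SR * IB‖ ≤
      (A * CS + (B + CS) * CI) * (P : ℝ) ^ (-τ + ε) := by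
    calc _ = ‖singInt k u * (singSer k u - SR) + SR * (singInt k u - IB)‖ := by congr 1; ring
      _ ≤ A * (CS * (P : ℝ) ^ (-τ + ε)) + (B + CS) * (CI * (P : ℝ) ^ (-τ + ε)) := by
          refine (norm_add_le _ _).trans ?_
          rw [norm_mul, norm_mul]
          exact add_le_add (mul_le_mul_of_nonneg_left b1 hA0)
            (mul_le_mul b2 b3 (norm_nonneg _) (by positivity))
      _ = _ := by ring
  have hexp : ∀ {C x : ℝ}, x ≤ (s : ℝ) - σ - τ + ε →
      C * (P : ℝ) ^ x ≤ |C| * (P : ℝ) ^ ((s : ℝ) - σ - τ + ε) := fun {C x} hx =>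
    mul_le_mul (le_abs_self _) (rpow_le_rpow_of_exponent_le hP1 hx) (by positivity) (abs_nonneg _)
  calc _ = ‖((NF k u P : ℂ) - Mj) + (Mj - (((P : ℝ) ^ ((s : ℝ) - σ) : ℝ) : ℂ) * SR * IB) -
        (((P : ℝ) ^ ((s : ℝ) - σ) : ℝ) : ℂ) * (singInt k u * singSer k u - SR * IB)‖ := by
        congr 1; ring
    _ ≤ Cm * (P : ℝ) ^ ((s : ℝ) - σ - (τ - ε1) + ε1) + CM * (P : ℝ) ^ ((s : ℝ) - 1 - σ + δ + ε1) +
        (P : ℝ) ^ ((s : ℝ) - σ) * ((A * CS + (B + CS) * CI) * (P : ℝ) ^ (-τ + ε)) := by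
        refine (norm_sub_le _ _).trans (add_le_add ((norm_add_le _ _).trans (add_le_add a1 a2)) ?_)
        rw [norm_mul, Complex.norm_real, Real.norm_of_nonneg (by positivity)]
        exact mul_le_mul_of_nonneg_left b5 (by positivity)
    _ ≤ _ := by
        have c1 := hexp (C := Cm) (x := (s : ℝ) - σ - (τ - ε1) + ε1) (by linarith)
        have c2 := hexp (C := CM) (x := (s : ℝ) - 1 - σ + δ + ε1) (by linarith)
        have c3 : (P : ℝ) ^ ((s : ℝ) - σ - τ + ε) =
            (P : ℝ) ^ ((s : ℝ) - σ) * (P : ℝ) ^ (-τ + ε) := by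
          rw [← rpow_add hP0]; congr 1; ring
        rw [c3] at c1 c2 ⊢
        linarith

/-- The asymptotic formula for real `X`. -/
lemma asymp {n K s : ℕ} (hn : 2 ≤ n) (k : Fin n → ℕ) (hk : StrictMono k) (h1 : ∀ i, 1 ≤ k i)
    (hK : ∀ i, k i ≤ K) (hK2 : 2 ≤ K) (u : Fin n → Fin s → ℤ) (hu : ∀ i j, u i j ≠ 0)
    (hs : 1 + 2 * tri K ≤ s) {ε : ℝ} (hε : 0 < ε) : ∃ C : ℝ, ∀ X : ℝ, 1 ≤ X →
      ‖(NF k u X : ℂ) - singInt k u * singSer k u *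
          ((X ^ ((s : ℝ) - ∑ i, (k i : ℝ)) : ℝ) : ℂ)‖ ≤
        C * X ^ ((s : ℝ) - (∑ i, (k i : ℝ)) - 1 / ((n : ℝ) * (K : ℝ) ^ 2) + ε) := by
  obtain ⟨C, hC, hev⟩ := asymp_nat hn k hk h1 hK hK2 u hu hs hε
  obtain ⟨P0, hP0⟩ := Filter.eventually_atTop.1 hev
  have hτ1 : 1 / ((n : ℝ) * (K : ℝ) ^ 2) ≤ 1 := by
    have h2 : (2 : ℝ) ≤ n := by exact_mod_cast hn
    have h3 : (2 : ℝ) ≤ K := by exact_mod_cast hK2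
    rw [div_le_one (by positivity)]
    nlinarith
  have hsum := sum_le_tri k hk.injective hK
  have ht := tri_pos (k := K) (by omega)
  obtain ⟨d, hd⟩ : ∃ d : ℕ, d + ∑ i, k i = s := ⟨s - ∑ i, k i, by omega⟩
  have hd1 : 1 ≤ d := by omega
  have hds : (s : ℝ) - ∑ i, (k i : ℝ) = d := by rw [← hd]; push_cast; ring
  rw [hds] at hP0 ⊢
  simp only [rpow_natCast] at hP0 ⊢
  set τ : ℝ := 1 / ((n : ℝ) * (K : ℝ) ^ 2)
  have hd1' : (1 : ℝ) ≤ d := by exact_mod_cast hd1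
  set W := singInt k u * singSer k u
  have hfloor : ∀ X : ℝ, 0 ≤ X → NF k u X = NF k u (⌊X⌋₊ : ℝ) := fun X hX => by
    unfold NF
    congr 2
    ext x
    have : ∀ j, |(x j : ℝ)| ≤ X ↔ |(x j : ℝ)| ≤ (⌊X⌋₊ : ℝ) := fun j => by
      rw [← Int.cast_abs, Int.abs_eq_natAbs, Int.cast_natCast, Nat.cast_le, Nat.le_floor_iff hX]
    exact and_congr_left fun _ => forall_congr' this
  set C0 : ℝ := ∑ P ∈ range P0, ‖(NF k u (P : ℝ) : ℂ)‖
  refine ⟨C + ‖W‖ * d + (C0 + ‖W‖ * (P0 + 1) ^ d), fun X hX => ?_⟩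
  have hX0 : 0 < X := by linarith
  set P := ⌊X⌋₊
  have hP1 : 1 ≤ P := Nat.le_floor (by simpa using hX)
  have hPX : (P : ℝ) ≤ X := Nat.floor_le hX0.le
  have hXP : X < P + 1 := Nat.lt_floor_add_one X
  rw [hfloor X hX0.le]
  have hC0 : 0 ≤ C0 := sum_nonneg fun _ _ => norm_nonneg _
  have hrp : 0 < X ^ ((d : ℝ) - τ + ε) := by positivity
  rw [add_mul]
  rcases le_or_gt P0 P with h | h
  · refine le_add_of_le_of_nonneg ?_ (by positivity)
    have b1 : |X ^ d - (P : ℝ) ^ d| ≤ d * X ^ (d - 1) := by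
      have := abs_pow_sub_pow_le X (P : ℝ) d
      have hab : |X - P| ≤ 1 := by rw [abs_le]; constructor <;> linarith
      rw [max_eq_left (by rw [abs_of_nonneg hX0.le, abs_of_nonneg (by positivity)]; exact hPX),
        abs_of_nonneg hX0.le] at this
      refine this.trans ?_
      rw [mul_assoc]
      exact mul_le_of_le_one_left (by positivity) hab
    have b2 : X ^ (d - 1) ≤ X ^ ((d : ℝ) - τ + ε) := by
      rw [← rpow_natCast, Nat.cast_sub hd1, Nat.cast_one]
      exact rpow_le_rpow_of_exponent_le hX (by linarith)
    calc _ = ‖((NF k u (P : ℝ) : ℂ) - W * (((P : ℝ) ^ d : ℝ) : ℂ)) -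
          W * ((X ^ d - (P : ℝ) ^ d : ℝ) : ℂ)‖ := by congr 1; push_cast; ring
      _ ≤ C * (P : ℝ) ^ ((d : ℝ) - τ + ε) + ‖W‖ * (d * X ^ (d - 1)) := by
          refine (norm_sub_le _ _).trans (add_le_add (hP0 P h) ?_)
          rw [norm_mul, Complex.norm_real]
          exact mul_le_mul_of_nonneg_left b1 (norm_nonneg _)
      _ ≤ C * X ^ ((d : ℝ) - τ + ε) + ‖W‖ * (d * X ^ ((d : ℝ) - τ + ε)) := by
          refine add_le_add (mul_le_mul_of_nonneg_left
            (rpow_le_rpow (by positivity) hPX (by linarith)) hC.le) ?_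
          gcongr
      _ = _ := by ring
  · refine le_add_of_nonneg_of_le (by positivity) ?_
    refine le_trans ?_ (le_mul_of_one_le_right (by positivity)
      (Real.one_le_rpow hX (by linarith)))
    refine (norm_sub_le _ _).trans (add_le_add ?_ ?_)
    · exact single_le_sum (f := fun P : ℕ => ‖(NF k u (P : ℝ) : ℂ)‖)
        (fun _ _ => norm_nonneg _) (mem_range.2 h)
    · rw [norm_mul, Complex.norm_real, Real.norm_of_nonneg (by positivity)]
      have : (P : ℝ) ≤ P0 := by exact_mod_cast h.le
      gcongr
      linarith

/-! ### Local coordinates at nonsingular solutions -/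

/-- A matrix of full row rank has an invertible maximal minor. -/
lemma exists_cols {𝕜 : Type*} [Field 𝕜] {n s : ℕ} (A : Matrix (Fin n) (Fin s) 𝕜) (h : A.rank = n) :
    ∃ σ : Fin n → Fin s, Function.Injective σ ∧ (A.submatrix id σ).det ≠ 0 := by
  obtain ⟨κ, a, ha, hsp, hli⟩ := exists_linearIndependent' 𝕜 A.col
  have : Finite κ := Finite.of_injective a ha
  have := Fintype.ofFinite κ
  have hc : Fintype.card κ = n := by
    rw [← finrank_span_eq_card hli, hsp, ← A.rank_eq_finrank_span_cols, h]
  let f : Fin n ≃ κ := (Fintype.equivFinOfCardEq hc).symm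
  refine ⟨a ∘ f, ha.comp f.injective, ?_⟩
  have h2 : LinearIndependent 𝕜 (A.submatrix id (a ∘ f)).col := hli.comp f f.injective
  exact ((Matrix.isUnit_iff_isUnit_det _).1 (Matrix.linearIndependent_cols_iff_isUnit.1 h2)).ne_zero

lemma NonsingularSol.smul {𝕜 : Type*} [Field 𝕜] {n s : ℕ} {k : Fin n → ℕ}
    {u : Fin n → Fin s → ℤ} {η : Fin s → 𝕜} (h : NonsingularSol k u η) {c : 𝕜} (hc : c ≠ 0) :
    NonsingularSol k u (c • η) := by
  refine ⟨fun i => ?_, ?_⟩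
  · have : dF k u i (c • η) = c ^ k i * dF k u i η := by
      simp only [dF, mul_sum, Pi.smul_apply, smul_eq_mul, mul_pow]
      exact sum_congr rfl fun j _ => by ring
    rw [this, h.1 i, mul_zero]
  · refine Eq.trans ?_ h.2
    rw [← Matrix.rank_mul_eq_right_of_isUnit_det (Matrix.diagonal fun i => c ^ (k i - 1))
      (Matrix.of fun i j => (k i : 𝕜) * (u i j : 𝕜) * η j ^ (k i - 1))]
    · congr 1
      ext i j
      simp only [Matrix.diagonal_mul, Matrix.of_apply, Pi.smul_apply, smul_eq_mul, mul_pow]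
      ring
    · rw [Matrix.det_diagonal]
      exact (prod_ne_zero_iff.2 fun i _ => pow_ne_zero _ hc).isUnit

/-- The coordinates in which the coordinates `σ i` are replaced by the values of the forms. -/
noncomputable def Psi {𝕜 : Type*} [Field 𝕜]
    (σ : Fin n → Fin s) (t : Fin s → 𝕜) : Fin s → 𝕜 :=
  Function.extend σ (fun i => dF k u i t) t

/-- Near a nonsingular solution, which may be scaled into the open unit ball, the values of the
forms and suitable `s - n` of the variables are local coordinates. -/
lemma local_coord {𝕜 : Type*} [NontriviallyNormedField 𝕜] [CompleteSpace 𝕜] {n s : ℕ}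
    {k : Fin n → ℕ} {u : Fin n → Fin s → ℤ} {η : Fin s → 𝕜} (h : NonsingularSol k u η) :
    ∃ (η : Fin s → 𝕜) (σ : Fin n → Fin s) (L : (Fin s → 𝕜) →L[𝕜] (Fin s → 𝕜)),
      ‖η‖ < 1 ∧ (∀ i, dF k u i η = 0) ∧ Function.Injective σ ∧
      HasStrictFDerivAt (Psi k u σ) L η ∧ Filter.map (Psi k u σ) (nhds η) = nhds (Psi k u σ η) := by
  obtain ⟨c, hc0, hc⟩ := NormedField.exists_norm_lt 𝕜 (r := 1 / (‖η‖ + 1)) (by positivity)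
  have h := h.smul (norm_pos_iff.1 hc0)
  have hn : ‖c • η‖ < 1 := by
    rw [lt_div_iff₀ (by positivity)] at hc
    rw [norm_smul]
    nlinarith [norm_nonneg c]
  generalize c • η = η at h hn
  obtain ⟨σ, hσ, hdet⟩ := exists_cols _ h.2
  let D : Fin n → (Fin s → 𝕜) →L[𝕜] 𝕜 := fun i =>
    ∑ j, ((k i : 𝕜) * (u i j : 𝕜) * η j ^ (k i - 1)) • ContinuousLinearMap.proj j
  let L : (Fin s → 𝕜) →L[𝕜] (Fin s → 𝕜) :=
    ContinuousLinearMap.pi (Function.extend σ D fun j => ContinuousLinearMap.proj j)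
  have hL1 : ∀ v i, L v (σ i) = D i v := fun v i => by
    simp only [L, ContinuousLinearMap.pi_apply, hσ.extend_apply]
  have hL2 : ∀ v j, (¬∃ i, σ i = j) → L v j = v j := fun v j hj => by
    simp only [L, ContinuousLinearMap.pi_apply, Function.extend_apply' _ _ _ hj,
      ContinuousLinearMap.proj_apply]
  have hinj : Function.Injective L := by
    rw [injective_iff_map_eq_zero]
    intro v hv
    have hv2 : ∀ j, (¬∃ i, σ i = j) → v j = 0 := fun j hj => by rw [← hL2 v j hj, hv]; rfl
    have hv1 : v ∘ σ = 0 := by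
      refine Matrix.eq_zero_of_mulVec_eq_zero hdet ?_
      funext i
      have h3 : D i v = 0 := by rw [← hL1, hv]; rfl
      rw [Pi.zero_apply, ← h3]
      simp only [D, _root_.sum_apply, smul_apply,
        ContinuousLinearMap.proj_apply, Matrix.mulVec, dotProduct, Matrix.submatrix_apply,
        Matrix.of_apply, Function.comp_apply, id, smul_eq_mul]
      refine Fintype.sum_of_injective σ hσ _ _ (fun j hj => ?_) fun j => rfl
      rw [hv2 j hj, mul_zero]
    funext j
    by_cases hj : ∃ i, σ i = j
    · obtain ⟨i, rfl⟩ := hj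
      exact congrFun hv1 i
    · exact hv2 j hj
  have hd : HasStrictFDerivAt (Psi k u σ) L η := by
    rw [hasStrictFDerivAt_pi']
    intro j
    by_cases hj : ∃ i, σ i = j
    · obtain ⟨i, rfl⟩ := hj
      have e1 : (fun t : Fin s → 𝕜 => Psi k u σ t (σ i)) = fun t => ∑ j, (u i j : 𝕜) * t j ^ k i := by
        funext t; simp only [Psi, hσ.extend_apply, dF]
      have e2 : (ContinuousLinearMap.proj (σ i)).comp L = D i := by
        ext1 v; exact hL1 v i
      rw [e1, e2]
      refine HasStrictFDerivAt.fun_sum fun j _ => ?_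
      refine (((hasStrictFDerivAt_apply (𝕜 := 𝕜) j η).pow (k i)).const_mul
        (u i j : 𝕜)).congr_fderiv ?_
      ext1 v
      simp only [smul_apply, nsmul_eq_mul, smul_eq_mul]
      ring
    · have e1 : (fun t : Fin s → 𝕜 => Psi k u σ t j) = fun t => t j := by
        funext t; simp only [Psi, Function.extend_apply' _ _ _ hj]
      have e2 : (ContinuousLinearMap.proj j).comp L = ContinuousLinearMap.proj j := by
        ext1 v; exact hL2 v j hj
      rw [e1, e2]
      exact hasStrictFDerivAt_apply j η
  refine ⟨η, σ, L, hn, h.1, hσ, hd, hd.map_nhds_eq_of_surj ?_⟩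
  exact LinearMap.range_eq_top.2 (LinearMap.injective_iff_surjective.1 hinj)

/-! ### Positivity of the singular integral -/

/-- The set where all forms are at most `ε` has measure at least a multiple of `ε ^ n`. -/
lemma volume_lower {n s : ℕ} {k : Fin n → ℕ} {u : Fin n → Fin s → ℤ} {η : Fin s → ℝ}
    (h : NonsingularSol k u η) : ∃ c > 0, ∃ r > 0, ∀ ε : ℝ, 0 < ε → ε ≤ r →
      c * ε ^ n ≤ volume.real {t ∈ Set.Icc (fun _ : Fin s => (-1 : ℝ)) (fun _ => 1) |
        ∀ i, |dF k u i t| ≤ ε} := by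
  classical
  obtain ⟨η, σ, L, hη, hη0, hσ, hd, hop⟩ := local_coord h
  obtain ⟨m, hm⟩ : ∃ m : NNReal, ENNReal.ofReal |L.det| < m :=
    ⟨(ENNReal.ofReal |L.det|).toNNReal + 1, by
      rw [ENNReal.coe_add, ENNReal.coe_toNNReal ENNReal.ofReal_ne_top]
      exact ENNReal.lt_add_right ENNReal.ofReal_ne_top (by simp)⟩
  obtain ⟨δ, hδ, hδ0⟩ := ((addHaar_image_le_mul_of_det_lt volume L hm).and
    self_mem_nhdsWithin).exists
  obtain ⟨S, hS, hSa⟩ := hd.approximates_deriv_on_nhds (Or.inr hδ0)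
  have hU : S ∩ Metric.ball 0 1 ∈ nhds η :=
    Filter.inter_mem hS (Metric.isOpen_ball.mem_nhds (by simpa using hη))
  have hU2 := Filter.image_mem_map (m := Psi k u σ) hU
  rw [hop] at hU2
  obtain ⟨r, hr, hball⟩ := Metric.nhds_basis_closedBall.mem_iff.1 hU2
  have hm0 : (0 : ℝ) < m := by
    have : (0 : ENNReal) < m := bot_le.trans_lt hm
    exact_mod_cast this
  refine ⟨((∏ j : Fin s, if ∃ i, σ i = j then 2 else 2 * r) / m), div_pos (prod_pos fun j _ => by
    split_ifs <;> positivity) hm0, r, hr, fun ε hε hεr => ?_⟩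
  let w : Fin s → ℝ := Function.extend σ (fun _ => ε) fun _ => r
  have hw1 : ∀ i, w (σ i) = ε := fun i => hσ.extend_apply _ _ i
  have hw2 : ∀ j, (¬∃ i, σ i = j) → w j = r := fun j hj => Function.extend_apply' _ _ _ hj
  have hwr : ∀ j, 0 < w j ∧ w j ≤ r := fun j => by
    by_cases hj : ∃ i, σ i = j
    · obtain ⟨i, rfl⟩ := hj; rw [hw1]; exact ⟨hε, hεr⟩
    · rw [hw2 j hj]; exact ⟨hr, le_rfl⟩
  let B : Set (Fin s → ℝ) := Set.Icc (fun j => Psi k u σ η j - w j) fun j => Psi k u σ η j + w j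
  let A := (S ∩ Metric.ball 0 1) ∩ Psi k u σ ⁻¹' B
  have hBA : B ⊆ Psi k u σ '' A := fun y hy => by
    obtain ⟨t, ht, rfl⟩ := hball (show y ∈ Metric.closedBall (Psi k u σ η) r by
      rw [Metric.mem_closedBall, dist_pi_le_iff hr.le]
      intro j
      rw [Real.dist_eq, abs_le]
      constructor <;> linarith [hy.1 j, hy.2 j, (hwr j).2])
    exact ⟨t, ⟨ht, hy⟩, rfl⟩
  have hBv : volume.real B = (∏ j : Fin s, if ∃ i, σ i = j then 2 else 2 * r) * ε ^ n := by
    rw [measureReal_def, Real.volume_Icc_pi, ENNReal.toReal_prod]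
    have hn : ε ^ n = ∏ j : Fin s, if ∃ i, σ i = j then ε else 1 := by
      rw [← Fintype.prod_of_injective σ hσ (fun _ => ε) (fun j => if ∃ i, σ i = j then ε else 1)
        (fun j hj => if_neg hj) fun i => (if_pos ⟨i, rfl⟩).symm]
      simp
    rw [hn, ← prod_mul_distrib]
    refine prod_congr rfl fun j _ => ?_
    rw [ENNReal.toReal_ofReal (by linarith [(hwr j).1])]
    by_cases hj : ∃ i, σ i = j
    · rw [if_pos hj, if_pos hj]
      obtain ⟨i, rfl⟩ := hj; rw [hw1]; ring
    · rw [if_neg hj, if_neg hj, hw2 j hj]; ring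
  have hAT : A ⊆ {t ∈ Set.Icc (fun _ : Fin s => (-1 : ℝ)) (fun _ => 1) | ∀ i, |dF k u i t| ≤ ε} := by
    rintro t ⟨⟨-, ht⟩, htB⟩
    refine ⟨⟨fun j => ?_, fun j => ?_⟩, fun i => ?_⟩
    · have := (norm_le_pi_norm t j).trans (mem_ball_zero_iff.1 ht).le
      exact (abs_le.1 this).1
    · have := (norm_le_pi_norm t j).trans (mem_ball_zero_iff.1 ht).le
      exact (abs_le.1 this).2
    · have e0 : ∀ t : Fin s → ℝ, Psi k u σ t (σ i) = dF k u i t := fun t => hσ.extend_apply _ _ i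
      have e1 := htB.1 (σ i)
      have e2 := htB.2 (σ i)
      simp only [e0, hη0, hw1] at e1 e2
      exact abs_le.2 ⟨by linarith, by linarith⟩
  have hfin : volume {t ∈ Set.Icc (fun _ : Fin s => (-1 : ℝ)) (fun _ => 1) |
      ∀ i, |dF k u i t| ≤ ε} < ⊤ :=
    (measure_mono fun t ht => ht.1).trans_lt (isCompact_Icc (a := fun _ : Fin s => (-1 : ℝ))
      (b := fun _ => 1)).measure_lt_top
  have hv : volume B ≤ m * volume {t ∈ Set.Icc (fun _ : Fin s => (-1 : ℝ)) (fun _ => 1) |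
      ∀ i, |dF k u i t| ≤ ε} :=
    (measure_mono hBA).trans ((hδ A _ (hSa.mono_set fun t ht => ht.1.1)).trans
      (mul_le_mul_right (measure_mono hAT) _))
  have hv2 := ENNReal.toReal_mono (ENNReal.mul_ne_top ENNReal.coe_ne_top hfin.ne) hv
  rw [ENNReal.toReal_mul, ENNReal.coe_toReal, ← measureReal_def, hBv, ← measureReal_def] at hv2
  rw [div_mul_eq_mul_div, div_le_iff₀' hm0]
  exact hv2

lemma continuous_dF (i : Fin n) :
    Continuous fun t : Fin s → ℝ => dF k u i t := by
  unfold dF; fun_prop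

/-- Inserting a Gaussian weight turns the singular integral into an integral of a Gaussian in
the values of the forms. -/
lemma gauss_weight {b : ℝ} (hb : 0 < b) :
    ∫ β : Fin n → ℝ, Complex.exp (-(b : ℂ) * ∑ i, (β i : ℂ) ^ 2) * singIntInner k u β =
      ((∫ t in Set.Icc (fun _ : Fin s => (-1 : ℝ)) (fun _ => 1), (Real.pi / b) ^ ((n : ℝ) / 2) *
        Real.exp (-(Real.pi ^ 2 / b) * ∑ i, dF k u i t ^ 2) : ℝ) : ℂ) := by
  have hbr : 0 < (b : ℂ).re := by simpa using hb
  have hG : Integrable fun β : Fin n → ℝ => Complex.exp (-(b : ℂ) * ∑ i, (β i : ℂ) ^ 2) := by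
    simpa using GaussianFourier.integrable_cexp_neg_mul_sum_add hbr (fun _ : Fin n => 0)
  have hc1 : IntegrableOn (fun _ : Fin s → ℝ => (1 : ℂ))
      (Set.Icc (fun _ : Fin s => (-1 : ℝ)) (fun _ => 1)) :=
    continuous_const.continuousOn.integrableOn_compact isCompact_Icc
  have hcont : Continuous fun p : (Fin n → ℝ) × (Fin s → ℝ) => e (∑ i, p.1 i * dF k u i p.2) :=
    continuous_e.comp (continuous_finsetSum _ fun i _ =>
      ((continuous_apply i).comp continuous_fst).mul ((continuous_dF k u i).comp continuous_snd))
  have hGc : Continuous fun β : Fin n → ℝ => Complex.exp (-(b : ℂ) * ∑ i, (β i : ℂ) ^ 2) := by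
    fun_prop
  unfold singIntInner
  simp only [← integral_const_mul]
  rw [integral_integral_swap]
  · rw [← integral_complex_ofReal]
    congr 1
    funext t
    have := GaussianFourier.integral_cexp_neg_mul_sum_add hbr
      (fun i : Fin n => 2 * Real.pi * I * (dF k u i t : ℝ))
    convert this using 1
    · congr 1
      funext β
      rw [e, ← Complex.exp_add]
      congr 2
      push_cast
      rw [mul_sum]
      exact sum_congr rfl fun i _ => by ring
    · push_cast
      rw [Fintype.card_fin, Complex.ofReal_cpow (by positivity)]
      push_cast
      congr 2
      rw [mul_sum, sum_div]
      refine sum_congr rfl fun i _ => ?_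
      rw [mul_pow, mul_pow, Complex.I_sq]
      have : (b : ℂ) ≠ 0 := by exact_mod_cast hb.ne'
      field_simp
      ring
  · refine (hG.mul_prod hc1).mono ((hGc.comp continuous_fst).mul hcont).aestronglyMeasurable
      (Eventually.of_forall fun p => ?_)
    simp only [Function.uncurry, norm_mul, norm_e, norm_one]
    exact le_rfl

/-- Positivity of the singular integral. -/
lemma singInt_pos {n s : ℕ} {k : Fin n → ℕ} {u : Fin n → Fin s → ℤ} {η : Fin s → ℝ}
    (h : NonsingularSol k u η) (hI : Integrable (singIntInner k u)) :
    ∃ c : ℝ, 0 < c ∧ singInt k u = c := by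
  obtain ⟨c, hc, r, hr, hvol⟩ := volume_lower h
  set c' : ℝ := c * Real.pi ^ ((n : ℝ) / 2) * Real.exp (-(Real.pi ^ 2 * n))
  have hc' : 0 < c' := by positivity
  let b : ℕ → ℝ := fun N => (1 / ((N : ℝ) + 1)) ^ 2
  have hb : ∀ N, 0 < b N := fun N => by positivity
  have hlim := tendsto_one_div_add_atTop_nhds_zero_nat (𝕜 := ℝ)
  have hb0 : Tendsto b atTop (nhds 0) := by
    have := hlim.pow 2
    rwa [zero_pow two_ne_zero] at this
  have hT : Tendsto (fun N => ∫ β : Fin n → ℝ,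
      Complex.exp (-(b N : ℂ) * ∑ i, (β i : ℂ) ^ 2) * singIntInner k u β) atTop
      (nhds (singInt k u)) := by
    refine tendsto_integral_of_dominated_convergence (fun β => ‖singIntInner k u β‖)
      (fun N => ?_) hI.norm (fun N => Eventually.of_forall fun β => ?_)
      (Eventually.of_forall fun β => ?_)
    · exact (Continuous.aestronglyMeasurable (by fun_prop)).mul hI.aestronglyMeasurable
    · rw [norm_mul, Complex.norm_exp]
      refine mul_le_of_le_one_left (norm_nonneg _) (Real.exp_le_one_iff.2 ?_)
      have : (-(b N : ℂ) * ∑ i, (β i : ℂ) ^ 2) = ((-(b N) * ∑ i, β i ^ 2 : ℝ) : ℂ) := by push_cast; rfl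
      rw [this, Complex.ofReal_re, neg_mul]
      exact neg_nonpos.2 (mul_nonneg (hb N).le (sum_nonneg fun i _ => sq_nonneg _))
    · have h2 : Tendsto (fun N => Complex.exp (-(b N : ℂ) * ∑ i, (β i : ℂ) ^ 2))
          atTop (nhds (Complex.exp (-((0 : ℝ) : ℂ) * ∑ i, (β i : ℂ) ^ 2))) :=
        (Complex.continuous_exp.tendsto _).comp
          ((((Complex.continuous_ofReal.tendsto 0).comp hb0).neg).mul_const _)
      simpa using h2.mul_const (singIntInner k u β)
  have hmem : singInt k u ∈ {z : ℂ | z.im = 0} ∩ {z : ℂ | c' ≤ z.re} := by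
    refine ((isClosed_eq Complex.continuous_im continuous_const).inter
      (isClosed_le continuous_const Complex.continuous_re)).mem_of_tendsto hT ?_
    filter_upwards [hlim.eventually (gt_mem_nhds hr)] with N hN
    rw [gauss_weight k u (hb N)]
    refine ⟨Complex.ofReal_im _, ?_⟩
    simp only [Set.mem_ofPred_eq, Complex.ofReal_re]
    set ε : ℝ := 1 / ((N : ℝ) + 1)
    have hε : 0 < ε := by positivity
    have hbe : b N = ε ^ 2 := rfl
    set T := {t ∈ Set.Icc (fun _ : Fin s => (-1 : ℝ)) (fun _ => 1) | ∀ i, |dF k u i t| ≤ ε}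
    have hTm : MeasurableSet T := by
      refine measurableSet_Icc.inter (measurableSet_setOfPred.2 (Measurable.forall fun i => ?_))
      exact measurableSet_setOfPred.1
        (measurableSet_le (continuous_dF k u i).abs.measurable measurable_const)
    have hcont : Continuous fun t : Fin s → ℝ => (Real.pi / b N) ^ ((n : ℝ) / 2) *
        Real.exp (-(Real.pi ^ 2 / b N) * ∑ i, dF k u i t ^ 2) :=
      continuous_const.mul (Real.continuous_exp.comp (continuous_const.mul
        (continuous_finsetSum _ fun i _ => (continuous_dF k u i).pow 2)))
    have hinteg := hcont.continuousOn.integrableOn_compact (μ := volume)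
      (isCompact_Icc (a := fun _ : Fin s => (-1 : ℝ)) (b := fun _ => 1))
    have hTs : T ⊆ Set.Icc (fun _ : Fin s => (-1 : ℝ)) (fun _ => 1) := fun t ht => ht.1
    have hTf : volume T ≠ ⊤ := ((measure_mono hTs).trans_lt isCompact_Icc.measure_lt_top).ne
    have hpw : (Real.pi / b N) ^ ((n : ℝ) / 2) = Real.pi ^ ((n : ℝ) / 2) * (ε ^ n)⁻¹ := by
      rw [hbe, Real.div_rpow Real.pi_pos.le (by positivity), ← rpow_natCast ε 2,
        ← rpow_mul hε.le, div_eq_mul_inv, ← rpow_natCast ε n]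
      congr 3; push_cast; ring
    calc c' = (c * ε ^ n) * (Real.pi ^ ((n : ℝ) / 2) * (ε ^ n)⁻¹ * Real.exp (-(Real.pi ^ 2 * n))) := by
          simp only [c']; field_simp
      _ ≤ volume.real T * (Real.pi ^ ((n : ℝ) / 2) * (ε ^ n)⁻¹ * Real.exp (-(Real.pi ^ 2 * n))) :=
          mul_le_mul_of_nonneg_right (hvol ε hε hN.le) (by positivity)
      _ = ∫ t in T, (Real.pi / b N) ^ ((n : ℝ) / 2) * Real.exp (-(Real.pi ^ 2 * n)) := by
          rw [setIntegral_const, smul_eq_mul, hpw]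
      _ ≤ ∫ t in T, (Real.pi / b N) ^ ((n : ℝ) / 2) *
          Real.exp (-(Real.pi ^ 2 / b N) * ∑ i, dF k u i t ^ 2) := by
          refine setIntegral_mono_on (integrableOn_const hTf) (hinteg.mono_set hTs) hTm fun t ht => ?_
          refine mul_le_mul_of_nonneg_left (Real.exp_le_exp.2 ?_) (by have := hb N; positivity)
          have : ∑ i, dF k u i t ^ 2 ≤ n * ε ^ 2 := by
            refine (sum_le_sum fun i _ => sq_le_sq' ?_ (abs_le.1 (ht.2 i)).2).trans_eq
              (by simp [sum_const] : ∑ _i : Fin n, ε ^ 2 = n * ε ^ 2)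
            exact (abs_le.1 (ht.2 i)).1
          rw [hbe, neg_mul, neg_le_neg_iff, div_mul_eq_mul_div, div_le_iff₀ (by positivity)]
          nlinarith [mul_le_mul_of_nonneg_left this (sq_nonneg Real.pi)]
      _ ≤ _ := setIntegral_mono_set hinteg (Eventually.of_forall fun t => by
          have := hb N; positivity) (Eventually.of_forall hTs)
  exact ⟨(singInt k u).re, hc'.trans_le hmem.2, Complex.ext rfl hmem.1⟩

/-! ### Positivity of the singular series -/

/-- The number of solutions of the system modulo `q`. -/
noncomputable def Msol (q : ℕ) : ℕ :=
  Nat.card {x : Fin s → ZMod q // ∀ i, dF k u i x = 0}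

lemma sum_residues {m q : ℕ} [NeZero q] (f : (Fin m → ZMod q) → ℂ) :
    ∑ r ∈ Fintype.piFinset fun _ : Fin m => Icc 1 q, f (fun j => (r j : ZMod q)) =
      ∑ x, f x := by
  refine sum_bij (fun r _ j => (r j : ZMod q)) (fun _ _ => mem_univ _) ?_ ?_ fun _ _ => rfl
  · intro a ha b hb hab
    simp only [Fintype.mem_piFinset, mem_Icc] at ha hb
    funext j
    have h1 := (ZMod.natCast_eq_natCast_iff _ _ _).1 (congrFun hab j)
    have h2 := ha j
    have h3 := hb j
    refine h1.eq_of_abs_lt ?_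
    rw [abs_lt]
    omega
  · intro x _
    refine ⟨fun j => if (x j).val = 0 then q else (x j).val, ?_, ?_⟩
    · simp only [Fintype.mem_piFinset, mem_Icc]
      intro j
      have := (x j).val_lt
      have := NeZero.pos q
      split_ifs <;> omega
    · funext j
      show ((if (x j).val = 0 then q else (x j).val : ℕ) : ZMod q) = x j
      split_ifs with h
      · rw [(ZMod.val_eq_zero _).1 h]; simp
      · simp

/-- Orthogonality of additive characters modulo `q`. -/
lemma sum_all_Ts (q : ℕ) (hq : 1 ≤ q) :
    ∑ a ∈ Fintype.piFinset fun _ : Fin n => Icc 1 q, ∏ j, Ts k u q a j =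
      (q : ℂ) ^ n * Msol k u q / (q : ℂ) ^ s := by
  classical
  have : NeZero q := ⟨by omega⟩
  have h1 : ∀ a : Fin n → ℕ, ∏ j, Ts k u q a j = 1 / (q : ℂ) ^ s * ∑ x : Fin s → ZMod q,
      ∏ i, ZMod.stdAddChar ((a i : ZMod q) * dF k u i x) := fun a => by
    rw [← prod_Ts k u q hq, ← sum_residues]
    congr 1
    refine sum_congr rfl fun r _ => ?_
    have hs : ∀ f : Fin n → ZMod q, (∏ i, ZMod.stdAddChar (f i) : ℂ) = ZMod.stdAddChar (∑ i, f i) :=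
      fun f => (map_prod (ZMod.stdAddChar (N := q)).toMonoidHom
        (fun i => Multiplicative.ofAdd (f i)) univ).symm
    rw [hs]
    have : (∑ i, (a i : ZMod q) * dF k u i fun j => (r j : ZMod q)) =
        ((∑ i, (a i : ℤ) * dF k u i fun j => (r j : ℤ) : ℤ) : ZMod q) := by
      simp [dF]
    rw [this, ZMod.stdAddChar_coe, e]
    congr 1
    simp [dF]
    ring
  simp_rw [h1, ← mul_sum]
  rw [sum_residues (fun a : Fin n → ZMod q => ∑ x : Fin s → ZMod q,
      ∏ i, ZMod.stdAddChar (a i * dF k u i x)), sum_comm]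
  have h2 : ∀ x : Fin s → ZMod q, ∑ a : Fin n → ZMod q, ∏ i, ZMod.stdAddChar (a i * dF k u i x) =
      if ∀ i, dF k u i x = 0 then (q : ℂ) ^ n else 0 := fun x => by
    have := prod_univ_sum (fun _ : Fin n => (univ : Finset (ZMod q)))
      fun i b => ZMod.stdAddChar (N := q) (b * dF k u i x)
    rw [Fintype.piFinset_univ] at this
    rw [← this]
    simp_rw [AddChar.sum_mulShift _ (ZMod.isPrimitive_stdAddChar q), ZMod.card]
    split_ifs with h
    · simp [h]
    · push Not at h
      obtain ⟨i, hi⟩ := h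
      exact prod_eq_zero (mem_univ i) (by simp [hi])
  simp_rw [h2]
  rw [← sum_filter, sum_const, Msol, Nat.card_eq_fintype_card, Fintype.card_subtype,
    nsmul_eq_mul]
  ring

lemma csum_mul (d m : ℕ) (hd : 1 ≤ d) (hm : 1 ≤ m) (b : Fin n → ℤ) :
    csum k (d * m) (fun i => b i * m) = csum k d b := by
  have hd0 : (d : ℝ) ≠ 0 := by positivity
  have hm0 : (m : ℝ) ≠ 0 := by positivity
  have h1 : ∀ r : ℕ, e (((∑ i, b i * m * (r : ℤ) ^ k i : ℤ) : ℝ) / (d * m : ℕ)) =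
      e (((∑ i, b i * (r : ℤ) ^ k i : ℤ) : ℝ) / d) := fun r => by
    congr 1
    have : (∑ i, b i * m * (r : ℤ) ^ k i : ℤ) = (∑ i, b i * (r : ℤ) ^ k i) * m := by
      rw [sum_mul]; exact sum_congr rfl fun i _ => by ring
    rw [this]
    push_cast
    field_simp
  have h2 : ∀ m : ℕ, ∑ r ∈ range (d * m), e (((∑ i, b i * (r : ℤ) ^ k i : ℤ) : ℝ) / d) =
      m * ∑ r ∈ range d, e (((∑ i, b i * (r : ℤ) ^ k i : ℤ) : ℝ) / d) := fun m => by
    induction m with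
    | zero => simp
    | succ m ih =>
      rw [Nat.mul_succ, sum_range_add, ih, Nat.cast_succ, add_mul, one_mul]
      congr 1
      refine sum_congr rfl fun r _ => e_div_congr hd ?_
      rw [← sum_sub_distrib]
      refine dvd_sum fun i _ => ?_
      rw [← mul_sub]
      refine Dvd.dvd.mul_left ((?_ : (d : ℤ) ∣ _).trans
        (sub_dvd_pow_sub_pow _ _ _)) _
      exact ⟨m, by push_cast; ring⟩
  unfold csum
  simp_rw [h1]
  rw [h2]
  have : (m : ℂ) ≠ 0 := by exact_mod_cast hm0
  have : (d : ℂ) ≠ 0 := by exact_mod_cast hd0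
  push_cast
  field_simp

/-- Fractions with denominator `q`, sorted by their reduced denominators. -/
lemma sum_divisors (q : ℕ) (hq : 1 ≤ q) :
    ∑ d ∈ q.divisors, singSerTerm k u d = (q : ℂ) ^ n * Msol k u q / (q : ℂ) ^ s := by
  rw [← sum_all_Ts k u q hq, sum_congr rfl fun d hd =>
    singSerTerm_eq k u d (Nat.pos_of_mem_divisors hd), sum_sigma']
  refine sum_bij (fun x _ i => x.2 i * (q / x.1)) ?_ ?_ ?_ ?_
  · rintro ⟨d, a⟩ h
    simp only [mem_sigma, Nat.mem_divisors, mem_Aset] at h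
    obtain ⟨⟨⟨m, rfl⟩, -⟩, h2, -⟩ := h
    have hd : 0 < d := Nat.pos_of_ne_zero (by rintro rfl; simp at hq)
    have hm : 0 < m := Nat.pos_of_ne_zero (by rintro rfl; simp at hq)
    simp only [Fintype.mem_piFinset, mem_Icc, Nat.mul_div_cancel_left _ hd]
    exact fun i => ⟨Nat.mul_pos (h2 i).1 hm, Nat.mul_le_mul_right _ (h2 i).2⟩
  · rintro ⟨d, a⟩ h ⟨d', a'⟩ h' hab
    simp only [mem_sigma, Nat.mem_divisors, mem_Aset] at h h'
    have hd : 0 < d := Nat.pos_of_dvd_of_pos h.1.1 hq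
    have hd' : 0 < d' := Nat.pos_of_dvd_of_pos h'.1.1 hq
    have hx := Prim.eq hd hd' h.2.2 h'.2.2 fun i => by
      have h3 := congrFun hab i
      simp only at h3
      have h4 : a i * (q / d) * (d * d') = a' i * (q / d') * (d * d') := by rw [h3]
      have e1 := Nat.div_mul_cancel h.1.1
      have e2 := Nat.div_mul_cancel h'.1.1
      have h5 : a i * d' * q = a' i * d * q := by
        calc a i * d' * q = a i * d' * (q / d * d) := by rw [e1]
          _ = a i * (q / d) * (d * d') := by ring
          _ = a' i * (q / d') * (d * d') := h4
          _ = a' i * d * (q / d' * d') := by ring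
          _ = _ := by rw [e2]
      exact_mod_cast Nat.eq_of_mul_eq_mul_right hq h5
    obtain ⟨rfl, h6⟩ := hx
    congr
    funext i
    exact_mod_cast congrFun h6 i
  · intro b hb
    simp only [Fintype.mem_piFinset, mem_Icc] at hb
    obtain ⟨d, a, hd, -, hp, hv⟩ := exists_prim q (fun i => (b i : ℤ)) hq
    have hv' : ∀ i, a i * q = b i * d := fun i => by
      have := hv i
      rw [div_eq_div_iff (by positivity) (by positivity)] at this
      exact_mod_cast this.symm
    obtain ⟨m, rfl⟩ := hp.dvd hd hv'
    have hm : 0 < m := Nat.pos_of_ne_zero (by rintro rfl; simp at hq)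
    have hb' : ∀ i, (b i : ℤ) = a i * m := fun i => by
      have := hv' i
      push_cast at this
      have hd' : (d : ℤ) ≠ 0 := by omega
      exact mul_right_cancel₀ hd' (by rw [← this]; ring)
    have ha : ∀ i, ((a i).toNat : ℤ) = a i := fun i => Int.toNat_of_nonneg (by
      have h1 := hb' i
      have h2 := (hb i).1
      by_contra h3
      nlinarith)
    refine ⟨⟨d, fun i => (a i).toNat⟩, ?_, ?_⟩
    · simp only [mem_sigma, Nat.mem_divisors, mem_Aset]
      refine ⟨⟨dvd_mul_right _ _, by omega⟩, fun i => ?_, ?_⟩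
      · have h1 := hb' i
        have h2 := hb i
        rw [← ha] at h1
        have h1 : b i = (a i).toNat * m := by exact_mod_cast h1
        rw [h1] at h2
        exact ⟨Nat.pos_of_mul_pos_right h2.1, Nat.le_of_mul_le_mul_right h2.2 hm⟩
      · simp_rw [ha]; exact hp
    · funext i
      have h1 := hb' i
      rw [← ha] at h1
      simp only [Nat.mul_div_cancel_left _ hd]
      exact_mod_cast h1.symm
  · rintro ⟨d, a⟩ h
    simp only [mem_sigma, Nat.mem_divisors, mem_Aset] at h
    obtain ⟨⟨⟨m, rfl⟩, -⟩, -⟩ := h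
    have hd : 0 < d := Nat.pos_of_ne_zero (by rintro rfl; simp at hq)
    have hm : 0 < m := Nat.pos_of_ne_zero (by rintro rfl; simp at hq)
    refine prod_congr rfl fun j _ => ?_
    rw [Ts, Ts, ← csum_mul k d m hd hm]
    congr 1
    funext i
    simp only [Nat.mul_div_cancel_left _ hd]
    push_cast
    ring

lemma map_dF {R S : Type*} [CommRing R] [CommRing S] (f : R →+* S) {n s : ℕ} (k : Fin n → ℕ)
    (u : Fin n → Fin s → ℤ) (i : Fin n) (t : Fin s → R) :
    f (dF k u i t) = dF k u i fun j => f (t j) := by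
  simp [dF]

lemma Msol_mul {a b : ℕ} (h : a.Coprime b) :
    Msol k u (a * b) = Msol k u a * Msol k u b := by
  rw [Msol, Msol, Msol, ← Nat.card_prod]
  let φ := ZMod.chineseRemainder h
  refine Nat.card_congr
    { toFun := fun x => (⟨fun j => (φ (x.1 j)).1, fun i => ?_⟩, ⟨fun j => (φ (x.1 j)).2, fun i => ?_⟩)
      invFun := fun y => ⟨fun j => φ.symm (y.1.1 j, y.2.1 j), fun i => φ.injective ?_⟩
      left_inv := fun x => by simp
      right_inv := fun y => by simp }
  · have := map_dF ((RingHom.fst _ _).comp φ.toRingHom) k u i x.1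
    rw [x.2 i, map_zero] at this
    exact this.symm
  · have := map_dF ((RingHom.snd _ _).comp φ.toRingHom) k u i x.1
    rw [x.2 i, map_zero] at this
    exact this.symm
  · have h1 := map_dF φ.toRingHom k u i fun j => φ.symm (y.1.1 j, y.2.1 j)
    refine h1.trans ?_
    simp only [RingEquiv.toRingHom_eq_coe, RingEquiv.coe_toRingHom, RingEquiv.apply_symm_apply,
      map_zero]
    refine Prod.ext ?_ ?_
    · exact (map_dF (RingHom.fst _ _) k u i fun j => (y.1.1 j, y.2.1 j)).trans (y.1.2 i)
    · exact (map_dF (RingHom.snd _ _) k u i fun j => (y.1.1 j, y.2.1 j)).trans (y.2.2 i)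

/-- The density of solutions modulo `q`. -/
noncomputable def sdens (q : ℕ) : ℝ :=
  (q : ℝ) ^ n * Msol k u q / (q : ℝ) ^ s

/-- A nonsingular `p`-adic zero bounds the solution densities modulo powers of `p` from below:
in the local coordinates, `s - n` variables can be prescribed in a residue class modulo `p ^ N`. -/
lemma dens_prime_pow {n s : ℕ} {k : Fin n → ℕ} {u : Fin n → Fin s → ℤ} {p : ℕ} [Fact p.Prime]
    {η : Fin s → ℚ_[p]} (h : NonsingularSol k u η) :
    ∃ c : ℝ, 0 < c ∧ c ≤ 1 ∧ ∀ h, c ≤ sdens k u (p ^ h) := by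
  classical
  have hp : p.Prime := Fact.out
  have hp1 : (1 : ℝ) < p := by exact_mod_cast hp.one_lt
  obtain ⟨η, σ, L, hη, hη0, hσ, -, hop⟩ := local_coord h
  have hU : Metric.ball (0 : Fin s → ℚ_[p]) 1 ∈ nhds η :=
    Metric.isOpen_ball.mem_nhds (by simpa using hη)
  have hU2 := Filter.image_mem_map (m := Psi k u σ) hU
  rw [hop, Metric.mem_nhds_iff] at hU2
  obtain ⟨r, hr, hsub⟩ := hU2
  obtain ⟨N, hN⟩ := exists_pow_lt_of_lt_one hr (inv_lt_one_of_one_lt₀ hp1)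
  have hns : n ≤ s := by simpa using Fintype.card_le_of_injective σ hσ
  have hcard : Fintype.card {j // ¬∃ i, σ i = j} = s - n := by
    rw [Fintype.card_subtype_compl, Fintype.card_fin]
    congr 1
    rw [← Nat.card_eq_fintype_card]
    exact (Nat.card_range_of_injective hσ).trans (Nat.card_fin n)
  refine ⟨((p : ℝ) ^ (N * (s - n)))⁻¹, by positivity,
    inv_le_one_of_one_le₀ (one_le_pow₀ hp1.le), fun h => ?_⟩
  let w : ({j // ¬∃ i, σ i = j} → Fin (p ^ (h - N))) → Fin s → ℕ := fun y j =>
    if hj : ¬∃ i, σ i = j then (y ⟨j, hj⟩ : ℕ) else 0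
  have ht : ∀ y, ∃ t : Fin s → ℤ_[p], (∀ i, dF k u i t = 0) ∧
      ∀ j, (¬∃ i, σ i = j) → (t j : ℚ_[p]) = η j + (p : ℚ_[p]) ^ N * w y j := fun y => by
    obtain ⟨t, ht, hty⟩ := hsub (show Psi k u σ η + (p : ℚ_[p]) ^ N • (fun j => (w y j : ℚ_[p])) ∈ _ by
      rw [mem_ball_iff_norm, add_sub_cancel_left, norm_smul, norm_pow, Padic.norm_p]
      refine lt_of_le_of_lt (mul_le_of_le_one_right (by positivity) ?_) hN
      refine (pi_norm_le_iff_of_nonneg zero_le_one).2 fun j => ?_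
      exact_mod_cast Padic.norm_int_le_one (p := p) (w y j))
    have ht1 : ∀ j, ‖t j‖ ≤ 1 := fun j =>
      (norm_le_pi_norm t j).trans (by simpa using (mem_ball_zero_iff.1 ht).le)
    refine ⟨fun j => ⟨t j, ht1 j⟩, fun i => ?_, fun j hj => ?_⟩
    · have h1 := congrFun hty (σ i)
      have h2 : w y (σ i) = 0 := by simp [w]
      simp only [Psi, hσ.extend_apply, Pi.add_apply, Pi.smul_apply, h2, hη0, Nat.cast_zero,
        smul_zero, add_zero] at h1
      refine Subtype.coe_injective ?_
      exact (map_dF PadicInt.Coe.ringHom k u i _).trans h1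
    · have h1 := congrFun hty j
      simpa only [Psi, Function.extend_apply' _ _ _ hj, Pi.add_apply, Pi.smul_apply,
        smul_eq_mul] using h1
  choose t ht0 ht1 using ht
  have hM : (p ^ (h - N)) ^ (s - n) ≤ Msol k u (p ^ h) := by
    have : NeZero (p ^ h) := ⟨pow_ne_zero _ hp.ne_zero⟩
    have hc : Nat.card ({j // ¬∃ i, σ i = j} → Fin (p ^ (h - N))) = (p ^ (h - N)) ^ (s - n) := by
      rw [Nat.card_eq_fintype_card, Fintype.card_fun, hcard, Fintype.card_fin]
    rw [← hc]
    refine Nat.card_le_card_of_injective (fun y => ⟨fun j => PadicInt.toZModPow h (t y j),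
      fun i => ?_⟩) fun y y' hyy => ?_
    · rw [← map_dF, ht0, map_zero]
    · funext ⟨j, hj⟩
      have h1 := congrFun (congrArg Subtype.val hyy) j
      simp only at h1
      have h2 : t y j - t y' j = (((p : ℤ) ^ N * ((w y j : ℤ) - w y' j) : ℤ) : ℤ_[p]) := by
        refine Subtype.coe_injective ?_
        push_cast
        rw [ht1 y j hj, ht1 y' j hj]
        ring
      have h3 := congrArg (PadicInt.toZModPow h) h2
      rw [map_sub, h1, sub_self, map_intCast, eq_comm, ZMod.intCast_zmod_eq_zero_iff_dvd] at h3
      have h4 : ((p ^ (h - N) : ℕ) : ℤ) ∣ (w y' j : ℤ) - w y j := by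
        rw [← neg_sub, dvd_neg]
        rcases le_total h N with hh | hh
        · rw [Nat.sub_eq_zero_of_le hh]; simp
        · rw [← Nat.add_sub_of_le hh] at h3
          push_cast at h3 ⊢
          rw [pow_add] at h3
          simpa using (mul_dvd_mul_iff_left (pow_ne_zero N (Int.natCast_ne_zero.2 hp.ne_zero))).1 h3
      have h5 : (w y j : ℤ) ≡ w y' j [ZMOD (p ^ (h - N) : ℕ)] := Int.modEq_iff_dvd.2 h4
      have h6 := (Int.natCast_modEq_iff.1 h5)
      simp only [w, hj, not_false_eq_true, dif_pos] at h6
      exact Fin.ext (h6.eq_of_lt_of_lt (Fin.isLt _) (Fin.isLt _))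
  have hM' : ((p : ℝ) ^ (h - N)) ^ (s - n) ≤ Msol k u (p ^ h) := by exact_mod_cast hM
  have hp0 : (0 : ℝ) < p := by linarith
  rw [sdens]
  push_cast
  rw [le_div_iff₀ (by positivity), inv_mul_le_iff₀ (by positivity)]
  calc ((p : ℝ) ^ h) ^ s = ((p : ℝ) ^ h) ^ n * (p : ℝ) ^ (h * (s - n)) := by
        rw [pow_mul, ← pow_add, Nat.add_sub_of_le hns]
    _ ≤ ((p : ℝ) ^ h) ^ n * ((p : ℝ) ^ (N * (s - n)) * ((p : ℝ) ^ (h - N)) ^ (s - n)) := by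
        refine mul_le_mul_of_nonneg_left ?_ (by positivity)
        rw [← pow_mul, ← pow_add, ← add_mul]
        exact pow_le_pow_right₀ hp1.le (Nat.mul_le_mul_right _ (by omega))
    _ ≤ _ := by
        rw [mul_left_comm]
        gcongr

lemma one_sub_sum_le {ι : Type*} (T : Finset ι) (a : ι → ℝ) (h0 : ∀ i ∈ T, 0 ≤ a i)
    (h1 : ∀ i ∈ T, a i ≤ 1) : 1 - ∑ i ∈ T, a i ≤ ∏ i ∈ T, (1 - a i) := by
  classical
  induction T using Finset.induction_on with
  | empty => simp
  | insert i T hi ih =>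
    rw [sum_insert hi, prod_insert hi]
    have h2 := ih (fun j hj => h0 j (mem_insert_of_mem hj)) fun j hj => h1 j (mem_insert_of_mem hj)
    have h3 : 0 ≤ ∑ j ∈ T, a j := sum_nonneg fun j hj => h0 j (mem_insert_of_mem hj)
    have h4 := h0 i (mem_insert_self _ _)
    have h5 := h1 i (mem_insert_self _ _)
    nlinarith

lemma sum_divisors' {q : ℕ} (hq : q ≠ 0) :
    ∑ d ∈ q.divisors, singSerTerm k u d = (sdens k u q : ℂ) := by
  rw [sum_divisors k u q (Nat.one_le_iff_ne_zero.2 hq), sdens]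
  push_cast
  rfl

lemma dens_one : sdens k u 1 = 1 := by
  have : Msol k u 1 = 1 := by
    rw [Msol, Nat.card_eq_one_iff_unique]
    exact ⟨⟨fun x y => Subsingleton.elim _ _⟩, ⟨0, fun i => Subsingleton.elim _ _⟩⟩
  simp [sdens, this]

/-- The densities modulo `q` are bounded below: by multiplicativity they are products over primes;
small primes are treated by `dens_prime_pow`, and large ones by the convergence of the series. -/
lemma dens_lower {n s : ℕ} {k : Fin n → ℕ} {u : Fin n → Fin s → ℤ}
    (hp : ∀ (p : ℕ) (_ : Fact p.Prime), ∃ η : Fin s → ℚ_[p], NonsingularSol k u η)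
    (hA : Summable fun q => ‖singSerTerm k u q‖) :
    ∃ c : ℝ, 0 < c ∧ ∀ q, q ≠ 0 → c ≤ sdens k u q := by
  classical
  have hc : ∀ p : ℕ, ∃ c : ℝ, 0 < c ∧ c ≤ 1 ∧ (p.Prime → ∀ h, c ≤ sdens k u (p ^ h)) := fun p => by
    by_cases hpp : p.Prime
    · have : Fact p.Prime := ⟨hpp⟩
      obtain ⟨η, hη⟩ := hp p this
      obtain ⟨c, h1, h2, h3⟩ := dens_prime_pow hη
      exact ⟨c, h1, h2, fun _ => h3⟩
    · exact ⟨1, one_pos, le_rfl, fun h => absurd h hpp⟩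
  choose c hc0 hc1 hcp using hc
  obtain ⟨S, hS⟩ := summable_iff_vanishing_norm.1 hA (1 / 2) (by norm_num)
  let B := S.sup id + 1
  refine ⟨(∏ p ∈ range B, c p) * (1 / 2), mul_pos (prod_pos fun p _ => hc0 p) (by norm_num),
    fun q hq => ?_⟩
  have hmul : sdens k u q = ∏ p ∈ range (B + q + 1), sdens k u (p ^ q.factorization p) := by
    rw [Nat.multiplicative_factorization (sdens k u) (fun a b hab => ?_) (dens_one k u) hq]
    · refine Finsupp.prod_of_support_subset _ (fun p hp => ?_) _ fun p _ => ?_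
      · have := Nat.le_of_mem_primeFactors hp
        rw [mem_range]; omega
      · rw [pow_zero, dens_one]
    · simp only [sdens, Msol_mul k u hab]
      push_cast
      ring
  have hz : ∀ p : ℕ, ¬p.Prime → q.factorization p = 0 := fun p hp =>
    Nat.factorization_eq_zero_of_not_prime _ hp
  let D : ℕ → Finset ℕ := fun p => (p ^ q.factorization p).divisors.erase 1
  have hD : ∀ p d, d ∈ D p → p.Prime ∧ d ∣ p ^ q.factorization p ∧ d ≠ 1 := fun p d hd => by
    simp only [D, mem_erase, Nat.mem_divisors] at hd
    refine ⟨?_, hd.2.1, hd.1⟩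
    by_contra hpp
    rw [hz p hpp, pow_zero] at hd
    exact hd.1 (Nat.dvd_one.1 hd.2.1)
  let a : ℕ → ℝ := fun p => ∑ d ∈ D p, ‖singSerTerm k u d‖
  have ha0 : ∀ p, 0 ≤ a p := fun p => sum_nonneg fun d _ => norm_nonneg _
  have hsum : ∑ p ∈ Ico B (B + q + 1), a p ≤ 1 / 2 := by
    rw [← sum_biUnion]
    · refine ((le_abs_self _).trans_lt (hS _ ?_)).le
      rw [disjoint_left]
      intro d hd hdS
      obtain ⟨p, hp, hdp⟩ := mem_biUnion.1 hd
      obtain ⟨h1, h2, h3⟩ := hD p d hdp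
      obtain ⟨m, -, rfl⟩ := (Nat.dvd_prime_pow h1).1 h2
      have hm : m ≠ 0 := by rintro rfl; simp at h3
      have h4 : p ^ m ≤ S.sup id := le_sup (f := id) hdS
      have h5 := Nat.le_self_pow hm p
      have h6 := (mem_Ico.1 hp).1
      simp only [B] at h6
      omega
    · intro p _ p' _ hpp
      rw [Function.onFun, disjoint_left]
      intro d hd hd'
      obtain ⟨h1, h2, h3⟩ := hD p d hd
      obtain ⟨h1', h2', -⟩ := hD p' d hd'
      exact h3 (Nat.eq_one_of_dvd_coprimes (Nat.coprime_pow_primes _ _ h1 h1' hpp) h2 h2')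
  have hlow : ∀ p, 1 - a p ≤ sdens k u (p ^ q.factorization p) := fun p => by
    have hne : p ^ q.factorization p ≠ 0 := by
      by_cases hpp : p.Prime
      · exact pow_ne_zero _ hpp.ne_zero
      · rw [hz p hpp]; simp
    have h1 := sum_divisors' k u hne
    rw [← add_sum_erase _ _ (Nat.one_mem_divisors.2 hne)] at h1
    have h2 := sum_divisors' k u one_ne_zero
    rw [Nat.divisors_one, sum_singleton, dens_one] at h2
    rw [h2] at h1
    have h3 := congrArg Complex.re h1
    rw [Complex.add_re, Complex.ofReal_re, Complex.ofReal_re] at h3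
    have h4 := (abs_le.1 (Complex.abs_re_le_norm (∑ d ∈ D p, singSerTerm k u d))).1
    have h5 : ‖∑ d ∈ D p, singSerTerm k u d‖ ≤ a p := norm_sum_le _ _
    simp only [D] at h4 h5
    linarith
  have ha1 : ∀ p ∈ Ico B (B + q + 1), a p ≤ 1 := fun p hp =>
    (single_le_sum (fun p _ => ha0 p) hp).trans (hsum.trans (by norm_num))
  rw [hmul, ← prod_range_mul_prod_Ico _ (show B ≤ B + q + 1 by omega)]
  refine mul_le_mul (prod_le_prod (fun p _ => (hc0 p).le) fun p _ => ?_) ?_ (by norm_num) ?_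
  · by_cases hpp : p.Prime
    · exact hcp p hpp _
    · rw [hz p hpp, pow_zero, dens_one]; exact hc1 p
  · calc (1 / 2 : ℝ) ≤ 1 - ∑ p ∈ Ico B (B + q + 1), a p := by linarith
      _ ≤ ∏ p ∈ Ico B (B + q + 1), (1 - a p) := one_sub_sum_le _ _ (fun p _ => ha0 p) ha1
      _ ≤ _ := prod_le_prod (fun p hp => sub_nonneg.2 (ha1 p hp)) fun p _ => hlow p
  · exact prod_nonneg fun p _ => by unfold sdens; positivity

lemma singSer_pos {n s : ℕ} (hn : 2 ≤ n) {k : Fin n → ℕ} {u : Fin n → Fin s → ℤ}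
    (hp : ∀ (p : ℕ) (_ : Fact p.Prime), ∃ η : Fin s → ℚ_[p], NonsingularSol k u η)
    (hA : Summable fun q => ‖singSerTerm k u (q + 1)‖) :
    ∃ c : ℝ, 0 < c ∧ singSer k u = c := by
  have hA' := (summable_nat_add_iff (f := fun q => ‖singSerTerm k u q‖) 1).1 hA
  obtain ⟨c, hc, hcd⟩ := dens_lower hp hA'
  have h0 : singSerTerm k u 0 = 0 := by
    rw [singSerTerm, filter_eq_empty_iff.2 fun a ha => ?_, sum_empty, mul_zero]
    simpa using Fintype.mem_piFinset.1 ha ⟨0, by omega⟩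
  have hS : singSer k u = ∑' q, singSerTerm k u q := by
    rw [hA'.of_norm.tsum_eq_zero_add, h0, zero_add, singSer]
  have hlim : Tendsto (fun N : ℕ => ∑ d ∈ insert 0 (N.factorial).divisors, singSerTerm k u d)
      atTop (nhds (singSer k u)) := by
    rw [hS]
    refine hA'.of_norm.hasSum.comp (Filter.tendsto_atTop_finset_of_monotone (fun M N hMN => ?_)
      fun d => ⟨d, ?_⟩)
    · exact insert_subset_insert _
        (Nat.divisors_subset_of_dvd (Nat.factorial_ne_zero _) (Nat.factorial_dvd_factorial hMN))
    · rcases Nat.eq_zero_or_pos d with rfl | hd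
      · simp
      · exact mem_insert_of_mem (Nat.mem_divisors.2
          ⟨Nat.dvd_factorial hd le_rfl, Nat.factorial_ne_zero _⟩)
  have hval : ∀ N : ℕ, ∑ d ∈ insert 0 (N.factorial).divisors, singSerTerm k u d =
      (sdens k u N.factorial : ℂ) := fun N => by
    rw [sum_insert (by simp), h0, zero_add, sum_divisors' k u (Nat.factorial_ne_zero _)]
  simp_rw [hval] at hlim
  have h1 := (Complex.continuous_re.tendsto _).comp hlim
  have h2 := (Complex.continuous_im.tendsto _).comp hlim
  refine ⟨(singSer k u).re, hc.trans_le (ge_of_tendsto' h1 fun N => ?_), Complex.ext rfl ?_⟩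
  · exact hcd _ (Nat.factorial_ne_zero _)
  · refine tendsto_nhds_unique h2 ?_
    simp [Function.comp_def]

end

theorem stmt0 (n : ℕ) (hn : 2 ≤ n) (k : Fin n → ℕ)
    (hk1 : 1 ≤ k ⟨0, by omega⟩) (hkmono : StrictMono k)
    (s : ℕ) (hs : 1 + k ⟨n - 1, by omega⟩ * (1 + k ⟨n - 1, by omega⟩) ≤ s)
    (u : Fin n → Fin s → ℤ) (hu : ∀ i j, u i j ≠ 0) :
    Integrable (singIntInner k u) ∧
    Summable (fun q : ℕ => ‖singSerTerm k u (q + 1)‖) ∧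
    (∀ ε : ℝ, 0 < ε → ∃ C : ℝ, ∀ X : ℝ, 1 ≤ X →
      ‖(NF k u X : ℂ) - singInt k u * singSer k u *
          ((X ^ ((s : ℝ) - ∑ i, (k i : ℝ)) : ℝ) : ℂ)‖ ≤
        C * X ^ ((s : ℝ) - (∑ i, (k i : ℝ))
            - 1 / ((n : ℝ) * (k ⟨n - 1, by omega⟩ : ℝ) ^ 2) + ε)) ∧
    ((∃ η : Fin s → ℝ, NonsingularSol k u η) →
      (∀ (p : ℕ) (_ : Fact p.Prime), ∃ η : Fin s → ℚ_[p], NonsingularSol k u η) →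
      ∃ c : ℝ, 0 < c ∧ singInt k u * singSer k u = (c : ℂ)) := by
  have h1 : ∀ i, 1 ≤ k i := fun i =>
    hk1.trans (hkmono.monotone (Fin.mk_le_of_le_val (Nat.zero_le _)))
  have hK2 : 2 ≤ k ⟨n - 1, by omega⟩ := by
    have : k ⟨0, by omega⟩ < k ⟨n - 1, by omega⟩ := hkmono (Fin.mk_lt_mk.2 (by omega))
    omega
  have hK : ∀ i, k i ≤ k ⟨n - 1, by omega⟩ := fun i =>
    hkmono.monotone (Fin.le_def.2 (by have := i.2; simp only; omega))
  have hs' : 1 + 2 * tri (k ⟨n - 1, by omega⟩) ≤ s := by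
    rw [two_mul_tri, add_comm _ 1]; exact hs
  have hI := (sing_integral k hkmono.injective h1 hK (by omega) u hu hs').1
  have hK2' : (2 : ℝ) ≤ k ⟨n - 1, by omega⟩ := by exact_mod_cast hK2
  have hA := (series k hkmono h1 hK hK2 u hu hs' (ε := 1 / ((k ⟨n - 1, by omega⟩ : ℝ) *
    ((k ⟨n - 1, by omega⟩ : ℝ) - 1))) (by
      refine one_div_pos.2 (mul_pos ?_ ?_) <;> linarith) le_rfl).1
  refine ⟨hI, hA, fun ε hε => asymp hn k hkmono h1 hK hK2 u hu hs' hε, ?_⟩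
  rintro ⟨η, hη⟩ hp
  obtain ⟨c, hc, hc'⟩ := singInt_pos hη hI
  obtain ⟨d, hd, hd'⟩ := singSer_pos hn hp hA
  exact ⟨c * d, mul_pos hc hd, by rw [hc', hd']; push_cast; rfl⟩
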